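/- For every squarefree odd integer d > 1, let χ_{4d} be a Dirichlet character modulo 4d whose value at every odd integer n equals the Jacobi symbol (4d/n), and assume χ_{4d} is nonprincipal; let L(1, χ_{4d}) denote the value at s = 1 of the Dirichlet L-function of χ_{4d}. Then for every ε > 0 there is a constant C_ε such that for all K, D ≥ 1: Σ_{1 < d ≤ D, d squarefree and odd} | 1/L(1, χ_{4d}) − Σ_{k ≤ K} μ(k) χ_{4d}(k)/k |² ≤ C_ε ( D^{1+ε}/K + D^ε ). -/

import Mathlib

/-!
The error `1 / L(1, χ_d) - ∑_{k ≤ K} μ(k) χ_d(k) / k` is the sum of the terms `K < k ≤ N` and of the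
tail beyond `N`, where `N ≥ exp (D ^ ε)` is `K` times a power of two with exponent `O(D ^ ε)`.

*The range `K < k ≤ N`* (`final_nat`). It is cut into `O(D ^ ε)` dyadic blocks `M < k ≤ 2 M`. By
Heath-Brown's large sieve for Jacobi symbols (`heathBrown`), or for `M > D ^ 3` by the dual of an
elementary bound, the mean square of one block over `d ≤ D` is `≪ D ^ ε (D + M) / M`
(`LS_uniform`, `block_bound`); the Cauchy-Schwarz inequality combines the blocks.

*Heath-Brown's large sieve.* By duality and quadratic reciprocity rows and columns can be interchanged
(`LS.swap`). Completing character sums gives the constant `X + n ^ 3` (`LS_base`). If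
`n + X ^ β` is admissible up to factors `(X n) ^ ε`, then so is `n + X ^ (2 - 1 / β)` (`step`), and the
exponents obtained by iteration tend to `1`. For the step, the sum over rows is smoothed by a Gaussian
and extended to all integers whose squarefree part exceeds a threshold; expanding the square, pairs of
columns `g l₁, g l₂` with `(l₁, l₂) = 1` give theta sums of the Jacobi symbol modulo `q = l₁ l₂`. The
theta transformation (Poisson summation and Gauss sums) relates these to dual sums; after adding the
same form with coefficients twisted by normalised Gauss sums, which is nonnegative, the main terms
coming from small squarefree parts cancel (`err_identity`, `GForm_twist`). The rest is bounded by the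
assumed large sieve after separating `l₁` from `l₂` by Mellin inversion (`bound_Err`).

*The tail beyond `N`* (`mobius_tail`). Siegel's theorem for the family (`siegel`) is proved by
Estermann's argument: the Taylor coefficients at `2` of `ζ(s) L(s, χ₁) L(s, χ₂) L(s, χ₁χ₂)` alternate in
sign. With the `3-4-1` inequality off the real axis it gives a lower bound for `|L(s, χ_d)|` in a region of
width `D ^ (-δ)` to the left of `Re s = 1` (`L_lower`). Newman's contour integral, taken over a rectangle
(`newman`), turns the resulting analytic continuation and bound of `1 / L` into the rate `O(1 / D)` for
partial sums of length at least `exp (D ^ ε)`.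
-/

namespace QLS

/-! ### The large sieve for Jacobi symbols: duality, reciprocity and an elementary bound -/

open Finset

/-- Odd squarefree integers in `[1, n]`: the columns of the sieve matrix. -/
def OS (n : ℕ) : Finset ℕ := (Icc 1 n).filter (fun l => Odd l ∧ Squarefree l)

/-- Squarefree integers in `[1, X]`: the rows of the sieve matrix. -/
def SF (X : ℕ) : Finset ℕ := (Icc 1 X).filter (fun k => Squarefree k)

/-- The Jacobi symbol `(k/l)` as a complex number. -/
def J (k l : ℕ) : ℂ := ((jacobiSym (k : ℤ) l : ℤ) : ℂ)

/-- `LS A X n`: the constant `A` is admissible in the large sieve inequality for the Jacobi symbols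
`(k/l)` with `k ≤ X` squarefree and `l ≤ n` odd and squarefree. -/
def LS (A : ℝ) (X n : ℕ) : Prop :=
  ∀ b : ℕ → ℂ, ∑ k ∈ SF X, ‖∑ l ∈ OS n, b l * J k l‖ ^ 2 ≤ A * ∑ l ∈ OS n, ‖b l‖ ^ 2

lemma mem_OS {n l : ℕ} : l ∈ OS n ↔ 1 ≤ l ∧ l ≤ n ∧ Odd l ∧ Squarefree l := by
  simp [OS, and_assoc]

lemma mem_SF {n l : ℕ} : l ∈ SF n ↔ 1 ≤ l ∧ l ≤ n ∧ Squarefree l := by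
  simp [SF, and_assoc]

lemma norm_J_le (k l : ℕ) : ‖J k l‖ ≤ 1 := by
  unfold J
  rcases jacobiSym.trichotomy (k : ℤ) l with h | h | h <;> simp [h]

lemma conj_J (k l : ℕ) : (starRingEnd ℂ) (J k l) = J k l := by
  unfold J; simp

lemma J_mul_left (a b l : ℕ) : J (a * b) l = J a l * J b l := by
  unfold J; push_cast; rw [jacobiSym.mul_left]; push_cast; rfl

lemma J_mul_right (a : ℕ) {m n : ℕ} (hm : m ≠ 0) (hn : n ≠ 0) : J a (m * n) = J a m * J a n := by
  unfold J; rw [jacobiSym.mul_right' _ hm hn]; push_cast; rfl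

lemma J_one_left (l : ℕ) : J 1 l = 1 := by simp [J]

lemma J_one_right (l : ℕ) : J l 1 = 1 := by simp [J]

lemma J_eq_zero {k l : ℕ} (hl : l ≠ 0) (h : ¬ k.Coprime l) : J k l = 0 := by
  unfold J
  rw [jacobiSym.eq_zero_iff.mpr ⟨hl, by simpa [Int.gcd_natCast_natCast] using h⟩]; simp

lemma J_sq_of_coprime {k l : ℕ} (h : k.Coprime l) : J k l * J k l = 1 := by
  unfold J
  have := jacobiSym.sq_one (a := (k : ℤ)) (b := l) (by simpa [Int.gcd_natCast_natCast] using h)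
  rw [← Int.cast_mul, ← sq, this]; simp

lemma J_mod (k l : ℕ) : J (k % l) l = J k l := by
  unfold J; rw [jacobiSym.mod_left (k : ℤ) l]; push_cast; rfl

lemma LS.mono {A A' : ℝ} {X X' n n' : ℕ} (h : LS A X n) (hA : A ≤ A') (hX : X' ≤ X) (hn : n' ≤ n) :
    LS A' X' n' := by
  intro b
  have hsub : OS n' ⊆ OS n := fun l hl => by
    rw [mem_OS] at *; exact ⟨hl.1, hl.2.1.trans hn, hl.2.2⟩
  have hsubX : SF X' ⊆ SF X := fun l hl => by
    rw [mem_SF] at *; exact ⟨hl.1, hl.2.1.trans hX, hl.2.2⟩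
  set b' : ℕ → ℂ := fun l => if l ≤ n' then b l else 0
  have e1 : ∀ k, ∑ l ∈ OS n, b' l * J k l = ∑ l ∈ OS n', b l * J k l := by
    intro k
    rw [← Finset.sum_subset hsub]
    · refine Finset.sum_congr rfl fun l hl => ?_
      simp [b', (mem_OS.mp hl).2.1]
    · intro l hl hl'
      have : ¬ l ≤ n' := fun h => hl' (by rw [mem_OS] at *; tauto)
      simp [b', this]
  have e2 : ∑ l ∈ OS n, ‖b' l‖ ^ 2 = ∑ l ∈ OS n', ‖b l‖ ^ 2 := by
    rw [← Finset.sum_subset hsub]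
    · refine Finset.sum_congr rfl fun l hl => ?_
      simp [b', (mem_OS.mp hl).2.1]
    · intro l hl hl'
      have : ¬ l ≤ n' := fun h => hl' (by rw [mem_OS] at *; tauto)
      simp [b', this]
  have := h b'
  simp only [e1, e2] at this
  calc _ ≤ ∑ k ∈ SF X, ‖∑ l ∈ OS n', b l * J k l‖ ^ 2 :=
        Finset.sum_le_sum_of_subset_of_nonneg hsubX (fun _ _ _ => by positivity)
    _ ≤ _ := this
    _ ≤ _ := by gcongr

/-- The duality principle for bilinear forms with a real kernel. -/
lemma duality {ι κ : Type*} (R : Finset ι) (S : Finset κ) (c : ι → κ → ℂ) {A : ℝ} (hA : 0 ≤ A)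
    (h : ∀ b : κ → ℂ, ∑ k ∈ R, ‖∑ l ∈ S, b l * c k l‖ ^ 2 ≤ A * ∑ l ∈ S, ‖b l‖ ^ 2) (a : ι → ℂ) :
    ∑ l ∈ S, ‖∑ k ∈ R, a k * c k l‖ ^ 2 ≤ A * ∑ k ∈ R, ‖a k‖ ^ 2 := by
  set v : κ → ℂ := fun l => ∑ k ∈ R, a k * c k l with hv
  set V : ℝ := ∑ l ∈ S, ‖v l‖ ^ 2 with hV
  set N : ℝ := ∑ k ∈ R, ‖a k‖ ^ 2 with hN
  have hV0 : 0 ≤ V := by positivity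
  have key : (V : ℂ) = ∑ k ∈ R, a k * ∑ l ∈ S, (starRingEnd ℂ) (v l) * c k l := by
    have : (V : ℂ) = ∑ l ∈ S, (starRingEnd ℂ) (v l) * v l := by
      rw [hV]; push_cast
      refine Finset.sum_congr rfl fun l _ => ?_
      rw [Complex.conj_mul']
    rw [this]
    simp only [hv, Finset.mul_sum]
    rw [Finset.sum_comm]
    refine Finset.sum_congr rfl fun k _ => Finset.sum_congr rfl fun l _ => ?_
    ring
  have h1 : V ≤ ∑ k ∈ R, ‖a k‖ * ‖∑ l ∈ S, (starRingEnd ℂ) (v l) * c k l‖ := by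
    calc V = ‖(V : ℂ)‖ := by rw [Complex.norm_real, Real.norm_of_nonneg hV0]
      _ ≤ _ := by
        rw [key]
        exact (norm_sum_le _ _).trans (le_of_eq (Finset.sum_congr rfl fun k _ => norm_mul _ _))
  have h2 : V ^ 2 ≤ N * (A * V) := by
    calc V ^ 2 ≤ (∑ k ∈ R, ‖a k‖ * ‖∑ l ∈ S, (starRingEnd ℂ) (v l) * c k l‖) ^ 2 := by gcongr
      _ ≤ N * ∑ k ∈ R, ‖∑ l ∈ S, (starRingEnd ℂ) (v l) * c k l‖ ^ 2 :=
        Finset.sum_mul_sq_le_sq_mul_sq _ _ _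
      _ ≤ N * (A * V) := by
        have := h (fun l => (starRingEnd ℂ) (v l))
        simp only [RCLike.norm_conj] at this
        exact mul_le_mul_of_nonneg_left this (by positivity)
  rcases hV0.eq_or_lt with h0 | h0
  · rw [← h0]; positivity
  · nlinarith

lemma norm_add_sq_le (x y : ℂ) : ‖x + y‖ ^ 2 ≤ 2 * ‖x‖ ^ 2 + 2 * ‖y‖ ^ 2 := by
  have h := norm_add_le x y
  nlinarith [sq_nonneg (‖x‖ - ‖y‖), norm_nonneg (x + y), norm_nonneg x, norm_nonneg y]

/-- Reciprocity for an odd row: up to a sign depending on the row only, `(k/l)` equals `(l/k)` on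
each residue class of `l` modulo `4`. -/
lemma reciprocity_row (n k : ℕ) (hk : Odd k) (b : ℕ → ℂ) :
    ‖∑ l ∈ OS n, b l * J k l‖ ^ 2 ≤
      2 * ‖∑ l ∈ OS n, (if l % 4 = 1 then b l else 0) * J l k‖ ^ 2 +
      2 * ‖∑ l ∈ OS n, (if l % 4 = 1 then 0 else b l) * J l k‖ ^ 2 := by
  obtain ⟨σ, hσ, hs⟩ : ∃ σ : ℂ, ‖σ‖ = 1 ∧ ∀ l ∈ OS n, l % 4 ≠ 1 → J k l = σ * J l k := by
    rcases Nat.odd_mod_four_iff.mp (Nat.odd_iff.mp hk) with h | h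
    · refine ⟨1, by simp, fun l hl _ => ?_⟩
      rw [one_mul]; unfold J
      rw [jacobiSym.quadratic_reciprocity_one_mod_four h (mem_OS.mp hl).2.2.1]
    · refine ⟨-1, by simp, fun l hl h1 => ?_⟩
      unfold J
      have h3 : l % 4 = 3 :=
        (Nat.odd_mod_four_iff.mp (Nat.odd_iff.mp (mem_OS.mp hl).2.2.1)).resolve_left h1
      rw [jacobiSym.quadratic_reciprocity_three_mod_four h h3]; simp
  have e : ∑ l ∈ OS n, b l * J k l = ∑ l ∈ OS n, (if l % 4 = 1 then b l else 0) * J l k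
      + σ * ∑ l ∈ OS n, (if l % 4 = 1 then 0 else b l) * J l k := by
    rw [Finset.mul_sum, ← Finset.sum_add_distrib]
    refine Finset.sum_congr rfl fun l hl => ?_
    by_cases h1 : l % 4 = 1
    · simp only [h1, if_true]
      unfold J
      rw [jacobiSym.quadratic_reciprocity_one_mod_four' hk h1]; ring
    · simp only [h1, if_false, hs l hl h1]; ring
  rw [e]
  refine (norm_add_sq_le _ _).trans (le_of_eq ?_)
  rw [norm_mul, hσ, one_mul]

/-- Rows and columns of the large sieve inequality may be interchanged. -/
lemma LS.swap {A : ℝ} {X n : ℕ} (hA : 0 ≤ A) (h : LS A n X) : LS (4 * A) X n := by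
  have hsub : OS n ⊆ SF n := fun l hl => by rw [mem_OS] at hl; rw [mem_SF]; tauto
  have odd_part : ∀ b : ℕ → ℂ, ∑ k ∈ OS X, ‖∑ l ∈ OS n, b l * J k l‖ ^ 2 ≤
      2 * A * ∑ l ∈ OS n, ‖b l‖ ^ 2 := by
    intro b
    have dual : ∀ a : ℕ → ℂ, ∑ k ∈ OS X, ‖∑ l ∈ OS n, a l * J l k‖ ^ 2 ≤
        A * ∑ l ∈ OS n, ‖a l‖ ^ 2 := by
      intro a
      have := duality (SF n) (OS X) J hA h (fun l => if l ∈ OS n then a l else 0)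
      have e1 : ∀ k, ∑ l ∈ SF n, (if l ∈ OS n then a l else 0) * J l k
          = ∑ l ∈ OS n, a l * J l k := by
        intro k
        rw [← Finset.sum_subset hsub]
        · exact Finset.sum_congr rfl fun l hl => by simp [hl]
        · intro l _ hl; simp [hl]
      have e2 : ∑ l ∈ SF n, ‖(if l ∈ OS n then a l else 0)‖ ^ 2 = ∑ l ∈ OS n, ‖a l‖ ^ 2 := by
        rw [← Finset.sum_subset hsub]
        · exact Finset.sum_congr rfl fun l hl => by simp [hl]
        · intro l _ hl; simp [hl]
      simpa only [e1, e2] using this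
    calc _ ≤ ∑ k ∈ OS X, (2 * ‖∑ l ∈ OS n, (if l % 4 = 1 then b l else 0) * J l k‖ ^ 2 +
          2 * ‖∑ l ∈ OS n, (if l % 4 = 1 then 0 else b l) * J l k‖ ^ 2) :=
          Finset.sum_le_sum fun k hk => reciprocity_row n k (mem_OS.mp hk).2.2.1 b
      _ ≤ 2 * (A * ∑ l ∈ OS n, ‖(if l % 4 = 1 then b l else 0)‖ ^ 2) +
          2 * (A * ∑ l ∈ OS n, ‖(if l % 4 = 1 then 0 else b l)‖ ^ 2) := by
          rw [Finset.sum_add_distrib, ← Finset.mul_sum, ← Finset.mul_sum]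
          gcongr <;> exact dual _
      _ = 2 * A * ∑ l ∈ OS n, ‖b l‖ ^ 2 := by
          rw [← mul_add, ← mul_add, ← Finset.sum_add_distrib, mul_assoc]
          congr 2
          refine Finset.sum_congr rfl fun l _ => ?_
          by_cases h1 : l % 4 = 1 <;> simp [h1]
  intro b
  have split : SF X ⊆ OS X ∪ (OS X).image (fun k => 2 * k) := by
    intro k hk
    rw [mem_SF] at hk
    rw [Finset.mem_union, Finset.mem_image]
    rcases Nat.even_or_odd k with he | ho
    · right
      obtain ⟨m, rfl⟩ := he.two_dvd
      refine ⟨m, ?_, rfl⟩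
      have hm : Squarefree m := hk.2.2.squarefree_of_dvd (dvd_mul_left _ _)
      refine mem_OS.mpr ⟨by omega, by omega, ?_, hm⟩
      by_contra hcon
      obtain ⟨j, rfl⟩ := (Nat.not_odd_iff_even.mp hcon).two_dvd
      have := hk.2.2 2 ⟨j, by ring⟩
      simp at this
    · left; exact mem_OS.mpr ⟨hk.1, hk.2.1, ho, hk.2.2⟩
  calc _ ≤ ∑ k ∈ OS X ∪ (OS X).image (fun k => 2 * k), ‖∑ l ∈ OS n, b l * J k l‖ ^ 2 :=
        Finset.sum_le_sum_of_subset_of_nonneg split fun _ _ _ => by positivity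
    _ ≤ ∑ k ∈ OS X, ‖∑ l ∈ OS n, b l * J k l‖ ^ 2 +
        ∑ k ∈ (OS X).image (fun k => 2 * k), ‖∑ l ∈ OS n, b l * J k l‖ ^ 2 := by
        rw [← Finset.sum_union_inter]
        exact le_add_of_nonneg_right (by positivity)
    _ = ∑ k ∈ OS X, ‖∑ l ∈ OS n, b l * J k l‖ ^ 2 +
        ∑ k ∈ OS X, ‖∑ l ∈ OS n, (b l * J 2 l) * J k l‖ ^ 2 := by
        rw [Finset.sum_image (fun a _ b _ h => by simpa using h)]
        simp only [J_mul_left, mul_assoc]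
    _ ≤ 2 * A * ∑ l ∈ OS n, ‖b l‖ ^ 2 + 2 * A * ∑ l ∈ OS n, ‖b l * J 2 l‖ ^ 2 :=
        add_le_add (odd_part b) (odd_part _)
    _ ≤ 2 * A * ∑ l ∈ OS n, ‖b l‖ ^ 2 + 2 * A * ∑ l ∈ OS n, ‖b l‖ ^ 2 := by
        gcongr with l hl
        rw [norm_mul]
        exact mul_le_of_le_one_right (norm_nonneg _) (norm_J_le _ _)
    _ = _ := by ring

/-- Partial sums of a `1`-bounded `q`-periodic function with mean zero are at most `q`. -/
lemma norm_sum_range_periodic_le {q : ℕ} (hq : 0 < q) (f : ℕ → ℂ) (hper : ∀ m, f (m + q) = f m)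
    (hb : ∀ m, ‖f m‖ ≤ 1) (h0 : ∑ m ∈ range q, f m = 0) (X : ℕ) :
    ‖∑ m ∈ range X, f m‖ ≤ q := by
  induction X using Nat.strong_induction_on with
  | _ X ih =>
    rcases lt_or_ge X q with h | h
    · calc _ ≤ ∑ m ∈ range X, ‖f m‖ := norm_sum_le _ _
        _ ≤ ∑ m ∈ range X, (1 : ℝ) := Finset.sum_le_sum fun m _ => hb m
        _ ≤ q := by simp; exact_mod_cast h.le
    · obtain ⟨Y, rfl⟩ := Nat.exists_eq_add_of_le h
      rw [Finset.sum_range_add, h0, zero_add]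
      simpa only [add_comm q, hper] using ih Y (by omega)

lemma exists_jacobi_neg_one {u m : ℕ} (hu : 1 < u) (hodd : Odd u) (hsq : Squarefree u)
    (hum : u.Coprime m) : ∃ a : ℕ, a ≡ 1 [MOD m] ∧ a.Coprime u ∧ J a u = -1 := by
  obtain ⟨p, hp, hpu⟩ := Nat.exists_prime_and_dvd hu.ne'
  have : Fact p.Prime := ⟨hp⟩
  obtain ⟨v, rfl⟩ := hpu
  have hp2 : p ≠ 2 := by rintro rfl; exact (Nat.not_odd_iff_even.mpr ⟨v, by ring⟩) hodd
  obtain ⟨x, hx⟩ := FiniteField.exists_nonsquare (F := ZMod p)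
    (by rw [ZMod.ringChar_zmod_n]; exact hp2)
  have hpv : p.Coprime v := (Nat.squarefree_mul_iff.mp hsq).1
  have hpm : p.Coprime m := Nat.Coprime.coprime_mul_right hum
  have hvm : v.Coprime m := Nat.Coprime.coprime_mul_left hum
  obtain ⟨a, ha1, ha2⟩ := Nat.chineseRemainder (Nat.Coprime.mul_right hpv hpm) x.val 1
  have hav : a ≡ 1 [MOD v] := ha2.of_dvd (dvd_mul_right _ _)
  have ham : a ≡ 1 [MOD m] := ha2.of_dvd (dvd_mul_left _ _)
  have hxa : ((a : ℤ) : ZMod p) = x := by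
    have := (ZMod.natCast_eq_natCast_iff _ _ _).mpr ha1
    rw [ZMod.natCast_zmod_val] at this
    simpa using this
  have hJp : jacobiSym (a : ℤ) p = -1 := by
    rw [← jacobiSym.legendreSym.to_jacobiSym, legendreSym.eq_neg_one_iff, hxa]; exact hx
  have hJv : jacobiSym (a : ℤ) v = 1 := by
    rw [jacobiSym.mod_left' (a₂ := 1), jacobiSym.one_left]
    have := Int.natCast_modEq_iff.mpr hav
    simpa [Int.ModEq] using this
  have hv0 : v ≠ 0 := by rintro rfl; simp at hu
  have hJ : jacobiSym (a : ℤ) (p * v) = -1 := by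
    rw [jacobiSym.mul_right' _ hp.ne_zero hv0, hJp, hJv]; norm_num
  refine ⟨a, ham, ?_, by simp [J, hJ]⟩
  by_contra hcon
  have := jacobiSym.eq_zero_iff.mpr ⟨mul_ne_zero hp.ne_zero hv0,
    (show (a : ℤ).gcd ((p * v : ℕ) : ℤ) ≠ 1 by rwa [Int.gcd_natCast_natCast])⟩
  rw [this] at hJ; norm_num at hJ

lemma sum_range_mul_left_coprime {q a : ℕ} (hq : 0 < q) (ha : a.Coprime q) (f : ℕ → ℂ)
    (hper : ∀ m, f (m % q) = f m) :
    ∑ m ∈ range q, f (a * m) = ∑ m ∈ range q, f m := by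
  have hinj : Set.InjOn (fun m => a * m % q) (range q) := by
    intro m hm m' hm' h
    have h1 : a * m ≡ a * m' [MOD q] := h
    have h2 := Nat.ModEq.cancel_left_of_coprime (by rwa [Nat.coprime_comm] at ha) h1
    rw [coe_range, Set.mem_Iio] at hm hm'
    exact Nat.ModEq.eq_of_lt_of_lt h2 hm hm'
  have himg : (range q).image (fun m => a * m % q) = range q := by
    refine Finset.eq_of_subset_of_card_le ?_ (by rw [Finset.card_image_of_injOn hinj])
    intro b hb
    obtain ⟨m, _, rfl⟩ := Finset.mem_image.mp hb
    exact mem_range.mpr (Nat.mod_lt _ hq)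
  conv_rhs => rw [← himg, Finset.sum_image hinj]
  exact Finset.sum_congr rfl fun m _ => (hper _).symm

/-- The character sum of `(·/l₁l₂)` over a complete period vanishes for distinct squarefree
`l₁, l₂`, because `l₁l₂` is then not a square. -/
lemma sum_J_mul_eq_zero {l₁ l₂ : ℕ} (h1 : Odd l₁) (h2 : Odd l₂) (s1 : Squarefree l₁)
    (s2 : Squarefree l₂) (hne : l₁ ≠ l₂) :
    ∑ m ∈ range (l₁ * l₂), J m l₁ * J m l₂ = 0 := by
  have hp1 : 0 < l₁ := h1.pos
  have hp2 : 0 < l₂ := h2.pos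
  set g := l₁.gcd l₂ with hg
  obtain ⟨x, hx⟩ := Nat.gcd_dvd_left l₁ l₂
  obtain ⟨y, hy⟩ := Nat.gcd_dvd_right l₁ l₂
  rw [← hg] at hx hy
  have hg0 : 0 < g := Nat.gcd_pos_of_pos_left _ hp1
  have hx0 : x ≠ 0 := by rintro rfl; omega
  have hy0 : y ≠ 0 := by rintro rfl; omega
  have hxy : x.Coprime y := by
    have : g.gcd g = g * (x.gcd y) := by
      rw [← Nat.gcd_mul_left, ← hx, ← hy, Nat.gcd_self]
    rw [Nat.gcd_self] at this
    exact Nat.eq_of_mul_eq_mul_left hg0 (by rw [mul_one]; exact this.symm)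
  have hgx : g.Coprime x := (Nat.squarefree_mul_iff.mp (hx ▸ s1)).1
  have hgy : g.Coprime y := (Nat.squarefree_mul_iff.mp (hy ▸ s2)).1
  have sx : Squarefree x := (Nat.squarefree_mul_iff.mp (hx ▸ s1)).2.2
  have sy : Squarefree y := (Nat.squarefree_mul_iff.mp (hy ▸ s2)).2.2
  have ox : Odd x := (Nat.odd_mul.mp (hx ▸ h1)).2
  have oy : Odd y := (Nat.odd_mul.mp (hy ▸ h2)).2
  have hu : 1 < x * y := by
    by_contra hcon
    have h3 : x * y = 1 := by
      have := Nat.pos_of_ne_zero (mul_ne_zero hx0 hy0); omega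
    have h4 := Nat.eq_one_of_mul_eq_one_right h3
    have h5 := Nat.eq_one_of_mul_eq_one_left h3
    rw [h4] at hx; rw [h5] at hy; omega
  obtain ⟨a, ham, hau, haJ⟩ := exists_jacobi_neg_one (u := x * y) (m := g) hu (ox.mul oy)
    ((Nat.squarefree_mul_iff).mpr ⟨hxy, sx, sy⟩) (Nat.Coprime.mul_left hgx.symm hgy.symm)
  have hag : a.Coprime g := by
    rw [Nat.Coprime, ham.gcd_eq]; simp
  have hJa : J a l₁ * J a l₂ = -1 := by
    rw [hx, hy, J_mul_right _ hg0.ne' hx0, J_mul_right _ hg0.ne' hy0]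
    rw [J_mul_right _ hx0 hy0] at haJ
    calc _ = (J a g * J a g) * (J a x * J a y) := by ring
      _ = -1 := by rw [J_sq_of_coprime hag, haJ, one_mul]
  have haq : a.Coprime (l₁ * l₂) := by
    rw [hx, hy]
    exact Nat.Coprime.mul_right (Nat.Coprime.mul_right hag (Nat.Coprime.coprime_mul_right_right hau))
      (Nat.Coprime.mul_right hag (Nat.Coprime.coprime_mul_left_right hau))
  have key := sum_range_mul_left_coprime (Nat.mul_pos hp1 hp2) haq (fun m => J m l₁ * J m l₂) (by
    intro m
    rw [← J_mod (m % (l₁ * l₂)) l₁, ← J_mod (m % (l₁ * l₂)) l₂, Nat.mod_mul_right_mod,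
      Nat.mod_mul_left_mod, J_mod, J_mod])
  have e : ∑ m ∈ range (l₁ * l₂), J (a * m) l₁ * J (a * m) l₂ =
      -∑ m ∈ range (l₁ * l₂), J m l₁ * J m l₂ := by
    rw [← Finset.sum_neg_distrib]
    refine Finset.sum_congr rfl fun m _ => ?_
    rw [J_mul_left, J_mul_left]
    calc _ = (J a l₁ * J a l₂) * (J m l₁ * J m l₂) := by ring
      _ = _ := by rw [hJa]; ring
  rw [e] at key
  have h2 : (2 : ℂ) * ∑ m ∈ range (l₁ * l₂), J m l₁ * J m l₂ = 0 := by linear_combination -key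
  simpa using h2

lemma J_periodic (m l k : ℕ) : J (m + k * l) l = J m l := by
  rw [← J_mod (m + k * l), Nat.add_mul_mod_self_right, J_mod]

/-- Completing the character sums over all rows gives the large sieve constant `X + n ^ 3`, up to
the row `0` which is included for convenience. -/
lemma LS_base (X n : ℕ) : LS (X + 1 + (n : ℝ) ^ 3) X n := by
  intro b
  have hsub : SF X ⊆ range (X + 1) := fun k hk => by
    rw [mem_SF] at hk; rw [mem_range]; omega
  have hcard : ((OS n).card : ℝ) ≤ n := by
    have : (OS n).card ≤ n := by
      simpa [OS] using Finset.card_filter_le (Icc 1 n) (fun l => Odd l ∧ Squarefree l)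
    exact_mod_cast this
  have hpair : ∀ l₁ ∈ OS n, ∀ l₂ ∈ OS n,
      ‖∑ k ∈ range (X + 1), J k l₁ * J k l₂‖ ≤ (if l₁ = l₂ then (X + 1 : ℝ) else 0) + (n : ℝ) ^ 2 := by
    intro l₁ h1 l₂ h2
    rw [mem_OS] at h1 h2
    have hb : ∀ m, ‖J m l₁ * J m l₂‖ ≤ 1 := fun m => by
      rw [norm_mul]
      exact mul_le_one₀ (norm_J_le _ _) (norm_nonneg _) (norm_J_le _ _)
    split_ifs with h
    · calc _ ≤ ∑ k ∈ range (X + 1), ‖J k l₁ * J k l₂‖ := norm_sum_le _ _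
        _ ≤ ∑ k ∈ range (X + 1), (1 : ℝ) := Finset.sum_le_sum fun k _ => hb k
        _ ≤ _ := by simp
    · have := norm_sum_range_periodic_le (q := l₁ * l₂) (Nat.mul_pos h1.1 h2.1)
        (fun m => J m l₁ * J m l₂)
        (fun m => by
          rw [mul_comm l₁ l₂, J_periodic, mul_comm l₂ l₁, J_periodic]) hb
        (sum_J_mul_eq_zero h1.2.2.1 h2.2.2.1 h1.2.2.2 h2.2.2.2 h) (X + 1)
      refine this.trans ?_
      rw [zero_add, sq]
      push_cast
      have a1 : (l₁ : ℝ) ≤ n := by exact_mod_cast h1.2.1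
      have a2 : (l₂ : ℝ) ≤ n := by exact_mod_cast h2.2.1
      gcongr
  set S : ℝ := ∑ k ∈ range (X + 1), ‖∑ l ∈ OS n, b l * J k l‖ ^ 2 with hS
  have expand : (S : ℂ) = ∑ l₁ ∈ OS n, ∑ l₂ ∈ OS n, b l₁ * (starRingEnd ℂ) (b l₂) *
      ∑ k ∈ range (X + 1), J k l₁ * J k l₂ := by
    rw [hS]; push_cast
    calc _ = ∑ k ∈ range (X + 1), ∑ l₁ ∈ OS n, ∑ l₂ ∈ OS n,
          b l₁ * (starRingEnd ℂ) (b l₂) * (J k l₁ * J k l₂) := by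
          refine Finset.sum_congr rfl fun k _ => ?_
          rw [← Complex.mul_conj', map_sum, Finset.sum_mul_sum]
          refine Finset.sum_congr rfl fun l₁ _ => Finset.sum_congr rfl fun l₂ _ => ?_
          rw [map_mul, conj_J]; ring
      _ = _ := by
          rw [Finset.sum_comm]
          refine Finset.sum_congr rfl fun l₁ _ => ?_
          rw [Finset.sum_comm]
          refine Finset.sum_congr rfl fun l₂ _ => ?_
          rw [Finset.mul_sum]
  have hS0 : 0 ≤ S := by positivity
  calc _ ≤ S := Finset.sum_le_sum_of_subset_of_nonneg hsub fun _ _ _ => by positivity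
    _ = ‖(S : ℂ)‖ := by rw [Complex.norm_real, Real.norm_of_nonneg hS0]
    _ ≤ ∑ l₁ ∈ OS n, ∑ l₂ ∈ OS n, ‖b l₁‖ * ‖b l₂‖ *
        ((if l₁ = l₂ then (X + 1 : ℝ) else 0) + (n : ℝ) ^ 2) := by
        rw [expand]
        refine (norm_sum_le _ _).trans (Finset.sum_le_sum fun l₁ h1 => ?_)
        refine (norm_sum_le _ _).trans (Finset.sum_le_sum fun l₂ h2 => ?_)
        rw [norm_mul, norm_mul, RCLike.norm_conj]
        gcongr
        exact hpair l₁ h1 l₂ h2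
    _ = (X + 1) * ∑ l ∈ OS n, ‖b l‖ ^ 2 + (n : ℝ) ^ 2 * (∑ l ∈ OS n, ‖b l‖) ^ 2 := by
        simp only [mul_add, Finset.sum_add_distrib]
        congr 1
        · rw [Finset.mul_sum]
          refine Finset.sum_congr rfl fun l hl => ?_
          simp only [mul_ite, mul_zero]
          rw [Finset.sum_ite_eq, if_pos hl]; ring
        · rw [sq (∑ l ∈ OS n, ‖b l‖), Finset.sum_mul_sum, Finset.mul_sum]
          refine Finset.sum_congr rfl fun l _ => ?_
          rw [Finset.mul_sum]
          exact Finset.sum_congr rfl fun l' _ => by ring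
    _ ≤ (X + 1) * ∑ l ∈ OS n, ‖b l‖ ^ 2 + (n : ℝ) ^ 2 * (n * ∑ l ∈ OS n, ‖b l‖ ^ 2) := by
        gcongr
        exact sq_sum_le_card_mul_sum_sq.trans (by gcongr)
    _ = _ := by ring

end QLS

namespace QLS

/-! ### Gauss sums -/

open Finset

/-- The Gauss sum `∑_{x mod q} (x/q) e(xh/q)`. -/
noncomputable def G (q : ℕ) (h : ℤ) : ℂ :=
  ∑ x ∈ range q, J x q * Complex.exp (2 * Real.pi * Complex.I * (x * h / q))

lemma exp_congr {q : ℕ} (hq : 0 < q) {x y : ℤ} (h : x ≡ y [ZMOD q]) :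
    Complex.exp (2 * Real.pi * Complex.I * (x / q)) =
      Complex.exp (2 * Real.pi * Complex.I * (y / q)) := by
  obtain ⟨k, hk⟩ := h.symm.dvd
  rw [Complex.exp_eq_exp_iff_exists_int]
  refine ⟨k, ?_⟩
  have hq' : (q : ℂ) ≠ 0 := by exact_mod_cast hq.ne'
  have : (x : ℂ) = y + q * k := by
    have : x = y + q * k := by linarith
    rw [this]; push_cast; ring
  rw [this]; field_simp

lemma G_congr {q : ℕ} (hq : 0 < q) {h h' : ℤ} (hh : h ≡ h' [ZMOD q]) : G q h = G q h' := by
  unfold G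
  refine Finset.sum_congr rfl fun x _ => ?_
  congr 1
  have := exp_congr hq (hh.mul_left (x : ℤ))
  push_cast at this
  exact this

/-- Multiplicativity of Gauss sums, by the Chinese remainder theorem. -/
lemma G_mul {m n : ℕ} (hm : 0 < m) (hn : 0 < n) (hmn : m.Coprime n) (h : ℤ) :
    G (m * n) h = J n m * J m n * (G m h * G n h) := by
  unfold G
  rw [Finset.sum_mul_sum, ← Finset.sum_product', Finset.mul_sum]
  symm
  have hinj : Set.InjOn (fun p : ℕ × ℕ => (p.1 * n + p.2 * m) % (m * n)) (range m ×ˢ range n) := by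
    rintro ⟨u, v⟩ huv ⟨u', v'⟩ huv' heq
    simp only [coe_range, Set.mem_prod, Set.mem_Iio] at huv huv'
    have h1 : u * n + v * m ≡ u' * n + v' * m [MOD m * n] := heq
    have h2 : u * n ≡ u' * n [MOD m] := by
      have := h1.of_mul_right n
      simpa [Nat.ModEq, Nat.add_mul_mod_self_right] using this
    have h3 : v * m ≡ v' * m [MOD n] := by
      have := h1.of_mul_left m
      simpa [Nat.ModEq, Nat.add_comm, Nat.add_mul_mod_self_right] using this
    have h4 := Nat.ModEq.cancel_right_of_coprime hmn h2
    have h5 := Nat.ModEq.cancel_right_of_coprime hmn.symm h3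
    rw [Nat.ModEq.eq_of_lt_of_lt h4 huv.1 huv'.1, Nat.ModEq.eq_of_lt_of_lt h5 huv.2 huv'.2]
  have himg : (range m ×ˢ range n).image (fun p : ℕ × ℕ => (p.1 * n + p.2 * m) % (m * n)) =
      range (m * n) := by
    refine Finset.eq_of_subset_of_card_le ?_ (by
      rw [Finset.card_image_of_injOn (by simpa using hinj)]; simp)
    intro b hb
    obtain ⟨p, _, rfl⟩ := Finset.mem_image.mp hb
    exact mem_range.mpr (Nat.mod_lt _ (Nat.mul_pos hm hn))
  rw [← himg, Finset.sum_image (by simpa using hinj)]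
  refine Finset.sum_congr rfl fun p _ => ?_
  obtain ⟨u, v⟩ := p
  dsimp only
  have hJ : J ((u * n + v * m) % (m * n)) (m * n) = J n m * J m n * (J u m * J v n) := by
    rw [J_mod, J_mul_right _ hm.ne' hn.ne', J_periodic, add_comm, J_periodic, J_mul_left,
      J_mul_left]
    ring
  have he : Complex.exp (2 * Real.pi * Complex.I *
        ((((u * n + v * m) % (m * n) : ℕ) : ℂ) * h / ((m * n : ℕ) : ℂ))) =
      Complex.exp (2 * Real.pi * Complex.I * (u * h / m)) *
        Complex.exp (2 * Real.pi * Complex.I * (v * h / n)) := by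
    have hmod : ((((u * n + v * m) % (m * n) : ℕ) : ℤ) * h) ≡ ((u * n + v * m : ℕ) : ℤ) * h
        [ZMOD ((m * n : ℕ) : ℤ)] := by
      refine Int.ModEq.mul_right _ ?_
      exact Int.natCast_modEq_iff.mpr (Nat.mod_modEq _ _)
    have := exp_congr (Nat.mul_pos hm hn) hmod
    rw [← Complex.exp_add]
    rw [Int.cast_mul, Int.cast_natCast] at this
    rw [this]
    congr 1
    have hm' : (m : ℂ) ≠ 0 := by exact_mod_cast hm.ne'
    have hn' : (n : ℂ) ≠ 0 := by exact_mod_cast hn.ne'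
    push_cast
    field_simp
  rw [hJ, he]; ring

lemma G_one (h : ℤ) : G 1 h = 1 := by simp [G, J]

lemma sum_J_prime {p : ℕ} (hp : p.Prime) (hp2 : p ≠ 2) : ∑ x ∈ range p, J x p = 0 := by
  have := sum_J_mul_eq_zero (l₁ := p) (l₂ := 1) (hp.odd_of_ne_two hp2) odd_one hp.squarefree
    squarefree_one hp.one_lt.ne'
  simpa [J_one_right] using this

lemma G_prime {p : ℕ} (hp : p.Prime) (hp2 : p ≠ 2) (h : ℤ) :
    G p h = (jacobiSym h p : ℂ) * G p 1 := by
  obtain ⟨k, hk⟩ : ∃ k : ℕ, h ≡ (k : ℤ) [ZMOD p] := by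
    refine ⟨(h % p).toNat, ?_⟩
    rw [Int.toNat_of_nonneg (Int.emod_nonneg _ (by exact_mod_cast hp.ne_zero))]
    exact (Int.mod_modEq _ _).symm
  rw [G_congr hp.pos hk, jacobiSym.mod_left' hk]
  change _ = J k p * _
  by_cases hc : k.Coprime p
  · have := sum_range_mul_left_coprime hp.pos hc
      (fun m => J m p * Complex.exp (2 * Real.pi * Complex.I * (m * ((1 : ℤ) : ℂ) / p))) (by
        intro m
        rw [J_mod]
        congr 1
        have := exp_congr hp.pos (Int.natCast_modEq_iff.mpr (Nat.mod_modEq m p))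
        rw [Int.cast_natCast, Int.cast_natCast] at this
        rw [Int.cast_one, mul_one, mul_one, this])
    change _ = G p 1 at this
    rw [← this, Finset.mul_sum]
    unfold G
    refine Finset.sum_congr rfl fun x _ => ?_
    rw [J_mul_left]
    calc _ = (J k p * J k p) * (J x p *
          Complex.exp (2 * Real.pi * Complex.I * (x * ((k : ℤ) : ℂ) / p))) := by
          rw [J_sq_of_coprime hc, one_mul]
      _ = _ := by push_cast; ring_nf
  · rw [J_eq_zero hp.ne_zero hc, zero_mul]
    have h0 : (k : ℤ) ≡ 0 [ZMOD p] := by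
      rw [Int.modEq_zero_iff_dvd, Int.natCast_dvd_natCast]
      by_contra hcon
      exact hc ((Nat.Prime.coprime_iff_not_dvd hp).mpr hcon).symm
    rw [G_congr hp.pos h0]
    unfold G
    simpa using sum_J_prime hp hp2

lemma norm_G_prime {p : ℕ} (hp : p.Prime) (hp2 : p ≠ 2) : ‖G p 1‖ ^ 2 = p := by
  have : Fact p.Prime := ⟨hp⟩
  set χ : MulChar (ZMod p) ℂ := (quadraticChar (ZMod p)).ringHomComp (Int.castRingHom ℂ) with hχ
  have hq : χ.IsQuadratic := (quadraticChar_isQuadratic (ZMod p)).comp _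
  have hne : χ ≠ 1 := by
    have h1 := quadraticChar_ne_one (F := ZMod p) (by rw [ZMod.ringChar_zmod_n]; exact hp2)
    rw [MulChar.ne_one_iff] at h1 ⊢
    obtain ⟨a, ha⟩ := h1
    refine ⟨a, fun h => ha ?_⟩
    simpa [hχ, MulChar.ringHomComp_apply] using h
  have hG : G p 1 = gaussSum χ ZMod.stdAddChar := by
    unfold G gaussSum
    refine Finset.sum_bij' (fun x _ => (x : ZMod p)) (fun a _ => a.val) (fun _ _ => mem_univ _)
      (fun a _ => mem_range.mpr (ZMod.val_lt a)) ?_ (fun a _ => ZMod.natCast_zmod_val a) ?_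
    · intro x hx; exact ZMod.val_cast_of_lt (mem_range.mp hx)
    · intro x _
      have e1 : χ (x : ZMod p) = J x p := by
        simp only [hχ, MulChar.ringHomComp_apply, J]
        rw [← jacobiSym.legendreSym.to_jacobiSym]
        simp [legendreSym]
      have e2 := ZMod.stdAddChar_coe (N := p) (x : ℤ)
      push_cast at e2
      rw [e1, e2]
      push_cast; ring_nf
  have h2 := gaussSum_sq hne hq (ZMod.isPrimitive_stdAddChar p)
  rw [← norm_pow, hG, h2, norm_mul, ZMod.card, Complex.norm_natCast]
  have h3 : χ (-1) * χ (-1) = 1 := by rw [← map_mul]; simp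
  have h4 : ‖χ (-1)‖ * ‖χ (-1)‖ = 1 := by rw [← norm_mul, h3, norm_one]
  have h5 : ‖χ (-1)‖ = 1 := by nlinarith [norm_nonneg (χ (-1))]
  rw [h5, one_mul]

lemma jacobi_mul_right_cast (h : ℤ) {m n : ℕ} (hm : m ≠ 0) (hn : n ≠ 0) :
    ((jacobiSym h (m * n) : ℤ) : ℂ) = (jacobiSym h m : ℂ) * (jacobiSym h n : ℂ) := by
  rw [jacobiSym.mul_right' _ hm hn]; push_cast; rfl

/-- For odd squarefree `q` the Gauss sum at every frequency is the one at frequency `1` times the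
symbol, and has modulus `√q`. -/
lemma G_twist_norm (q : ℕ) (hodd : Odd q) (hsq : Squarefree q) :
    (∀ h : ℤ, G q h = (jacobiSym h q : ℂ) * G q 1) ∧ ‖G q 1‖ ^ 2 = q := by
  induction q using Nat.strong_induction_on with
  | _ q ih =>
    rcases Nat.lt_or_ge 1 q with h1 | h1
    · obtain ⟨p, hp, m, rfl⟩ := Nat.exists_prime_and_dvd h1.ne'
      have hm0 : 0 < m := Nat.pos_of_ne_zero (by rintro rfl; simp at h1)
      have hp2 : p ≠ 2 := by rintro rfl; exact (Nat.not_odd_iff_even.mpr ⟨m, by ring⟩) hodd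
      obtain ⟨hpm, -, hms⟩ := Nat.squarefree_mul_iff.mp hsq
      obtain ⟨ihm1, ihm2⟩ := ih m (by nlinarith [hp.one_lt]) (Nat.odd_mul.mp hodd).2 hms
      refine ⟨fun h => ?_, ?_⟩
      · rw [G_mul hp.pos hm0 hpm, G_mul hp.pos hm0 hpm, G_prime hp hp2 h, ihm1 h,
          jacobi_mul_right_cast _ hp.ne_zero hm0.ne']
        ring
      · rw [G_mul hp.pos hm0 hpm]
        have e1 : ‖J m p‖ = 1 := by
          have := congrArg norm (J_sq_of_coprime hpm.symm)
          rw [norm_mul, norm_one] at this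
          nlinarith [norm_nonneg (J m p)]
        have e2 : ‖J p m‖ = 1 := by
          have := congrArg norm (J_sq_of_coprime hpm)
          rw [norm_mul, norm_one] at this
          nlinarith [norm_nonneg (J p m)]
        rw [norm_mul, norm_mul, e1, e2, norm_mul, one_mul, one_mul, mul_pow, ihm2,
          norm_G_prime hp hp2]
        push_cast; ring
    · have : q = 1 := by have := hodd.pos; omega
      subst this
      simp [G_one]

/-- The normalised Gauss sum, a unimodular number for odd squarefree moduli. -/
noncomputable def gam (q : ℕ) : ℂ := G q 1 / (Real.sqrt q : ℂ)

lemma norm_gam {q : ℕ} (hodd : Odd q) (hsq : Squarefree q) : ‖gam q‖ = 1 := by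
  have h := (G_twist_norm q hodd hsq).2
  have hq : (0 : ℝ) < q := by exact_mod_cast hodd.pos
  rw [gam, norm_div, Complex.norm_real, Real.norm_of_nonneg (Real.sqrt_nonneg _), ← h,
    Real.sqrt_sq (norm_nonneg _), div_self]
  intro h0; rw [h0] at h; norm_num at h; linarith

lemma gam_mul {m n : ℕ} (hm : 0 < m) (hn : 0 < n) (hmn : m.Coprime n) :
    gam (m * n) = J n m * J m n * (gam m * gam n) := by
  unfold gam
  rw [G_mul hm hn hmn]
  push_cast
  rw [Real.sqrt_mul (Nat.cast_nonneg _)]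
  push_cast
  have h1 : ((Real.sqrt m : ℝ) : ℂ) ≠ 0 := by
    norm_cast; exact (Real.sqrt_pos.mpr (by exact_mod_cast hm)).ne'
  have h2 : ((Real.sqrt n : ℝ) : ℂ) ≠ 0 := by
    norm_cast; exact (Real.sqrt_pos.mpr (by exact_mod_cast hn)).ne'
  field_simp

lemma conj_gam {q : ℕ} (hodd : Odd q) (hsq : Squarefree q) :
    (starRingEnd ℂ) (gam q) = (jacobiSym (-1) q : ℂ) * gam q := by
  have h1 := (G_twist_norm q hodd hsq).1 (-1)
  have h2 : (starRingEnd ℂ) (G q 1) = G q (-1) := by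
    unfold G
    rw [map_sum]
    refine Finset.sum_congr rfl fun x _ => ?_
    rw [map_mul, conj_J, ← Complex.exp_conj]
    congr 2
    simp only [map_mul, map_div₀, Complex.conj_ofReal, Complex.conj_I, map_natCast, map_ofNat,
      Int.cast_neg, Int.cast_one, map_one]
    ring
  rw [gam, map_div₀, h2, h1, Complex.conj_ofReal, mul_div_assoc]

lemma gam_sq {q : ℕ} (h4 : q % 4 = 1) (hsq : Squarefree q) :
    gam q * gam q = 1 ∧ (starRingEnd ℂ) (gam q) = gam q := by
  have hodd : Odd q := Nat.odd_iff.mpr (by omega)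
  have h := conj_gam hodd hsq
  have hJ : jacobiSym (-1) q = 1 := by
    rw [jacobiSym.at_neg_one hodd, ZMod.χ₄_nat_one_mod_four h4]
  rw [hJ] at h
  simp only [Int.cast_one, one_mul] at h
  refine ⟨?_, h⟩
  have h2 := Complex.conj_mul' (gam q)
  rw [h, norm_gam hodd hsq] at h2
  simpa using h2

/-- Reciprocity sign. -/
lemma J_mul_J_swap {m n : ℕ} (hm : Odd m) (hn : Odd n) (hmn : m.Coprime n) :
    J n m * J m n = if m % 4 = 3 ∧ n % 4 = 3 then -1 else 1 := by
  have h := J_sq_of_coprime hmn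
  rcases Nat.odd_mod_four_iff.mp (Nat.odd_iff.mp hm) with h1 | h1
  · rw [if_neg (by omega)]
    have : J m n = J n m := by
      unfold J; rw [jacobiSym.quadratic_reciprocity_one_mod_four h1 hn]
    rw [← this, h]
  · rcases Nat.odd_mod_four_iff.mp (Nat.odd_iff.mp hn) with h2 | h2
    · rw [if_neg (by omega)]
      have : J m n = J n m := by
        unfold J; rw [jacobiSym.quadratic_reciprocity_one_mod_four' hm h2]
      rw [← this, h]
    · rw [if_pos ⟨h1, h2⟩]
      have : J m n = - J n m := by
        unfold J; rw [jacobiSym.quadratic_reciprocity_three_mod_four h1 h2]; simp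
      rw [this] at h ⊢
      linear_combination -h

/-- The normalised Gauss sum attached to a pair of columns `gl₁ ≡ gl₂ (mod 4)` splits as a
product of a function of `gl₁` and a function of `gl₂`. -/
lemma gam_pair {g l₁ l₂ : ℕ} (h1 : Odd (g * l₁)) (h2 : Odd (g * l₂)) (s1 : Squarefree (g * l₁))
    (s2 : Squarefree (g * l₂)) (hc : l₁.Coprime l₂) (h4 : g * l₁ % 4 = g * l₂ % 4) :
    gam (g * l₁) * (starRingEnd ℂ) (gam (g * l₂)) = gam (l₁ * l₂) := by
  obtain ⟨c1, sg, sl1⟩ := Nat.squarefree_mul_iff.mp s1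
  obtain ⟨c2, -, sl2⟩ := Nat.squarefree_mul_iff.mp s2
  obtain ⟨og, o1⟩ := Nat.odd_mul.mp h1
  obtain ⟨-, o2⟩ := Nat.odd_mul.mp h2
  rw [gam_mul og.pos o1.pos c1, gam_mul og.pos o2.pos c2, gam_mul o1.pos o2.pos hc,
    J_mul_J_swap og o1 c1, J_mul_J_swap og o2 c2, J_mul_J_swap o1 o2 hc]
  simp only [map_mul]
  rw [conj_gam o2 sl2, jacobiSym.at_neg_one o2]
  have hg : gam g * (starRingEnd ℂ) (gam g) = 1 := by
    rw [Complex.mul_conj', norm_gam og sg]; simp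
  have hmod1 := Nat.mul_mod g l₁ 4
  have hmod2 := Nat.mul_mod g l₂ 4
  rcases Nat.odd_mod_four_iff.mp (Nat.odd_iff.mp og) with a | a <;>
  rcases Nat.odd_mod_four_iff.mp (Nat.odd_iff.mp o1) with b | b <;>
  rcases Nat.odd_mod_four_iff.mp (Nat.odd_iff.mp o2) with c | c <;>
  simp only [a, b, c] at hmod1 hmod2 ⊢ <;>
  first
  | (exfalso; omega)
  | (first
     | rw [ZMod.χ₄_nat_one_mod_four c]
     | rw [ZMod.χ₄_nat_three_mod_four c]
     simp
     linear_combination (gam l₁ * gam l₂) * hg)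

end QLS

namespace QLS

/-! ### The theta transformation for Jacobi symbols -/

open Finset

/-- The Gaussian weight `exp(-πx²)`. -/
noncomputable def W (x : ℝ) : ℝ := Real.exp (-Real.pi * x ^ 2)

lemma W_pos (x : ℝ) : 0 < W x := Real.exp_pos _

lemma W_le_one (x : ℝ) : W x ≤ 1 := by
  unfold W; rw [Real.exp_le_one_iff]; nlinarith [Real.pi_pos, sq_nonneg x]

lemma W_neg (x : ℝ) : W (-x) = W x := by simp [W]

/-- Two-sided Gaussian sums converge. -/
lemma summable_W_int {t : ℝ} (ht : 0 < t) : Summable fun n : ℤ => W (n * t) := by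
  have h := (summable_jacobiTheta₂_term_iff 0 (Complex.I * (t ^ 2 : ℝ))).mpr (by
    rw [Complex.I_mul_im, Complex.ofReal_re]; positivity)
  have h2 := h.norm
  refine h2.congr fun n => ?_
  rw [norm_jacobiTheta₂_term]
  simp only [Complex.I_mul_im, Complex.ofReal_re, Complex.zero_im, mul_zero, sub_zero, W]
  congr 1; ring

lemma summable_W_nat {t : ℝ} (ht : 0 < t) : Summable fun n : ℕ => W (n * t) := by
  have := (summable_W_int ht).comp_injective (i := fun n : ℕ => (n : ℤ)) Nat.cast_injective
  simpa [Function.comp_def] using this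

lemma norm_jacobi_le (m : ℤ) (q : ℕ) : ‖((jacobiSym m q : ℤ) : ℂ)‖ ≤ 1 := by
  rcases jacobiSym.trichotomy m q with h | h | h <;> simp [h]

lemma summable_int_JW (q : ℕ) {t : ℝ} (ht : 0 < t) :
    Summable fun n : ℤ => ((jacobiSym n q : ℤ) : ℂ) * (W (n * t) : ℂ) := by
  refine Summable.of_norm_bounded (summable_W_int ht) fun n => ?_
  rw [norm_mul, Complex.norm_real, Real.norm_of_nonneg (W_pos _).le]
  exact mul_le_of_le_one_left (W_pos _).le (norm_jacobi_le _ _)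

lemma summable_nat_JW (q : ℕ) {t : ℝ} (ht : 0 < t) :
    Summable fun n : ℕ => J n q * (W (n * t) : ℂ) := by
  refine Summable.of_norm_bounded (summable_W_nat ht) fun n => ?_
  rw [norm_mul, Complex.norm_real, Real.norm_of_nonneg (W_pos _).le]
  exact mul_le_of_le_one_left (W_pos _).le (norm_jacobi_le _ _)

/-- Poisson summation in one residue class. -/
lemma poisson_class {q : ℕ} (hq : 0 < q) (x : ℕ) {t : ℝ} (ht : 0 < t) :
    ∑' n : ℤ, (W (n * (1 / (t * q))) : ℂ) *
        Complex.exp (2 * Real.pi * Complex.I * (x * ((-n : ℤ) : ℂ) / q)) =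
      (t * q) * ∑' n : ℤ, (W ((n * q + x) * t) : ℂ) := by
  have hqr : (0 : ℝ) < q := by exact_mod_cast hq
  have hqc : (q : ℂ) ≠ 0 := by exact_mod_cast hq.ne'
  have htc : (t : ℂ) ≠ 0 := by exact_mod_cast ht.ne'
  have h := Complex.tsum_exp_neg_quadratic (a := (((1 / (t * q)) ^ 2 : ℝ) : ℂ)) (by
    rw [Complex.ofReal_re]; positivity) (-Complex.I * x / q)
  have e1 : ((((1 / (t * q)) ^ 2 : ℝ) : ℂ)) ^ (1 / 2 : ℂ) = ((1 / (t * q) : ℝ) : ℂ) := by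
    have : ((1 / 2 : ℝ) : ℂ) = (1 / 2 : ℂ) := by push_cast; ring
    rw [← this, ← Complex.ofReal_cpow (by positivity), ← Real.sqrt_eq_rpow,
      Real.sqrt_sq (by positivity)]
  rw [e1] at h
  convert h using 1
  · refine tsum_congr fun n => ?_
    rw [W, Complex.ofReal_exp, ← Complex.exp_add]
    congr 1
    push_cast
    field_simp
  · congr 1
    · push_cast; field_simp
    · refine tsum_congr fun n => ?_
      rw [W, Complex.ofReal_exp]
      congr 1
      push_cast
      have : (n : ℂ) + Complex.I * (-Complex.I * x / q) = (n * q + x) / q := by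
        field_simp
        linear_combination (-(x : ℂ)) * Complex.I_sq
      rw [this]
      field_simp

/-- The twisted theta transformation for the Jacobi symbol modulo `q ≡ 1 (mod 4)`. -/
lemma theta_int {q : ℕ} (h4 : q % 4 = 1) (hsq : Squarefree q) {t : ℝ} (ht : 0 < t) :
    ∑' n : ℤ, ((jacobiSym n q : ℤ) : ℂ) * (W (n * t) : ℂ) =
      gam q / (t * Real.sqrt q) *
        ∑' n : ℤ, ((jacobiSym n q : ℤ) : ℂ) * (W (n * (1 / (t * q))) : ℂ) := by
  have hodd : Odd q := Nat.odd_iff.mpr (by omega)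
  have hq := hodd.pos
  have hqr : (0 : ℝ) < q := by exact_mod_cast hq
  have hqc : (q : ℂ) ≠ 0 := by exact_mod_cast hq.ne'
  have htc : (t : ℂ) ≠ 0 := by exact_mod_cast ht.ne'
  have hs : ((Real.sqrt q : ℝ) : ℂ) * (Real.sqrt q : ℝ) = q := by
    rw [← Complex.ofReal_mul, Real.mul_self_sqrt hqr.le, Complex.ofReal_natCast]
  have hs0 : ((Real.sqrt q : ℝ) : ℂ) ≠ 0 := by
    intro h0; rw [h0] at hs; simp at hs; exact hqc hs.symm
  have : NeZero q := ⟨hq.ne'⟩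
  have hJ : ∀ n : ℤ, jacobiSym (-n) q = jacobiSym n q := by
    intro n
    rw [neg_eq_neg_one_mul, jacobiSym.mul_left, jacobiSym.at_neg_one hodd,
      ZMod.χ₄_nat_one_mod_four h4, one_mul]
  -- residue decomposition of the left side
  have h1 : ∑' n : ℤ, ((jacobiSym n q : ℤ) : ℂ) * (W (n * t) : ℂ) =
      ∑ x ∈ range q, J x q * ∑' n : ℤ, (W ((n * q + x) * t) : ℂ) := by
    rw [← (Int.divModEquiv q).symm.tsum_eq]
    have hsum := (Int.divModEquiv q).symm.summable_iff.mpr (summable_int_JW q ht)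
    rw [← (Equiv.prodComm (Fin q) ℤ).tsum_eq]
    have hsum2 := (Equiv.prodComm (Fin q) ℤ).summable_iff.mpr hsum
    refine (Summable.tsum_prod' hsum2 (fun b => hsum2.prod_factor b)).trans ?_
    rw [tsum_fintype, ← Fin.sum_univ_eq_sum_range (fun x => J x q * ∑' n : ℤ, (W ((n * q + x) * t) : ℂ))]
    refine Finset.sum_congr rfl fun x _ => ?_
    rw [← tsum_mul_left]
    refine tsum_congr fun n => ?_
    simp only [Function.comp_apply, Equiv.prodComm_apply, Prod.swap_prod_mk, Int.divModEquiv_symm_apply]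
    have : jacobiSym (n * q + (x : ℕ)) q = jacobiSym (x : ℕ) q := by
      apply jacobiSym.mod_left'
      simp
    rw [this]
    push_cast
    rfl
  -- Gauss sums on the right side
  have h2 : G q 1 * ∑' n : ℤ, ((jacobiSym n q : ℤ) : ℂ) * (W (n * (1 / (t * q))) : ℂ) =
      ∑ x ∈ range q, J x q * ∑' n : ℤ, (W (n * (1 / (t * q))) : ℂ) *
        Complex.exp (2 * Real.pi * Complex.I * (x * ((-n : ℤ) : ℂ) / q)) := by
    have hsx : ∀ x ∈ range q, Summable fun n : ℤ => J x q * ((W (n * (1 / (t * q))) : ℂ) *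
        Complex.exp (2 * Real.pi * Complex.I * (x * ((-n : ℤ) : ℂ) / q))) := by
      intro x _
      refine Summable.mul_left _ (Summable.of_norm_bounded
        (summable_W_int (t := 1 / (t * q)) (by positivity)) fun n => ?_)
      rw [norm_mul, Complex.norm_real, Real.norm_of_nonneg (W_pos _).le]
      have : (2 * Real.pi * Complex.I * (x * ((-n : ℤ) : ℂ) / q)) =
          ((2 * Real.pi * (x * (-n) / q) : ℝ) : ℂ) * Complex.I := by push_cast; ring
      rw [this, Complex.norm_exp_ofReal_mul_I, mul_one]
    simp_rw [← tsum_mul_left]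
    rw [← Summable.tsum_finsetSum hsx]
    refine tsum_congr fun n => ?_
    have := (G_twist_norm q hodd hsq).1 (-n)
    rw [hJ n] at this
    rw [← mul_assoc, mul_comm (G q 1), ← this, G, sum_mul]
    refine Finset.sum_congr rfl fun x _ => by ring
  have h3 : G q 1 * ∑' n : ℤ, ((jacobiSym n q : ℤ) : ℂ) * (W (n * (1 / (t * q))) : ℂ) =
      (t * q) * ∑' n : ℤ, ((jacobiSym n q : ℤ) : ℂ) * (W (n * t) : ℂ) := by
    rw [h2, h1, mul_sum]
    refine Finset.sum_congr rfl fun x _ => ?_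
    rw [poisson_class hq x ht]; ring
  have h4 : gam q / (t * Real.sqrt q) *
        ∑' n : ℤ, ((jacobiSym n q : ℤ) : ℂ) * (W (n * (1 / (t * q))) : ℂ) =
      (1 / (t * q)) * (G q 1 *
        ∑' n : ℤ, ((jacobiSym n q : ℤ) : ℂ) * (W (n * (1 / (t * q))) : ℂ)) := by
    rw [gam, ← hs]; field_simp
  rw [h4, h3, ← mul_assoc, one_div, inv_mul_cancel₀ (mul_ne_zero htc hqc), one_mul]

lemma int_to_nat {q : ℕ} (h4 : q % 4 = 1) {t : ℝ} (ht : 0 < t) :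
    ∑' n : ℤ, ((jacobiSym n q : ℤ) : ℂ) * (W (n * t) : ℂ) =
      2 * ∑' n : ℕ, J n q * (W (n * t) : ℂ) - J 0 q := by
  have hodd : Odd q := Nat.odd_iff.mpr (by omega)
  have hJ : ∀ n : ℤ, jacobiSym (-n) q = jacobiSym n q := by
    intro n
    rw [neg_eq_neg_one_mul, jacobiSym.mul_left, jacobiSym.at_neg_one hodd,
      ZMod.χ₄_nat_one_mod_four h4, one_mul]
  have hs := (summable_nat_JW q ht).hasSum
  have := HasSum.of_nat_of_neg (f := fun n : ℤ => ((jacobiSym n q : ℤ) : ℂ) * (W (n * t) : ℂ))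
    (g := ∑' n : ℕ, J n q * (W (n * t) : ℂ)) (g' := ∑' n : ℕ, J n q * (W (n * t) : ℂ))
    (by simpa [J] using hs) (by
      simp only [hJ]
      simpa [J, W_neg] using hs)
  rw [this.tsum_eq]
  simp [J, W]; ring

/-- One-sided form of the theta transformation; the symbol `(0/q)` is `1` for `q = 1` and
vanishes otherwise. -/
lemma theta_nat {q : ℕ} (h4 : q % 4 = 1) (hsq : Squarefree q) {t : ℝ} (ht : 0 < t) :
    2 * ∑' n : ℕ, J n q * (W (n * t) : ℂ) - J 0 q =
      gam q / (t * Real.sqrt q) *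
        (2 * ∑' n : ℕ, J n q * (W (n * (1 / (t * q))) : ℂ) - J 0 q) := by
  have hq : (0 : ℝ) < q := by exact_mod_cast (by omega : 0 < q)
  rw [← int_to_nat h4 ht, ← int_to_nat h4 (by positivity), theta_int h4 hsq ht]

end QLS

namespace QLS

/-! ### Euler summation and Mellin superpositions -/

open Finset MeasureTheory

/-- `f` is an absolutely convergent superposition of the powers `y^{-(σ+2iτ)}`. -/
def SepRep (σ : ℝ) (f : ℝ → ℝ) : Prop :=
  ∃ ρ : ℝ → ℂ, Integrable ρ ∧ ∀ y : ℝ, 0 < y →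
    (f y : ℂ) = ∫ τ : ℝ, ρ τ * (y : ℂ) ^ (-((σ : ℂ) + 2 * τ * Complex.I))

lemma integrable_Gamma_vertical {κ : ℝ} (hκ : 0 < κ) :
    Integrable fun τ : ℝ => Complex.Gamma (κ + τ * Complex.I) := by
  have hcont : Continuous fun τ : ℝ => Complex.Gamma (κ + τ * Complex.I) := by
    rw [continuous_iff_continuousAt]
    intro τ
    have h1 : ContinuousAt Complex.Gamma (κ + τ * Complex.I) := by
      apply (Complex.differentiableAt_Gamma _ _).continuousAt
      intro m h
      have := congrArg Complex.re h
      simp at this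
      have hm : (0 : ℝ) ≤ m := Nat.cast_nonneg m
      linarith
    exact ContinuousAt.comp (f := fun τ : ℝ => (κ : ℂ) + τ * Complex.I) h1 (by fun_prop)
  have hnorm : ∀ s : ℂ, 0 < s.re → ‖Complex.Gamma s‖ ≤ Real.Gamma s.re := by
    intro s hs
    rw [Complex.Gamma_eq_integral hs, Real.Gamma_eq_integral hs, Complex.GammaIntegral]
    refine (norm_integral_le_integral_norm _).trans (le_of_eq ?_)
    refine setIntegral_congr_fun measurableSet_Ioi fun x hx => ?_
    rw [norm_mul, Complex.norm_real, Real.norm_of_nonneg (Real.exp_pos _).le,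
      Complex.norm_cpow_eq_rpow_re_of_pos hx]
    simp
  refine Integrable.mono' (g := fun τ : ℝ => (Real.Gamma (κ + 2) / min 1 (κ ^ 2)) * (1 + τ ^ 2)⁻¹)
    (integrable_inv_one_add_sq.const_mul _) hcont.aestronglyMeasurable
    (Filter.Eventually.of_forall fun τ => ?_)
  set s : ℂ := κ + τ * Complex.I with hs
  have hre : s.re = κ := by simp [hs]
  have him : s.im = τ := by simp [hs]
  have hs0 : s ≠ 0 := fun h => by rw [h] at hre; simp at hre; linarith
  have hs1 : s + 1 ≠ 0 := fun h => by
    have := congrArg Complex.re h; simp [hre] at this; linarith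
  have h2 : Complex.Gamma (s + 2) = (s + 1) * s * Complex.Gamma s := by
    rw [show s + 2 = (s + 1) + 1 by ring, Complex.Gamma_add_one _ hs1, Complex.Gamma_add_one _ hs0]
    ring
  have h3 := hnorm (s + 2) (by simp [hre]; linarith)
  rw [h2, norm_mul, norm_mul] at h3
  have hre2 : (s + 2).re = κ + 2 := by simp [hre]
  rw [hre2] at h3
  have e1 : ‖s‖ ^ 2 = κ ^ 2 + τ ^ 2 := by
    rw [Complex.sq_norm, Complex.normSq_apply, hre, him]; ring
  have e2 : ‖s + 1‖ ^ 2 = (κ + 1) ^ 2 + τ ^ 2 := by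
    rw [Complex.sq_norm, Complex.normSq_apply]; simp [hre, him]; ring
  have e3 : ‖s‖ ≤ ‖s + 1‖ := by
    refine (sq_le_sq₀ (norm_nonneg _) (norm_nonneg _)).mp ?_
    rw [e1, e2]; nlinarith
  have hm : 0 < min 1 (κ ^ 2) := lt_min one_pos (by positivity)
  have e4 : min 1 (κ ^ 2) * (1 + τ ^ 2) ≤ ‖s + 1‖ * ‖s‖ := by
    have : min 1 (κ ^ 2) * (1 + τ ^ 2) ≤ κ ^ 2 + τ ^ 2 := by
      nlinarith [min_le_left 1 (κ ^ 2), min_le_right 1 (κ ^ 2), sq_nonneg τ]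
    nlinarith [norm_nonneg s]
  rw [div_mul_eq_mul_div, le_div_iff₀ hm, ← div_eq_mul_inv, le_div_iff₀ (by positivity)]
  calc _ = (min 1 (κ ^ 2) * (1 + τ ^ 2)) * ‖Complex.Gamma s‖ := by ring
    _ ≤ (‖s + 1‖ * ‖s‖) * ‖Complex.Gamma s‖ := by gcongr
    _ ≤ _ := h3

/-- Mellin inversion for the exponential. -/
lemma exp_mellin {κ : ℝ} (hκ : 0 < κ) {u : ℝ} (hu : 0 < u) :
    ((Real.exp (-u) : ℝ) : ℂ) = ∫ τ : ℝ, (1 / (2 * Real.pi)) * Complex.Gamma (κ + τ * Complex.I) *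
      (u : ℂ) ^ (-((κ : ℂ) + τ * Complex.I)) := by
  have hmel : ∀ s : ℂ, 0 < s.re →
      mellin (fun x : ℝ => ((Real.exp (-x) : ℝ) : ℂ)) s = Complex.Gamma s := by
    intro s hs
    rw [Complex.Gamma_eq_integral hs, Complex.GammaIntegral, mellin]
    refine setIntegral_congr_fun measurableSet_Ioi fun x _ => ?_
    simp only [smul_eq_mul]; ring
  have h := mellinInv_mellin_eq κ (fun x : ℝ => ((Real.exp (-x) : ℝ) : ℂ)) hu (by
    have := Complex.GammaIntegral_convergent (s := κ) (by simpa using hκ)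
    refine this.congr_fun (fun x _ => ?_) measurableSet_Ioi
    simp only [smul_eq_mul]; ring) (by
    refine (integrable_Gamma_vertical hκ).congr (Filter.Eventually.of_forall fun τ => ?_)
    dsimp only
    rw [hmel]; simpa using hκ) (by fun_prop)
  rw [← h, mellinInv, Complex.real_smul, ← integral_const_mul]
  refine integral_congr_ae (Filter.Eventually.of_forall fun τ => ?_)
  dsimp only
  rw [hmel _ (by simpa using hκ)]
  push_cast
  simp only [smul_eq_mul]; ring

lemma pi_mul_sq_cpow {y : ℝ} (hy : 0 < y) (z : ℂ) :
    ((Real.pi * y ^ 2 : ℝ) : ℂ) ^ z = (Real.pi : ℂ) ^ z * (y : ℂ) ^ (2 * z) := by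
  have hy0 : (y : ℂ) ≠ 0 := by exact_mod_cast hy.ne'
  rw [Complex.ofReal_mul, Complex.mul_cpow_ofReal_nonneg Real.pi_pos.le (by positivity), sq,
    Complex.ofReal_mul, Complex.mul_cpow_ofReal_nonneg hy.le hy.le, ← Complex.cpow_add _ _ hy0,
    two_mul]

lemma sepRep_W {σ : ℝ} (hσ : 0 < σ) : SepRep σ W := by
  have hκ : 0 < σ / 2 := by positivity
  refine ⟨fun τ => (1 / (2 * Real.pi)) * Complex.Gamma ((σ / 2 : ℝ) + τ * Complex.I) *
    (Real.pi : ℂ) ^ (-(((σ / 2 : ℝ) : ℂ) + τ * Complex.I)), ?_, fun y hy => ?_⟩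
  · refine (((integrable_Gamma_vertical hκ).const_mul _).mul_bdd (c := Real.pi ^ (-(σ / 2)))
      (Continuous.aestronglyMeasurable ?_) (Filter.Eventually.of_forall fun τ => ?_))
    · have : (Real.pi : ℂ) ≠ 0 := by exact_mod_cast Real.pi_ne_zero
      exact Continuous.const_cpow (by fun_prop) (Or.inl this)
    · rw [Complex.norm_cpow_eq_rpow_re_of_pos Real.pi_pos]; simp
  · rw [W, neg_mul, exp_mellin hκ (by positivity : (0 : ℝ) < Real.pi * y ^ 2)]
    refine integral_congr_ae (Filter.Eventually.of_forall fun τ => ?_)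
    dsimp only
    rw [pi_mul_sq_cpow hy, mul_assoc, mul_assoc, mul_assoc]
    congr 4
    push_cast; ring

/-- `φ(x) = πx² e^{-πx²}`. -/
noncomputable def phi (x : ℝ) : ℝ := Real.pi * x ^ 2 * W x

lemma sepRep_phi {σ : ℝ} (hσ : 0 < σ) : SepRep σ phi := by
  have hκ : 0 < σ / 2 + 1 := by positivity
  refine ⟨fun τ => (1 / (2 * Real.pi)) * Complex.Gamma ((σ / 2 + 1 : ℝ) + τ * Complex.I) *
    (Real.pi : ℂ) ^ (-(((σ / 2 : ℝ) : ℂ) + τ * Complex.I)), ?_, fun y hy => ?_⟩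
  · refine (((integrable_Gamma_vertical hκ).const_mul _).mul_bdd (c := Real.pi ^ (-(σ / 2)))
      (Continuous.aestronglyMeasurable ?_) (Filter.Eventually.of_forall fun τ => ?_))
    · have : (Real.pi : ℂ) ≠ 0 := by exact_mod_cast Real.pi_ne_zero
      exact Continuous.const_cpow (by fun_prop) (Or.inl this)
    · rw [Complex.norm_cpow_eq_rpow_re_of_pos Real.pi_pos]; simp
  · have hu : (0 : ℝ) < Real.pi * y ^ 2 := by positivity
    rw [phi, W, neg_mul, Complex.ofReal_mul, exp_mellin hκ hu, ← integral_const_mul]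
    refine integral_congr_ae (Filter.Eventually.of_forall fun τ => ?_)
    dsimp only
    have hu0 : ((Real.pi * y ^ 2 : ℝ) : ℂ) ≠ 0 := by exact_mod_cast hu.ne'
    have e : (-(((σ / 2 + 1 : ℝ) : ℂ) + τ * Complex.I)) =
        (-(((σ / 2 : ℝ) : ℂ) + τ * Complex.I)) - 1 := by push_cast; ring
    rw [e, Complex.cpow_sub _ _ hu0, Complex.cpow_one, pi_mul_sq_cpow hy]
    have e2 : 2 * (-(((σ / 2 : ℝ) : ℂ) + τ * Complex.I)) = -((σ : ℂ) + 2 * τ * Complex.I) := by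
      push_cast; ring
    rw [e2]
    field_simp

/-- The remainder in `∑_{t ≥ 1} W(yt²) = c y^{-1/2} + E(y)`. -/
noncomputable def E (y : ℝ) : ℝ := ∫ t in Set.Ioi (0 : ℝ), (-4 * Int.fract t / t) * phi (y * t ^ 2)

/-- The constant of the main term in `∑_{t ≥ 1} W(yt²) = c y^{-1/2} + E(y)`. -/
noncomputable def c0 : ℝ := Real.pi ^ (-(1 / 4) : ℝ) * Real.Gamma (5 / 4)

lemma integrable_phi {y : ℝ} (hy : 0 < y) :
    IntegrableOn (fun t : ℝ => phi (y * t ^ 2)) (Set.Ioi 0) := by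
  have h := integrableOn_rpow_mul_exp_neg_mul_rpow (s := 4) (p := 4) (b := Real.pi * y ^ 2)
    (by norm_num) (by norm_num) (by positivity)
  refine IntegrableOn.congr_fun (Integrable.const_mul h (Real.pi * y ^ 2)) (fun t _ => ?_)
    measurableSet_Ioi
  have e : t ^ (4 : ℝ) = t ^ 4 := by norm_cast
  simp only [e, phi, W]; ring_nf

lemma integral_phi {y : ℝ} (hy : 0 < y) :
    ∫ t in Set.Ioi (0 : ℝ), 4 * phi (y * t ^ 2) = c0 * y ^ (-(1 / 2) : ℝ) := by
  have h := integral_rpow_mul_exp_neg_mul_rpow (q := 4) (p := 4) (b := Real.pi * y ^ 2)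
    (by norm_num) (by norm_num) (by positivity)
  have h2 : ∫ t in Set.Ioi (0 : ℝ), 4 * phi (y * t ^ 2) = (4 * (Real.pi * y ^ 2)) *
      ∫ t in Set.Ioi (0 : ℝ), t ^ (4 : ℝ) * Real.exp (-(Real.pi * y ^ 2) * t ^ (4 : ℝ)) := by
    rw [← integral_const_mul]
    refine setIntegral_congr_fun measurableSet_Ioi fun t _ => ?_
    have e : t ^ (4 : ℝ) = t ^ 4 := by norm_cast
    simp only [e, phi, W]; ring_nf
  rw [h2, h, c0, Real.mul_rpow Real.pi_pos.le (by positivity)]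
  have e1 : (y ^ 2) ^ (-(4 + 1) / 4 : ℝ) = y ^ (-(5 / 2) : ℝ) := by
    rw [← Real.rpow_natCast, ← Real.rpow_mul hy.le]; norm_num
  have e2 : y ^ (-(1 / 2) : ℝ) = y ^ (-(5 / 2) : ℝ) * y ^ 2 := by
    rw [← Real.rpow_natCast, ← Real.rpow_add hy]; norm_num
  have e3 : Real.pi ^ (-(1 / 4) : ℝ) = Real.pi ^ (-(4 + 1) / 4 : ℝ) * Real.pi := by
    conv_rhs => rw [← Real.rpow_one Real.pi]
    rw [← Real.rpow_mul Real.pi_pos.le, ← Real.rpow_add Real.pi_pos]; norm_num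
  rw [e1, e2, e3]
  norm_num
  ring

lemma hasDerivAt_W_sq (y t : ℝ) :
    HasDerivAt (fun t : ℝ => W (y * t ^ 2)) (-4 * Real.pi * y ^ 2 * t ^ 3 * W (y * t ^ 2)) t := by
  unfold W
  have h1 : HasDerivAt (fun t : ℝ => -Real.pi * (y * t ^ 2) ^ 2) (-4 * Real.pi * y ^ 2 * t ^ 3) t := by
    have := (hasDerivAt_pow 4 t).const_mul (-Real.pi * y ^ 2)
    have e1 : (fun t : ℝ => -Real.pi * (y * t ^ 2) ^ 2) = fun x => -Real.pi * y ^ 2 * x ^ 4 := by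
      funext x; ring
    rw [e1]
    refine this.congr_deriv ?_
    push_cast; ring
  convert h1.exp using 1
  ring

/-- Euler summation for `t ↦ W(yt²)`. -/
lemma sum_W_sq {y : ℝ} (hy : 0 < y) :
    ∑' t : ℕ, W (y * ((t + 1 : ℕ) : ℝ) ^ 2) = c0 * y ^ (-(1 / 2) : ℝ) + E y := by
  set f : ℝ → ℝ := fun t => W (y * t ^ 2) with hf
  set c : ℕ → ℝ := fun k => if k = 0 then 0 else 1 with hc
  have hsum : ∀ n : ℕ, ∑ k ∈ Icc 0 n, c k = n := by
    intro n
    induction n with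
    | zero => simp [hc]
    | succ n ih => rw [Finset.sum_Icc_succ_top (by omega), ih]; simp [hc]
  have hd : deriv f = fun t => -4 * Real.pi * y ^ 2 * t ^ 3 * W (y * t ^ 2) :=
    funext fun t => (hasDerivAt_W_sq y t).deriv
  have hcW : Continuous W := by unfold W; fun_prop
  have hcd : Continuous (deriv f) := by rw [hd]; fun_prop
  have hkey : ∀ t : ℝ, 0 < t → deriv f t * t = - (4 * phi (y * t ^ 2)) := by
    intro t ht; rw [hd, phi]; ring
  -- decay of `t f(t)`
  have hlim : Filter.Tendsto (fun n : ℕ => f n * ∑ k ∈ Icc 0 n, c k) Filter.atTop (nhds 0) := by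
    have h1 : Filter.Tendsto (fun n : ℕ => 1 / (Real.pi * y ^ 2) * (1 / (n : ℝ)))
        Filter.atTop (nhds 0) := by
      have := (tendsto_one_div_atTop_nhds_zero_nat (𝕜 := ℝ)).const_mul (1 / (Real.pi * y ^ 2))
      rwa [mul_zero] at this
    refine squeeze_zero' (Filter.Eventually.of_forall fun n => ?_) ?_ h1
    · rw [hsum]; exact mul_nonneg (W_pos _).le (Nat.cast_nonneg _)
    · filter_upwards [Filter.eventually_ge_atTop 1] with n hn
      have hn' : (1 : ℝ) ≤ n := by exact_mod_cast hn
      rw [hsum]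
      have hu : 0 < Real.pi * y ^ 2 * n ^ 4 := by positivity
      have h2 : W (y * (n : ℝ) ^ 2) ≤ 1 / (Real.pi * y ^ 2 * n ^ 4) := by
        have e : W (y * (n : ℝ) ^ 2) = (Real.exp (Real.pi * y ^ 2 * n ^ 4))⁻¹ := by
          rw [← Real.exp_neg, W]; ring_nf
        rw [e, one_div]
        exact inv_anti₀ hu (by linarith [Real.add_one_le_exp (Real.pi * y ^ 2 * n ^ 4)])
      calc f n * n ≤ 1 / (Real.pi * y ^ 2 * n ^ 4) * n := by gcongr
        _ = 1 / (Real.pi * y ^ 2) * (1 / (n : ℝ)) * (1 / (n : ℝ) ^ 2) := by field_simp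
        _ ≤ _ := by
          refine mul_le_of_le_one_right (by positivity) ?_
          rw [div_le_one (by positivity)]; nlinarith
  have hint : IntegrableOn (fun t : ℝ => 4 * phi (y * t ^ 2)) (Set.Ioi 0) :=
    (integrable_phi hy).const_mul 4
  have hnn : ∀ x, 0 ≤ phi x := fun x => by
    unfold phi; exact mul_nonneg (by positivity) (W_pos _).le
  have h := tendsto_sum_mul_atTop_nhds_one_sub_integral c (f := f)
    (fun t _ => (hasDerivAt_W_sq y t).differentiableAt)
    (hcd.locallyIntegrable.locallyIntegrableOn _) hlim
    (g := fun t : ℝ => 4 * phi (y * t ^ 2)) (by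
      refine Asymptotics.IsBigO.of_bound 1 ?_
      filter_upwards [Filter.eventually_gt_atTop 0] with t ht
      rw [hsum, one_mul, ← norm_neg (4 * phi _), ← hkey t ht, norm_mul, norm_mul]
      refine mul_le_mul_of_nonneg_left ?_ (norm_nonneg _)
      rw [Real.norm_of_nonneg (Nat.cast_nonneg _), Real.norm_of_nonneg ht.le]
      exact Nat.floor_le ht.le)
    ⟨Set.Ioi 0, Filter.Ioi_mem_atTop 0, hint⟩
  have hS : Summable fun t : ℕ => W (y * ((t + 1 : ℕ) : ℝ) ^ 2) := by
    have h1 : Summable fun t : ℕ => W ((t + 1 : ℕ) * y) :=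
      (summable_nat_add_iff 1).mpr (summable_W_nat hy)
    refine Summable.of_nonneg_of_le (fun t => (W_pos _).le) (fun t => ?_) h1
    unfold W
    apply Real.exp_le_exp.mpr
    have ht : (1 : ℝ) ≤ ((t + 1 : ℕ) : ℝ) := by push_cast; linarith [(Nat.cast_nonneg t : (0:ℝ) ≤ t)]
    have : (((t + 1 : ℕ) : ℝ) * y) ^ 2 ≤ (y * ((t + 1 : ℕ) : ℝ) ^ 2) ^ 2 := by
      gcongr 1
      rw [mul_comm]; gcongr; nlinarith
    nlinarith [Real.pi_pos]
  have h2 := hS.hasSum.tendsto_sum_nat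
  have h3 : ∀ n : ℕ, ∑ k ∈ Icc 0 n, f k * c k = ∑ t ∈ range n, W (y * ((t + 1 : ℕ) : ℝ) ^ 2) := by
    intro n
    induction n with
    | zero => simp [hc]
    | succ n ih => rw [Finset.sum_Icc_succ_top (by omega), ih, Finset.sum_range_succ]; simp [hc, hf]
  have h4 := tendsto_nhds_unique h2 (h.congr h3)
  have hfr : IntegrableOn (fun t : ℝ => (-4 * Int.fract t / t) * phi (y * t ^ 2)) (Set.Ioi 0) := by
    refine Integrable.mono' hint ?_ ?_
    · refine AEStronglyMeasurable.mul ?_ ?_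
      · exact ((measurable_fract.const_mul (-4)).div measurable_id).aestronglyMeasurable
      · unfold phi; exact (by fun_prop : Continuous fun t : ℝ =>
          Real.pi * (y * t ^ 2) ^ 2 * W (y * t ^ 2)).aestronglyMeasurable
    · refine (ae_restrict_iff' measurableSet_Ioi).mpr (Filter.Eventually.of_forall fun t ht => ?_)
      have ht : 0 < t := ht
      rw [norm_mul, Real.norm_of_nonneg (hnn _)]
      gcongr
      · exact hnn _
      rw [norm_div, norm_mul, Real.norm_of_nonneg (Int.fract_nonneg _), Real.norm_of_nonneg ht.le,
        div_le_iff₀ ht]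
      have : Int.fract t ≤ t := by
        have := Int.floor_nonneg.mpr ht.le
        have h5 := Int.self_sub_floor t
        have : (0 : ℝ) ≤ ⌊t⌋ := by exact_mod_cast this
        linarith
      norm_num; linarith
  rw [h4, E, ← integral_phi hy, ← integral_add hint hfr, zero_sub, ← integral_neg]
  refine setIntegral_congr_fun measurableSet_Ioi fun t ht => ?_
  have ht : 0 < t := ht
  have e1 : ((⌊t⌋₊ : ℕ) : ℝ) = t - Int.fract t := by
    rw [natCast_floor_eq_intCast_floor ht.le]; have := Int.self_sub_floor t; linarith
  have e2 : phi (y * t ^ 2) = - (deriv f t * t) / 4 := by rw [hkey t ht]; ring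
  rw [hsum, e1, e2]
  field_simp
  ring

/-- Integrating a Mellin representation of `phi` gives one for `E`; the weight involves
`4 * fract t * t ^ (-1 - 2 * σ)`, which is integrable on `(0, ∞)` for `0 < σ < 1/2`. -/
lemma sepRep_E {σ : ℝ} (hσ : 0 < σ) (hσ2 : σ < 1 / 2) : SepRep σ E := by
  obtain ⟨ρ, hρ, hrep⟩ := sepRep_phi hσ
  have hmaj : IntegrableOn (fun t : ℝ => 4 * Int.fract t * t ^ (-1 - 2 * σ)) (Set.Ioi 0) := by
    rw [← Set.Ioc_union_Ioi_eq_Ioi (zero_le_one (α := ℝ))]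
    have hmeas : Measurable (fun t : ℝ => 4 * Int.fract t * t ^ (-1 - 2 * σ)) :=
      (measurable_fract.const_mul 4).mul (by fun_prop)
    refine IntegrableOn.union ?_ ?_
    · have h1 := (intervalIntegral.intervalIntegrable_rpow' (a := 0) (b := 1) (r := - 2 * σ)
        (by linarith)).1
      refine Integrable.mono' (h1.const_mul 4) hmeas.aestronglyMeasurable ?_
      refine (ae_restrict_iff' measurableSet_Ioc).mpr (Filter.Eventually.of_forall fun t ht => ?_)
      have ht0 : 0 < t := ht.1
      rw [Real.norm_of_nonneg (mul_nonneg (by have := Int.fract_nonneg t; positivity)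
        (by positivity)), show (-2 * σ) = 1 + (-1 - 2 * σ) by ring, Real.rpow_add ht0,
        Real.rpow_one, ← mul_assoc]
      gcongr
      have := Int.floor_nonneg.mpr ht0.le
      have h5 := Int.self_sub_floor t
      have : (0 : ℝ) ≤ ⌊t⌋ := by exact_mod_cast this
      linarith
    · have h1 := integrableOn_Ioi_rpow_of_lt (a := -1 - 2 * σ) (c := 1) (by linarith) one_pos
      refine Integrable.mono' (h1.const_mul 4) hmeas.aestronglyMeasurable ?_
      refine (ae_restrict_iff' measurableSet_Ioi).mpr (Filter.Eventually.of_forall fun t ht => ?_)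
      have ht0 : 0 < t := lt_trans one_pos ht
      rw [Real.norm_of_nonneg (mul_nonneg (by have := Int.fract_nonneg t; positivity)
        (by positivity))]
      gcongr
      linarith [Int.fract_lt_one t]
  set Z : ℝ → ℂ := fun τ => ∫ t in Set.Ioi (0 : ℝ), ((-4 * Int.fract t / t : ℝ) : ℂ) *
    (t : ℂ) ^ (-(2 * ((σ : ℂ) + 2 * τ * Complex.I))) with hZ
  -- the double integrand
  have hprod : ∀ y : ℝ, 0 < y → Integrable (Function.uncurry fun (t : ℝ) (τ : ℝ) =>
      ((-4 * Int.fract t / t : ℝ) : ℂ) * (ρ τ * ((y * t ^ 2 : ℝ) : ℂ) ^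
        (-((σ : ℂ) + 2 * τ * Complex.I)))) ((volume.restrict (Set.Ioi 0)).prod volume) := by
    intro y hy
    have hm := (hmaj.mul_prod hρ.norm).const_mul (y ^ (-σ))
    refine Integrable.mono' hm ?_ ?_
    · refine AEStronglyMeasurable.mul ?_ (AEStronglyMeasurable.mul ?_ ?_)
      · refine Measurable.aestronglyMeasurable ?_
        refine Complex.measurable_ofReal.comp ?_
        exact ((measurable_fract.comp measurable_fst).const_mul (-4)).div measurable_fst
      · exact hρ.aestronglyMeasurable.comp_snd
      · exact Measurable.aestronglyMeasurable (by fun_prop)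
    · have hae : ∀ᵐ p : ℝ × ℝ ∂((volume.restrict (Set.Ioi 0)).prod volume), 0 < p.1 := by
        have : ∀ᵐ t : ℝ ∂(volume.restrict (Set.Ioi 0)), 0 < t :=
          (ae_restrict_iff' measurableSet_Ioi).mpr (Filter.Eventually.of_forall fun t ht => ht)
        exact Measure.quasiMeasurePreserving_fst.ae this
      filter_upwards [hae] with p hp
      have hpos : 0 < y * p.1 ^ 2 := by positivity
      simp only [Function.uncurry]
      rw [norm_mul, norm_mul, Complex.norm_cpow_eq_rpow_re_of_pos hpos, Complex.norm_real,
        norm_div, norm_mul, Real.norm_of_nonneg (Int.fract_nonneg _), Real.norm_of_nonneg hp.le]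
      have e1 : (-((σ : ℂ) + 2 * p.2 * Complex.I)).re = -σ := by simp
      rw [e1, Real.mul_rpow hy.le (by positivity), ← Real.rpow_natCast, ← Real.rpow_mul hp.le]
      have e2 : p.1 ^ (-1 - 2 * σ) = p.1 ^ (((2 : ℕ) : ℝ) * -σ) / p.1 := by
        rw [show -1 - 2 * σ = ((2 : ℕ) : ℝ) * -σ - 1 by push_cast; ring, Real.rpow_sub hp,
          Real.rpow_one]
      rw [e2]
      norm_num
      apply le_of_eq; ring
  have hsplit : ∀ y t : ℝ, 0 < y → 0 < t → ∀ τ : ℝ, ((y * t ^ 2 : ℝ) : ℂ) ^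
      (-((σ : ℂ) + 2 * τ * Complex.I)) = (y : ℂ) ^ (-((σ : ℂ) + 2 * τ * Complex.I)) *
        (t : ℂ) ^ (-(2 * ((σ : ℂ) + 2 * τ * Complex.I))) := by
    intro y t hy ht τ
    have ht0 : (t : ℂ) ≠ 0 := by exact_mod_cast ht.ne'
    rw [Complex.ofReal_mul, Complex.mul_cpow_ofReal_nonneg hy.le (by positivity), sq,
      Complex.ofReal_mul, Complex.mul_cpow_ofReal_nonneg ht.le ht.le, ← Complex.cpow_add _ _ ht0]
    congr 2; ring
  have hE : ∀ y : ℝ, 0 < y → ∀ τ : ℝ, ∫ t in Set.Ioi (0 : ℝ), ((-4 * Int.fract t / t : ℝ) : ℂ) *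
      (ρ τ * ((y * t ^ 2 : ℝ) : ℂ) ^ (-((σ : ℂ) + 2 * τ * Complex.I))) =
      ρ τ * Z τ * (y : ℂ) ^ (-((σ : ℂ) + 2 * τ * Complex.I)) := by
    intro y hy τ
    rw [hZ]
    dsimp only
    refine Eq.trans ?_ (mul_right_comm _ _ _).symm
    rw [← integral_const_mul]
    refine setIntegral_congr_fun (measurableSet_Ioi (a := (0 : ℝ))) fun t ht => ?_
    rw [hsplit y t hy ht]; ring
  refine ⟨fun τ => ρ τ * Z τ, ?_, fun y hy => ?_⟩
  · have := (hprod 1 one_pos).integral_prod_right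
    refine this.congr (Filter.Eventually.of_forall fun τ => ?_)
    simp only [Function.uncurry]
    rw [hE 1 one_pos]; simp
  · rw [E, ← integral_complex_ofReal]
    have h1 : ∀ t ∈ Set.Ioi (0 : ℝ), (((-4 * Int.fract t / t) * phi (y * t ^ 2) : ℝ) : ℂ) =
        ∫ τ : ℝ, ((-4 * Int.fract t / t : ℝ) : ℂ) * (ρ τ * ((y * t ^ 2 : ℝ) : ℂ) ^
        (-((σ : ℂ) + 2 * τ * Complex.I))) := by
      intro t ht
      have ht : 0 < t := ht
      rw [integral_const_mul, ← hrep _ (by positivity), Complex.ofReal_mul]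
    rw [setIntegral_congr_fun measurableSet_Ioi h1, integral_integral_swap (hprod y hy)]
    exact integral_congr_ae (Filter.Eventually.of_forall fun τ => hE y hy τ)

end QLS

namespace QLS

/-! ### The divisor bound, coprime pairs and dyadic sums -/

open Finset

/-- The divisor bound `d(n) ≪ n^ε`. -/
lemma divisor_bound {ε : ℝ} (hε : 0 < ε) :
    ∃ C : ℝ, 1 ≤ C ∧ ∀ n : ℕ, 0 < n → (n.divisors.card : ℝ) ≤ C * (n : ℝ) ^ ε := by
  have hl : 0 < Real.log 2 := Real.log_pos (by norm_num)
  set A : ℝ := 1 + 1 / (ε * Real.log 2) with hA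
  have hA1 : 1 ≤ A := by have : 0 < 1 / (ε * Real.log 2) := by positivity
                         linarith
  set P : ℕ := ⌈(2 : ℝ) ^ (1 / ε)⌉₊ with hP
  refine ⟨A ^ P, one_le_pow₀ hA1, fun n hn => ?_⟩
  -- local bounds
  have hloc : ∀ p : ℕ, p.Prime → ∀ a : ℕ,
      ((a : ℝ) + 1) ≤ (if p < P then A else 1) * ((p : ℝ) ^ a) ^ ε := by
    intro p hp a
    have hp2 : (2 : ℝ) ≤ p := by exact_mod_cast hp.two_le
    split_ifs with h
    · have h1 : (2 : ℝ) ^ ((a : ℝ) * ε) ≤ ((p : ℝ) ^ a) ^ ε := by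
        rw [← Real.rpow_natCast, ← Real.rpow_mul (by positivity)]
        exact Real.rpow_le_rpow (by norm_num) hp2 (by positivity)
      have h2 : 1 + a * ε * Real.log 2 ≤ (2 : ℝ) ^ ((a : ℝ) * ε) := by
        rw [Real.rpow_def_of_pos (by norm_num)]
        have := Real.add_one_le_exp (Real.log 2 * (a * ε))
        linarith
      have h3 : (a : ℝ) + 1 ≤ A * (1 + a * ε * Real.log 2) := by
        have h4 : (1 / (ε * Real.log 2)) * (a * ε * Real.log 2) = a := by field_simp
        have h5 : 0 < 1 / (ε * Real.log 2) := by positivity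
        have h6 : 0 ≤ (a : ℝ) * ε * Real.log 2 := by positivity
        rw [hA]; nlinarith
      exact h3.trans (mul_le_mul_of_nonneg_left (h2.trans h1) (by linarith))
    · rw [one_mul]
      have h1 : (2 : ℝ) ^ (1 / ε) ≤ p := (Nat.le_ceil _).trans (by exact_mod_cast not_lt.mp h)
      have h2 : (2 : ℝ) ≤ (p : ℝ) ^ ε := by
        calc (2 : ℝ) = ((2 : ℝ) ^ (1 / ε)) ^ ε := by
              rw [← Real.rpow_mul (by norm_num), one_div_mul_cancel hε.ne', Real.rpow_one]
          _ ≤ _ := Real.rpow_le_rpow (by positivity) h1 hε.le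
      calc (a : ℝ) + 1 ≤ 2 ^ a := by exact_mod_cast Nat.lt_two_pow_self (n := a)
        _ ≤ ((p : ℝ) ^ ε) ^ a := by gcongr
        _ = _ := by
          rw [← Real.rpow_natCast, ← Real.rpow_mul (by positivity), mul_comm,
            Real.rpow_mul (by positivity), Real.rpow_natCast]
  have hn0 : n ≠ 0 := hn.ne'
  rw [Nat.card_divisors hn0]
  push_cast
  calc ∏ p ∈ n.primeFactors, ((n.factorization p : ℝ) + 1)
      ≤ ∏ p ∈ n.primeFactors, ((if p < P then A else 1) * ((p : ℝ) ^ n.factorization p) ^ ε) :=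
        Finset.prod_le_prod (fun p _ => by positivity)
          (fun p hp => hloc p (Nat.prime_of_mem_primeFactors hp) _)
    _ = (∏ p ∈ n.primeFactors, (if p < P then A else 1)) * (n : ℝ) ^ ε := by
        rw [Finset.prod_mul_distrib, Real.finsetProd_rpow _ _ (fun p _ => by positivity)]
        congr 2
        conv_rhs => rw [← Nat.prod_factorization_pow_eq_self hn0]
        rw [Finsupp.prod]; push_cast; rfl
    _ ≤ _ := by
        gcongr
        rw [← Finset.prod_filter, Finset.prod_const]
        refine pow_le_pow_right₀ hA1 ?_
        calc _ ≤ (range P).card := Finset.card_le_card fun p hp =>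
              mem_range.mpr (Finset.mem_filter.mp hp).2
          _ = P := card_range P

lemma sum_moebius_divisors (n : ℕ) :
    ∑ d ∈ n.divisors, ((ArithmeticFunction.moebius d : ℤ) : ℂ) = if n = 1 then 1 else 0 := by
  have h := congrArg (fun f => f n) ArithmeticFunction.moebius_mul_coe_zeta
  simp only [ArithmeticFunction.coe_mul_zeta_apply,
    ArithmeticFunction.one_apply] at h
  rw [← Int.cast_sum, h]; split_ifs <;> simp

lemma norm_moebius_le (n : ℕ) : ‖((ArithmeticFunction.moebius n : ℤ) : ℂ)‖ ≤ 1 := by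
  rw [Complex.norm_intCast]
  exact_mod_cast ArithmeticFunction.abs_moebius_le_one

/-- The bilinear form over coprime pairs of columns; Möbius inversion of the coprimality
condition reduces it to squares of linear forms. -/
lemma bilinear_coprime {A : ℝ} {X n : ℕ} (hA : 0 ≤ A) (h : LS A X n) (b b' : ℕ → ℂ) {τ : ℝ}
    (hτ : ∀ l ∈ OS n, (l.divisors.card : ℝ) ≤ τ) :
    ∑ k ∈ SF X, ‖∑ l₁ ∈ OS n, ∑ l₂ ∈ OS n,
        (if l₁.Coprime l₂ then b l₁ * b' l₂ * (J k l₁ * J k l₂) else 0)‖ ≤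
      A * τ * ((∑ l ∈ OS n, ‖b l‖ ^ 2) + ∑ l ∈ OS n, ‖b' l‖ ^ 2) / 2 := by
  set S : (ℕ → ℂ) → ℕ → ℕ → ℂ := fun b f k =>
    ∑ l ∈ OS n, (if f ∣ l then b l else 0) * J k l with hS
  have hmob : ∀ l₁ ∈ OS n, ∀ l₂ ∈ OS n, (if l₁.Coprime l₂ then (1 : ℂ) else 0) =
      ∑ f ∈ OS n, (ArithmeticFunction.moebius f : ℂ) *
        ((if f ∣ l₁ then 1 else 0) * (if f ∣ l₂ then 1 else 0)) := by
    intro l₁ h1 l₂ h2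
    have hl1 := mem_OS.mp h1
    have hl0 : l₁ ≠ 0 := by have := hl1.1; omega
    have hg : l₁.gcd l₂ ≠ 0 := Nat.gcd_ne_zero_left hl0
    have := sum_moebius_divisors (l₁.gcd l₂)
    simp only [Nat.coprime_iff_gcd_eq_one]
    rw [← this]
    have e : (l₁.gcd l₂).divisors = (OS n).filter (fun f => f ∣ l₁ ∧ f ∣ l₂) := by
      ext f
      simp only [Nat.mem_divisors, mem_filter, Nat.dvd_gcd_iff]
      constructor
      · rintro ⟨⟨h3, h4⟩, -⟩
        refine ⟨mem_OS.mpr ?_, h3, h4⟩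
        have hf0 : 0 < f := Nat.pos_of_ne_zero (fun h => hl0 (by simpa [h] using h3))
        obtain ⟨_, q2, q3, q4⟩ := hl1
        refine ⟨hf0, (Nat.le_of_dvd (by omega) h3).trans q2, ?_, ?_⟩
        · exact Odd.of_dvd_nat q3 h3
        · exact q4.squarefree_of_dvd h3
      · rintro ⟨-, h3, h4⟩; exact ⟨⟨h3, h4⟩, hg⟩
    rw [e, Finset.sum_filter]
    refine Finset.sum_congr rfl fun f _ => ?_
    by_cases h3 : f ∣ l₁ <;> by_cases h4 : f ∣ l₂ <;> simp [h3, h4]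
  have hid : ∀ k, ∑ l₁ ∈ OS n, ∑ l₂ ∈ OS n,
        (if l₁.Coprime l₂ then b l₁ * b' l₂ * (J k l₁ * J k l₂) else 0) =
      ∑ f ∈ OS n, (ArithmeticFunction.moebius f : ℂ) * (S b f k * S b' f k) := by
    intro k
    have : ∀ l₁ ∈ OS n, ∀ l₂ ∈ OS n,
        (if l₁.Coprime l₂ then b l₁ * b' l₂ * (J k l₁ * J k l₂) else 0) =
        ∑ f ∈ OS n, (ArithmeticFunction.moebius f : ℂ) *
          (((if f ∣ l₁ then b l₁ else 0) * J k l₁) * ((if f ∣ l₂ then b' l₂ else 0) * J k l₂)) := by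
      intro l₁ h1 l₂ h2
      have e := hmob l₁ h1 l₂ h2
      calc _ = (b l₁ * b' l₂ * (J k l₁ * J k l₂)) * (if l₁.Coprime l₂ then (1 : ℂ) else 0) := by
            split_ifs <;> simp
        _ = _ := by
            rw [e, mul_sum]
            refine Finset.sum_congr rfl fun f _ => ?_
            by_cases h3 : f ∣ l₁ <;> by_cases h4 : f ∣ l₂ <;> simp [h3, h4]; ring
    rw [Finset.sum_congr rfl fun l₁ h1 => Finset.sum_congr rfl fun l₂ h2 => this l₁ h1 l₂ h2]
    simp_rw [hS, Finset.sum_mul_sum, mul_sum]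
    rw [Finset.sum_congr rfl fun l₁ _ => Finset.sum_comm]
    rw [Finset.sum_comm]
  have hbd : ∀ (b : ℕ → ℂ), ∑ f ∈ OS n, ∑ k ∈ SF X, ‖S b f k‖ ^ 2 ≤
      A * τ * ∑ l ∈ OS n, ‖b l‖ ^ 2 := by
    intro b
    calc ∑ f ∈ OS n, ∑ k ∈ SF X, ‖S b f k‖ ^ 2
        ≤ ∑ f ∈ OS n, A * ∑ l ∈ OS n, ‖(if f ∣ l then b l else 0)‖ ^ 2 :=
          Finset.sum_le_sum fun f _ => h _
      _ = A * ∑ l ∈ OS n, ∑ f ∈ OS n, (if f ∣ l then ‖b l‖ ^ 2 else 0) := by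
          rw [← mul_sum, Finset.sum_comm]
          congr 1
          refine Finset.sum_congr rfl fun l _ => Finset.sum_congr rfl fun f _ => ?_
          split_ifs <;> simp
      _ ≤ A * ∑ l ∈ OS n, τ * ‖b l‖ ^ 2 := by
          gcongr with l hl
          rw [← Finset.sum_filter, Finset.sum_const, nsmul_eq_mul]
          gcongr
          refine le_trans ?_ (hτ l hl)
          have hl0 : l ≠ 0 := by have := (mem_OS.mp hl).1; omega
          exact_mod_cast Finset.card_le_card fun f hf => Nat.mem_divisors.mpr
            ⟨(mem_filter.mp hf).2, hl0⟩
      _ = _ := by rw [← mul_sum]; ring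
  calc _ ≤ ∑ k ∈ SF X, ∑ f ∈ OS n, (‖S b f k‖ ^ 2 + ‖S b' f k‖ ^ 2) / 2 := by
        refine Finset.sum_le_sum fun k _ => ?_
        rw [hid]
        refine (norm_sum_le _ _).trans (Finset.sum_le_sum fun f _ => ?_)
        rw [norm_mul, norm_mul]
        have := norm_moebius_le f
        nlinarith [sq_nonneg (‖S b f k‖ - ‖S b' f k‖), norm_nonneg (S b f k),
          norm_nonneg (S b' f k), mul_nonneg (norm_nonneg (S b f k)) (norm_nonneg (S b' f k))]
    _ = ((∑ f ∈ OS n, ∑ k ∈ SF X, ‖S b f k‖ ^ 2) + ∑ f ∈ OS n, ∑ k ∈ SF X, ‖S b' f k‖ ^ 2) / 2 := by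
        rw [Finset.sum_comm, ← Finset.sum_add_distrib, Finset.sum_div]
        refine Finset.sum_congr rfl fun f _ => ?_
        rw [← Finset.sum_add_distrib, Finset.sum_div]
    _ ≤ _ := by
        have h1 := hbd b
        have h2 := hbd b'
        rw [mul_add]; linarith

/-- Dyadic summation. -/
lemma dyadic_sum {β ε : ℝ} (hβ : 0 < β) (hε : 0 < ε) : ∃ C : ℝ, 0 < C ∧
    ∀ (u : ℕ → ℝ) (B n z : ℝ), (∀ k, 0 ≤ u k) → 0 ≤ B → 0 ≤ z → n ≤ z ^ β →
      (∀ X : ℕ, 1 ≤ X → ∑ k ∈ SF X, u k ≤ B * (X : ℝ) ^ ε * (n + (X : ℝ) ^ β)) →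
      ∀ X : ℕ, ∑ k ∈ (SF X).filter (fun k : ℕ => z < (k : ℝ)), (k : ℝ) ^ (-(β + 2 * ε)) * u k ≤
        C * B := by
  have hr : (2 : ℝ) ^ (-ε) < 1 := Real.rpow_lt_one_of_one_lt_of_neg (by norm_num) (by linarith)
  have hr0 : (0 : ℝ) < (2 : ℝ) ^ (-ε) := by positivity
  refine ⟨2 * 2 ^ (ε + β) * (1 - (2 : ℝ) ^ (-ε))⁻¹, by
    have : 0 < 1 - (2 : ℝ) ^ (-ε) := by linarith
    positivity, fun u B n z hu hB hz hn hsum X => ?_⟩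
  have hblock : ∀ j : ℕ, ∑ k ∈ ((SF X).filter (fun k : ℕ => z < (k : ℝ))).filter
      (fun k => Nat.log 2 k = j), (k : ℝ) ^ (-(β + 2 * ε)) * u k ≤
        2 * 2 ^ (ε + β) * B * ((2 : ℝ) ^ (-ε)) ^ j := by
    intro j
    rcases (((SF X).filter (fun k : ℕ => z < (k : ℝ))).filter (fun k => Nat.log 2 k = j)).eq_empty_or_nonempty
      with he | ⟨k0, hk0⟩
    · rw [he, Finset.sum_empty]; positivity
    · have hmem : ∀ k ∈ ((SF X).filter (fun k : ℕ => z < (k : ℝ))).filter (fun k => Nat.log 2 k = j),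
          (2 : ℝ) ^ j ≤ k ∧ (k : ℝ) ≤ 2 ^ (j + 1) ∧ z < k ∧ k ∈ SF (2 ^ (j + 1)) := by
        intro k hk
        simp only [mem_filter] at hk
        obtain ⟨⟨hk1, hk2⟩, hk3⟩ := hk
        have hk' := mem_SF.mp hk1
        have hk0 : k ≠ 0 := by have := hk'.1; omega
        have h1 := Nat.pow_log_le_self 2 hk0
        have h2 := Nat.lt_pow_succ_log_self (b := 2) (by norm_num) k
        rw [hk3] at h1 h2
        exact ⟨by exact_mod_cast h1, by exact_mod_cast h2.le, hk2,
          mem_SF.mpr ⟨hk'.1, h2.le, hk'.2.2⟩⟩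
      have hn2 : n ≤ ((2 : ℝ) ^ (j + 1)) ^ β := hn.trans (by
        obtain ⟨_, h2, h3, _⟩ := hmem k0 hk0
        exact Real.rpow_le_rpow hz (by linarith) hβ.le)
      have hs := hsum (2 ^ (j + 1)) Nat.one_le_two_pow
      push_cast at hs
      calc _ ≤ ∑ k ∈ ((SF X).filter (fun k : ℕ => z < (k : ℝ))).filter (fun k => Nat.log 2 k = j),
            ((2 : ℝ) ^ j) ^ (-(β + 2 * ε)) * u k := by
            refine Finset.sum_le_sum fun k hk => ?_
            refine mul_le_mul_of_nonneg_right ?_ (hu k)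
            exact Real.rpow_le_rpow_of_nonpos (by positivity) (hmem k hk).1 (by linarith)
        _ = ((2 : ℝ) ^ j) ^ (-(β + 2 * ε)) * ∑ k ∈ ((SF X).filter (fun k : ℕ => z < (k : ℝ))).filter
            (fun k => Nat.log 2 k = j), u k := by rw [mul_sum]
        _ ≤ ((2 : ℝ) ^ j) ^ (-(β + 2 * ε)) * ∑ k ∈ SF (2 ^ (j + 1)), u k := by
            refine mul_le_mul_of_nonneg_left ?_ (by positivity)
            exact Finset.sum_le_sum_of_subset_of_nonneg (fun k hk => (hmem k hk).2.2.2)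
              (fun k _ _ => hu k)
        _ ≤ ((2 : ℝ) ^ j) ^ (-(β + 2 * ε)) * (B * ((2 : ℝ) ^ (j + 1)) ^ ε *
            (((2 : ℝ) ^ (j + 1)) ^ β + ((2 : ℝ) ^ (j + 1)) ^ β)) := by
            gcongr
            refine hs.trans ?_
            gcongr
        _ = 2 * B * (((2 : ℝ) ^ j) ^ (-(β + 2 * ε)) * (((2 : ℝ) ^ (j + 1)) ^ ε *
            ((2 : ℝ) ^ (j + 1)) ^ β)) := by ring
        _ = _ := by
            have : ((2 : ℝ) ^ j) ^ (-(β + 2 * ε)) * (((2 : ℝ) ^ (j + 1)) ^ ε *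
              ((2 : ℝ) ^ (j + 1)) ^ β) = 2 ^ (ε + β) * ((2 : ℝ) ^ (-ε)) ^ j := by
              simp_rw [← Real.rpow_natCast]
              simp_rw [← Real.rpow_mul (by norm_num : (0 : ℝ) ≤ 2)]
              simp_rw [← Real.rpow_add (by norm_num : (0 : ℝ) < 2)]
              congr 1; push_cast; ring
            rw [this]; ring
  have hmaps : ∀ k ∈ (SF X).filter (fun k : ℕ => z < (k : ℝ)), Nat.log 2 k ∈ range (X + 1) := by
    intro k hk
    have hk' := mem_SF.mp (mem_filter.mp hk).1
    have := Nat.log_le_self 2 k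
    exact mem_range.mpr (by have := hk'.2.1; omega)
  rw [← Finset.sum_fiberwise_of_maps_to hmaps]
  calc _ ≤ ∑ j ∈ range (X + 1), 2 * 2 ^ (ε + β) * B * ((2 : ℝ) ^ (-ε)) ^ j :=
        Finset.sum_le_sum fun j _ => hblock j
    _ = 2 * 2 ^ (ε + β) * B * ∑ j ∈ range (X + 1), ((2 : ℝ) ^ (-ε)) ^ j := by rw [mul_sum]
    _ ≤ 2 * 2 ^ (ε + β) * B * (1 - (2 : ℝ) ^ (-ε))⁻¹ := by
        gcongr
        rw [← tsum_geometric_of_lt_one hr0.le hr]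
        exact Summable.sum_le_tsum _ (fun j _ => by positivity)
          (summable_geometric_of_lt_one hr0.le hr)
    _ = _ := by ring

end QLS

namespace QLS

/-! ### Greatest common divisors and squarefree parts -/

open Finset

/-- Sorting pairs of columns by their greatest common divisor. -/
lemma sum_pairs (N : ℕ) (F : ℕ → ℕ → ℂ) (hF : ∀ n₁ n₂, F n₁ n₂ ≠ 0 → n₁ ∈ OS N ∧ n₂ ∈ OS N) :
    ∑ n₁ ∈ OS N, ∑ n₂ ∈ OS N, F n₁ n₂ =
      ∑ g ∈ OS N, ∑ l₁ ∈ OS (N / g), ∑ l₂ ∈ OS (N / g),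
        (if l₁.Coprime l₂ then F (g * l₁) (g * l₂) else 0) := by
  rw [← Finset.sum_product']
  have hmaps : ∀ p ∈ OS N ×ˢ OS N, p.1.gcd p.2 ∈ OS N := by
    intro p hp
    obtain ⟨h1, h2⟩ := mem_product.mp hp
    rw [mem_OS] at h1 ⊢
    have hd := Nat.gcd_dvd_left p.1 p.2
    exact ⟨Nat.pos_of_dvd_of_pos hd (by omega), (Nat.le_of_dvd (by omega) hd).trans h1.2.1,
      Odd.of_dvd_nat h1.2.2.1 hd, h1.2.2.2.squarefree_of_dvd hd⟩
  rw [← Finset.sum_fiberwise_of_maps_to hmaps]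
  refine Finset.sum_congr rfl fun g hg => ?_
  have hg0 : 0 < g := (mem_OS.mp hg).1
  rw [← Finset.sum_product' (OS (N / g)) (OS (N / g))
    (fun l₁ l₂ => if l₁.Coprime l₂ then F (g * l₁) (g * l₂) else 0), ← Finset.sum_filter]
  rw [← Finset.sum_filter_of_ne (s := (OS (N / g) ×ˢ OS (N / g)).filter
    (fun p : ℕ × ℕ => p.1.Coprime p.2)) (p := fun p => g * p.1 ∈ OS N ∧ g * p.2 ∈ OS N)
    (fun p _ h => hF _ _ h)]
  refine Finset.sum_bij (fun p _ => (p.1 / g, p.2 / g)) ?_ ?_ ?_ ?_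
  · rintro ⟨n₁, n₂⟩ hp
    simp only [mem_filter, mem_product] at hp ⊢
    obtain ⟨⟨h1, h2⟩, h3⟩ := hp
    obtain ⟨l₁, rfl⟩ : g ∣ n₁ := h3 ▸ Nat.gcd_dvd_left _ _
    obtain ⟨l₂, rfl⟩ : g ∣ n₂ := h3 ▸ Nat.gcd_dvd_right _ _
    rw [Nat.mul_div_cancel_left _ hg0, Nat.mul_div_cancel_left _ hg0]
    refine ⟨⟨⟨?_, ?_⟩, ?_⟩, h1, h2⟩
    · rw [mem_OS] at h1 ⊢
      exact ⟨Nat.pos_of_mul_pos_left h1.1, (Nat.le_div_iff_mul_le hg0).mpr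
        (by rw [mul_comm]; exact h1.2.1), (Nat.odd_mul.mp h1.2.2.1).2,
        h1.2.2.2.squarefree_of_dvd (Dvd.intro_left _ rfl)⟩
    · rw [mem_OS] at h2 ⊢
      exact ⟨Nat.pos_of_mul_pos_left h2.1, (Nat.le_div_iff_mul_le hg0).mpr
        (by rw [mul_comm]; exact h2.2.1), (Nat.odd_mul.mp h2.2.2.1).2,
        h2.2.2.2.squarefree_of_dvd (Dvd.intro_left _ rfl)⟩
    · rw [Nat.gcd_mul_left] at h3
      exact Nat.eq_of_mul_eq_mul_left hg0 (by simpa using h3)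
  · rintro ⟨n₁, n₂⟩ hp ⟨m₁, m₂⟩ hq h
    simp only [mem_filter, mem_product, Prod.mk.injEq] at hp hq h
    have e1 : g ∣ n₁ := hp.2 ▸ Nat.gcd_dvd_left _ _
    have e2 : g ∣ n₂ := hp.2 ▸ Nat.gcd_dvd_right _ _
    have e3 : g ∣ m₁ := hq.2 ▸ Nat.gcd_dvd_left _ _
    have e4 : g ∣ m₂ := hq.2 ▸ Nat.gcd_dvd_right _ _
    rw [← Nat.mul_div_cancel' e1, ← Nat.mul_div_cancel' e2, h.1, h.2, Nat.mul_div_cancel' e3,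
      Nat.mul_div_cancel' e4]
  · rintro ⟨l₁, l₂⟩ hp
    simp only [mem_filter, mem_product] at hp
    refine ⟨(g * l₁, g * l₂), ?_, ?_⟩
    · simp only [mem_filter, mem_product]
      refine ⟨hp.2, ?_⟩
      rw [Nat.gcd_mul_left, hp.1.2.gcd_eq_one, mul_one]
    · simp [Nat.mul_div_cancel_left _ hg0]
  · rintro ⟨n₁, n₂⟩ hp
    simp only [mem_filter, mem_product] at hp
    have e1 : g ∣ n₁ := hp.2 ▸ Nat.gcd_dvd_left _ _
    have e2 : g ∣ n₂ := hp.2 ▸ Nat.gcd_dvd_right _ _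
    simp only [Nat.mul_div_cancel' e1, Nat.mul_div_cancel' e2]

lemma tsum_dvd {e : ℕ} (he : 0 < e) (f : ℕ → ℂ) :
    ∑' v : ℕ, (if e ∣ v then f v else 0) = ∑' n : ℕ, f (e * n) := by
  have hinj : Function.Injective (fun n : ℕ => e * n) := fun a b h =>
    Nat.eq_of_mul_eq_mul_left he h
  rw [← hinj.tsum_eq]
  · simp
  · intro v hv
    have : e ∣ v := by by_contra h; simp [h] at hv
    obtain ⟨n, rfl⟩ := this
    exact ⟨n, rfl⟩

lemma tsum_succ_dvd {e : ℕ} (he : 0 < e) (f : ℕ → ℂ) :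
    ∑' t : ℕ, (if e ∣ t + 1 then f (t + 1) else 0) = ∑' n : ℕ, f (e * (n + 1)) := by
  have hinj : Function.Injective (fun n : ℕ => e * (n + 1) - 1) := fun a b h => by
    have h1 : 0 < e * (a + 1) := by positivity
    have h2 : 0 < e * (b + 1) := by positivity
    have h' : e * (a + 1) - 1 = e * (b + 1) - 1 := h
    have : e * (a + 1) = e * (b + 1) := by omega
    have := Nat.eq_of_mul_eq_mul_left he this
    omega
  rw [← hinj.tsum_eq]
  · refine tsum_congr fun n => ?_
    have h1 : e * (n + 1) - 1 + 1 = e * (n + 1) := Nat.sub_add_cancel (by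
      have : 0 < e * (n + 1) := by positivity
      omega)
    simp only [h1]; simp
  · intro v hv
    have : e ∣ v + 1 := by by_contra h; simp [h] at hv
    obtain ⟨n, hn⟩ := this
    have hn0 : n ≠ 0 := by rintro rfl; omega
    obtain ⟨m, rfl⟩ := Nat.exists_eq_succ_of_ne_zero hn0
    exact ⟨m, by show e * (m + 1) - 1 = v; simp only [Nat.succ_eq_add_one] at hn; omega⟩

/-- `v` is a nonzero square times a squarefree number which is at most `Y`. -/
def Sml (Y v : ℕ) : Prop := v ≠ 0 ∧ ∃ k ∈ SF Y, ∃ t, v = k * t ^ 2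

lemma core_unique {k k' t t' : ℕ} (hk : Squarefree k) (hk' : Squarefree k') (ht : t ≠ 0)
    (ht' : t' ≠ 0) (h : k * t ^ 2 = k' * t' ^ 2) : k = k' := by
  refine Nat.eq_of_factorization_eq hk.ne_zero hk'.ne_zero fun p => ?_
  have h1 := hk.natFactorization_le_one p
  have h2 := hk'.natFactorization_le_one p
  have h3 := congrArg (fun m => m.factorization p) h
  simp only [Nat.factorization_mul hk.ne_zero (pow_ne_zero 2 ht),
    Nat.factorization_mul hk'.ne_zero (pow_ne_zero 2 ht'), Nat.factorization_pow,
    Finsupp.add_apply, Finsupp.smul_apply, smul_eq_mul] at h3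
  omega

open Classical in
/-- The sum over numbers with small squarefree part, parametrised as `v = kt²`. -/
lemma tsum_small (Y : ℕ) {f : ℕ → ℂ} (hf : Summable f) :
    ∑' v : ℕ, (if Sml Y v then f v else 0) = ∑ k ∈ SF Y, ∑' t : ℕ, f (k * (t + 1) ^ 2) := by
  have hpt : ∀ v, (if Sml Y v then f v else 0) =
      ∑ k ∈ SF Y, (if ∃ t : ℕ, v = k * (t + 1) ^ 2 then f v else 0) := by
    intro v
    by_cases h : Sml Y v
    · rw [if_pos h]
      obtain ⟨hv, k, hk, t, rfl⟩ := h
      have ht : t ≠ 0 := by rintro rfl; simp at hv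
      obtain ⟨m, rfl⟩ := Nat.exists_eq_succ_of_ne_zero ht
      rw [Finset.sum_eq_single k]
      · rw [if_pos ⟨m, rfl⟩]
      · intro k' hk' hne
        rw [if_neg]
        rintro ⟨t', h'⟩
        exact hne (core_unique (mem_SF.mp hk').2.2 (mem_SF.mp hk).2.2 (Nat.succ_ne_zero t') ht
          h'.symm)
      · exact fun h => absurd hk h
    · rw [if_neg h]
      refine (Finset.sum_eq_zero fun k hk => if_neg ?_).symm
      rintro ⟨t, rfl⟩
      have := (mem_SF.mp hk).1
      exact h ⟨by positivity, k, hk, t + 1, rfl⟩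
  simp_rw [hpt]
  rw [Summable.tsum_finsetSum]
  · refine Finset.sum_congr rfl fun k hk => ?_
    have hk0 := (mem_SF.mp hk).1
    have hinj : Function.Injective (fun t : ℕ => k * (t + 1) ^ 2) := fun a b h => by
      have := Nat.eq_of_mul_eq_mul_left hk0 h
      have := Nat.pow_left_injective (n := 2) (by norm_num) this
      omega
    rw [← hinj.tsum_eq]
    · refine tsum_congr fun t => if_pos ⟨t, rfl⟩
    · intro v hv
      have : ∃ t : ℕ, v = k * (t + 1) ^ 2 := by by_contra h; simp [h] at hv
      obtain ⟨t, rfl⟩ := this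
      exact ⟨t, rfl⟩
  · intro k _
    refine Summable.of_norm_bounded hf.norm fun v => ?_
    split_ifs <;> simp

end QLS

namespace QLS

/-! ### Theta sums split by the squarefree part -/

open Finset

lemma J_mul_sq {q : ℕ} (hq : q ≠ 0) (k m : ℕ) :
    J (k * m ^ 2) q = J k q * (if m.Coprime q then 1 else 0) := by
  rw [J_mul_left, sq, J_mul_left]
  split_ifs with h
  · rw [J_sq_of_coprime h]
  · rw [J_eq_zero hq h]; simp

lemma tsum_coprime {q : ℕ} (hq : q ≠ 0) {f : ℕ → ℂ} (hf : Summable f) :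
    ∑' t : ℕ, (if (t + 1).Coprime q then f (t + 1) else 0) =
      ∑ w ∈ q.divisors, (ArithmeticFunction.moebius w : ℂ) * ∑' t : ℕ, f (w * (t + 1)) := by
  have hpt : ∀ t : ℕ, (if (t + 1).Coprime q then f (t + 1) else 0) =
      ∑ w ∈ q.divisors, (ArithmeticFunction.moebius w : ℂ) *
        (if w ∣ t + 1 then f (t + 1) else 0) := by
    intro t
    have h := sum_moebius_divisors ((t + 1).gcd q)
    have e : ((t + 1).gcd q).divisors = q.divisors.filter (fun w => w ∣ t + 1) := by
      ext w
      simp only [Nat.mem_divisors, mem_filter, Nat.dvd_gcd_iff, ne_eq, Nat.gcd_eq_zero_iff]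
      constructor
      · rintro ⟨⟨h1, h2⟩, -⟩; exact ⟨⟨h2, hq⟩, h1⟩
      · rintro ⟨⟨h2, -⟩, h1⟩; exact ⟨⟨h1, h2⟩, fun h => hq h.2⟩
    calc _ = (if (t + 1).gcd q = 1 then (1 : ℂ) else 0) * f (t + 1) := by
          simp only [Nat.coprime_iff_gcd_eq_one]; split_ifs <;> simp
      _ = _ := by
          rw [← h, e, Finset.sum_filter, Finset.sum_mul]
          refine Finset.sum_congr rfl fun w _ => ?_
          split_ifs <;> simp
  have hf1 : Summable fun t : ℕ => f (t + 1) := (summable_nat_add_iff 1).mpr hf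
  simp_rw [hpt]
  rw [Summable.tsum_finsetSum]
  · refine Finset.sum_congr rfl fun w hw => ?_
    rw [tsum_mul_left, tsum_succ_dvd (Nat.pos_of_mem_divisors hw)]
  · intro w _
    refine Summable.mul_left _ (Summable.of_norm_bounded hf1.norm fun v => ?_)
    split_ifs <;> simp

lemma dvd_mul_sq_iff {e : ℕ} (he : Squarefree e) (k m : ℕ) :
    e ∣ k * m ^ 2 ↔ e / e.gcd k ∣ m := by
  have hc0 : 0 < e.gcd k := Nat.gcd_pos_of_pos_left _ (Nat.pos_of_ne_zero he.ne_zero)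
  obtain ⟨e', he'⟩ := Nat.gcd_dvd_left e k
  obtain ⟨k', hk'⟩ := Nat.gcd_dvd_right e k
  have hcop : e'.Coprime k' := by
    have := Nat.gcd_mul_left (e.gcd k) e' k'
    rw [← he', ← hk'] at this
    exact Nat.eq_of_mul_eq_mul_left hc0 (by rw [← this, mul_one])
  have h1 : e / e.gcd k = e' := Nat.div_eq_of_eq_mul_right hc0 he'
  have hs : Squarefree e' := he.squarefree_of_dvd (Dvd.intro_left _ he'.symm)
  rw [h1]
  calc e ∣ k * m ^ 2 ↔ e.gcd k * e' ∣ e.gcd k * (k' * m ^ 2) := by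
        rw [← he', ← mul_assoc, ← hk']
    _ ↔ e' ∣ k' * m ^ 2 := Nat.mul_dvd_mul_iff_left hc0
    _ ↔ e' ∣ m ^ 2 := hcop.dvd_mul_left
    _ ↔ e' ∣ m := hs.dvd_pow_iff_dvd (by norm_num)

open Classical in
/-- The character theta sum over `v` divisible by `e` with squarefree part `≤ Y`. -/
noncomputable def PS (Y e q : ℕ) (r : ℝ) : ℂ :=
  ∑' v : ℕ, if Sml Y v then (if e ∣ v then J v q * (W (v * r) : ℂ) else 0) else 0

open Classical in
/-- The character theta sum over `v` divisible by `e` with squarefree part `> Y`. -/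
noncomputable def PL (Y e q : ℕ) (r : ℝ) : ℂ :=
  ∑' v : ℕ, if v ≠ 0 ∧ ¬ Sml Y v then (if e ∣ v then J v q * (W (v * r) : ℂ) else 0) else 0

lemma summable_JW_ite (e q : ℕ) {r : ℝ} (hr : 0 < r) :
    Summable fun v : ℕ => if e ∣ v then J v q * (W (v * r) : ℂ) else 0 := by
  refine Summable.of_norm_bounded (summable_nat_JW q hr).norm fun v => ?_
  split_ifs <;> simp; positivity

lemma summable_W_sq {y : ℝ} (hy : 0 < y) : Summable fun m : ℕ => ((W (y * (m : ℝ) ^ 2) : ℝ) : ℂ) := by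
  refine Summable.of_norm_bounded (summable_W_nat hy) fun m => ?_
  rw [Complex.norm_real, Real.norm_of_nonneg (W_pos _).le]
  unfold W
  refine Real.exp_le_exp.mpr ?_
  have h1 : (m : ℝ) ≤ (m : ℝ) ^ 2 := by
    have : m ≤ m ^ 2 := Nat.le_self_pow (by norm_num) m
    exact_mod_cast this
  have h2 : ((m : ℝ) * y) ^ 2 ≤ (y * (m : ℝ) ^ 2) ^ 2 := by
    refine pow_le_pow_left₀ (by positivity) ?_ 2
    rw [mul_comm]; gcongr
  nlinarith [Real.pi_pos]

/-- The small part, written as `v = k t²` with `k ≤ Y` squarefree: Möbius inversion removes the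
condition `(t, q) = 1` and Euler summation evaluates the sum over `t`. -/
lemma PS_eq (Y : ℕ) {e q : ℕ} (hq : q ≠ 0) (he : Squarefree e) (heq : e.Coprime q) {r : ℝ}
    (hr : 0 < r) :
    PS Y e q r = ∑ k ∈ SF Y, J k q * ∑ w ∈ q.divisors, (ArithmeticFunction.moebius w : ℂ) *
      ((c0 * ((w : ℝ) ^ 2 * (r * k * ((e / e.gcd k : ℕ) : ℝ) ^ 2)) ^ (-(1 / 2) : ℝ) +
        E ((w : ℝ) ^ 2 * (r * k * ((e / e.gcd k : ℕ) : ℝ) ^ 2)) : ℝ) : ℂ) := by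
  unfold PS
  rw [tsum_small Y (summable_JW_ite e q hr)]
  refine Finset.sum_congr rfl fun k hk => ?_
  have hk0 := (mem_SF.mp hk).1
  have he0 : 0 < e := Nat.pos_of_ne_zero he.ne_zero
  set e' := e / e.gcd k with he'
  have he'd : e' ∣ e := Nat.div_dvd_of_dvd (Nat.gcd_dvd_left e k)
  have he'0 : 0 < e' := Nat.pos_of_dvd_of_pos he'd he0
  have he'q : e'.Coprime q := Nat.Coprime.coprime_dvd_left he'd heq
  simp_rw [dvd_mul_sq_iff he]
  rw [tsum_succ_dvd he'0 (fun m => J (k * m ^ 2) q * (W ((k * m ^ 2 : ℕ) * r) : ℂ))]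
  simp_rw [J_mul_sq hq]
  set y : ℝ := r * k * (e' : ℝ) ^ 2 with hy
  have hy0 : 0 < y := by positivity
  calc _ = ∑' t : ℕ, J k q * (if (t + 1).Coprime q then ((W (y * ((t + 1 : ℕ) : ℝ) ^ 2) : ℝ) : ℂ)
          else 0) := by
        refine tsum_congr fun t => ?_
        have h1 : (e' * (t + 1)).Coprime q ↔ (t + 1).Coprime q := by
          rw [Nat.coprime_mul_iff_left]; exact and_iff_right he'q
        have h2 : ((k * (e' * (t + 1)) ^ 2 : ℕ) : ℝ) * r = y * ((t + 1 : ℕ) : ℝ) ^ 2 := by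
          rw [hy]; push_cast; ring
        simp only [h1, h2]
        split_ifs <;> simp
    _ = _ := by
        rw [tsum_mul_left, tsum_coprime hq (f := fun m => ((W (y * (m : ℝ) ^ 2) : ℝ) : ℂ))
          (summable_W_sq hy0)]
        congr 1
        refine Finset.sum_congr rfl fun w hw => ?_
        have hw0 : 0 < w := Nat.pos_of_mem_divisors hw
        congr 1
        rw [← sum_W_sq (by positivity), Complex.ofReal_tsum]
        refine tsum_congr fun t => ?_
        congr 2
        push_cast; ring

lemma PS_add_PL (Y : ℕ) {e q : ℕ} (he : 0 < e) {r : ℝ} (hr : 0 < r) :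
    PS Y e q r + PL Y e q r = J e q * (∑' n : ℕ, J n q * (W (n * (e * r)) : ℂ) - J 0 q) := by
  classical
  have hs := summable_JW_ite e q hr
  unfold PS PL
  rw [← Summable.tsum_add]
  · have h1 := tsum_dvd he (fun v => J v q * (W (v * r) : ℂ))
    have h2 : ∑' n : ℕ, J (e * n : ℕ) q * (W ((e * n : ℕ) * r) : ℂ) =
        J e q * ∑' n : ℕ, J n q * (W (n * (e * r)) : ℂ) := by
      rw [← tsum_mul_left]
      refine tsum_congr fun n => ?_
      rw [J_mul_left, mul_assoc]; congr 3; push_cast; ring_nf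
    have h3 : J e q * J 0 q = J 0 q := by rw [← J_mul_left, mul_zero]
    rw [mul_sub, ← h2, ← h1, h3]
    have h4 := hs.tsum_eq_add_tsum_ite 0
    rw [h4]
    simp only [dvd_zero, if_true, Nat.cast_zero, zero_mul]
    have h5 : W 0 = 1 := by simp [W]
    rw [h5, Complex.ofReal_one, mul_one, add_sub_cancel_left]
    refine tsum_congr fun v => ?_
    by_cases h0 : v = 0
    · simp [h0, Sml]
    · by_cases h6 : Sml Y v <;> simp [h0, h6]
  · refine Summable.of_norm_bounded hs.norm fun v => ?_
    split_ifs <;> simp; positivity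
  · refine Summable.of_norm_bounded hs.norm fun v => ?_
    split_ifs <;> simp; positivity

/-- The twisted error sum `∑_{w ∣ q} μ(w) E(w²y)`. -/
noncomputable def FE (q : ℕ) (y : ℝ) : ℂ :=
  ∑ w ∈ q.divisors, (ArithmeticFunction.moebius w : ℂ) * (E ((w : ℝ) ^ 2 * y) : ℂ)

/-- What remains of the large part of a theta sum after applying the functional equation and
cancelling the main terms of the small parts. -/
noncomputable def Err (Y e q : ℕ) (M : ℝ) : ℂ :=
  (M / (e * Real.sqrt q) : ℝ) * PL Y e q (M / (e ^ 2 * q)) +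
  ((∑ k ∈ SF Y, J k q * ((M / (e * Real.sqrt q) : ℝ) *
      FE q (M / (e ^ 2 * q) * k * ((e / e.gcd k : ℕ) : ℝ) ^ 2))) -
    ∑ k ∈ SF Y, J k q * FE q (1 / M * k * ((e / e.gcd k : ℕ) : ℝ) ^ 2)) +
  J e q * J 0 q * ((gam q * (M / (e * Real.sqrt q) : ℝ) - 1) / 2)

/-- The theta transformation relates `PS + PL` at `1 / M` to the same sum at the dual scale. The
main terms `c0 y^{-1/2}` of the two small parts cancel, and what is left of the relation is this
identity; the factor `1 + gam q` comes from `gam q ^ 2 = 1`. -/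
lemma err_identity (Y : ℕ) {e q : ℕ} (h4 : q % 4 = 1) (hsq : Squarefree q) (he : Squarefree e)
    (heq : e.Coprime q) {M : ℝ} (hM : 0 < M) :
    (1 + gam q) * PL Y e q (1 / M) = (1 + gam q) * Err Y e q M := by
  have hq0 : q ≠ 0 := by omega
  have hq : (0 : ℝ) < q := by exact_mod_cast (by omega : 0 < q)
  have he0 : 0 < e := Nat.pos_of_ne_zero he.ne_zero
  have heR : (0 : ℝ) < e := by exact_mod_cast he0
  have hsq0 : 0 < Real.sqrt q := Real.sqrt_pos.mpr hq
  set p : ℝ := M / (e * Real.sqrt q) with hp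
  have hg := (gam_sq h4 hsq).1
  have hth := theta_nat h4 hsq (t := e / M) (by positivity)
  have e1 := PS_add_PL Y (q := q) he0 (r := 1 / M) (by positivity)
  have e2 := PS_add_PL Y (q := q) he0 (r := M / (e ^ 2 * q)) (by positivity)
  have r1 : (e : ℝ) * (1 / M) = e / M := by ring
  have r2 : (e : ℝ) * (M / (e ^ 2 * q)) = 1 / (e / M * q) := by field_simp
  rw [r1] at e1
  rw [r2] at e2
  have hgp : gam q / (((e / M : ℝ) : ℂ) * (Real.sqrt q : ℂ)) = gam q * (p : ℂ) := by
    rw [hp, div_eq_mul_inv]; congr 1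
    rw [← Complex.ofReal_mul, ← Complex.ofReal_inv]; congr 1; field_simp
  rw [hgp] at hth
  have hmain : (p : ℂ) * PS Y e q (M / (e ^ 2 * q)) - PS Y e q (1 / M) =
      (∑ k ∈ SF Y, J k q * ((p : ℂ) * FE q (M / (e ^ 2 * q) * k * ((e / e.gcd k : ℕ) : ℝ) ^ 2))) -
        ∑ k ∈ SF Y, J k q * FE q (1 / M * k * ((e / e.gcd k : ℕ) : ℝ) ^ 2) := by
    rw [PS_eq Y hq0 he heq (by positivity), PS_eq Y hq0 he heq (by positivity), mul_sum,
      ← Finset.sum_sub_distrib, ← Finset.sum_sub_distrib]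
    refine Finset.sum_congr rfl fun k hk => ?_
    have hk0 := (mem_SF.mp hk).1
    have he'd : e / e.gcd k ∣ e := Nat.div_dvd_of_dvd (Nat.gcd_dvd_left e k)
    have he'0 : 0 < e / e.gcd k := Nat.pos_of_dvd_of_pos he'd he0
    set e' := e / e.gcd k with he'
    have hk1 : (0 : ℝ) < k := by exact_mod_cast hk0
    have he1 : (0 : ℝ) < e' := by exact_mod_cast he'0
    have hcan : ∀ w ∈ q.divisors,
        p * (c0 * ((w : ℝ) ^ 2 * (M / (e ^ 2 * q) * k * (e' : ℝ) ^ 2)) ^ (-(1 / 2) : ℝ)) =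
          c0 * ((w : ℝ) ^ 2 * (1 / M * k * (e' : ℝ) ^ 2)) ^ (-(1 / 2) : ℝ) := by
      intro w hw
      have hw0 : (0 : ℝ) < w := by exact_mod_cast Nat.pos_of_mem_divisors hw
      have a1 : (w : ℝ) ^ 2 * (M / (e ^ 2 * q) * k * (e' : ℝ) ^ 2) =
          p ^ 2 * ((w : ℝ) ^ 2 * (1 / M * k * (e' : ℝ) ^ 2)) := by
        rw [hp, div_pow, mul_pow, Real.sq_sqrt hq.le]; field_simp
      have hp0 : 0 < p := by positivity
      have a2 : (p ^ 2) ^ (-(1 / 2) : ℝ) = p⁻¹ := by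
        rw [← Real.rpow_natCast, ← Real.rpow_mul hp0.le, ← Real.rpow_neg_one]; norm_num
      rw [a1, Real.mul_rpow (by positivity) (by positivity), a2]
      field_simp
    unfold FE
    rw [← mul_sub, mul_left_comm, ← mul_sub, mul_sum, mul_sum, ← Finset.sum_sub_distrib,
      ← Finset.sum_sub_distrib]
    congr 1
    refine Finset.sum_congr rfl fun w hw => ?_
    have := congrArg (fun x : ℝ => (x : ℂ)) (hcan w hw)
    push_cast at this ⊢
    linear_combination (ArithmeticFunction.moebius w : ℂ) * this
  unfold Err
  rw [← hp, ← hmain]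
  linear_combination (1 + gam q) * e1 - (1 + gam q) * gam q * p * e2 + (1 + gam q) * J e q / 2 * hth
    + (p * PL Y e q (M / (e ^ 2 * q)) + p * PS Y e q (M / (e ^ 2 * q))) * hg

end QLS

namespace QLS

/-! ### Separation of variables in bilinear forms -/

open Finset MeasureTheory

/-- The bilinear form over coprime pairs of columns attached to the row `k`. -/
noncomputable def bil (n : ℕ) (b b' : ℕ → ℂ) (k : ℕ) : ℂ :=
  ∑ l₁ ∈ OS n, ∑ l₂ ∈ OS n, (if l₁.Coprime l₂ then b l₁ * b' l₂ * (J k l₁ * J k l₂) else 0)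

/-- A bilinear form whose kernel is an integral of products of functions of `l₁` and of `l₂` is
controlled by the bilinear forms without kernel. -/
lemma kernel_form {ρ : ℝ → ℂ} (hρ : Integrable ρ) (n : ℕ) (Ks : Finset ℕ) (b : ℕ → ℂ)
    (κ : ℕ → ℕ → ℕ → ℂ) (U φ : ℕ → ℝ → ℂ) (y : ℕ → ℝ) (Φ : ℝ)
    (hU : ∀ k ∈ Ks, Continuous (U k)) (hUb : ∀ k ∈ Ks, ∀ τ, ‖U k τ‖ ≤ y k)
    (hφ : ∀ l ∈ OS n, Continuous (φ l)) (hφb : ∀ l ∈ OS n, b l ≠ 0 → ∀ τ, ‖φ l τ‖ ≤ Φ)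
    (hκ : ∀ k ∈ Ks, ∀ l₁ ∈ OS n, ∀ l₂ ∈ OS n, l₁.Coprime l₂ → b l₁ ≠ 0 → b l₂ ≠ 0 →
      κ k l₁ l₂ = ∫ τ, ρ τ * (U k τ * φ l₁ τ * φ l₂ τ))
    {B : ℝ} (hB : ∀ b₁ b₂ : ℕ → ℂ, (∀ l ∈ OS n, ‖b₁ l‖ ≤ Φ * ‖b l‖) →
      (∀ l ∈ OS n, ‖b₂ l‖ ≤ Φ * ‖b l‖) → ∑ k ∈ Ks, y k * ‖bil n b₁ b₂ k‖ ≤ B) :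
    ∑ k ∈ Ks, ‖∑ l₁ ∈ OS n, ∑ l₂ ∈ OS n, (if l₁.Coprime l₂ then
      b l₁ * (starRingEnd ℂ) (b l₂) * (J k l₁ * J k l₂) * κ k l₁ l₂ else 0)‖ ≤
      (∫ τ, ‖ρ τ‖) * B := by
  set b₁ : ℝ → ℕ → ℂ := fun τ l => b l * φ l τ with hb₁
  set b₂ : ℝ → ℕ → ℂ := fun τ l => (starRingEnd ℂ) (b l) * φ l τ with hb₂
  have hn1 : ∀ τ, ∀ l ∈ OS n, ‖b₁ τ l‖ ≤ Φ * ‖b l‖ := by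
    intro τ l hl
    by_cases h : b l = 0
    · simp [hb₁, h]
    · rw [hb₁, norm_mul, mul_comm]; gcongr; exact hφb l hl h τ
  have hn2 : ∀ τ, ∀ l ∈ OS n, ‖b₂ τ l‖ ≤ Φ * ‖b l‖ := by
    intro τ l hl
    by_cases h : b l = 0
    · simp [hb₂, h]
    · rw [hb₂, norm_mul, mul_comm, RCLike.norm_conj]; gcongr; exact hφb l hl h τ
  have hc1 : ∀ l ∈ OS n, Continuous fun τ => b₁ τ l := fun l hl =>
    continuous_const.mul (hφ l hl)
  have hc2 : ∀ l ∈ OS n, Continuous fun τ => b₂ τ l := fun l hl =>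
    continuous_const.mul (hφ l hl)
  -- the integrand attached to a pair of columns
  set F : ℕ → ℕ → ℕ → ℝ → ℂ := fun k l₁ l₂ τ => if l₁.Coprime l₂ then
      ρ τ * (U k τ * (b₁ τ l₁ * b₂ τ l₂ * (J k l₁ * J k l₂))) else 0 with hF
  have hFint : ∀ k ∈ Ks, ∀ l₁ ∈ OS n, ∀ l₂ ∈ OS n, Integrable (F k l₁ l₂) := by
    intro k hk l₁ h1 l₂ h2
    by_cases hc : l₁.Coprime l₂
    · simp only [hF, if_pos hc]
      refine hρ.mul_bdd (c := y k * ((Φ * ‖b l₁‖) * (Φ * ‖b l₂‖) * (1 * 1)))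
        (Continuous.aestronglyMeasurable ?_) (Filter.Eventually.of_forall fun τ => ?_)
      · exact (hU k hk).mul (((hc1 l₁ h1).mul (hc2 l₂ h2)).mul continuous_const)
      · have a1 := hn1 τ l₁ h1
        have a2 := hn2 τ l₂ h2
        have a3 := hUb k hk τ
        have a4 := (norm_nonneg _).trans a1
        have a5 := (norm_nonneg _).trans a3
        simp only [norm_mul]
        gcongr
        · exact mul_nonneg a4 ((norm_nonneg _).trans a2)
        · exact norm_J_le _ _
        · exact norm_J_le _ _
    · simp only [hF, if_neg hc]; exact integrable_zero _ _ _
  have hterm : ∀ k ∈ Ks, ∑ l₁ ∈ OS n, ∑ l₂ ∈ OS n, (if l₁.Coprime l₂ then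
      b l₁ * (starRingEnd ℂ) (b l₂) * (J k l₁ * J k l₂) * κ k l₁ l₂ else 0) =
      ∫ τ, ρ τ * (U k τ * bil n (b₁ τ) (b₂ τ) k) := by
    intro k hk
    have e1 : ∀ τ, ρ τ * (U k τ * bil n (b₁ τ) (b₂ τ) k) =
        ∑ l₁ ∈ OS n, ∑ l₂ ∈ OS n, F k l₁ l₂ τ := by
      intro τ
      simp only [bil, mul_sum, hF]
      refine Finset.sum_congr rfl fun l₁ _ => Finset.sum_congr rfl fun l₂ _ => ?_
      split_ifs <;> simp
    simp_rw [e1]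
    rw [integral_finsetSum _ (fun l₁ h1 => integrable_finsetSum _ fun l₂ h2 =>
      hFint k hk l₁ h1 l₂ h2)]
    refine Finset.sum_congr rfl fun l₁ h1 => ?_
    rw [integral_finsetSum _ (fun l₂ h2 => hFint k hk l₁ h1 l₂ h2)]
    refine Finset.sum_congr rfl fun l₂ h2 => ?_
    by_cases hc : l₁.Coprime l₂
    · simp only [hF, if_pos hc]
      by_cases z1 : b l₁ = 0
      · simp [hb₁, z1]
      by_cases z2 : b l₂ = 0
      · simp [hb₂, z2]
      rw [hκ k hk l₁ h1 l₂ h2 hc z1 z2, ← integral_const_mul]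
      refine integral_congr_ae (Filter.Eventually.of_forall fun τ => ?_)
      simp only [hb₁, hb₂]; ring
    · simp [hF, if_neg hc]
  have hGint : ∀ k ∈ Ks, Integrable fun τ => ρ τ * (U k τ * bil n (b₁ τ) (b₂ τ) k) := by
    intro k hk
    have e1 : (fun τ => ρ τ * (U k τ * bil n (b₁ τ) (b₂ τ) k)) =
        fun τ => ∑ l₁ ∈ OS n, ∑ l₂ ∈ OS n, F k l₁ l₂ τ := by
      funext τ
      simp only [bil, mul_sum, hF]
      refine Finset.sum_congr rfl fun l₁ _ => Finset.sum_congr rfl fun l₂ _ => ?_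
      split_ifs <;> simp
    rw [e1]
    exact integrable_finsetSum _ fun l₁ h1 => integrable_finsetSum _ fun l₂ h2 =>
      hFint k hk l₁ h1 l₂ h2
  calc _ = ∑ k ∈ Ks, ‖∫ τ, ρ τ * (U k τ * bil n (b₁ τ) (b₂ τ) k)‖ :=
        Finset.sum_congr rfl fun k hk => by rw [hterm k hk]
    _ ≤ ∑ k ∈ Ks, ∫ τ, ‖ρ τ * (U k τ * bil n (b₁ τ) (b₂ τ) k)‖ :=
        Finset.sum_le_sum fun k _ => norm_integral_le_integral_norm _
    _ = ∫ τ, ∑ k ∈ Ks, ‖ρ τ * (U k τ * bil n (b₁ τ) (b₂ τ) k)‖ := by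
        rw [integral_finsetSum _ fun k hk => (hGint k hk).norm]
    _ ≤ ∫ τ, ‖ρ τ‖ * B := by
        refine integral_mono (integrable_finsetSum _ fun k hk => (hGint k hk).norm)
          (hρ.norm.mul_const _) fun τ => ?_
        calc _ = ‖ρ τ‖ * ∑ k ∈ Ks, ‖U k τ‖ * ‖bil n (b₁ τ) (b₂ τ) k‖ := by
              rw [mul_sum]
              exact Finset.sum_congr rfl fun k _ => by rw [norm_mul, norm_mul]
          _ ≤ _ := by
              refine mul_le_mul_of_nonneg_left ?_ (norm_nonneg _)
              refine le_trans (Finset.sum_le_sum fun k hk => ?_) (hB (b₁ τ) (b₂ τ) (hn1 τ) (hn2 τ))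
              exact mul_le_mul_of_nonneg_right (hUb k hk τ) (norm_nonneg _)
    _ = _ := by rw [integral_mul_const]

/-- `F_s(l) = ∑_{w ∣ l} μ(w) w^{-2s}` at `s = σ + 2iτ`. -/
noncomputable def Fs (σ : ℝ) (l : ℕ) (τ : ℝ) : ℂ :=
  ∑ w ∈ l.divisors, (ArithmeticFunction.moebius w : ℂ) *
    (((w : ℝ) ^ 2 : ℝ) : ℂ) ^ (-((σ : ℂ) + 2 * τ * Complex.I))

lemma continuous_cpow_line {y : ℝ} (hy : 0 < y) (σ : ℝ) :
    Continuous fun τ : ℝ => (y : ℂ) ^ (-((σ : ℂ) + 2 * τ * Complex.I)) := by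
  have : (y : ℂ) ≠ 0 := by exact_mod_cast hy.ne'
  exact Continuous.const_cpow (by fun_prop) (Or.inl this)

lemma norm_cpow_line {y : ℝ} (hy : 0 < y) (σ τ : ℝ) :
    ‖(y : ℂ) ^ (-((σ : ℂ) + 2 * τ * Complex.I))‖ = y ^ (-σ) := by
  rw [Complex.norm_cpow_eq_rpow_re_of_pos hy]; simp

lemma continuous_Fs (σ : ℝ) (l : ℕ) : Continuous (Fs σ l) := by
  unfold Fs
  refine continuous_finsetSum _ fun w hw => continuous_const.mul ?_
  have : (0 : ℝ) < w := by exact_mod_cast Nat.pos_of_mem_divisors hw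
  exact continuous_cpow_line (by positivity) σ

lemma norm_Fs_le {σ : ℝ} (hσ : 0 ≤ σ) (l : ℕ) (τ : ℝ) : ‖Fs σ l τ‖ ≤ l.divisors.card := by
  unfold Fs
  refine (norm_sum_le _ _).trans ?_
  rw [Finset.card_eq_sum_ones, Nat.cast_sum]
  refine Finset.sum_le_sum fun w hw => ?_
  have hw1 : (1 : ℝ) ≤ w := by exact_mod_cast Nat.pos_of_mem_divisors hw
  rw [norm_mul, norm_cpow_line (by positivity), Nat.cast_one]
  exact mul_le_one₀ (norm_moebius_le w) (by positivity)
    (Real.rpow_le_one_of_one_le_of_nonpos (one_le_pow₀ hw1) (by linarith))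

lemma Fs_mul (σ : ℝ) {m n : ℕ} (h : m.Coprime n) (τ : ℝ) : Fs σ (m * n) τ = Fs σ m τ * Fs σ n τ := by
  unfold Fs
  rw [Finset.sum_mul_sum, ← Finset.sum_product', Nat.divisors_mul, Finset.mul_def,
    Finset.sum_image (by simpa using h.mul_injOn_divisors)]
  refine Finset.sum_congr rfl fun p hp => ?_
  obtain ⟨h1, h2⟩ := mem_product.mp hp
  have hc : p.1.Coprime p.2 := Nat.Coprime.coprime_dvd_left (Nat.dvd_of_mem_divisors h1)
    (Nat.Coprime.coprime_dvd_right (Nat.dvd_of_mem_divisors h2) h)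
  rw [ArithmeticFunction.isMultiplicative_moebius.map_mul_of_coprime hc]
  have : (((p.1 * p.2 : ℕ) : ℝ) ^ 2 : ℝ) = (p.1 : ℝ) ^ 2 * (p.2 : ℝ) ^ 2 := by push_cast; ring
  rw [this, Complex.ofReal_mul, Complex.mul_cpow_ofReal_nonneg (by positivity) (by positivity)]
  push_cast; ring

/-- A Mellin representation of `E` gives one of `FE`, in which the dependence on `q` is the
multiplicative function `Fs`; this is what separates `l₁` from `l₂` when `q = l₁ l₂`. -/
lemma FE_rep {σ : ℝ} {ρ : ℝ → ℂ} (hρ : Integrable ρ)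
    (hrep : ∀ y : ℝ, 0 < y →
      (E y : ℂ) = ∫ τ : ℝ, ρ τ * (y : ℂ) ^ (-((σ : ℂ) + 2 * τ * Complex.I)))
    (q : ℕ) {y : ℝ} (hy : 0 < y) :
    FE q y = ∫ τ, ρ τ * ((y : ℂ) ^ (-((σ : ℂ) + 2 * τ * Complex.I)) * Fs σ q τ) := by
  unfold FE
  have hint : ∀ w ∈ q.divisors, Integrable fun τ : ℝ => ρ τ *
      (((y : ℂ) ^ (-((σ : ℂ) + 2 * τ * Complex.I))) * ((ArithmeticFunction.moebius w : ℂ) *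
    (((w : ℝ) ^ 2 : ℝ) : ℂ) ^ (-((σ : ℂ) + 2 * τ * Complex.I)))) := by
    intro w hw
    have hw1 : (0 : ℝ) < w := by exact_mod_cast Nat.pos_of_mem_divisors hw
    refine hρ.mul_bdd (c := y ^ (-σ) * (1 * ((w : ℝ) ^ 2) ^ (-σ)))
        (Continuous.aestronglyMeasurable ?_) (Filter.Eventually.of_forall fun τ => ?_)
    · exact (continuous_cpow_line hy σ).mul (continuous_const.mul
        (continuous_cpow_line (by positivity) σ))
    · rw [norm_mul, norm_mul, norm_cpow_line hy, norm_cpow_line (by positivity)]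
      gcongr
      exact norm_moebius_le w
  unfold Fs
  simp_rw [mul_sum]
  rw [integral_finsetSum _ hint]
  refine Finset.sum_congr rfl fun w hw => ?_
  have hw1 : (0 : ℝ) < w := by exact_mod_cast Nat.pos_of_mem_divisors hw
  rw [hrep _ (by positivity), ← integral_const_mul]
  refine integral_congr_ae (Filter.Eventually.of_forall fun τ => ?_)
  simp only
  rw [Complex.ofReal_mul, Complex.mul_cpow_ofReal_nonneg (by positivity) hy.le]
  ring

lemma bil_sum {A : ℝ} {X n : ℕ} (hA : 0 ≤ A) (h : LS A X n) {b b₁ b₂ : ℕ → ℂ} {τ Φ : ℝ}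
    (hτ0 : 0 ≤ τ) (hτ : ∀ l ∈ OS n, (l.divisors.card : ℝ) ≤ τ)
    (h1 : ∀ l ∈ OS n, ‖b₁ l‖ ≤ Φ * ‖b l‖) (h2 : ∀ l ∈ OS n, ‖b₂ l‖ ≤ Φ * ‖b l‖) :
    ∑ k ∈ SF X, ‖bil n b₁ b₂ k‖ ≤ A * τ * Φ ^ 2 * ∑ l ∈ OS n, ‖b l‖ ^ 2 := by
  refine (bilinear_coprime hA h b₁ b₂ hτ).trans ?_
  have key : ∀ b' : ℕ → ℂ, (∀ l ∈ OS n, ‖b' l‖ ≤ Φ * ‖b l‖) →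
      ∑ l ∈ OS n, ‖b' l‖ ^ 2 ≤ Φ ^ 2 * ∑ l ∈ OS n, ‖b l‖ ^ 2 := by
    intro b' hb'
    rw [mul_sum]
    refine Finset.sum_le_sum fun l hl => ?_
    rw [← mul_pow]
    exact pow_le_pow_left₀ (norm_nonneg _) (hb' l hl) 2
  have k1 := key b₁ h1
  have k2 := key b₂ h2
  have hAτ : 0 ≤ A * τ := mul_nonneg hA hτ0
  calc _ ≤ A * τ * (Φ ^ 2 * ∑ l ∈ OS n, ‖b l‖ ^ 2 + Φ ^ 2 * ∑ l ∈ OS n, ‖b l‖ ^ 2) / 2 := by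
        gcongr
    _ = _ := by ring

end QLS

namespace QLS

/-! ### Bounds for the pieces of the error term -/

open Finset MeasureTheory

/-- The large sieve bound with exponent `β` in the rows, in the form used as induction hypothesis. -/
def HLS (β ε C : ℝ) : Prop :=
  ∀ X n : ℕ, 1 ≤ X → 1 ≤ n → LS (C * ((X : ℝ) * n) ^ ε * (n + (X : ℝ) ^ β)) X n

/-- The standing assumptions on the sizes of the parameters. -/
structure Par (β : ℝ) (N : ℕ) (M : ℝ) (g e : ℕ) (τ : ℝ) : Prop where
  hN : 1 ≤ N
  hM1 : 1 ≤ M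
  hM : (N : ℝ) ^ (2 - 1 / β) ≤ M
  hg : g ∈ OS N
  he : e ∣ g
  hτ1 : 1 ≤ τ
  hτ : ∀ l ∈ OS (N / g), (l.divisors.card : ℝ) ≤ τ

namespace Par
variable {β M τ : ℝ} {N g e : ℕ}

lemma hg0 (h : Par β N M g e τ) : 0 < g := (mem_OS.mp h.hg).1
lemma he0 (h : Par β N M g e τ) : 0 < e := Nat.pos_of_dvd_of_pos h.he h.hg0
lemma heg (h : Par β N M g e τ) : e ≤ g := Nat.le_of_dvd h.hg0 h.he
lemma heN (h : Par β N M g e τ) : e ≤ N := h.heg.trans (mem_OS.mp h.hg).2.1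
lemma hn1 (h : Par β N M g e τ) : 1 ≤ N / g :=
  (Nat.one_le_div_iff h.hg0).mpr (mem_OS.mp h.hg).2.1
lemma hnN (_h : Par β N M g e τ) : N / g ≤ N := Nat.div_le_self _ _
lemma hen (h : Par β N M g e τ) : e * (N / g) ≤ N :=
  (Nat.mul_le_mul_right _ h.heg).trans (Nat.mul_div_le N g)
lemma hNR (h : Par β N M g e τ) : (1 : ℝ) ≤ N := by exact_mod_cast h.hN
lemma hnR (h : Par β N M g e τ) : (1 : ℝ) ≤ (N / g : ℕ) := by exact_mod_cast h.hn1
lemma hnNR (h : Par β N M g e τ) : ((N / g : ℕ) : ℝ) ≤ N := by exact_mod_cast h.hnN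
lemma hM0 (h : Par β N M g e τ) : 0 < M := by linarith [h.hM1]
lemma hNM (h : Par β N M g e τ) (hβ : 1 ≤ β) : (N : ℝ) ≤ M := by
  refine le_trans ?_ h.hM
  conv_lhs => rw [← Real.rpow_one (N : ℝ)]
  refine Real.rpow_le_rpow_of_exponent_le h.hNR ?_
  have : 1 / β ≤ 1 := by rw [div_le_one (by linarith)]; exact hβ
  linarith
lemma hG1 (h : Par β N M g e τ) : 1 ≤ M * N := one_le_mul_of_one_le_of_one_le h.hM1 h.hNR
lemma hNG (h : Par β N M g e τ) : (N : ℝ) ≤ M * N := le_mul_of_one_le_left (by positivity) h.hM1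
lemma hMG (h : Par β N M g e τ) : M ≤ M * N := le_mul_of_one_le_right h.hM0.le h.hNR
lemma hY1 (h : Par β N M g e τ) (hβ : 1 ≤ β) : 1 ≤ ⌊(N : ℝ) ^ (1 / β)⌋₊ := by
  rw [Nat.one_le_floor_iff]; exact Real.one_le_rpow h.hNR (by positivity)
lemma hYN (h : Par β N M g e τ) (hβ : 1 ≤ β) : (⌊(N : ℝ) ^ (1 / β)⌋₊ : ℝ) ≤ N := by
  refine (Nat.floor_le (by positivity)).trans ?_
  conv_rhs => rw [← Real.rpow_one (N : ℝ)]
  refine Real.rpow_le_rpow_of_exponent_le h.hNR ?_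
  rw [div_le_one (by linarith)]; exact hβ
end Par

lemma floor_rpow_le {β x : ℝ} (hβ : 1 ≤ β) (hx : 0 ≤ x) : (⌊x ^ (1 / β)⌋₊ : ℝ) ^ β ≤ x := by
  calc (⌊x ^ (1 / β)⌋₊ : ℝ) ^ β ≤ (x ^ (1 / β)) ^ β :=
        Real.rpow_le_rpow (by positivity) (Nat.floor_le (by positivity)) (by linarith)
    _ = x := by rw [← Real.rpow_mul hx, one_div_mul_cancel (by linarith), Real.rpow_one]

/-- The contribution to `Err` of the error terms of the small part at the original scale. -/
lemma bound_PS {β ε C₀ : ℝ} (hβ : 1 ≤ β) (hε : 0 < ε) (hε2 : ε < 1 / 2) (hC : 0 < C₀)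
    (hLS : HLS β ε C₀) : ∃ C : ℝ, 0 ≤ C ∧ ∀ (N : ℕ) (M : ℝ) (g e : ℕ) (τ : ℝ) (b : ℕ → ℂ),
      Par β N M g e τ →
      ∑ k ∈ SF ⌊(N : ℝ) ^ (1 / β)⌋₊, ‖∑ l₁ ∈ OS (N / g), ∑ l₂ ∈ OS (N / g),
        (if l₁.Coprime l₂ then b l₁ * (starRingEnd ℂ) (b l₂) * (J k l₁ * J k l₂) *
          FE (l₁ * l₂) (1 / M * k * ((e / e.gcd k : ℕ) : ℝ) ^ 2) else 0)‖ ≤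
      C * ((M * N) ^ (6 * ε) * M * τ ^ 3 * ∑ l ∈ OS (N / g), ‖b l‖ ^ 2) := by
  obtain ⟨ρ, hρ, hrep⟩ := sepRep_E hε hε2
  have hI : 0 ≤ ∫ τ, ‖ρ τ‖ := integral_nonneg fun _ => norm_nonneg _
  refine ⟨(∫ τ, ‖ρ τ‖) * (2 * C₀), by positivity, fun N M g e τ b P => ?_⟩
  set S := ∑ l ∈ OS (N / g), ‖b l‖ ^ 2 with hS
  have hS0 : 0 ≤ S := Finset.sum_nonneg fun _ _ => by positivity
  set Y := ⌊(N : ℝ) ^ (1 / β)⌋₊ with hY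
  have hM0 := P.hM0
  have hM1 := P.hM1
  have hτ1 := P.hτ1
  have hNR := P.hNR
  have hpos : ∀ k ∈ SF Y, 1 / M ≤ 1 / M * k * ((e / e.gcd k : ℕ) : ℝ) ^ 2 := by
    intro k hk
    have h1 : (1 : ℝ) ≤ k := by exact_mod_cast (mem_SF.mp hk).1
    have h2 : (1 : ℝ) ≤ (e / e.gcd k : ℕ) := by
      exact_mod_cast Nat.pos_of_dvd_of_pos (Nat.div_dvd_of_dvd (Nat.gcd_dvd_left e k)) P.he0
    have h3 := one_le_pow₀ h2 (n := 2)
    rw [mul_assoc]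
    exact le_mul_of_one_le_right (by positivity) (one_le_mul_of_one_le_of_one_le h1 h3)
  have hMi : 0 < 1 / M := by positivity
  refine (kernel_form hρ (N / g) (SF Y) b _
    (fun k τ => ((1 / M * k * ((e / e.gcd k : ℕ) : ℝ) ^ 2 : ℝ) : ℂ) ^
      (-((ε : ℂ) + 2 * τ * Complex.I))) (Fs ε) (fun _ => M ^ ε) τ
    (fun k hk => continuous_cpow_line (hMi.trans_le (hpos k hk)) ε) ?_
    (fun l _ => continuous_Fs ε l) (fun l hl _ t => (norm_Fs_le hε.le l t).trans (P.hτ l hl)) ?_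
    (B := 2 * C₀ * ((M * N) ^ (6 * ε) * M * τ ^ 3 * S)) ?_).trans (le_of_eq (by ring))
  · intro k hk t
    rw [norm_cpow_line (hMi.trans_le (hpos k hk))]
    calc _ ≤ (1 / M) ^ (-ε) := Real.rpow_le_rpow_of_nonpos hMi (hpos k hk) (by linarith)
      _ = M ^ ε := by rw [one_div, Real.inv_rpow hM0.le, Real.rpow_neg hM0.le, inv_inv]
  · intro k hk l₁ _ l₂ _ hc _ _
    rw [FE_rep hρ hrep _ (hMi.trans_le (hpos k hk))]
    refine integral_congr_ae (Filter.Eventually.of_forall fun t => ?_)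
    simp only [Fs_mul ε hc]; ring
  · intro b₁ b₂ h1 h2
    rw [← mul_sum]
    have hA := hLS Y (N / g) (P.hY1 hβ) P.hn1
    have hb := bil_sum (by positivity) hA (by linarith) P.hτ h1 h2
    rw [← hS] at hb
    have hYN := P.hYN hβ
    have hYb : (Y : ℝ) ^ β ≤ N := floor_rpow_le hβ (by positivity)
    have e1 : ((Y : ℝ) * (N / g : ℕ)) ^ ε ≤ (M * N) ^ (2 * ε) := by
      rw [Real.rpow_mul (by positivity)]
      refine Real.rpow_le_rpow (by positivity) ?_ hε.le
      rw [Real.rpow_two, sq]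
      exact mul_le_mul (hYN.trans P.hNG) (P.hnNR.trans P.hNG) (by positivity) (by positivity)
    have e2 : M ^ ε ≤ (M * N) ^ ε := Real.rpow_le_rpow hM0.le P.hMG hε.le
    have e3 : ((N / g : ℕ) : ℝ) + (Y : ℝ) ^ β ≤ 2 * M := by
      have := P.hNM hβ
      have := P.hnNR
      linarith
    calc M ^ ε * ∑ k ∈ SF Y, ‖bil (N / g) b₁ b₂ k‖
        ≤ (M * N) ^ ε * (C₀ * (M * N) ^ (2 * ε) * (2 * M) * τ * τ ^ 2 * S) := by
          refine mul_le_mul e2 (hb.trans ?_) (Finset.sum_nonneg fun _ _ => norm_nonneg _)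
            (by positivity)
          gcongr
      _ = 2 * C₀ * ((M * N) ^ (3 * ε) * M * τ ^ 3 * S) := by
          have : (M * N) ^ (3 * ε) = (M * N) ^ ε * (M * N) ^ (2 * ε) := by
            rw [← Real.rpow_add (by positivity)]; ring_nf
          rw [this]; ring
      _ ≤ _ := by
          have := Real.rpow_le_rpow_of_exponent_le P.hG1 (by linarith : 3 * ε ≤ 6 * ε)
          gcongr

/-- The part `l^{-1/2} l^{s}` of the kernel depending on one column. -/
noncomputable def psi (σ : ℝ) (l : ℕ) (τ : ℝ) : ℂ :=
  (((l : ℝ) ^ (-(1 / 2) : ℝ) : ℝ) : ℂ) * (((l : ℝ)⁻¹ : ℝ) : ℂ) ^ (-((σ : ℂ) + 2 * τ * Complex.I))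

lemma continuous_psi (σ : ℝ) {l : ℕ} (hl : 0 < l) : Continuous (psi σ l) := by
  have : (0 : ℝ) < l := by exact_mod_cast hl
  exact continuous_const.mul (continuous_cpow_line (by positivity) σ)

lemma norm_psi (σ : ℝ) {l : ℕ} (hl : 0 < l) (τ : ℝ) : ‖psi σ l τ‖ = (l : ℝ) ^ (σ - 1 / 2) := by
  have hl' : (0 : ℝ) < l := by exact_mod_cast hl
  rw [psi, norm_mul, norm_cpow_line (by positivity), Complex.norm_real,
    Real.norm_of_nonneg (by positivity), Real.inv_rpow hl'.le, ← Real.rpow_neg hl'.le,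
    ← Real.rpow_add hl']
  congr 1; ring

lemma psi_split (σ τ : ℝ) {M : ℝ} {e l₁ l₂ : ℕ} (h1 : 0 < l₁) (h2 : 0 < l₂) (he : 0 < e)
    {y z : ℝ} (hy : 0 < y) (hz : z = y * ((l₁ : ℝ)⁻¹ * (l₂ : ℝ)⁻¹)) :
    ((M / (e * Real.sqrt ((l₁ * l₂ : ℕ) : ℝ)) : ℝ) : ℂ) *
        (z : ℂ) ^ (-((σ : ℂ) + 2 * τ * Complex.I)) =
      (((M / e : ℝ) : ℂ) * (y : ℂ) ^ (-((σ : ℂ) + 2 * τ * Complex.I))) *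
        psi σ l₁ τ * psi σ l₂ τ := by
  have h1' : (0 : ℝ) < l₁ := by exact_mod_cast h1
  have h2' : (0 : ℝ) < l₂ := by exact_mod_cast h2
  have he' : (0 : ℝ) < e := by exact_mod_cast he
  have hp : M / (e * Real.sqrt ((l₁ * l₂ : ℕ) : ℝ)) =
      M / e * ((l₁ : ℝ) ^ (-(1 / 2) : ℝ) * (l₂ : ℝ) ^ (-(1 / 2) : ℝ)) := by
    rw [← Real.mul_rpow h1'.le h2'.le, Real.rpow_neg (by positivity), ← Real.sqrt_eq_rpow]
    push_cast
    field_simp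
  rw [hz, hp, Complex.ofReal_mul y, Complex.mul_cpow_ofReal_nonneg hy.le (by positivity),
    Complex.ofReal_mul (l₁ : ℝ)⁻¹, Complex.mul_cpow_ofReal_nonneg (by positivity) (by positivity),
    psi, psi]
  simp only [Complex.ofReal_mul]
  ring

end QLS

namespace QLS

open Finset MeasureTheory

/-- `kernel_form` for the kernel in which the dual error terms enter. -/
lemma kernel_FE {σ : ℝ} {ρ : ℝ → ℂ} (hρ : Integrable ρ)
    (hrep : ∀ y : ℝ, 0 < y → (E y : ℂ) = ∫ τ, ρ τ * (y : ℂ) ^ (-((σ : ℂ) + 2 * τ * Complex.I)))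
    (hσ : 0 ≤ σ) {M : ℝ} (hM : 0 < M) {e : ℕ} (he : 0 < e) (n : ℕ) (Ks : Finset ℕ)
    (hKs : ∀ k ∈ Ks, 0 < k) (b : ℕ → ℂ) (y : ℕ → ℝ) (Φ : ℝ)
    (hy : ∀ k ∈ Ks, M / e * (M * k * ((e / e.gcd k : ℕ) : ℝ) ^ 2 / (e : ℝ) ^ 2) ^ (-σ) ≤ y k)
    (hΦ : ∀ l ∈ OS n, b l ≠ 0 → (l : ℝ) ^ (σ - 1 / 2) * l.divisors.card ≤ Φ)
    {B : ℝ} (hB : ∀ b₁ b₂ : ℕ → ℂ, (∀ l ∈ OS n, ‖b₁ l‖ ≤ Φ * ‖b l‖) →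
      (∀ l ∈ OS n, ‖b₂ l‖ ≤ Φ * ‖b l‖) → ∑ k ∈ Ks, y k * ‖bil n b₁ b₂ k‖ ≤ B) :
    ∑ k ∈ Ks, ‖∑ l₁ ∈ OS n, ∑ l₂ ∈ OS n, (if l₁.Coprime l₂ then
      b l₁ * (starRingEnd ℂ) (b l₂) * (J k l₁ * J k l₂) *
        (((M / (e * Real.sqrt ((l₁ * l₂ : ℕ) : ℝ)) : ℝ) : ℂ) * FE (l₁ * l₂)
          (M / ((e : ℝ) ^ 2 * ((l₁ * l₂ : ℕ) : ℝ)) * k * ((e / e.gcd k : ℕ) : ℝ) ^ 2)) else 0)‖ ≤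
      (∫ τ, ‖ρ τ‖) * B := by
  have he' : (0 : ℝ) < e := by exact_mod_cast he
  have hc : ∀ k : ℕ, (0 : ℝ) < (e / e.gcd k : ℕ) := fun k => by
    exact_mod_cast Nat.pos_of_dvd_of_pos (Nat.div_dvd_of_dvd (Nat.gcd_dvd_left e k)) he
  have hpos : ∀ k ∈ Ks, 0 < M * k * ((e / e.gcd k : ℕ) : ℝ) ^ 2 / (e : ℝ) ^ 2 := by
    intro k hk
    have h1 : (0 : ℝ) < k := by exact_mod_cast hKs k hk
    have := hc k
    positivity
  refine kernel_form hρ n Ks b _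
    (fun k τ => ((M / e : ℝ) : ℂ) * ((M * k * ((e / e.gcd k : ℕ) : ℝ) ^ 2 / (e : ℝ) ^ 2 : ℝ) : ℂ) ^
      (-((σ : ℂ) + 2 * τ * Complex.I))) (fun l τ => psi σ l τ * Fs σ l τ) y Φ
    (fun k hk => continuous_const.mul (continuous_cpow_line (hpos k hk) σ)) ?_
    (fun l hl => (continuous_psi σ (mem_OS.mp hl).1).mul (continuous_Fs σ l)) ?_ ?_ hB
  · intro k hk t
    refine le_trans (le_of_eq ?_) (hy k hk)
    rw [norm_mul, norm_cpow_line (hpos k hk), Complex.norm_real, Real.norm_of_nonneg (by positivity)]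
  · intro l hl hbl t
    refine le_trans ?_ (hΦ l hl hbl)
    rw [norm_mul, norm_psi σ (mem_OS.mp hl).1]
    exact mul_le_mul_of_nonneg_left (norm_Fs_le hσ l t) (by positivity)
  · intro k hk l₁ h1 l₂ h2 hcop _ _
    have p1 : (0 : ℝ) < l₁ := by exact_mod_cast (mem_OS.mp h1).1
    have p2 : (0 : ℝ) < l₂ := by exact_mod_cast (mem_OS.mp h2).1
    have hk0 : (0 : ℝ) < k := by exact_mod_cast hKs k hk
    have hz : M / ((e : ℝ) ^ 2 * ((l₁ * l₂ : ℕ) : ℝ)) * k * ((e / e.gcd k : ℕ) : ℝ) ^ 2 =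
        M * k * ((e / e.gcd k : ℕ) : ℝ) ^ 2 / (e : ℝ) ^ 2 * ((l₁ : ℝ)⁻¹ * (l₂ : ℝ)⁻¹) := by
      push_cast; field_simp
    have hzp : 0 < M / ((e : ℝ) ^ 2 * ((l₁ * l₂ : ℕ) : ℝ)) * k * ((e / e.gcd k : ℕ) : ℝ) ^ 2 := by
      rw [hz]; exact mul_pos (hpos k hk) (by positivity)
    rw [FE_rep hρ hrep _ hzp, ← integral_const_mul]
    refine integral_congr_ae (Filter.Eventually.of_forall fun t => ?_)
    have := psi_split σ t (M := M) (mem_OS.mp h1).1 (mem_OS.mp h2).1 he (hpos k hk) hz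
    simp only [Fs_mul σ hcop]
    rw [mul_left_comm, ← mul_assoc (_ : ℂ) _ (Fs σ l₁ t * Fs σ l₂ t), this]
    ring

/-- The contribution to `Err` of the dual error terms with `k ≤ (N/g)^{1/β}`. Columns are
restricted to a dyadic range because the exponent of `l` in the kernel is negative here. -/
lemma bound_dual_small {β ε C₀ : ℝ} (hβ : 1 ≤ β) (hε : 0 < ε) (hε2 : ε < 1 / 2) (hC : 0 < C₀)
    (hLS : HLS β ε C₀) : ∃ C : ℝ, 0 ≤ C ∧ ∀ (N : ℕ) (M : ℝ) (g e : ℕ) (τ : ℝ) (b : ℕ → ℂ),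
      Par β N M g e τ → (∀ l ∈ OS (N / g), b l ≠ 0 → N / g < 2 * l) →
      ∑ k ∈ SF ⌊((N / g : ℕ) : ℝ) ^ (1 / β)⌋₊, ‖∑ l₁ ∈ OS (N / g), ∑ l₂ ∈ OS (N / g),
        (if l₁.Coprime l₂ then b l₁ * (starRingEnd ℂ) (b l₂) * (J k l₁ * J k l₂) *
        (((M / (e * Real.sqrt ((l₁ * l₂ : ℕ) : ℝ)) : ℝ) : ℂ) * FE (l₁ * l₂)
          (M / ((e : ℝ) ^ 2 * ((l₁ * l₂ : ℕ) : ℝ)) * k * ((e / e.gcd k : ℕ) : ℝ) ^ 2)) else 0)‖ ≤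
      C * ((M * N) ^ (6 * ε) * M * τ ^ 3 * ∑ l ∈ OS (N / g), ‖b l‖ ^ 2) := by
  obtain ⟨ρ, hρ, hrep⟩ := sepRep_E hε hε2
  have hI : 0 ≤ ∫ τ, ‖ρ τ‖ := integral_nonneg fun _ => norm_nonneg _
  refine ⟨(∫ τ, ‖ρ τ‖) * (8 * C₀), by positivity, fun N M g e τ b P hb => ?_⟩
  set S := ∑ l ∈ OS (N / g), ‖b l‖ ^ 2 with hS
  have hS0 : 0 ≤ S := Finset.sum_nonneg fun _ _ => by positivity
  set n := N / g with hn
  set Y := ⌊(n : ℝ) ^ (1 / β)⌋₊ with hY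
  have hM0 := P.hM0
  have hM1 := P.hM1
  have hτ1 := P.hτ1
  have hNR := P.hNR
  have hnR : (1 : ℝ) ≤ n := P.hnR
  have hnN : (n : ℝ) ≤ N := P.hnNR
  have hG1 := P.hG1
  have he1 : (1 : ℝ) ≤ e := by exact_mod_cast P.he0
  have heN : (e : ℝ) ≤ N := by exact_mod_cast P.heN
  refine (kernel_FE hρ hrep hε.le hM0 P.he0 n (SF Y) (fun k hk => (mem_SF.mp hk).1) b
    (fun _ => M * (M * N) ^ (2 * ε)) (2 * (n : ℝ) ^ (ε - 1 / 2) * τ) ?_ ?_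
    (B := 8 * C₀ * ((M * N) ^ (6 * ε) * M * τ ^ 3 * S)) ?_).trans (le_of_eq (by ring))
  · intro k hk
    have h1 : (1 : ℝ) ≤ k := by exact_mod_cast (mem_SF.mp hk).1
    have h2 : (1 : ℝ) ≤ (e / e.gcd k : ℕ) := by
      exact_mod_cast Nat.pos_of_dvd_of_pos (Nat.div_dvd_of_dvd (Nat.gcd_dvd_left e k)) P.he0
    have h3 := one_le_pow₀ h2 (n := 2)
    have h4 : 1 / (M * N) ^ 2 ≤ M * k * ((e / e.gcd k : ℕ) : ℝ) ^ 2 / (e : ℝ) ^ 2 := by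
      rw [div_le_div_iff₀ (by positivity) (by positivity)]
      have a1 : (e : ℝ) ^ 2 ≤ (M * N) ^ 2 := by
        have := heN.trans P.hNG
        gcongr
      have a2 : 1 ≤ M * k * ((e / e.gcd k : ℕ) : ℝ) ^ 2 :=
        one_le_mul_of_one_le_of_one_le (one_le_mul_of_one_le_of_one_le hM1 h1) h3
      calc 1 * (e : ℝ) ^ 2 ≤ 1 * (M * N) ^ 2 := by gcongr
        _ ≤ _ := by gcongr
    calc M / e * (M * k * ((e / e.gcd k : ℕ) : ℝ) ^ 2 / (e : ℝ) ^ 2) ^ (-ε)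
        ≤ M * (1 / (M * N) ^ 2) ^ (-ε) := by
          refine mul_le_mul (div_le_self hM0.le he1) ?_ (by positivity) hM0.le
          exact Real.rpow_le_rpow_of_nonpos (by positivity) h4 (by linarith)
      _ = M * (M * N) ^ (2 * ε) := by
          rw [one_div, Real.inv_rpow (by positivity), Real.rpow_neg (by positivity), inv_inv,
            ← Real.rpow_two, ← Real.rpow_mul (by positivity)]
  · intro l hl hbl
    have h1 := hb l hl hbl
    have h2 : (n : ℝ) / 2 ≤ l := by
      rw [div_le_iff₀ two_pos]
      have : (n : ℝ) ≤ 2 * l := by exact_mod_cast h1.le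
      linarith
    refine mul_le_mul ?_ (P.hτ l hl) (by positivity) (by positivity)
    calc (l : ℝ) ^ (ε - 1 / 2) ≤ ((n : ℝ) / 2) ^ (ε - 1 / 2) :=
          Real.rpow_le_rpow_of_nonpos (by positivity) h2 (by linarith)
      _ = (2 : ℝ) ^ (1 / 2 - ε) * (n : ℝ) ^ (ε - 1 / 2) := by
          rw [Real.div_rpow (by positivity) (by norm_num), div_eq_inv_mul,
            ← Real.rpow_neg (by norm_num)]
          congr 2; ring
      _ ≤ 2 * (n : ℝ) ^ (ε - 1 / 2) := by
          refine mul_le_mul_of_nonneg_right ?_ (by positivity)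
          calc (2 : ℝ) ^ (1 / 2 - ε) ≤ 2 ^ (1 : ℝ) :=
                Real.rpow_le_rpow_of_exponent_le (by norm_num) (by linarith)
            _ = 2 := Real.rpow_one _
  · intro b₁ b₂ h1 h2
    rw [← mul_sum]
    have hY1 : 1 ≤ Y := by
      rw [hY, Nat.one_le_floor_iff]; exact Real.one_le_rpow hnR (by positivity)
    have hA := hLS Y n hY1 P.hn1
    have hb := bil_sum (by positivity) hA (by linarith) P.hτ h1 h2
    rw [← hS] at hb
    have hYb : (Y : ℝ) ^ β ≤ n := floor_rpow_le hβ (by positivity)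
    have hYn : (Y : ℝ) ≤ n := by
      refine (Nat.floor_le (by positivity)).trans ?_
      conv_rhs => rw [← Real.rpow_one (n : ℝ)]
      refine Real.rpow_le_rpow_of_exponent_le hnR ?_
      rw [div_le_one (by linarith)]; exact hβ
    have e1 : ((Y : ℝ) * n) ^ ε ≤ (n : ℝ) ^ (2 * ε) := by
      rw [Real.rpow_mul (by positivity)]
      refine Real.rpow_le_rpow (by positivity) ?_ hε.le
      rw [Real.rpow_two, sq]
      gcongr
    have e3 : (n : ℝ) + (Y : ℝ) ^ β ≤ 2 * n := by linarith
    calc M * (M * N) ^ (2 * ε) * ∑ k ∈ SF Y, ‖bil n b₁ b₂ k‖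
        ≤ M * (M * N) ^ (2 * ε) *
          (C₀ * (n : ℝ) ^ (2 * ε) * (2 * n) * τ * (2 * (n : ℝ) ^ (ε - 1 / 2) * τ) ^ 2 * S) := by
          refine mul_le_mul_of_nonneg_left (hb.trans ?_) (by positivity)
          gcongr
      _ = 8 * C₀ * ((M * N) ^ (2 * ε) * (n : ℝ) ^ (4 * ε) * M * τ ^ 3 * S) := by
          have : (n : ℝ) ^ (4 * ε) = (n : ℝ) ^ (2 * ε) * n * ((n : ℝ) ^ (ε - 1 / 2)) ^ 2 := by
            rw [← Real.rpow_natCast ((n : ℝ) ^ (ε - 1 / 2)), ← Real.rpow_mul (by positivity)]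
            nth_rw 3 [← Real.rpow_one (n : ℝ)]
            rw [← Real.rpow_add (by positivity), ← Real.rpow_add (by positivity)]
            congr 1; push_cast; ring
          rw [this]; ring
      _ ≤ 8 * C₀ * ((M * N) ^ (2 * ε) * (M * N) ^ (4 * ε) * M * τ ^ 3 * S) := by
          have := Real.rpow_le_rpow (by positivity) (hnN.trans P.hNG)
            (by positivity : (0 : ℝ) ≤ 4 * ε)
          gcongr
      _ = _ := by
          rw [← Real.rpow_add (by positivity)]; ring_nf

/-- The contribution to `Err` of the dual error terms with `(N/g)^{1/β} < k ≤ N^{1/β}`. -/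
lemma bound_dual_large {β ε C₀ : ℝ} (hβ : 1 ≤ β) (hε : 0 < ε) (hε2 : ε < 1 / 2) (hC : 0 < C₀)
    (hLS : HLS β ε C₀) : ∃ C : ℝ, 0 ≤ C ∧ ∀ (N : ℕ) (M : ℝ) (g e : ℕ) (τ : ℝ) (b : ℕ → ℂ),
      Par β N M g e τ →
      ∑ k ∈ (SF ⌊(N : ℝ) ^ (1 / β)⌋₊).filter (fun k : ℕ => ((N / g : ℕ) : ℝ) ^ (1 / β) < (k : ℝ)),
        ‖∑ l₁ ∈ OS (N / g), ∑ l₂ ∈ OS (N / g),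
        (if l₁.Coprime l₂ then b l₁ * (starRingEnd ℂ) (b l₂) * (J k l₁ * J k l₂) *
        (((M / (e * Real.sqrt ((l₁ * l₂ : ℕ) : ℝ)) : ℝ) : ℂ) * FE (l₁ * l₂)
          (M / ((e : ℝ) ^ 2 * ((l₁ * l₂ : ℕ) : ℝ)) * k * ((e / e.gcd k : ℕ) : ℝ) ^ 2)) else 0)‖ ≤
      C * ((M * N) ^ (6 * ε) * M * τ ^ 3 * ∑ l ∈ OS (N / g), ‖b l‖ ^ 2) := by
  obtain ⟨ρ, hρ, hrep⟩ := sepRep_E (by linarith : 0 < 1 / 2 - ε) (by linarith : 1 / 2 - ε < 1 / 2)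
  obtain ⟨C₁, hC₁, hdy⟩ := dyadic_sum (by linarith : 0 < β) hε
  have hI : 0 ≤ ∫ τ, ‖ρ τ‖ := integral_nonneg fun _ => norm_nonneg _
  refine ⟨(∫ τ, ‖ρ τ‖) * (C₁ * C₀), by positivity, fun N M g e τ b P => ?_⟩
  set S := ∑ l ∈ OS (N / g), ‖b l‖ ^ 2 with hS
  have hS0 : 0 ≤ S := Finset.sum_nonneg fun _ _ => by positivity
  set n := N / g with hn
  set Y := ⌊(N : ℝ) ^ (1 / β)⌋₊ with hY
  have hM0 := P.hM0
  have hM1 := P.hM1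
  have hτ1 := P.hτ1
  have hNR := P.hNR
  have hnR : (1 : ℝ) ≤ n := P.hnR
  have hnN : (n : ℝ) ≤ N := P.hnNR
  have hG1 := P.hG1
  have hβ0 : 0 < β := by linarith
  have he1 : (1 : ℝ) ≤ e := by exact_mod_cast P.he0
  refine (kernel_FE hρ hrep (by linarith) hM0 P.he0 n
    ((SF Y).filter (fun k : ℕ => (n : ℝ) ^ (1 / β) < (k : ℝ)))
    (fun k hk => (mem_SF.mp (mem_filter.mp hk).1).1) b
    (fun k => M * (M * N) ^ (4 * ε) * (k : ℝ) ^ (-(β + 2 * ε))) τ ?_ ?_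
    (B := C₁ * C₀ * ((M * N) ^ (6 * ε) * M * τ ^ 3 * S)) ?_).trans (le_of_eq (by ring))
  · intro k hk
    have hk' := mem_SF.mp (mem_filter.mp hk).1
    have h1 : (1 : ℝ) ≤ k := by exact_mod_cast hk'.1
    have h0 : (0 : ℝ) < k := by linarith
    have hkY : (k : ℝ) ≤ (N : ℝ) ^ (1 / β) :=
      le_trans (by exact_mod_cast hk'.2.1) (Nat.floor_le (by positivity))
    have h2 : (1 : ℝ) ≤ (e / e.gcd k : ℕ) := by
      exact_mod_cast Nat.pos_of_dvd_of_pos (Nat.div_dvd_of_dvd (Nat.gcd_dvd_left e k)) P.he0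
    have h3 := one_le_pow₀ h2 (n := 2)
    have h4 : M * k / (e : ℝ) ^ 2 ≤ M * k * ((e / e.gcd k : ℕ) : ℝ) ^ 2 / (e : ℝ) ^ 2 := by
      exact div_le_div_of_nonneg_right (le_mul_of_one_le_right (by positivity) h3) (by positivity)
    have a1 : (k : ℝ) ^ (β + 3 * ε - 1 / 2) ≤ M ^ (1 / 2 : ℝ) * (N : ℝ) ^ (3 * ε) := by
      calc (k : ℝ) ^ (β + 3 * ε - 1 / 2) ≤ ((N : ℝ) ^ (1 / β)) ^ (β + 3 * ε - 1 / 2) :=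
            Real.rpow_le_rpow h0.le hkY (by linarith)
        _ = ((N : ℝ) ^ (2 - 1 / β)) ^ (1 / 2 : ℝ) * (N : ℝ) ^ (3 * ε / β) := by
            rw [← Real.rpow_mul (by positivity), ← Real.rpow_mul (by positivity),
              ← Real.rpow_add (by positivity)]
            congr 1; field_simp; ring
        _ ≤ _ := by
            refine mul_le_mul (Real.rpow_le_rpow (by positivity) P.hM (by norm_num))
              (Real.rpow_le_rpow_of_exponent_le hNR ?_) (by positivity) (by positivity)
            exact div_le_self (by positivity) hβ
    calc M / e * (M * k * ((e / e.gcd k : ℕ) : ℝ) ^ 2 / (e : ℝ) ^ 2) ^ (-(1 / 2 - ε))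
        ≤ M / e * (M * k / (e : ℝ) ^ 2) ^ (-(1 / 2 - ε)) := by
          refine mul_le_mul_of_nonneg_left ?_ (by positivity)
          exact Real.rpow_le_rpow_of_nonpos (by positivity) h4 (by linarith)
      _ = M ^ (1 / 2 + ε) * (k : ℝ) ^ (ε - 1 / 2) * (e : ℝ) ^ (-(2 * ε)) := by
          rw [Real.div_rpow (by positivity) (by positivity), Real.mul_rpow hM0.le h0.le,
            ← Real.rpow_natCast (e : ℝ) 2, ← Real.rpow_mul (by positivity), div_eq_mul_inv M,
            div_eq_mul_inv, ← Real.rpow_neg (by positivity), ← Real.rpow_neg_one (e : ℝ)]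
          have x1 : M ^ (1 / 2 + ε) = M * M ^ (-(1 / 2 - ε)) := by
            nth_rw 2 [← Real.rpow_one M]; rw [← Real.rpow_add hM0]; congr 1; ring
          have x2 : (e : ℝ) ^ (-(2 * ε)) =
              (e : ℝ) ^ (-1 : ℝ) * (e : ℝ) ^ (-(((2 : ℕ) : ℝ) * -(1 / 2 - ε))) := by
            rw [← Real.rpow_add (by positivity)]; congr 1; push_cast; ring
          have x3 : ε - 1 / 2 = -(1 / 2 - ε) := by ring
          rw [x1, x2, x3]; ring
      _ ≤ M ^ (1 / 2 + ε) * (k : ℝ) ^ (ε - 1 / 2) * 1 := by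
          refine mul_le_mul_of_nonneg_left ?_ (by positivity)
          exact Real.rpow_le_one_of_one_le_of_nonpos he1 (by linarith)
      _ = M ^ (1 / 2 + ε) * ((k : ℝ) ^ (β + 3 * ε - 1 / 2) * (k : ℝ) ^ (-(β + 2 * ε))) := by
          rw [mul_one, ← Real.rpow_add h0]; congr 2; ring
      _ ≤ M ^ (1 / 2 + ε) * (M ^ (1 / 2 : ℝ) * (N : ℝ) ^ (3 * ε) * (k : ℝ) ^ (-(β + 2 * ε))) := by
          gcongr
      _ = M * (M ^ ε * (N : ℝ) ^ (3 * ε)) * (k : ℝ) ^ (-(β + 2 * ε)) := by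
          have x1 : M * M ^ ε = M ^ (1 / 2 + ε) * M ^ (1 / 2 : ℝ) := by
            nth_rw 1 [← Real.rpow_one M]
            rw [← Real.rpow_add hM0, ← Real.rpow_add hM0]; congr 1; ring
          rw [← mul_assoc M, x1]; ring
      _ ≤ _ := by
          have x1 : M ^ ε * (N : ℝ) ^ (3 * ε) ≤ (M * N) ^ (4 * ε) := by
            have : (M * N) ^ (4 * ε) = (M * N) ^ ε * (M * N) ^ (3 * ε) := by
              rw [← Real.rpow_add (by positivity)]; congr 1; ring
            rw [this]
            exact mul_le_mul (Real.rpow_le_rpow hM0.le P.hMG hε.le)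
              (Real.rpow_le_rpow (by positivity) P.hNG (by positivity)) (by positivity)
              (by positivity)
          gcongr
  · intro l hl _
    have hl1 : (1 : ℝ) ≤ l := by exact_mod_cast (mem_OS.mp hl).1
    calc _ ≤ 1 * τ := by
          refine mul_le_mul ?_ (P.hτ l hl) (by positivity) zero_le_one
          exact Real.rpow_le_one_of_one_le_of_nonpos hl1 (by linarith)
      _ = τ := one_mul _
  · intro b₁ b₂ h1 h2
    have hd := hdy (fun k => ‖bil n b₁ b₂ k‖) (C₀ * (n : ℝ) ^ ε * τ ^ 3 * S) n ((n : ℝ) ^ (1 / β))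
      (fun _ => norm_nonneg _) (by positivity) (by positivity)
      (by rw [← Real.rpow_mul (by positivity), one_div_mul_cancel hβ0.ne', Real.rpow_one]) ?_ Y
    · simp_rw [mul_assoc (M * (M * N) ^ (4 * ε))]
      rw [← mul_sum]
      calc _ ≤ M * (M * N) ^ (4 * ε) * (C₁ * (C₀ * (n : ℝ) ^ ε * τ ^ 3 * S)) :=
            mul_le_mul_of_nonneg_left hd (by positivity)
        _ = C₁ * C₀ * (((M * N) ^ (4 * ε) * (n : ℝ) ^ ε) * M * τ ^ 3 * S) := by ring
        _ ≤ _ := by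
            have : (M * N) ^ (4 * ε) * (n : ℝ) ^ ε ≤ (M * N) ^ (6 * ε) := by
              calc _ ≤ (M * N) ^ (4 * ε) * (M * N) ^ ε := by
                    refine mul_le_mul_of_nonneg_left ?_ (by positivity)
                    exact Real.rpow_le_rpow (by positivity) (hnN.trans P.hNG) hε.le
                _ = (M * N) ^ (5 * ε) := by
                    rw [← Real.rpow_add (by positivity)]; congr 1; ring
                _ ≤ _ := Real.rpow_le_rpow_of_exponent_le hG1 (by linarith)
            gcongr
    · intro X hX
      have hb := bil_sum (by positivity) (hLS X n hX P.hn1) (by linarith) P.hτ h1 h2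
      refine hb.trans (le_of_eq ?_)
      rw [Real.mul_rpow (by positivity) (by positivity)]
      ring
end QLS

namespace QLS

open Finset MeasureTheory

/-- Parametrising integers by their squarefree part and the square cofactor. -/
lemma sum_core_le {Y V : ℕ} (Ks : Finset ℕ) (hKs : ∀ v ∈ Ks, v < V ∧ v ≠ 0 ∧ ¬ Sml Y v)
    {z : ℝ} (hz : ⌊z⌋₊ = Y) (f : ℕ → ℝ) (hf : ∀ v, 0 ≤ f v) :
    ∑ v ∈ Ks, f v ≤ ∑ t ∈ Finset.Icc 1 V,
      ∑ k ∈ (SF V).filter (fun k : ℕ => z < (k : ℝ)), f (k * t ^ 2) := by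
  have hex : ∀ v : ℕ, ∃ p : ℕ × ℕ, p.2 * p.1 ^ 2 = v ∧ Squarefree p.2 := by
    intro v
    obtain ⟨a, b, h, hs⟩ := Nat.sq_mul_squarefree v
    exact ⟨(b, a), by rw [mul_comm]; exact h, hs⟩
  choose p hp hps using hex
  have hinj : Set.InjOn p Ks := by
    intro v _ w _ h
    rw [← hp v, ← hp w, h]
  calc ∑ v ∈ Ks, f v = ∑ x ∈ Ks.image p, f (x.2 * x.1 ^ 2) := by
        rw [Finset.sum_image hinj]
        exact Finset.sum_congr rfl fun v _ => by rw [hp]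
    _ ≤ ∑ x ∈ Finset.Icc 1 V ×ˢ (SF V).filter (fun k : ℕ => z < (k : ℝ)), f (x.2 * x.1 ^ 2) := by
        refine Finset.sum_le_sum_of_subset_of_nonneg ?_ fun _ _ _ => hf _
        intro x hx
        obtain ⟨v, hv, rfl⟩ := Finset.mem_image.mp hx
        obtain ⟨h1, h2, h3⟩ := hKs v hv
        have hk0 : (p v).2 ≠ 0 := (hps v).ne_zero
        have ht0 : (p v).1 ≠ 0 := by
          intro h
          apply h2; rw [← hp v, h]; simp
        have hkv : (p v).2 ≤ v := by
          conv_rhs => rw [← hp v]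
          exact Nat.le_mul_of_pos_right _ (by positivity)
        have htv : (p v).1 ≤ v := by
          conv_rhs => rw [← hp v]
          calc (p v).1 ≤ (p v).1 ^ 2 := Nat.le_self_pow (by norm_num) _
            _ ≤ _ := Nat.le_mul_of_pos_left _ (by omega)
        rw [mem_product, Finset.mem_Icc, mem_filter, mem_SF]
        refine ⟨⟨by omega, by omega⟩, ⟨by omega, by omega, hps v⟩, ?_⟩
        by_contra hcon
        refine h3 ⟨h2, (p v).2, mem_SF.mpr ⟨by omega, ?_, hps v⟩, (p v).1, (hp v).symm⟩
        rw [← hz]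
        exact Nat.le_floor (not_lt.mp hcon)
    _ = _ := Finset.sum_product _ _ _

lemma bil_mul_sq (n : ℕ) (b₁ b₂ : ℕ → ℂ) (k t : ℕ) :
    bil n b₁ b₂ (k * t ^ 2) = bil n (fun l => if t.Coprime l then b₁ l else 0)
      (fun l => if t.Coprime l then b₂ l else 0) k := by
  unfold bil
  refine Finset.sum_congr rfl fun l₁ h1 => Finset.sum_congr rfl fun l₂ h2 => ?_
  have p1 : l₁ ≠ 0 := by have := (mem_OS.mp h1).1; omega
  have p2 : l₂ ≠ 0 := by have := (mem_OS.mp h2).1; omega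
  rw [J_mul_sq p1, J_mul_sq p2]
  by_cases c1 : t.Coprime l₁
  · by_cases c2 : t.Coprime l₂
    · simp only [if_pos c1, if_pos c2, mul_one]
    · simp only [if_neg c2, mul_zero, zero_mul]
  · simp only [if_neg c1, mul_zero, zero_mul]

open Classical in
/-- The contribution to `Err` of the large part at the dual scale: the Gaussian weight is opened
by Mellin inversion, and the rows with squarefree part above `N^{1/β}` are handled by the assumed large
sieve bound. -/
lemma bound_PL {β ε C₀ : ℝ} (hβ : 1 ≤ β) (hε : 0 < ε) (hC : 0 < C₀)
    (hLS : HLS β ε C₀) : ∃ C : ℝ, 0 ≤ C ∧ ∀ (N : ℕ) (M : ℝ) (g e : ℕ) (τ : ℝ) (b : ℕ → ℂ),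
      Par β N M g e τ →
      ‖∑ l₁ ∈ OS (N / g), ∑ l₂ ∈ OS (N / g),
        (if l₁.Coprime l₂ then b l₁ * (starRingEnd ℂ) (b l₂) *
        (((M / (e * Real.sqrt ((l₁ * l₂ : ℕ) : ℝ)) : ℝ) : ℂ) * PL ⌊(N : ℝ) ^ (1 / β)⌋₊ e (l₁ * l₂)
          (M / ((e : ℝ) ^ 2 * ((l₁ * l₂ : ℕ) : ℝ)))) else 0)‖ ≤
      C * ((M * N) ^ (6 * ε) * M * τ ^ 3 * ∑ l ∈ OS (N / g), ‖b l‖ ^ 2) := by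
  set A : ℝ := β + 2 * ε with hA
  have hA1 : 1 < A := by linarith
  obtain ⟨ρ, hρ, hrep⟩ := sepRep_W (by linarith : 0 < A)
  obtain ⟨C₁, hC₁, hdy⟩ := dyadic_sum (by linarith : 0 < β) hε
  have hI : 0 ≤ ∫ τ, ‖ρ τ‖ := integral_nonneg fun _ => norm_nonneg _
  have hzs : Summable fun t : ℕ => ((t : ℝ)) ^ (-(2 * A)) := by
    rw [Real.summable_nat_rpow]; linarith
  set Z := ∑' t : ℕ, ((t : ℝ)) ^ (-(2 * A)) with hZ
  have hZ0 : 0 ≤ Z := tsum_nonneg fun _ => by positivity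
  refine ⟨(∫ τ, ‖ρ τ‖) * (Z * (C₁ * C₀)), by positivity, fun N M g e τ b P => ?_⟩
  set S := ∑ l ∈ OS (N / g), ‖b l‖ ^ 2 with hS
  have hS0 : 0 ≤ S := Finset.sum_nonneg fun _ _ => by positivity
  set n := N / g with hn
  set Y := ⌊(N : ℝ) ^ (1 / β)⌋₊ with hY
  have hM0 := P.hM0
  have hM1 := P.hM1
  have hτ1 := P.hτ1
  have hNR := P.hNR
  have hnR : (1 : ℝ) ≤ n := P.hnR
  have hnN : (n : ℝ) ≤ N := P.hnNR
  have hG1 := P.hG1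
  have hβ0 : 0 < β := by linarith
  have he1 : (1 : ℝ) ≤ e := by exact_mod_cast P.he0
  have hen : (e : ℝ) * n ≤ N := by exact_mod_cast P.hen
  set B : ℝ := Z * (C₁ * C₀) * ((M * N) ^ (6 * ε) * M * τ ^ 3 * S) with hB
  -- bound for finitely many rows
  have fin : ∀ Ks : Finset ℕ, ∀ V : ℕ, (∀ v ∈ Ks, v < V ∧ v ≠ 0 ∧ ¬ Sml Y v) →
      ∑ v ∈ Ks, ‖∑ l₁ ∈ OS n, ∑ l₂ ∈ OS n, (if l₁.Coprime l₂ then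
        b l₁ * (starRingEnd ℂ) (b l₂) * (J v l₁ * J v l₂) *
        (((M / (e * Real.sqrt ((l₁ * l₂ : ℕ) : ℝ)) : ℝ) : ℂ) *
          (W (v * (M / ((e : ℝ) ^ 2 * ((l₁ * l₂ : ℕ) : ℝ)))) : ℂ)) else 0)‖ ≤
        (∫ τ, ‖ρ τ‖) * B := by
    intro Ks V hKs
    have hpos : ∀ v ∈ Ks, (0 : ℝ) < v * M / (e : ℝ) ^ 2 := by
      intro v hv
      have : (0 : ℝ) < v := by exact_mod_cast Nat.pos_of_ne_zero (hKs v hv).2.1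
      positivity
    refine kernel_form hρ n Ks b _
      (fun v τ => ((M / e : ℝ) : ℂ) * ((v * M / (e : ℝ) ^ 2 : ℝ) : ℂ) ^
        (-((A : ℂ) + 2 * τ * Complex.I))) (psi A)
      (fun v => M / e * ((v : ℝ) * M / (e : ℝ) ^ 2) ^ (-A)) ((n : ℝ) ^ (A - 1 / 2))
      (fun v hv => continuous_const.mul (continuous_cpow_line (hpos v hv) A)) ?_
      (fun l hl => continuous_psi A (mem_OS.mp hl).1) ?_ ?_ ?_
    · intro v hv t
      rw [norm_mul, norm_cpow_line (hpos v hv), Complex.norm_real,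
        Real.norm_of_nonneg (by positivity)]
    · intro l hl _ t
      rw [norm_psi A (mem_OS.mp hl).1]
      refine Real.rpow_le_rpow (by positivity) ?_ (by linarith)
      exact_mod_cast (mem_OS.mp hl).2.1
    · intro v hv l₁ h1 l₂ h2 _ _ _
      have p1 : (0 : ℝ) < l₁ := by exact_mod_cast (mem_OS.mp h1).1
      have p2 : (0 : ℝ) < l₂ := by exact_mod_cast (mem_OS.mp h2).1
      have hv0 : (0 : ℝ) < v := by exact_mod_cast Nat.pos_of_ne_zero (hKs v hv).2.1
      have hz : v * (M / ((e : ℝ) ^ 2 * ((l₁ * l₂ : ℕ) : ℝ))) =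
          v * M / (e : ℝ) ^ 2 * ((l₁ : ℝ)⁻¹ * (l₂ : ℝ)⁻¹) := by
        push_cast; field_simp
      rw [hrep _ (by rw [hz]; exact mul_pos (hpos v hv) (by positivity)), ← integral_const_mul]
      refine integral_congr_ae (Filter.Eventually.of_forall fun t => ?_)
      have := psi_split A t (M := M) (mem_OS.mp h1).1 (mem_OS.mp h2).1 P.he0 (hpos v hv) hz
      simp only
      rw [mul_left_comm, this]
    · intro b₁ b₂ h1 h2
      refine (sum_core_le Ks hKs hY.symm
        (fun v => M / e * ((v : ℝ) * M / (e : ℝ) ^ 2) ^ (-A) * ‖bil n b₁ b₂ v‖)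
        (fun v => by positivity)).trans ?_
      set Φ : ℝ := (n : ℝ) ^ (A - 1 / 2) with hΦ
      have hK : M / e * (M / (e : ℝ) ^ 2) ^ (-A) * Φ ^ 2 ≤ M * (M * N) ^ (2 * ε) := by
        have x1 : Φ ^ 2 = (n : ℝ) ^ (2 * A - 1) := by
          rw [hΦ, ← Real.rpow_natCast, ← Real.rpow_mul (by positivity)]; congr 1; push_cast; ring
        have x2 : M / e * (M / (e : ℝ) ^ 2) ^ (-A) = M * M ^ (-A) * (e : ℝ) ^ (2 * A - 1) := by
          rw [Real.div_rpow hM0.le (by positivity), ← Real.rpow_natCast (e : ℝ) 2,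
            ← Real.rpow_mul (by positivity), div_eq_mul_inv M, div_eq_mul_inv,
            ← Real.rpow_neg (by positivity), ← Real.rpow_neg_one (e : ℝ)]
          have : (e : ℝ) ^ (2 * A - 1) = (e : ℝ) ^ (-1 : ℝ) * (e : ℝ) ^ (-(((2 : ℕ) : ℝ) * -A)) := by
            rw [← Real.rpow_add (by positivity)]; congr 1; push_cast; ring
          rw [this]; ring
        rw [x1, x2]
        calc M * M ^ (-A) * (e : ℝ) ^ (2 * A - 1) * (n : ℝ) ^ (2 * A - 1)
            = M * (M ^ (-A) * (e * n : ℝ) ^ (2 * A - 1)) := by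
              rw [Real.mul_rpow (by positivity) (by positivity)]; ring
          _ ≤ M * (((N : ℝ) ^ (2 - 1 / β)) ^ (-A) * (N : ℝ) ^ (2 * A - 1)) := by
              refine mul_le_mul_of_nonneg_left ?_ hM0.le
              refine mul_le_mul ?_ ?_ (by positivity) (by positivity)
              · exact Real.rpow_le_rpow_of_nonpos (by positivity) P.hM (by linarith)
              · exact Real.rpow_le_rpow (by positivity) hen (by linarith)
          _ = M * (N : ℝ) ^ (2 * ε / β) := by
              rw [← Real.rpow_mul (by positivity), ← Real.rpow_add (by positivity)]
              congr 2; rw [hA]; field_simp; ring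
          _ ≤ M * (N : ℝ) ^ (2 * ε) := by
              refine mul_le_mul_of_nonneg_left ?_ hM0.le
              exact Real.rpow_le_rpow_of_exponent_le hNR (div_le_self (by positivity) hβ)
          _ ≤ _ := by
              refine mul_le_mul_of_nonneg_left ?_ hM0.le
              exact Real.rpow_le_rpow (by positivity) P.hNG (by positivity)
      have hin : ∀ t ∈ Finset.Icc 1 V, ∑ k ∈ (SF V).filter (fun k : ℕ => (N : ℝ) ^ (1 / β) < (k : ℝ)),
          M / e * (((k * t ^ 2 : ℕ) : ℝ) * M / (e : ℝ) ^ 2) ^ (-A) * ‖bil n b₁ b₂ (k * t ^ 2)‖ ≤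
          (t : ℝ) ^ (-(2 * A)) *
            (M / e * (M / (e : ℝ) ^ 2) ^ (-A) * (C₁ * (C₀ * (n : ℝ) ^ ε * τ * Φ ^ 2 * S))) := by
        intro t ht
        have ht0 : (0 : ℝ) < t := by exact_mod_cast (Finset.mem_Icc.mp ht).1
        set b₁' : ℕ → ℂ := fun l => if t.Coprime l then b₁ l else 0 with hb₁'
        set b₂' : ℕ → ℂ := fun l => if t.Coprime l then b₂ l else 0 with hb₂'
        have h1' : ∀ l ∈ OS n, ‖b₁' l‖ ≤ Φ * ‖b l‖ := by
          intro l hl; simp only [hb₁']; split_ifs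
          · exact h1 l hl
          · rw [norm_zero]; exact (norm_nonneg _).trans (h1 l hl)
        have h2' : ∀ l ∈ OS n, ‖b₂' l‖ ≤ Φ * ‖b l‖ := by
          intro l hl; simp only [hb₂']; split_ifs
          · exact h2 l hl
          · rw [norm_zero]; exact (norm_nonneg _).trans (h2 l hl)
        have hd := hdy (fun k => ‖bil n b₁' b₂' k‖) (C₀ * (n : ℝ) ^ ε * τ * Φ ^ 2 * S) n
          ((N : ℝ) ^ (1 / β)) (fun _ => norm_nonneg _) (by positivity) (by positivity)
          (by rw [← Real.rpow_mul (by positivity), one_div_mul_cancel hβ0.ne', Real.rpow_one]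
              exact hnN) ?_ V
        · calc _ = (t : ℝ) ^ (-(2 * A)) * (M / e * (M / (e : ℝ) ^ 2) ^ (-A) *
                ∑ k ∈ (SF V).filter (fun k : ℕ => (N : ℝ) ^ (1 / β) < (k : ℝ)),
                  (k : ℝ) ^ (-(β + 2 * ε)) * ‖bil n b₁' b₂' k‖) := by
                rw [mul_sum, mul_sum]
                refine Finset.sum_congr rfl fun k hk => ?_
                rw [bil_mul_sq]
                have x1 : ((k * t ^ 2 : ℕ) : ℝ) * M / (e : ℝ) ^ 2 =
                    (k * (t : ℝ) ^ 2) * (M / (e : ℝ) ^ 2) := by push_cast; ring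
                have x2 : ((t : ℝ) ^ 2) ^ (-A) = (t : ℝ) ^ (-(2 * A)) := by
                  rw [← Real.rpow_natCast, ← Real.rpow_mul ht0.le]; congr 1; push_cast; ring
                rw [x1, Real.mul_rpow (by positivity) (by positivity),
                  Real.mul_rpow (by positivity) (by positivity), x2]
                ring
            _ ≤ _ := by
                refine mul_le_mul_of_nonneg_left ?_ (by positivity)
                exact mul_le_mul_of_nonneg_left hd (by positivity)
        · intro X hX
          have hb := bil_sum (by positivity) (hLS X n hX P.hn1) (by linarith) P.hτ h1' h2'
          refine hb.trans (le_of_eq ?_)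
          rw [Real.mul_rpow (by positivity) (by positivity)]
          ring
      refine (Finset.sum_le_sum hin).trans ?_
      rw [← Finset.sum_mul]
      have hZb : ∑ t ∈ Finset.Icc 1 V, (t : ℝ) ^ (-(2 * A)) ≤ Z :=
        hzs.sum_le_tsum _ fun _ _ => by positivity
      calc _ ≤ Z * (M / e * (M / (e : ℝ) ^ 2) ^ (-A) * (C₁ * (C₀ * (n : ℝ) ^ ε * τ * Φ ^ 2 * S))) :=
            mul_le_mul_of_nonneg_right hZb (by positivity)
        _ = Z * (C₁ * C₀) * ((n : ℝ) ^ ε * (M / e * (M / (e : ℝ) ^ 2) ^ (-A) * Φ ^ 2) * τ * S) := by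
            ring
        _ ≤ Z * (C₁ * C₀) * ((M * N) ^ ε * (M * (M * N) ^ (2 * ε)) * τ ^ 3 * S) := by
            have y1 : (n : ℝ) ^ ε ≤ (M * N) ^ ε :=
              Real.rpow_le_rpow (by positivity) (hnN.trans P.hNG) hε.le
            have y2 : τ ≤ τ ^ 3 := le_self_pow₀ hτ1 (by norm_num)
            gcongr
        _ = Z * (C₁ * C₀) * ((M * N) ^ (3 * ε) * M * τ ^ 3 * S) := by
            have : (M * N) ^ (3 * ε) = (M * N) ^ ε * (M * N) ^ (2 * ε) := by
              rw [← Real.rpow_add (by positivity)]; ring_nf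
            rw [this]; ring
        _ ≤ _ := by
            have := Real.rpow_le_rpow_of_exponent_le P.hG1 (by linarith : 3 * ε ≤ 6 * ε)
            rw [hB]
            gcongr
  -- the form is the sum of the rows
  set G : ℕ → ℕ → ℕ → ℂ := fun l₁ l₂ v => if l₁.Coprime l₂ then b l₁ * (starRingEnd ℂ) (b l₂) *
        (((M / (e * Real.sqrt ((l₁ * l₂ : ℕ) : ℝ)) : ℝ) : ℂ) *
        (if v ≠ 0 ∧ ¬ Sml Y v then (if e ∣ v then J v (l₁ * l₂) *
          (W (v * (M / ((e : ℝ) ^ 2 * ((l₁ * l₂ : ℕ) : ℝ)))) : ℂ) else 0) else 0)) else 0 with hG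
  have hsum : ∀ l₁ ∈ OS n, ∀ l₂ ∈ OS n, Summable (G l₁ l₂) := by
    intro l₁ h1 l₂ h2
    have p1 : (0 : ℝ) < l₁ := by exact_mod_cast (mem_OS.mp h1).1
    have p2 : (0 : ℝ) < l₂ := by exact_mod_cast (mem_OS.mp h2).1
    simp only [hG]
    by_cases hc : l₁.Coprime l₂
    · simp only [if_pos hc]
      refine Summable.mul_left _ (Summable.mul_left _ ?_)
      refine Summable.of_norm_bounded (summable_JW_ite e (l₁ * l₂)
        (r := M / ((e : ℝ) ^ 2 * ((l₁ * l₂ : ℕ) : ℝ))) (by push_cast; positivity)).norm fun v => ?_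
      by_cases hv : v ≠ 0 ∧ ¬ Sml Y v
      · rw [if_pos hv]
      · rw [if_neg hv, norm_zero]; exact norm_nonneg _
    · simp only [if_neg hc]; exact summable_zero
  have heq : ∑ l₁ ∈ OS n, ∑ l₂ ∈ OS n,
        (if l₁.Coprime l₂ then b l₁ * (starRingEnd ℂ) (b l₂) *
        (((M / (e * Real.sqrt ((l₁ * l₂ : ℕ) : ℝ)) : ℝ) : ℂ) * PL Y e (l₁ * l₂)
          (M / ((e : ℝ) ^ 2 * ((l₁ * l₂ : ℕ) : ℝ)))) else 0) =
      ∑' v, ∑ l₁ ∈ OS n, ∑ l₂ ∈ OS n, G l₁ l₂ v := by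
    rw [Summable.tsum_finsetSum fun l₁ h1 => summable_sum fun l₂ h2 => hsum l₁ h1 l₂ h2]
    refine Finset.sum_congr rfl fun l₁ h1 => ?_
    rw [Summable.tsum_finsetSum fun l₂ h2 => hsum l₁ h1 l₂ h2]
    refine Finset.sum_congr rfl fun l₂ h2 => ?_
    simp only [hG]
    by_cases hc : l₁.Coprime l₂
    · simp only [if_pos hc]
      rw [tsum_mul_left, tsum_mul_left]; rfl
    · simp [if_neg hc]
  rw [heq]
  have hpart : ∀ V, ∑ v ∈ range V, ‖∑ l₁ ∈ OS n, ∑ l₂ ∈ OS n, G l₁ l₂ v‖ ≤ (∫ τ, ‖ρ τ‖) * B := by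
    intro V
    refine le_trans (le_of_eq ?_) (fin ((range V).filter fun v => (v ≠ 0 ∧ ¬ Sml Y v) ∧ e ∣ v) V
      fun v hv => ⟨mem_range.mp (mem_filter.mp hv).1, (mem_filter.mp hv).2.1⟩)
    rw [Finset.sum_filter]
    refine Finset.sum_congr rfl fun v _ => ?_
    by_cases hv : (v ≠ 0 ∧ ¬ Sml Y v) ∧ e ∣ v
    · rw [if_pos hv]
      congr 1
      refine Finset.sum_congr rfl fun l₁ h1 => Finset.sum_congr rfl fun l₂ h2 => ?_
      have p1 : l₁ ≠ 0 := by have := (mem_OS.mp h1).1; omega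
      have p2 : l₂ ≠ 0 := by have := (mem_OS.mp h2).1; omega
      simp only [hG, if_pos hv.1, if_pos hv.2, J_mul_right v p1 p2]
      split_ifs
      · ring
      · rfl
    · rw [if_neg hv, norm_eq_zero]
      refine Finset.sum_eq_zero fun l₁ _ => Finset.sum_eq_zero fun l₂ _ => ?_
      simp only [hG]
      by_cases h1 : v ≠ 0 ∧ ¬ Sml Y v
      · have h2 : ¬ e ∣ v := fun h => hv ⟨h1, h⟩
        simp [h2]
      · simp [h1]
  have hsn := summable_of_sum_range_le (fun _ => norm_nonneg _) hpart
  refine (norm_tsum_le_tsum_norm hsn).trans ?_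
  refine (Real.tsum_le_of_sum_range_le (fun _ => norm_nonneg _) hpart).trans (le_of_eq ?_)
  rw [hB]; ring

end QLS

namespace QLS

open Finset MeasureTheory

/-- The contribution to `Err` of the term `v = 0`, nonzero only for `l₁ = l₂ = 1`. -/
lemma bound_diag {N g e : ℕ} {β M τ : ℝ} (b : ℕ → ℂ) (P : Par β N M g e τ) :
    ‖∑ l₁ ∈ OS (N / g), ∑ l₂ ∈ OS (N / g), (if l₁.Coprime l₂ then b l₁ * (starRingEnd ℂ) (b l₂) *
      (J e (l₁ * l₂) * J 0 (l₁ * l₂) * ((gam (l₁ * l₂) *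
        (M / (e * Real.sqrt ((l₁ * l₂ : ℕ) : ℝ)) : ℝ) - 1) / 2)) else 0)‖ ≤
      M * ∑ l ∈ OS (N / g), ‖b l‖ ^ 2 := by
  have h1 : 1 ∈ OS (N / g) := mem_OS.mpr ⟨le_rfl, P.hn1, odd_one, squarefree_one⟩
  have hz : ∀ l₁ ∈ OS (N / g), ∀ l₂ ∈ OS (N / g), l₁ * l₂ ≠ 1 → J 0 (l₁ * l₂) = 0 := by
    intro l₁ h1 l₂ h2 h
    have p1 := (mem_OS.mp h1).1
    have p2 := (mem_OS.mp h2).1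
    refine J_eq_zero (Nat.mul_ne_zero (by omega) (by omega)) ?_
    simpa using h
  rw [Finset.sum_eq_single_of_mem 1 h1, Finset.sum_eq_single_of_mem 1 h1]
  · have hM1 := P.hM1
    have he1 : (1 : ℝ) ≤ e := by exact_mod_cast P.he0
    have hg : ‖gam 1‖ = 1 := norm_gam odd_one squarefree_one
    simp only [mul_one, Nat.coprime_one_right_eq_true, if_true, Nat.cast_one, Real.sqrt_one,
      J_one_right, one_mul]
    rw [norm_mul, norm_mul, RCLike.norm_conj, ← sq, norm_div, mul_comm]
    refine mul_le_mul ?_ (Finset.single_le_sum (f := fun l => ‖b l‖ ^ 2)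
      (fun _ _ => by positivity) h1) (by positivity) (by linarith)
    have h3 : ‖gam 1 * ((M / e : ℝ) : ℂ) - 1‖ ≤ M + 1 := by
      refine (norm_sub_le _ _).trans ?_
      rw [norm_mul, hg, one_mul, norm_one, Complex.norm_real,
        Real.norm_of_nonneg (div_nonneg (by linarith) (by linarith))]
      have := div_le_self (by linarith : 0 ≤ M) he1
      linarith
    have h4 : ‖(2 : ℂ)‖ = 2 := by simp
    rw [h4, div_le_iff₀ two_pos]
    linarith
  · intro l₂ h2 hne
    rw [hz 1 h1 l₂ h2 (by simpa using hne)]; simp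
  · intro l₁ h1' hne
    refine Finset.sum_eq_zero fun l₂ h2 => ?_
    rw [hz l₁ h1' l₂ h2 (fun h => hne (Nat.eq_one_of_mul_eq_one_right h))]; simp

lemma norm_form_sum_le (n : ℕ) (Ks : Finset ℕ) (b : ℕ → ℂ) (κ : ℕ → ℕ → ℕ → ℂ) :
    ‖∑ l₁ ∈ OS n, ∑ l₂ ∈ OS n, (if l₁.Coprime l₂ then b l₁ * (starRingEnd ℂ) (b l₂) *
      (∑ k ∈ Ks, J k (l₁ * l₂) * κ k l₁ l₂) else 0)‖ ≤
    ∑ k ∈ Ks, ‖∑ l₁ ∈ OS n, ∑ l₂ ∈ OS n, (if l₁.Coprime l₂ then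
      b l₁ * (starRingEnd ℂ) (b l₂) * (J k l₁ * J k l₂) * κ k l₁ l₂ else 0)‖ := by
  refine le_trans (le_of_eq ?_) (norm_sum_le _ _)
  congr 1
  symm
  rw [Finset.sum_comm]
  refine Finset.sum_congr rfl fun l₁ h1 => ?_
  rw [Finset.sum_comm]
  refine Finset.sum_congr rfl fun l₂ h2 => ?_
  symm
  have p1 : l₁ ≠ 0 := by have := (mem_OS.mp h1).1; omega
  have p2 : l₂ ≠ 0 := by have := (mem_OS.mp h2).1; omega
  split_ifs
  · rw [mul_sum]
    refine Finset.sum_congr rfl fun k _ => ?_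
    rw [J_mul_right k p1 p2]; ring
  · simp

/-- The four pieces of `Err` together. -/
lemma bound_Err {β ε C₀ : ℝ} (hβ : 1 ≤ β) (hε : 0 < ε) (hε2 : ε < 1 / 2) (hC : 0 < C₀)
    (hLS : HLS β ε C₀) : ∃ C : ℝ, 0 ≤ C ∧ ∀ (N : ℕ) (M : ℝ) (g e : ℕ) (τ : ℝ) (b : ℕ → ℂ),
      Par β N M g e τ → (∀ l ∈ OS (N / g), b l ≠ 0 → N / g < 2 * l) →
      ‖∑ l₁ ∈ OS (N / g), ∑ l₂ ∈ OS (N / g), (if l₁.Coprime l₂ then b l₁ * (starRingEnd ℂ) (b l₂) *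
        Err ⌊(N : ℝ) ^ (1 / β)⌋₊ e (l₁ * l₂) M else 0)‖ ≤
      C * ((M * N) ^ (6 * ε) * M * τ ^ 3 * ∑ l ∈ OS (N / g), ‖b l‖ ^ 2) := by
  obtain ⟨C₁, hC₁, H1⟩ := bound_PS hβ hε hε2 hC hLS
  obtain ⟨C₂, hC₂, H2⟩ := bound_dual_small hβ hε hε2 hC hLS
  obtain ⟨C₃, hC₃, H3⟩ := bound_dual_large hβ hε hε2 hC hLS
  obtain ⟨C₄, hC₄, H4⟩ := bound_PL hβ hε hC hLS
  refine ⟨C₄ + (C₂ + C₃) + C₁ + 1, by positivity, fun N M g e τ b P hb => ?_⟩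
  have h1 := H1 N M g e τ b P
  have h2 := H2 N M g e τ b P hb
  have h3 := H3 N M g e τ b P
  have h4 := H4 N M g e τ b P
  have h5 := bound_diag b P
  set S := ∑ l ∈ OS (N / g), ‖b l‖ ^ 2 with hS
  have hS0 : 0 ≤ S := Finset.sum_nonneg fun _ _ => by positivity
  set n := N / g with hn
  set Y := ⌊(N : ℝ) ^ (1 / β)⌋₊ with hY
  have hM1 := P.hM1
  have hτ1 := P.hτ1
  have hR : M * S ≤ (M * N) ^ (6 * ε) * M * τ ^ 3 * S := by
    have x1 : 1 ≤ (M * N) ^ (6 * ε) := Real.one_le_rpow P.hG1 (by positivity)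
    have x2 : 1 ≤ τ ^ 3 := one_le_pow₀ hτ1
    calc M * S = 1 * M * 1 * S := by ring
      _ ≤ _ := by gcongr
  set R := (M * N) ^ (6 * ε) * M * τ ^ 3 * S with hRdef
  set κ₂ : ℕ → ℕ → ℕ → ℂ := fun k l₁ l₂ => ((M / (e * Real.sqrt ((l₁ * l₂ : ℕ) : ℝ)) : ℝ) : ℂ) *
    FE (l₁ * l₂) (M / ((e : ℝ) ^ 2 * ((l₁ * l₂ : ℕ) : ℝ)) * k * ((e / e.gcd k : ℕ) : ℝ) ^ 2)
    with hκ₂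
  set κ₁ : ℕ → ℕ → ℕ → ℂ := fun k l₁ l₂ =>
    FE (l₁ * l₂) (1 / M * k * ((e / e.gcd k : ℕ) : ℝ) ^ 2) with hκ₁
  have h23 : ‖∑ l₁ ∈ OS n, ∑ l₂ ∈ OS n, (if l₁.Coprime l₂ then b l₁ * (starRingEnd ℂ) (b l₂) *
      (∑ k ∈ SF Y, J k (l₁ * l₂) * κ₂ k l₁ l₂) else 0)‖ ≤ (C₂ + C₃) * R := by
    refine (norm_form_sum_le n (SF Y) b κ₂).trans ?_
    refine le_trans ?_ (le_trans (add_le_add h2 h3) (le_of_eq (by ring)))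
    rw [← Finset.sum_filter_add_sum_filter_not (SF Y) (fun k : ℕ => (n : ℝ) ^ (1 / β) < (k : ℝ)),
      add_comm]
    refine add_le_add ?_ le_rfl
    refine Finset.sum_le_sum_of_subset_of_nonneg ?_ fun _ _ _ => norm_nonneg _
    intro k hk
    obtain ⟨hk1, hk2⟩ := mem_filter.mp hk
    obtain ⟨x1, x2, x3⟩ := mem_SF.mp hk1
    exact mem_SF.mpr ⟨x1, Nat.le_floor (not_lt.mp hk2), x3⟩
  have h11 : ‖∑ l₁ ∈ OS n, ∑ l₂ ∈ OS n, (if l₁.Coprime l₂ then b l₁ * (starRingEnd ℂ) (b l₂) *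
      (∑ k ∈ SF Y, J k (l₁ * l₂) * κ₁ k l₁ l₂) else 0)‖ ≤ C₁ * R :=
    (norm_form_sum_le n (SF Y) b κ₁).trans h1
  have hsplit : ∑ l₁ ∈ OS n, ∑ l₂ ∈ OS n, (if l₁.Coprime l₂ then b l₁ * (starRingEnd ℂ) (b l₂) *
        Err Y e (l₁ * l₂) M else 0) =
      ∑ l₁ ∈ OS n, ∑ l₂ ∈ OS n,
        (if l₁.Coprime l₂ then b l₁ * (starRingEnd ℂ) (b l₂) *
        (((M / (e * Real.sqrt ((l₁ * l₂ : ℕ) : ℝ)) : ℝ) : ℂ) * PL Y e (l₁ * l₂)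
          (M / ((e : ℝ) ^ 2 * ((l₁ * l₂ : ℕ) : ℝ)))) else 0) +
      ∑ l₁ ∈ OS n, ∑ l₂ ∈ OS n, (if l₁.Coprime l₂ then b l₁ * (starRingEnd ℂ) (b l₂) *
        (∑ k ∈ SF Y, J k (l₁ * l₂) * κ₂ k l₁ l₂) else 0) -
      ∑ l₁ ∈ OS n, ∑ l₂ ∈ OS n, (if l₁.Coprime l₂ then b l₁ * (starRingEnd ℂ) (b l₂) *
        (∑ k ∈ SF Y, J k (l₁ * l₂) * κ₁ k l₁ l₂) else 0) +
      ∑ l₁ ∈ OS n, ∑ l₂ ∈ OS n, (if l₁.Coprime l₂ then b l₁ * (starRingEnd ℂ) (b l₂) *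
        (J e (l₁ * l₂) * J 0 (l₁ * l₂) * ((gam (l₁ * l₂) *
          (M / (e * Real.sqrt ((l₁ * l₂ : ℕ) : ℝ)) : ℝ) - 1) / 2)) else 0) := by
    simp only [← Finset.sum_add_distrib, ← Finset.sum_sub_distrib]
    refine Finset.sum_congr rfl fun l₁ _ => Finset.sum_congr rfl fun l₂ _ => ?_
    split_ifs
    · simp only [Err, hκ₁, hκ₂]; ring
    · simp
  rw [hsplit]
  refine (norm_add_le _ _).trans ?_
  refine (add_le_add ((norm_sub_le _ _).trans (add_le_add ((norm_add_le _ _).trans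
    (add_le_add h4 h23)) h11)) (h5.trans hR)).trans (le_of_eq ?_)
  ring

end QLS

namespace QLS

/-! ### The quadratic form over pairs of columns -/

open Finset MeasureTheory

/-- The coprimality condition `(v, g) = 1` coming from the common part `g` of two columns, opened
by Möbius inversion. -/
lemma J_pair (v : ℕ) {g l₁ l₂ : ℕ} (hg : g ≠ 0) (h1 : l₁ ≠ 0) (h2 : l₂ ≠ 0) :
    J v (g * l₁) * J v (g * l₂) = ∑ e ∈ g.divisors, (ArithmeticFunction.moebius e : ℂ) *
      (if e ∣ v then J v (l₁ * l₂) else 0) := by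
  have hsum : ∑ e ∈ g.divisors, (ArithmeticFunction.moebius e : ℂ) * (if e ∣ v then (1 : ℂ) else 0)
      = if v.Coprime g then 1 else 0 := by
    have hgcd : (v.gcd g).divisors = g.divisors.filter (fun e => e ∣ v) := by
      ext e
      simp only [Nat.mem_divisors, mem_filter, Nat.dvd_gcd_iff]
      constructor
      · rintro ⟨⟨a, b⟩, _⟩; exact ⟨⟨b, hg⟩, a⟩
      · rintro ⟨⟨b, _⟩, a⟩; exact ⟨⟨a, b⟩, Nat.gcd_ne_zero_right hg⟩
    have := sum_moebius_divisors (v.gcd g)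
    rw [hgcd, Finset.sum_filter] at this
    rw [show (if v.Coprime g then (1 : ℂ) else 0) = if v.gcd g = 1 then 1 else 0 from rfl, ← this]
    refine Finset.sum_congr rfl fun e _ => ?_
    split_ifs <;> simp
  have h3 : ∀ e ∈ g.divisors, (ArithmeticFunction.moebius e : ℂ) *
      (if e ∣ v then J v (l₁ * l₂) else 0) =
      ((ArithmeticFunction.moebius e : ℂ) * (if e ∣ v then (1 : ℂ) else 0)) * J v (l₁ * l₂) := by
    intro e _; split_ifs <;> simp
  rw [Finset.sum_congr rfl h3, ← Finset.sum_mul, hsum, J_mul_right v hg h1, J_mul_right v hg h2,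
    J_mul_right v h1 h2]
  by_cases hc : v.Coprime g
  · rw [if_pos hc]
    have := J_sq_of_coprime hc
    calc _ = (J v g * J v g) * (J v l₁ * J v l₂) := by ring
      _ = _ := by rw [this]
  · rw [if_neg hc, J_eq_zero hg hc]; simp

/-- The quadratic form over pairs of columns with a kernel depending on the common part and the
coprime cofactors. -/
noncomputable def GForm (N : ℕ) (a : ℕ → ℂ) (κ : ℕ → ℕ → ℂ) : ℂ :=
  ∑ g ∈ OS N, ∑ e ∈ g.divisors, (ArithmeticFunction.moebius e : ℂ) *
    ∑ l₁ ∈ OS (N / g), ∑ l₂ ∈ OS (N / g), (if l₁.Coprime l₂ then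
      a (g * l₁) * (starRingEnd ℂ) (a (g * l₂)) * κ e (l₁ * l₂) else 0)

lemma normSq_expand (N v : ℕ) (a : ℕ → ℂ) (ha : ∀ n, a n ≠ 0 → n ∈ OS N) :
    ((‖∑ n ∈ OS N, a n * J v n‖ ^ 2 : ℝ) : ℂ) =
      GForm N a (fun e q => if e ∣ v then J v q else 0) := by
  have h1 : ((‖∑ n ∈ OS N, a n * J v n‖ ^ 2 : ℝ) : ℂ) = ∑ n₁ ∈ OS N, ∑ n₂ ∈ OS N,
      (a n₁ * (starRingEnd ℂ) (a n₂)) * (J v n₁ * J v n₂) := by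
    rw [← Complex.normSq_eq_norm_sq, ← Complex.mul_conj, map_sum, Finset.sum_mul_sum]
    refine Finset.sum_congr rfl fun n₁ _ => Finset.sum_congr rfl fun n₂ _ => ?_
    rw [map_mul, conj_J]; ring
  rw [h1, sum_pairs N (fun n₁ n₂ => (a n₁ * (starRingEnd ℂ) (a n₂)) * (J v n₁ * J v n₂))]
  · unfold GForm
    refine Finset.sum_congr rfl fun g hg => ?_
    have hg0 : g ≠ 0 := by have := (mem_OS.mp hg).1; omega
    simp_rw [mul_sum]
    symm
    rw [Finset.sum_comm]
    refine Finset.sum_congr rfl fun l₁ h1 => ?_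
    rw [Finset.sum_comm]
    refine Finset.sum_congr rfl fun l₂ h2 => ?_
    symm
    have p1 : l₁ ≠ 0 := by have := (mem_OS.mp h1).1; omega
    have p2 : l₂ ≠ 0 := by have := (mem_OS.mp h2).1; omega
    by_cases hc : l₁.Coprime l₂
    · simp only [if_pos hc]
      rw [J_pair v hg0 p1 p2, mul_sum]
      exact Finset.sum_congr rfl fun e _ => by ring
    · simp [if_neg hc]
  · intro n₁ n₂ h
    refine ⟨ha n₁ fun h0 => h (by simp [h0]), ha n₂ fun h0 => h (by simp [h0])⟩

open Classical in
/-- The contribution of the row `v` to the smoothed sum over the rows whose squarefree part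
exceeds `Y`. -/
noncomputable def TS (Y N : ℕ) (M : ℝ) (a : ℕ → ℂ) (v : ℕ) : ℝ :=
  if v ≠ 0 ∧ ¬ Sml Y v then W (v * (1 / M)) * ‖∑ n ∈ OS N, a n * J v n‖ ^ 2 else 0

lemma TS_nonneg (Y N : ℕ) (M : ℝ) (a : ℕ → ℂ) (v : ℕ) : 0 ≤ TS Y N M a v := by
  unfold TS; split_ifs
  · exact mul_nonneg (W_pos _).le (by positivity)
  · exact le_rfl

open Classical in
lemma hasSum_TS (Y N : ℕ) {M : ℝ} (hM : 0 < M) (a : ℕ → ℂ) (ha : ∀ n, a n ≠ 0 → n ∈ OS N) :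
    HasSum (fun v => (TS Y N M a v : ℂ)) (GForm N a (fun e q => PL Y e q (1 / M))) := by
  have hr : 0 < 1 / M := by positivity
  have hPL : ∀ e q, HasSum (fun v : ℕ => if v ≠ 0 ∧ ¬ Sml Y v then
      (if e ∣ v then J v q * (W (v * (1 / M)) : ℂ) else 0) else 0) (PL Y e q (1 / M)) := by
    intro e q
    refine Summable.hasSum ?_
    refine Summable.of_norm_bounded (summable_JW_ite e q hr).norm fun v => ?_
    by_cases hv : v ≠ 0 ∧ ¬ Sml Y v
    · rw [if_pos hv]
    · rw [if_neg hv, norm_zero]; exact norm_nonneg _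
  have h := hasSum_sum (s := OS N) fun g _ => hasSum_sum (s := g.divisors) fun e _ =>
    (hasSum_sum (s := OS (N / g)) fun l₁ _ => hasSum_sum (s := OS (N / g)) fun l₂ _ =>
      ((hPL e (l₁ * l₂)).mul_left (if l₁.Coprime l₂ then
        a (g * l₁) * (starRingEnd ℂ) (a (g * l₂)) else 0))).mul_left
      (ArithmeticFunction.moebius e : ℂ)
  have key : ∀ {f f' : ℕ → ℂ} {s s' : ℂ}, HasSum f s → (∀ v, f' v = f v) → s' = s →
      HasSum f' s' := by
    intro f f' s s' hf hff hss
    rw [hss, funext hff]; exact hf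
  refine key h (fun v => ?_) ?_
  · unfold TS
    by_cases hv : v ≠ 0 ∧ ¬ Sml Y v
    · simp only [if_pos hv]
      rw [Complex.ofReal_mul, normSq_expand N v a ha, GForm, mul_sum]
      refine Finset.sum_congr rfl fun g _ => ?_
      rw [mul_sum]
      refine Finset.sum_congr rfl fun e _ => ?_
      rw [mul_left_comm]
      congr 1
      rw [mul_sum]
      refine Finset.sum_congr rfl fun l₁ _ => ?_
      rw [mul_sum]
      refine Finset.sum_congr rfl fun l₂ _ => ?_
      split_ifs <;> simp; ring
    · simp only [if_neg hv]; simp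
  · unfold GForm
    refine Finset.sum_congr rfl fun g _ => Finset.sum_congr rfl fun e _ => ?_
    congr 1
    refine Finset.sum_congr rfl fun l₁ _ => Finset.sum_congr rfl fun l₂ _ => ?_
    split_ifs <;> simp

/-- Adding the form of the coefficients twisted by Gauss sum signs makes the functional equation of
the theta function applicable to every pair of columns. -/
lemma GForm_twist (Y N r : ℕ) {M : ℝ} (hM : 0 < M) (a : ℕ → ℂ) (ha : ∀ n, a n ≠ 0 → n ∈ OS N)
    (hr : ∀ n, a n ≠ 0 → n % 4 = r) :
    GForm N a (fun e q => PL Y e q (1 / M)) +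
      GForm N (fun n => a n * gam n) (fun e q => PL Y e q (1 / M)) =
    GForm N a (fun e q => Err Y e q M) + GForm N (fun n => a n * gam n) (fun e q => Err Y e q M) := by
  unfold GForm
  simp only [← Finset.sum_add_distrib, ← mul_add]
  refine Finset.sum_congr rfl fun g hg => Finset.sum_congr rfl fun e he => ?_
  congr 1
  refine Finset.sum_congr rfl fun l₁ h1 => Finset.sum_congr rfl fun l₂ h2 => ?_
  by_cases hc : l₁.Coprime l₂
  · simp only [if_pos hc]
    by_cases z1 : a (g * l₁) = 0
    · simp [z1]
    by_cases z2 : a (g * l₂) = 0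
    · simp [z2]
    obtain ⟨_, _, o1, s1⟩ := mem_OS.mp (ha _ z1)
    obtain ⟨_, _, o2, s2⟩ := mem_OS.mp (ha _ z2)
    have hm : g * l₁ % 4 = g * l₂ % 4 := by rw [hr _ z1, hr _ z2]
    have hgam := gam_pair o1 o2 s1 s2 hc hm
    have hq4 : l₁ * l₂ % 4 = 1 := by
      have x1 := (Nat.odd_mul.mp o1).1
      have x2 := (Nat.odd_mul.mp o1).2
      have x3 := (Nat.odd_mul.mp o2).2
      have y1 : g % 4 = 1 ∨ g % 4 = 3 := by obtain ⟨j, rfl⟩ := x1; omega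
      have y2 : l₁ % 4 = 1 ∨ l₁ % 4 = 3 := by obtain ⟨j, rfl⟩ := x2; omega
      have y3 : l₂ % 4 = 1 ∨ l₂ % 4 = 3 := by obtain ⟨j, rfl⟩ := x3; omega
      rw [Nat.mul_mod g l₁, Nat.mul_mod g l₂] at hm
      rw [Nat.mul_mod]
      rcases y1 with y1 | y1 <;> rcases y2 with y2 | y2 <;> rcases y3 with y3 | y3 <;>
        simp [y1, y2, y3] at hm ⊢
    have hgl1 : g.Coprime l₁ := Nat.coprime_of_squarefree_mul s1
    have hgl2 : g.Coprime l₂ := Nat.coprime_of_squarefree_mul s2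
    have hsq : Squarefree (l₁ * l₂) := (Nat.squarefree_mul hc).mpr
      ⟨s1.squarefree_of_dvd (dvd_mul_left _ _), s2.squarefree_of_dvd (dvd_mul_left _ _)⟩
    have heg := Nat.dvd_of_mem_divisors he
    have hcop : e.Coprime (l₁ * l₂) := (hgl1.mul_right hgl2).coprime_dvd_left heg
    have hes : Squarefree e := (s1.squarefree_of_dvd (dvd_mul_right _ _)).squarefree_of_dvd heg
    have hid := err_identity Y hq4 hsq hes hcop hM
    rw [map_mul]
    have x : ∀ z : ℂ, a (g * l₁) * (starRingEnd ℂ) (a (g * l₂)) * z +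
        a (g * l₁) * gam (g * l₁) * ((starRingEnd ℂ) (a (g * l₂)) * (starRingEnd ℂ) (gam (g * l₂))) * z
        = a (g * l₁) * (starRingEnd ℂ) (a (g * l₂)) * ((1 + gam (l₁ * l₂)) * z) := by
      intro z; rw [← hgam]; ring
    rw [x, x, hid]
  · simp [if_neg hc]

/-- Summing over the ways of writing the columns as products `g l`. -/
lemma sum_mul_le (N : ℕ) (u : ℕ → ℝ) (hu : ∀ n, 0 ≤ u n) (hs : ∀ n, u n ≠ 0 → n ∈ OS N) {τ : ℝ}
    (hτ : ∀ l ∈ OS N, (l.divisors.card : ℝ) ≤ τ) :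
    ∑ g ∈ OS N, ∑ l ∈ OS (N / g), u (g * l) ≤ τ * ∑ n ∈ OS N, u n := by
  calc ∑ g ∈ OS N, ∑ l ∈ OS (N / g), u (g * l)
      ≤ ∑ g ∈ OS N, ∑ n ∈ OS N, (if g ∣ n then u n else 0) := by
        refine Finset.sum_le_sum fun g hg => ?_
        have hg0 : 0 < g := (mem_OS.mp hg).1
        rw [← Finset.sum_filter]
        calc ∑ l ∈ OS (N / g), u (g * l) = ∑ m ∈ (OS (N / g)).image (fun l => g * l), u m := by
              rw [Finset.sum_image]
              intro x _ y _ h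
              exact Nat.eq_of_mul_eq_mul_left hg0 h
          _ = ∑ m ∈ ((OS (N / g)).image (fun l => g * l)).filter (fun m => u m ≠ 0), u m :=
              (Finset.sum_filter_ne_zero _).symm
          _ ≤ _ := by
              refine Finset.sum_le_sum_of_subset_of_nonneg ?_ fun _ _ _ => hu _
              intro m hm
              obtain ⟨h1, h2⟩ := mem_filter.mp hm
              obtain ⟨l, _, rfl⟩ := Finset.mem_image.mp h1
              exact mem_filter.mpr ⟨hs _ h2, dvd_mul_right _ _⟩
    _ = ∑ n ∈ OS N, ∑ g ∈ OS N, (if g ∣ n then u n else 0) := Finset.sum_comm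
    _ ≤ ∑ n ∈ OS N, τ * u n := by
        refine Finset.sum_le_sum fun n hn => ?_
        rw [← Finset.sum_filter, Finset.sum_const, nsmul_eq_mul]
        refine mul_le_mul_of_nonneg_right ?_ (hu n)
        refine le_trans ?_ (hτ n hn)
        have hn0 := (mem_OS.mp hn).1
        exact_mod_cast Finset.card_le_card fun g hg =>
          Nat.mem_divisors.mpr ⟨(mem_filter.mp hg).2, by omega⟩
    _ = _ := by rw [mul_sum]

end QLS

namespace QLS

/-! ### The recursive step and Heath-Brown's large sieve -/

open Finset MeasureTheory

lemma GForm_Err_le {β ε C₀ : ℝ} (hβ : 1 ≤ β) (hε : 0 < ε) (hε2 : ε < 1 / 2) (hC : 0 < C₀)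
    (hLS : HLS β ε C₀) : ∃ C : ℝ, 0 ≤ C ∧ ∀ (N : ℕ) (M : ℝ) (τ : ℝ) (a : ℕ → ℂ),
      1 ≤ N → 1 ≤ M → (N : ℝ) ^ (2 - 1 / β) ≤ M → 1 ≤ τ →
      (∀ l ∈ OS N, (l.divisors.card : ℝ) ≤ τ) →
      (∀ n, a n ≠ 0 → n ∈ OS N) → (∀ n, a n ≠ 0 → N < 2 * n) →
      ‖GForm N a (fun e q => Err ⌊(N : ℝ) ^ (1 / β)⌋₊ e q M)‖ ≤
      C * ((M * N) ^ (6 * ε) * M * τ ^ 5 * ∑ l ∈ OS N, ‖a l‖ ^ 2) := by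
  obtain ⟨C, hC0, H⟩ := bound_Err hβ hε hε2 hC hLS
  refine ⟨C, hC0, fun N M τ a hN hM1 hM hτ1 hτ ha hs => ?_⟩
  have hτ0 : 0 < τ := by linarith
  have hM0 : 0 < M := by linarith
  have hsub : ∀ g, OS (N / g) ⊆ OS N := fun g l hl => by
    rw [mem_OS] at *; exact ⟨hl.1, hl.2.1.trans (Nat.div_le_self _ _), hl.2.2⟩
  set B : ℝ := C * ((M * N) ^ (6 * ε) * M * τ ^ 3) with hB
  have hB0 : 0 ≤ B := by positivity
  unfold GForm
  calc _ ≤ ∑ g ∈ OS N, ∑ e ∈ g.divisors, B * ∑ l ∈ OS (N / g), ‖a (g * l)‖ ^ 2 := by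
        refine (norm_sum_le _ _).trans (Finset.sum_le_sum fun g hg => ?_)
        refine (norm_sum_le _ _).trans (Finset.sum_le_sum fun e he => ?_)
        rw [norm_mul]
        have P : Par β N M g e τ :=
          ⟨hN, hM1, hM, hg, Nat.dvd_of_mem_divisors he, hτ1, fun l hl => hτ l (hsub g hl)⟩
        have h1 := H N M g e τ (fun l => a (g * l)) P (fun l hl hne => by
          have := hs _ hne
          refine Nat.div_lt_of_lt_mul ?_
          nlinarith)
        refine (mul_le_of_le_one_left (norm_nonneg _) (norm_moebius_le e)).trans ?_
        refine h1.trans (le_of_eq ?_)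
        rw [hB]; ring
    _ = ∑ g ∈ OS N, (g.divisors.card : ℝ) * (B * ∑ l ∈ OS (N / g), ‖a (g * l)‖ ^ 2) := by
        refine Finset.sum_congr rfl fun g _ => ?_
        rw [Finset.sum_const, nsmul_eq_mul]
    _ ≤ ∑ g ∈ OS N, τ * (B * ∑ l ∈ OS (N / g), ‖a (g * l)‖ ^ 2) := by
        refine Finset.sum_le_sum fun g hg => mul_le_mul_of_nonneg_right (hτ g hg) (by positivity)
    _ = τ * B * ∑ g ∈ OS N, ∑ l ∈ OS (N / g), ‖a (g * l)‖ ^ 2 := by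
        rw [mul_sum]; exact Finset.sum_congr rfl fun g _ => by ring
    _ ≤ τ * B * (τ * ∑ n ∈ OS N, ‖a n‖ ^ 2) := by
        refine mul_le_mul_of_nonneg_left ?_ (by positivity)
        exact sum_mul_le N (fun n => ‖a n‖ ^ 2) (fun n => by positivity)
          (fun n hn => ha n fun h => hn (by simp [h])) hτ
    _ = _ := by rw [hB]; ring

/-- The rows whose squarefree part exceeds `N^{1/β}`. Positivity of the twisted form allows
passing from the form of `PL` to the sum in `GForm_twist`, which involves only `Err`. -/
lemma sum_TS_le {β ε C₀ : ℝ} (hβ : 1 ≤ β) (hε : 0 < ε) (hε2 : ε < 1 / 2) (hC : 0 < C₀)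
    (hLS : HLS β ε C₀) : ∃ C : ℝ, 0 ≤ C ∧ ∀ (N r : ℕ) (M : ℝ) (τ : ℝ) (a : ℕ → ℂ) (S : Finset ℕ),
      1 ≤ N → 1 ≤ M → (N : ℝ) ^ (2 - 1 / β) ≤ M → 1 ≤ τ →
      (∀ l ∈ OS N, (l.divisors.card : ℝ) ≤ τ) →
      (∀ n, a n ≠ 0 → n ∈ OS N) → (∀ n, a n ≠ 0 → N < 2 * n) → (∀ n, a n ≠ 0 → n % 4 = r) →
      ∑ v ∈ S, TS ⌊(N : ℝ) ^ (1 / β)⌋₊ N M a v ≤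
      C * ((M * N) ^ (6 * ε) * M * τ ^ 5 * ∑ l ∈ OS N, ‖a l‖ ^ 2) := by
  obtain ⟨C, hC0, H⟩ := GForm_Err_le hβ hε hε2 hC hLS
  refine ⟨2 * C, by positivity, fun N r M τ a S hN hM1 hM hτ1 hτ ha hs hr => ?_⟩
  have hM0 : 0 < M := by linarith
  set Y := ⌊(N : ℝ) ^ (1 / β)⌋₊
  set a' : ℕ → ℂ := fun n => a n * gam n with ha'
  have hne : ∀ n, a' n ≠ 0 → a n ≠ 0 := fun n h h0 => h (by simp [ha', h0])
  have hsa : ∀ n ∈ OS N, ‖a' n‖ = ‖a n‖ := fun n hn => by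
    rw [ha', norm_mul, norm_gam (mem_OS.mp hn).2.2.1 (mem_OS.mp hn).2.2.2, mul_one]
  have h1 := hasSum_TS Y N hM0 a ha
  have h2 := hasSum_TS Y N hM0 a' (fun n h => ha n (hne n h))
  have b1 := H N M τ a hN hM1 hM hτ1 hτ ha hs
  have b2 := H N M τ a' hN hM1 hM hτ1 hτ (fun n h => ha n (hne n h)) (fun n h => hs n (hne n h))
  rw [Finset.sum_congr rfl fun n hn => by rw [hsa n hn]] at b2
  have h3 := h1.add h2
  rw [GForm_twist Y N r hM0 a ha hr] at h3
  set Z := GForm N a (fun e q => Err Y e q M) + GForm N a' (fun e q => Err Y e q M) with hZ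
  have h4 : HasSum (fun v => TS Y N M a v + TS Y N M a' v) Z.re := by
    have := Complex.hasSum_re h3
    simpa using this
  have h5 : ∑ v ∈ S, (TS Y N M a v + TS Y N M a' v) ≤ Z.re :=
    sum_le_hasSum S (fun v _ => add_nonneg (TS_nonneg _ _ _ _ _) (TS_nonneg _ _ _ _ _)) h4
  calc ∑ v ∈ S, TS Y N M a v ≤ ∑ v ∈ S, (TS Y N M a v + TS Y N M a' v) :=
        Finset.sum_le_sum fun v _ => le_add_of_nonneg_right (TS_nonneg _ _ _ _ _)
    _ ≤ Z.re := h5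
    _ ≤ ‖Z‖ := Complex.re_le_norm Z
    _ ≤ _ := (norm_add_le _ _).trans (add_le_add b1 b2)
    _ = _ := by ring

/-- The large sieve bound for one dyadic block of columns in a fixed residue class modulo `4`. -/
lemma piece {β ε C₀ : ℝ} (hβ : 1 ≤ β) (hε : 0 < ε) (hε2 : ε < 1 / 2) (hC : 0 < C₀)
    (hLS : HLS β ε C₀) : ∃ C : ℝ, 0 ≤ C ∧ ∀ (X N r : ℕ) (a : ℕ → ℂ), 1 ≤ X → 1 ≤ N →
      (∀ n, a n ≠ 0 → n ∈ OS N) → (∀ n, a n ≠ 0 → N < 2 * n) → (∀ n, a n ≠ 0 → n % 4 = r) →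
      ∑ k ∈ SF X, ‖∑ n ∈ OS N, a n * J k n‖ ^ 2 ≤
      C * (((X : ℝ) * N) ^ (23 * ε) * (X + (N : ℝ) ^ (2 - 1 / β)) * ∑ l ∈ OS N, ‖a l‖ ^ 2) := by
  obtain ⟨C, hC0, H⟩ := sum_TS_le hβ hε hε2 hC hLS
  obtain ⟨D, hD1, hD⟩ := divisor_bound hε
  refine ⟨2 * C₀ + Real.exp Real.pi * C * D ^ 5, by positivity, fun X N r a hX hN ha hs hr => ?_⟩
  have hNR : (1 : ℝ) ≤ N := by exact_mod_cast hN
  have hXR : (1 : ℝ) ≤ X := by exact_mod_cast hX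
  set M : ℝ := max X ((N : ℝ) ^ (2 - 1 / β)) with hMdef
  have hM1 : 1 ≤ M := hXR.trans (le_max_left _ _)
  have hM0 : 0 < M := by linarith
  have hMle : M ≤ X + (N : ℝ) ^ (2 - 1 / β) :=
    max_le (le_add_of_nonneg_right (by positivity)) (le_add_of_nonneg_left (by positivity))
  have hβ1 : 1 / β ≤ 1 := by rw [div_le_one (by linarith)]; exact hβ
  have hβ0 : 0 ≤ 1 / β := by positivity
  have hNM : (N : ℝ) ≤ M := by
    refine le_trans ?_ (le_max_right _ _)
    conv_lhs => rw [← Real.rpow_one (N : ℝ)]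
    exact Real.rpow_le_rpow_of_exponent_le hNR (by linarith)
  have hMN : M * N ≤ ((X : ℝ) * N) ^ 3 := by
    have : (N : ℝ) ^ (2 - 1 / β) ≤ (N : ℝ) ^ 2 := by
      rw [← Real.rpow_natCast]
      exact Real.rpow_le_rpow_of_exponent_le hNR (by push_cast; linarith)
    have hM2 : M ≤ (X : ℝ) * N ^ 2 :=
      max_le (le_mul_of_one_le_right (by positivity) (one_le_pow₀ hNR))
        (this.trans (le_mul_of_one_le_left (by positivity) hXR))
    calc M * N ≤ (X * (N : ℝ) ^ 2) * N := by gcongr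
      _ = X * (N : ℝ) ^ 3 := by ring
      _ ≤ (X : ℝ) ^ 3 * (N : ℝ) ^ 3 := by
          gcongr; exact le_self_pow₀ hXR (by norm_num)
      _ = _ := by ring
  have hXN1 : (1 : ℝ) ≤ X * N := one_le_mul_of_one_le_of_one_le hXR hNR
  set τ : ℝ := D * (N : ℝ) ^ ε with hτdef
  have hτ1 : 1 ≤ τ := one_le_mul_of_one_le_of_one_le hD1 (Real.one_le_rpow hNR hε.le)
  have hτ : ∀ l ∈ OS N, (l.divisors.card : ℝ) ≤ τ := fun l hl => by
    obtain ⟨h1, h2, _⟩ := mem_OS.mp hl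
    refine (hD l h1).trans ?_
    rw [hτdef]; gcongr
  set Y := ⌊(N : ℝ) ^ (1 / β)⌋₊ with hY
  have hY1 : 1 ≤ Y := by
    rw [hY, Nat.one_le_floor_iff]; exact Real.one_le_rpow hNR (by positivity)
  have hYN : (Y : ℝ) ≤ N := by
    refine (Nat.floor_le (by positivity)).trans ?_
    conv_rhs => rw [← Real.rpow_one (N : ℝ)]
    exact Real.rpow_le_rpow_of_exponent_le hNR hβ1
  have hYβ : (Y : ℝ) ^ β ≤ N := floor_rpow_le hβ (by positivity)
  set V := ∑ l ∈ OS N, ‖a l‖ ^ 2 with hV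
  have hV0 : 0 ≤ V := by positivity
  set P : ℝ := (X : ℝ) * N with hP
  have small : ∑ k ∈ SF Y, ‖∑ n ∈ OS N, a n * J k n‖ ^ 2 ≤ 2 * C₀ * (P ^ (23 * ε) * M * V) := by
    refine (hLS Y N hY1 hN a).trans ?_
    have e1 : ((Y : ℝ) * N) ^ ε ≤ P ^ (23 * ε) := by
      calc ((Y : ℝ) * N) ^ ε ≤ (M * N) ^ ε := by gcongr; exact hYN.trans hNM
        _ ≤ (P ^ 3) ^ ε := by gcongr
        _ = P ^ (3 * ε) := by
            rw [← Real.rpow_natCast, ← Real.rpow_mul (by positivity)]; norm_num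
        _ ≤ _ := Real.rpow_le_rpow_of_exponent_le hXN1 (by linarith)
    have e2 : (N : ℝ) + (Y : ℝ) ^ β ≤ 2 * M := by linarith
    calc C₀ * ((Y : ℝ) * N) ^ ε * (N + (Y : ℝ) ^ β) * V ≤ C₀ * P ^ (23 * ε) * (2 * M) * V := by
          gcongr
      _ = _ := by ring
  have large : ∑ k ∈ SF X \ SF Y, ‖∑ n ∈ OS N, a n * J k n‖ ^ 2 ≤
      Real.exp Real.pi * C * D ^ 5 * (P ^ (23 * ε) * M * V) := by
    have hTS : ∀ k ∈ SF X \ SF Y, ‖∑ n ∈ OS N, a n * J k n‖ ^ 2 ≤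
        Real.exp Real.pi * TS Y N M a k := by
      intro k hk
      obtain ⟨hkX, hkY⟩ := mem_sdiff.mp hk
      obtain ⟨k1, k2, k3⟩ := mem_SF.mp hkX
      have hns : ¬ Sml Y k := by
        rintro ⟨_, k', hk', t, ht⟩
        have ht0 : t ≠ 0 := by rintro rfl; simp at ht; omega
        have : k = k' := core_unique k3 (mem_SF.mp hk').2.2 one_ne_zero ht0 (by simpa using ht)
        exact hkY (this ▸ hk')
      unfold TS
      rw [if_pos ⟨by omega, hns⟩, ← mul_assoc]
      refine le_mul_of_one_le_left (by positivity) ?_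
      rw [W, ← Real.exp_add, Real.one_le_exp_iff]
      have hk2 : (k : ℝ) * (1 / M) ≤ 1 := by
        rw [mul_one_div, div_le_one hM0]
        exact le_trans (by exact_mod_cast k2) (le_max_left _ _)
      have : ((k : ℝ) * (1 / M)) ^ 2 ≤ 1 := pow_le_one₀ (by positivity) hk2
      nlinarith [Real.pi_pos]
    have hb := H N r M τ a (SF X \ SF Y) hN hM1 (le_max_right _ _) hτ1 hτ ha hs hr
    have e1 : (M * N) ^ (6 * ε) * τ ^ 5 ≤ D ^ 5 * P ^ (23 * ε) := by
      have x1 : (M * N) ^ (6 * ε) ≤ P ^ (18 * ε) := by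
        calc (M * N) ^ (6 * ε) ≤ (P ^ 3) ^ (6 * ε) := by gcongr
          _ = P ^ (18 * ε) := by
            rw [← Real.rpow_natCast, ← Real.rpow_mul (by positivity)]; congr 1; push_cast; ring
      have x2 : τ ^ 5 ≤ D ^ 5 * P ^ (5 * ε) := by
        rw [hτdef, mul_pow]
        gcongr
        rw [← Real.rpow_natCast, ← Real.rpow_mul (by positivity)]
        calc (N : ℝ) ^ (ε * (5 : ℕ)) ≤ P ^ (ε * (5 : ℕ)) := by
              gcongr; exact le_mul_of_one_le_left (by positivity) hXR
          _ = _ := by congr 1; push_cast; ring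
      calc (M * N) ^ (6 * ε) * τ ^ 5 ≤ P ^ (18 * ε) * (D ^ 5 * P ^ (5 * ε)) := by gcongr
        _ = D ^ 5 * (P ^ (18 * ε) * P ^ (5 * ε)) := by ring
        _ = _ := by rw [← Real.rpow_add (by positivity)]; congr 2; ring
    calc _ ≤ ∑ k ∈ SF X \ SF Y, Real.exp Real.pi * TS Y N M a k := Finset.sum_le_sum hTS
      _ = Real.exp Real.pi * ∑ k ∈ SF X \ SF Y, TS Y N M a k := by rw [mul_sum]
      _ ≤ Real.exp Real.pi * (C * ((M * N) ^ (6 * ε) * M * τ ^ 5 * V)) := by gcongr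
      _ = Real.exp Real.pi * C * (((M * N) ^ (6 * ε) * τ ^ 5) * M * V) := by ring
      _ ≤ Real.exp Real.pi * C * ((D ^ 5 * P ^ (23 * ε)) * M * V) := by gcongr
      _ = _ := by ring
  calc _ ≤ ∑ k ∈ SF Y ∪ (SF X \ SF Y), ‖∑ n ∈ OS N, a n * J k n‖ ^ 2 := by
        refine Finset.sum_le_sum_of_subset_of_nonneg ?_ fun _ _ _ => by positivity
        intro k hk
        by_cases h : k ∈ SF Y
        · exact mem_union_left _ h
        · exact mem_union_right _ (mem_sdiff.mpr ⟨hk, h⟩)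
    _ = _ := Finset.sum_union (disjoint_sdiff)
    _ ≤ 2 * C₀ * (P ^ (23 * ε) * M * V) + Real.exp Real.pi * C * D ^ 5 * (P ^ (23 * ε) * M * V) :=
        add_le_add small large
    _ = (2 * C₀ + Real.exp Real.pi * C * D ^ 5) * (P ^ (23 * ε) * M * V) := by ring
    _ ≤ _ := by gcongr

set_option maxHeartbeats 400000 in
/-- Columns are cut into dyadic blocks and residue classes modulo `4`. -/
lemma step_dual {β ε C₀ : ℝ} (hβ : 1 ≤ β) (hε : 0 < ε) (hε2 : ε < 1 / 2) (hC : 0 < C₀)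
    (hLS : HLS β ε C₀) : ∃ C : ℝ, 0 ≤ C ∧ ∀ (X N : ℕ), 1 ≤ X → 1 ≤ N →
      LS (C * ((X : ℝ) * N) ^ (24 * ε) * (X + (N : ℝ) ^ (2 - 1 / β))) X N := by
  obtain ⟨C, hC0, H⟩ := piece hβ hε hε2 hC hLS
  have hlog : ∃ E : ℝ, 0 ≤ E ∧ ∀ N : ℕ, 1 ≤ N → (4 * (Nat.log 2 N + 1) : ℝ) ≤ E * (N : ℝ) ^ ε := by
    refine ⟨4 * (1 / (ε * Real.log 2) + 1), by
      have := Real.log_pos (show (1 : ℝ) < 2 by norm_num); positivity, fun N hN => ?_⟩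
    have hNR : (1 : ℝ) ≤ N := by exact_mod_cast hN
    have hl2 := Real.log_pos (show (1 : ℝ) < 2 by norm_num)
    have h1 : (Nat.log 2 N : ℝ) * Real.log 2 ≤ Real.log N := by
      rw [← Real.log_pow]
      refine Real.log_le_log (by positivity) ?_
      exact_mod_cast Nat.pow_log_le_self 2 (by omega)
    have h2 : Real.log N ≤ (N : ℝ) ^ ε / ε := Real.log_le_rpow_div (by positivity) hε
    have h3 : (Nat.log 2 N : ℝ) ≤ 1 / (ε * Real.log 2) * (N : ℝ) ^ ε := by
      have := h1.trans h2
      rw [← le_div_iff₀ hl2] at this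
      refine this.trans (le_of_eq ?_)
      field_simp
    have h4 : 1 ≤ (N : ℝ) ^ ε := Real.one_le_rpow hNR hε.le
    nlinarith
  obtain ⟨E, hE0, hE⟩ := hlog
  refine ⟨E * C, by positivity, fun X N hX hN b => ?_⟩
  have hNR : (1 : ℝ) ≤ N := by exact_mod_cast hN
  have hXR : (1 : ℝ) ≤ X := by exact_mod_cast hX
  set I := range (Nat.log 2 N + 1) ×ˢ range 4 with hI
  let key : ℕ → ℕ × ℕ := fun n => (Nat.log 2 (N / n), n % 4)
  have hkey : ∀ n ∈ OS N, key n ∈ I := fun n hn => by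
    rw [hI, mem_product, mem_range, mem_range]
    exact ⟨Nat.lt_succ_of_le (show Nat.log 2 (N / n) ≤ Nat.log 2 N from
      Nat.log_mono_right (Nat.div_le_self _ _)), Nat.mod_lt _ (by norm_num)⟩
  let a : ℕ × ℕ → ℕ → ℂ := fun i n => if n ∈ OS N ∧ key n = i then b n else 0
  have hblock : ∀ i, ∀ n, a i n ≠ 0 → n ∈ OS (N / 2 ^ i.1) ∧ N / 2 ^ i.1 < 2 * n ∧ n % 4 = i.2 := by
    intro i n h
    have h1 : n ∈ OS N ∧ key n = i := by by_contra h0; exact h (if_neg h0)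
    obtain ⟨hn, rfl⟩ := h1
    obtain ⟨n1, n2, n3, n4⟩ := mem_OS.mp hn
    have hq : N / n ≠ 0 := (Nat.div_pos n2 n1).ne'
    have l1 : 2 ^ Nat.log 2 (N / n) ≤ N / n := Nat.pow_log_le_self 2 hq
    have l2 : N / n < 2 ^ (Nat.log 2 (N / n) + 1) := Nat.lt_pow_succ_log_self (by norm_num) _
    have hpos : 0 < 2 ^ Nat.log 2 (N / n) := by positivity
    refine ⟨mem_OS.mpr ⟨n1, ?_, n3, n4⟩, ?_, rfl⟩
    · show n ≤ N / 2 ^ Nat.log 2 (N / n)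
      rw [Nat.le_div_iff_mul_le hpos, mul_comm]
      exact (Nat.le_div_iff_mul_le n1).mp l1
    · show N / 2 ^ Nat.log 2 (N / n) < 2 * n
      rw [Nat.div_lt_iff_lt_mul n1] at l2
      refine Nat.div_lt_of_lt_mul ?_
      calc N < _ := l2
        _ = _ := by rw [pow_succ]; ring
  have hsum : ∀ k, ∑ n ∈ OS N, b n * J k n = ∑ i ∈ I, ∑ n ∈ OS N, a i n * J k n := by
    intro k
    rw [Finset.sum_comm]
    refine Finset.sum_congr rfl fun n hn => ?_
    rw [← Finset.sum_mul]
    congr 1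
    rw [Finset.sum_eq_single (key n)]
    · exact (if_pos ⟨hn, rfl⟩).symm
    · intro i _ hi
      simp only [a]; rw [if_neg (fun h => hi h.2.symm)]
    · intro h; exact absurd (hkey n hn) h
  have hnorm : ∑ n ∈ OS N, ‖b n‖ ^ 2 = ∑ i ∈ I, ∑ n ∈ OS N, ‖a i n‖ ^ 2 := by
    rw [Finset.sum_comm]
    refine Finset.sum_congr rfl fun n hn => ?_
    rw [Finset.sum_eq_single (key n)]
    · rw [show a (key n) n = b n from if_pos ⟨hn, rfl⟩]
    · intro i _ hi
      simp only [a]; rw [if_neg (fun h => hi h.2.symm)]; simp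
    · intro h; exact absurd (hkey n hn) h
  have hcard : (I.card : ℝ) ≤ E * (N : ℝ) ^ ε := by
    rw [hI, card_product, card_range, card_range]
    have := hE N hN
    push_cast; linarith
  clear_value a I
  have hpc : ∀ i ∈ I, ∑ k ∈ SF X, ‖∑ n ∈ OS N, a i n * J k n‖ ^ 2 ≤
      C * (((X : ℝ) * N) ^ (23 * ε) * (X + (N : ℝ) ^ (2 - 1 / β)) * ∑ l ∈ OS N, ‖a i l‖ ^ 2) := by
    intro i hi
    set N' := N / 2 ^ i.1 with hN'
    have hsub : OS N' ⊆ OS N := fun l hl => by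
      rw [mem_OS] at *; exact ⟨hl.1, hl.2.1.trans (Nat.div_le_self _ _), hl.2.2⟩
    have hN'1 : 1 ≤ N' := by
      rw [hN', Nat.one_le_div_iff (by positivity)]
      have : i.1 ≤ Nat.log 2 N := Nat.lt_succ_iff.mp (mem_range.mp (mem_product.mp (hI ▸ hi)).1)
      exact (Nat.pow_le_pow_right (by norm_num) this).trans (Nat.pow_log_le_self 2 (by omega))
    have h := H X N' i.2 (a i) hX hN'1 (fun n h => (hblock i n h).1) (fun n h => (hblock i n h).2.1)
      (fun n h => (hblock i n h).2.2)
    have z : ∀ n ∈ OS N, n ∉ OS N' → a i n = 0 := fun n _ hn => by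
      by_contra h0; exact hn (hblock i n h0).1
    have s1 : ∀ k, ∑ n ∈ OS N', a i n * J k n = ∑ n ∈ OS N, a i n * J k n := fun k =>
      Finset.sum_subset hsub fun n h1 h2 => by rw [z n h1 h2, zero_mul]
    have s2 : ∑ n ∈ OS N', ‖a i n‖ ^ 2 = ∑ n ∈ OS N, ‖a i n‖ ^ 2 :=
      Finset.sum_subset hsub fun n h1 h2 => by rw [z n h1 h2]; simp
    simp only [s1, s2] at h
    refine h.trans ?_
    have hNN : (N' : ℝ) ≤ N := by exact_mod_cast Nat.div_le_self _ _
    have hβ1 : 1 / β ≤ 1 := by rw [div_le_one (by linarith)]; exact hβ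
    gcongr
    linarith
  calc ∑ k ∈ SF X, ‖∑ l ∈ OS N, b l * J k l‖ ^ 2
      ≤ ∑ k ∈ SF X, (I.card : ℝ) * ∑ i ∈ I, ‖∑ n ∈ OS N, a i n * J k n‖ ^ 2 := by
        refine Finset.sum_le_sum fun k _ => ?_
        rw [hsum k]
        calc ‖∑ i ∈ I, ∑ n ∈ OS N, a i n * J k n‖ ^ 2
            ≤ (∑ i ∈ I, ‖∑ n ∈ OS N, a i n * J k n‖) ^ 2 := by gcongr; exact norm_sum_le _ _
          _ ≤ _ := sq_sum_le_card_mul_sum_sq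
    _ = (I.card : ℝ) * ∑ i ∈ I, ∑ k ∈ SF X, ‖∑ n ∈ OS N, a i n * J k n‖ ^ 2 := by
        rw [← mul_sum, Finset.sum_comm]
    _ ≤ (E * (N : ℝ) ^ ε) * ∑ i ∈ I,
        C * (((X : ℝ) * N) ^ (23 * ε) * (X + (N : ℝ) ^ (2 - 1 / β)) * ∑ l ∈ OS N, ‖a i l‖ ^ 2) := by
        refine mul_le_mul hcard (Finset.sum_le_sum hpc) (Finset.sum_nonneg fun i _ =>
          Finset.sum_nonneg fun k _ => by positivity) (by positivity)
    _ = (N : ℝ) ^ ε * (E * C * ((X : ℝ) * N) ^ (23 * ε) * (X + (N : ℝ) ^ (2 - 1 / β)) *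
        ∑ l ∈ OS N, ‖b l‖ ^ 2) := by
        rw [hnorm, ← mul_sum, ← mul_sum]; ring
    _ ≤ ((X : ℝ) * N) ^ ε * (E * C * ((X : ℝ) * N) ^ (23 * ε) * (X + (N : ℝ) ^ (2 - 1 / β)) *
        ∑ l ∈ OS N, ‖b l‖ ^ 2) := by
        gcongr
        exact le_mul_of_one_le_left (by positivity) hXR
    _ = E * C * (((X : ℝ) * N) ^ ε * ((X : ℝ) * N) ^ (23 * ε)) * (X + (N : ℝ) ^ (2 - 1 / β)) *
        ∑ l ∈ OS N, ‖b l‖ ^ 2 := by ring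
    _ = _ := by rw [← Real.rpow_add (by positivity), show ε + 23 * ε = 24 * ε by ring]

/-- The exponent `β` admissible in the large sieve improves to `2 - 1 / β`. -/
lemma step {β : ℝ} (hβ : 1 ≤ β) (h : ∀ ε > 0, ∃ C > 0, HLS β ε C) :
    ∀ ε > 0, ∃ C > 0, HLS (2 - 1 / β) ε C := by
  intro ε hε
  obtain ⟨C₀, hC₀, h0⟩ := h (min (ε / 24) (1 / 4)) (by positivity)
  obtain ⟨C, hC, H⟩ := step_dual hβ (by positivity)
    (lt_of_le_of_lt (min_le_right _ _) (by norm_num)) hC₀ h0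
  refine ⟨4 * (C + 1), by positivity, fun X n hX hn => ?_⟩
  have hNR : (1 : ℝ) ≤ n := by exact_mod_cast hn
  have hXR : (1 : ℝ) ≤ X := by exact_mod_cast hX
  refine (LS.swap (by positivity) (H n X hn hX)).mono ?_ le_rfl le_rfl
  have h1 : ((n : ℝ) * X) ^ (24 * min (ε / 24) (1 / 4)) ≤ ((X : ℝ) * n) ^ ε := by
    rw [mul_comm (n : ℝ)]
    refine Real.rpow_le_rpow_of_exponent_le (one_le_mul_of_one_le_of_one_le hXR hNR) ?_
    have := min_le_left (ε / 24) (1 / 4 : ℝ)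
    linarith
  calc 4 * (C * ((n : ℝ) * X) ^ (24 * min (ε / 24) (1 / 4)) * (n + (X : ℝ) ^ (2 - 1 / β)))
      ≤ 4 * ((C + 1) * ((X : ℝ) * n) ^ ε * (n + (X : ℝ) ^ (2 - 1 / β))) := by
        gcongr; linarith
    _ = _ := by ring

/-- The starting point of the recursion, dual to `LS_base`. -/
lemma HLS_three : ∀ ε > 0, ∃ C > 0, HLS 3 ε C := by
  intro ε hε
  refine ⟨8, by norm_num, fun X n hX hn => ?_⟩
  have hNR : (1 : ℝ) ≤ n := by exact_mod_cast hn
  have hXR : (1 : ℝ) ≤ X := by exact_mod_cast hX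
  refine (LS.swap (by positivity) (LS_base n X)).mono ?_ le_rfl le_rfl
  have h1 : 1 ≤ ((X : ℝ) * n) ^ ε :=
    Real.one_le_rpow (one_le_mul_of_one_le_of_one_le hXR hNR) hε.le
  have h2 : (X : ℝ) ^ (3 : ℝ) = (X : ℝ) ^ 3 := by norm_cast
  rw [h2]
  have h3 : (0 : ℝ) ≤ (X : ℝ) ^ 3 := by positivity
  nlinarith [mul_nonneg (sub_nonneg.mpr h1) (add_nonneg (by linarith : (0 : ℝ) ≤ n) h3)]

/-- The recursion `β ↦ 2 - 1 / β` started at `3` gives the exponents `1 + 2 / (2 k + 1)`, which tend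
to `1`. -/
lemma HLS_iterate (k : ℕ) : ∀ ε > 0, ∃ C > 0, HLS (1 + 2 / (2 * k + 1)) ε C := by
  induction k with
  | zero => simpa [show (1 : ℝ) + 2 = 3 by norm_num] using HLS_three
  | succ k ih =>
    have hk : (0 : ℝ) ≤ k := by positivity
    have := step (β := 1 + 2 / (2 * k + 1)) (le_add_of_nonneg_right (by positivity)) ih
    have e : (2 : ℝ) - 1 / (1 + 2 / (2 * k + 1)) = 1 + 2 / (2 * (k + 1 : ℕ) + 1) := by
      push_cast; field_simp; ring
    rwa [e] at this

/-- **Heath-Brown's large sieve** for real characters. -/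
theorem heathBrown {ε : ℝ} (hε : 0 < ε) : ∃ C > 0, ∀ X n : ℕ, 1 ≤ X → 1 ≤ n →
    LS (C * ((X : ℝ) * n) ^ ε * (X + n)) X n := by
  obtain ⟨k, hk⟩ := exists_nat_gt (4 / ε)
  obtain ⟨C, hC, H⟩ := HLS_iterate k (ε / 2) (by positivity)
  refine ⟨C, hC, fun X n hX hn => (H X n hX hn).mono ?_ le_rfl le_rfl⟩
  have hNR : (1 : ℝ) ≤ n := by exact_mod_cast hn
  have hXR : (1 : ℝ) ≤ X := by exact_mod_cast hX
  have hP : 1 ≤ (X : ℝ) * n := one_le_mul_of_one_le_of_one_le hXR hNR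
  have hk0 : (0 : ℝ) ≤ k := by positivity
  have hk' : 2 / (2 * (k : ℝ) + 1) ≤ ε / 2 := by
    rw [div_lt_iff₀ hε] at hk
    rw [div_le_iff₀ (by positivity)]
    nlinarith
  have h1 : (X : ℝ) ^ (1 + 2 / (2 * (k : ℝ) + 1)) ≤ X * ((X : ℝ) * n) ^ (ε / 2) := by
    rw [Real.rpow_add (by positivity), Real.rpow_one]
    gcongr
    calc (X : ℝ) ^ (2 / (2 * (k : ℝ) + 1)) ≤ (X : ℝ) ^ (ε / 2) :=
          Real.rpow_le_rpow_of_exponent_le hXR hk'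
      _ ≤ _ := by gcongr; exact le_mul_of_one_le_right (by positivity) hNR
  have h2 : 1 ≤ ((X : ℝ) * n) ^ (ε / 2) := Real.one_le_rpow hP (by positivity)
  calc C * ((X : ℝ) * n) ^ (ε / 2) * (n + (X : ℝ) ^ (1 + 2 / (2 * (k : ℝ) + 1)))
      ≤ C * ((X : ℝ) * n) ^ (ε / 2) * (n * ((X : ℝ) * n) ^ (ε / 2) + X * ((X : ℝ) * n) ^ (ε / 2)) := by
        gcongr
        exact le_mul_of_one_le_right (by positivity) h2
    _ = C * (((X : ℝ) * n) ^ (ε / 2) * ((X : ℝ) * n) ^ (ε / 2)) * (X + n) := by ring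
    _ = _ := by rw [← Real.rpow_add (by positivity), add_halves]

end QLS

namespace QLS

open Finset MeasureTheory

/-! ### Dirichlet series with bounded partial sums -/

/-- The coefficients `f` with the first `N` removed. -/
noncomputable def tailF (f : ℕ → ℂ) (N n : ℕ) : ℂ := if n ≤ N then 0 else f n

/-- The summatory function of `tailF`. -/
noncomputable def tailS (f : ℕ → ℂ) (N : ℕ) (t : ℝ) : ℂ := ∑ k ∈ Icc 1 ⌊t⌋₊, tailF f N k

lemma tailS_eq_zero (f : ℕ → ℂ) {N : ℕ} {t : ℝ} (ht : t ≤ N) : tailS f N t = 0 := by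
  refine Finset.sum_eq_zero fun k hk => ?_
  rw [tailF, if_pos]
  exact (mem_Icc.mp hk).2.trans (Nat.floor_le_of_le ht)

lemma norm_tailS_le {f : ℕ → ℂ} {E : ℝ} (hE : ∀ X, ‖∑ m ∈ range X, f m‖ ≤ E) (N : ℕ) (t : ℝ) :
    ‖tailS f N t‖ ≤ 2 * E := by
  have hE0 : 0 ≤ E := (norm_nonneg _).trans (hE 0)
  rcases le_or_gt ⌊t⌋₊ N with h | h
  · rw [tailS, Finset.sum_eq_zero]
    · simpa using hE0
    · intro k hk; rw [tailF, if_pos ((mem_Icc.mp hk).2.trans h)]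
  have e : tailS f N t = (∑ m ∈ range (⌊t⌋₊ + 1), f m) - ∑ m ∈ range (N + 1), f m := by
    rw [Finset.sum_range_sub_sum_range (by omega), tailS]
    calc ∑ k ∈ Icc 1 ⌊t⌋₊, tailF f N k = ∑ k ∈ (Icc 1 ⌊t⌋₊).filter (fun k => N + 1 ≤ k), f k := by
          rw [Finset.sum_filter]
          refine Finset.sum_congr rfl fun k _ => ?_
          unfold tailF; split_ifs <;> first | rfl | omega
      _ = _ := by
          congr 1; ext k; simp only [mem_filter, mem_Icc, mem_range]; omega
  rw [e]
  refine (norm_sub_le _ _).trans ?_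
  linarith [hE (⌊t⌋₊ + 1), hE (N + 1)]

lemma measurable_tailS (f : ℕ → ℂ) (N : ℕ) : Measurable (tailS f N) :=
  (measurable_from_nat (f := fun n => ∑ k ∈ Icc 1 n, tailF f N k)).comp Nat.measurable_floor

lemma norm_mellin_tailS_le {f : ℕ → ℂ} {E : ℝ} (hE : ∀ X, ‖∑ m ∈ range X, f m‖ ≤ E) {N : ℕ}
    (hN : 1 ≤ N) {s : ℂ} (hs : 0 < s.re) :
    ‖mellin (tailS f N) (-s)‖ ≤ 2 * E * (N : ℝ) ^ (-s.re) / s.re := by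
  have hN0 : (0 : ℝ) < N := by exact_mod_cast hN
  have e : mellin (tailS f N) (-s) = ∫ t in Set.Ioi (N : ℝ), (t : ℂ) ^ (-s - 1) • tailS f N t := by
    rw [mellin]
    refine (setIntegral_eq_of_subset_of_forall_sdiff_eq_zero measurableSet_Ioi
      (Set.Ioi_subset_Ioi hN0.le) fun t ht => ?_)
    rw [tailS_eq_zero f (not_lt.mp ht.2), smul_zero]
  rw [e]
  have hlt : -s.re - 1 < -1 := by linarith
  have hi : IntegrableOn (fun t : ℝ => 2 * E * t ^ (-s.re - 1)) (Set.Ioi (N : ℝ)) :=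
    (integrableOn_Ioi_rpow_of_lt hlt hN0).const_mul _
  refine (norm_integral_le_of_norm_le hi ?_).trans (le_of_eq ?_)
  · refine (ae_restrict_iff' measurableSet_Ioi).mpr (Filter.Eventually.of_forall fun t ht => ?_)
    have ht0 : 0 < t := hN0.trans ht
    rw [norm_smul, Complex.norm_cpow_eq_rpow_re_of_pos ht0, mul_comm]
    refine mul_le_mul (norm_tailS_le hE N t) (le_of_eq (by simp)) (by positivity) ?_
    exact mul_nonneg (by norm_num) ((norm_nonneg _).trans (hE 0))
  · rw [integral_const_mul, integral_Ioi_rpow_of_lt hlt hN0]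
    rw [show -s.re - 1 + 1 = -s.re by ring]
    field_simp

lemma differentiableAt_mellin_tailS {f : ℕ → ℂ} {E : ℝ} (hE : ∀ X, ‖∑ m ∈ range X, f m‖ ≤ E) {N : ℕ}
    (hN : 1 ≤ N) {s : ℂ} (hs : s.re < 0) : DifferentiableAt ℂ (mellin (tailS f N)) s := by
  have hb : ∀ t, ‖tailS f N t‖ ≤ 2 * E := norm_tailS_le hE N
  have hN0 : (0 : ℝ) < N := by exact_mod_cast hN
  refine mellin_differentiableAt_of_isBigO_rpow (a := 0) (b := s.re - 1) ?_ ?_ hs ?_ (by linarith)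
  · refine LocallyIntegrable.locallyIntegrableOn ?_ _
    have : LocallyIntegrable (fun _ : ℝ => (2 * E : ℝ)) volume := locallyIntegrable_const _
    refine this.mono (measurable_tailS f N).aestronglyMeasurable (Filter.Eventually.of_forall ?_)
    intro t
    exact (hb t).trans (Real.le_norm_self _)
  · refine Asymptotics.IsBigO.of_bound (2 * E) (Filter.Eventually.of_forall fun t => ?_)
    simpa using hb t
  · refine Asymptotics.IsBigO.of_bound 1 ?_
    filter_upwards [nhdsWithin_le_nhds (Iio_mem_nhds hN0)] with t ht
    rw [tailS_eq_zero f (le_of_lt ht), norm_zero]; positivity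

/-- The integral representation of the tail of a Dirichlet series. -/
lemma LSeries_tail {f : ℕ → ℂ} (hf : ∀ n, ‖f n‖ ≤ 1) (N : ℕ) {s : ℂ} (hs : 1 < s.re) :
    LSeries f s - ∑ n ∈ Icc 1 N, f n * (n : ℂ) ^ (-s) = s * mellin (tailS f N) (-s) := by
  have hO : ∀ g : ℕ → ℂ, (∀ n, ‖g n‖ ≤ 1) →
      (fun n : ℕ ↦ ∑ k ∈ Icc 1 n, ‖g k‖) =O[Filter.atTop] fun n ↦ (n : ℝ) ^ (1 : ℝ) := by
    intro g hg
    refine Asymptotics.IsBigO.of_bound 1 (Filter.Eventually.of_forall fun n => ?_)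
    rw [Real.rpow_one, Real.norm_of_nonneg (by positivity), Real.norm_of_nonneg (by positivity),
      one_mul]
    refine (Finset.sum_le_card_nsmul _ _ 1 fun k _ => hg k).trans ?_
    simp
  have hf' : ∀ n, ‖tailF f N n‖ ≤ 1 := fun n => by
    unfold tailF; split_ifs
    · simp
    · exact hf n
  have h1 := LSeries_eq_mul_integral' (tailF f N) zero_le_one hs (hO _ hf')
  have hS1 : LSeriesSummable f s := LSeriesSummable_of_sum_norm_bigO (hO f hf) zero_le_one hs
  have hS2 : LSeriesSummable (tailF f N) s :=
    LSeriesSummable_of_sum_norm_bigO (hO _ hf') zero_le_one hs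
  have h2 : LSeries f s - LSeries (tailF f N) s = ∑ n ∈ Icc 1 N, f n * (n : ℂ) ^ (-s) := by
    rw [← LSeries_sub hS1 hS2, LSeries, tsum_eq_sum (s := Icc 1 N)]
    · refine Finset.sum_congr rfl fun n hn => ?_
      obtain ⟨a, b⟩ := mem_Icc.mp hn
      rw [LSeries.term_of_ne_zero (by omega), Pi.sub_apply, tailF, if_pos b, sub_zero,
        Complex.cpow_neg, div_eq_mul_inv]
    · intro n hn
      rcases Nat.eq_zero_or_pos n with rfl | h0
      · simp
      · rw [LSeries.term_of_ne_zero (by omega), Pi.sub_apply, tailF, if_neg, sub_self, zero_div]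
        intro h; exact hn (mem_Icc.mpr ⟨h0, h⟩)
  rw [← h2, sub_sub_cancel, h1]
  congr 1
  rw [mellin]
  symm
  have : ∀ t : ℝ, (t : ℂ) ^ (-s - 1) • tailS f N t =
      (∑ k ∈ Icc 1 ⌊t⌋₊, tailF f N k) * (t : ℂ) ^ (-(s + 1)) := by
    intro t
    rw [smul_eq_mul, mul_comm, neg_add']
    rfl
  simp_rw [this]
  refine (setIntegral_eq_of_subset_of_ae_sdiff_eq_zero measurableSet_Ioi.nullMeasurableSet
      (Set.Ioi_subset_Ioi zero_le_one) ?_)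
  have hne : ∀ᵐ t : ℝ ∂volume, t ≠ 1 := by
    simp [ae_iff, measure_singleton]
  filter_upwards [hne] with t ht1 ht
  have h3 : ⌊t⌋₊ = 0 := by
    rw [Nat.floor_eq_zero]; exact lt_of_le_of_ne (not_lt.mp ht.2) ht1
  rw [h3]; simp

/-- The partial sums of a Dirichlet series with bounded partial coefficient sums approximate any
analytic continuation in the half plane of positive real part. -/
lemma norm_sub_partial_le {f : ℕ → ℂ} {E : ℝ} (hf : ∀ n, ‖f n‖ ≤ 1)
    (hE : ∀ X, ‖∑ m ∈ range X, f m‖ ≤ E) {F : ℂ → ℂ} (hF : Differentiable ℂ F)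
    (hFL : ∀ s : ℂ, 1 < s.re → F s = LSeries f s) {N : ℕ} (hN : 1 ≤ N) {s : ℂ} (hs : 0 < s.re) :
    ‖F s - ∑ n ∈ Icc 1 N, f n * (n : ℂ) ^ (-s)‖ ≤ 2 * E * ‖s‖ * (N : ℝ) ^ (-s.re) / s.re := by
  set U : Set ℂ := {z | 0 < z.re} with hU
  have hUo : IsOpen U := isOpen_lt continuous_const Complex.continuous_re
  have hP : Differentiable ℂ fun s : ℂ => ∑ n ∈ Icc 1 N, f n * (n : ℂ) ^ (-s) := by
    refine Differentiable.fun_sum fun n hn => ?_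
    have : (n : ℂ) ≠ 0 := by have := (mem_Icc.mp hn).1; exact_mod_cast (by omega : n ≠ 0)
    exact (differentiable_neg.const_cpow (Or.inl this)).const_mul _
  have key : Set.EqOn (fun s => F s - ∑ n ∈ Icc 1 N, f n * (n : ℂ) ^ (-s))
      (fun s => s * mellin (tailS f N) (-s)) U := by
    refine AnalyticOnNhd.eqOn_of_preconnected_of_eventuallyEq (𝕜 := ℂ) (z₀ := 2) ?_ ?_ ?_ ?_ ?_
    · exact (hF.sub hP).differentiableOn.analyticOnNhd hUo
    · refine DifferentiableOn.analyticOnNhd (fun z hz => ?_) hUo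
      refine (differentiableAt_id.mul ?_).differentiableWithinAt
      exact (differentiableAt_mellin_tailS hE hN (s := -z) (by simpa [hU] using hz)).comp z
        differentiable_neg.differentiableAt
    · exact (convex_halfSpace_re_gt 0).isPreconnected
    · simp [hU]
    · have : {z : ℂ | 1 < z.re} ∈ nhds (2 : ℂ) :=
        (isOpen_lt continuous_const Complex.continuous_re).mem_nhds (by simp)
      filter_upwards [this] with z hz
      rw [hFL z hz, LSeries_tail hf N hz]
  have h1 := key hs
  simp only at h1
  rw [h1, norm_mul]
  calc ‖s‖ * ‖mellin (tailS f N) (-s)‖ ≤ ‖s‖ * (2 * E * (N : ℝ) ^ (-s.re) / s.re) := by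
        gcongr; exact norm_mellin_tailS_le hE hN hs
    _ = _ := by ring

lemma sum_range_zmod {q : ℕ} [NeZero q] (g : ZMod q → ℂ) :
    ∑ m ∈ range q, g (m : ZMod q) = ∑ z, g z := by
  refine Finset.sum_bij (fun m _ => (m : ZMod q)) (fun _ _ => mem_univ _) ?_ ?_ (fun _ _ => rfl)
  · intro a ha b hb h
    rw [ZMod.natCast_eq_natCast_iff'] at h
    rwa [Nat.mod_eq_of_lt (mem_range.mp ha), Nat.mod_eq_of_lt (mem_range.mp hb)] at h
  · intro z _
    exact ⟨z.val, mem_range.mpr (ZMod.val_lt z), ZMod.natCast_zmod_val z⟩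

lemma sum_range_char_le {q : ℕ} [NeZero q] {χ : DirichletCharacter ℂ q} (hχ : χ ≠ 1) (X : ℕ) :
    ‖∑ m ∈ range X, χ (m : ZMod q)‖ ≤ q := by
  refine norm_sum_range_periodic_le (Nat.pos_of_neZero q) (fun m => χ (m : ZMod q)) (fun m => by simp)
    (fun m => DirichletCharacter.norm_le_one χ _) ?_ X
  rw [sum_range_zmod, MulChar.sum_eq_zero_of_ne_one hχ]

lemma L_sub_partial_le {q : ℕ} [NeZero q] {χ : DirichletCharacter ℂ q} (hχ : χ ≠ 1) {N : ℕ}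
    (hN : 1 ≤ N) {s : ℂ} (hs : 0 < s.re) :
    ‖χ.LFunction s - ∑ n ∈ Icc 1 N, χ (n : ZMod q) * (n : ℂ) ^ (-s)‖ ≤
      2 * q * ‖s‖ * (N : ℝ) ^ (-s.re) / s.re :=
  norm_sub_partial_le (f := fun n => χ (n : ZMod q)) (fun _ => χ.norm_le_one _)
    (sum_range_char_le hχ) (DirichletCharacter.differentiable_LFunction hχ)
    (fun _ h => χ.LFunction_eq_LSeries h) hN hs

/-- Crude bound near `s = 2`. -/
lemma L_bound_disc {q : ℕ} [NeZero q] {χ : DirichletCharacter ℂ q} (hχ : χ ≠ 1) {s : ℂ}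
    (hs : ‖s - 2‖ ≤ 3 / 2) : ‖χ.LFunction s‖ ≤ 15 * q := by
  have hre : 1 / 2 ≤ s.re := by
    have := (Complex.abs_re_le_norm (s - 2)).trans hs
    rw [abs_le] at this; simp at this; linarith
  have hn : ‖s‖ ≤ 7 / 2 := by
    calc ‖s‖ = ‖(s - 2) + 2‖ := by ring_nf
      _ ≤ ‖s - 2‖ + ‖(2 : ℂ)‖ := norm_add_le _ _
      _ ≤ _ := by simp; linarith
  have h := L_sub_partial_le hχ le_rfl (s := s) (by linarith)
  simp only [Icc_self, sum_singleton, Nat.cast_one, Complex.one_cpow, mul_one, map_one,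
    Real.one_rpow] at h
  have hq : (1 : ℝ) ≤ q := by exact_mod_cast Nat.pos_of_neZero q
  have h2 : 2 * (q : ℝ) * ‖s‖ / s.re ≤ 14 * q := by
    rw [div_le_iff₀ (by linarith)]
    nlinarith [mul_le_mul_of_nonneg_left hn (by linarith : (0 : ℝ) ≤ 2 * q)]
  calc ‖χ.LFunction s‖ = ‖(χ.LFunction s - 1) + 1‖ := by ring_nf
    _ ≤ ‖χ.LFunction s - 1‖ + ‖(1 : ℂ)‖ := norm_add_le _ _
    _ ≤ _ := by rw [norm_one]; linarith

lemma sum_inv_le {N : ℕ} : ∑ n ∈ Icc 1 N, (n : ℝ)⁻¹ ≤ 1 + Real.log N := by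
  have := harmonic_le_one_add_log N
  rw [harmonic_eq_sum_Icc] at this
  push_cast at this
  exact this

lemma partial_le {f : ℕ → ℂ} (hf : ∀ n, ‖f n‖ ≤ 1) {δ : ℝ} (hδ : 0 < δ) {N : ℕ} (hN : 1 ≤ N) {s : ℂ}
    (hs : 1 - δ ≤ s.re) :
    ‖∑ n ∈ Icc 1 N, f n * (n : ℂ) ^ (-s)‖ ≤ (1 + 1 / δ) * (N : ℝ) ^ (2 * δ) := by
  have hNR : (1 : ℝ) ≤ N := by exact_mod_cast hN
  have h1 : ∀ n ∈ Icc 1 N, ‖f n * (n : ℂ) ^ (-s)‖ ≤ (N : ℝ) ^ δ * (n : ℝ)⁻¹ := by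
    intro n hn
    obtain ⟨a, b⟩ := mem_Icc.mp hn
    have hn1 : (1 : ℝ) ≤ n := by exact_mod_cast a
    have hnN : (n : ℝ) ≤ N := by exact_mod_cast b
    rw [norm_mul, Complex.norm_natCast_cpow_of_pos (by omega)]
    refine (mul_le_of_le_one_left (by positivity) (hf n)).trans ?_
    calc (n : ℝ) ^ (-s).re ≤ (n : ℝ) ^ (δ + -1) :=
          Real.rpow_le_rpow_of_exponent_le hn1 (by rw [Complex.neg_re]; linarith)
      _ = (n : ℝ) ^ δ * (n : ℝ)⁻¹ := by rw [Real.rpow_add (by positivity), Real.rpow_neg_one]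
      _ ≤ _ := by gcongr
  refine (norm_sum_le_of_le _ h1).trans ?_
  rw [← mul_sum]
  have h2 : Real.log N ≤ (N : ℝ) ^ δ / δ := Real.log_le_rpow_div (by positivity) hδ
  have h3 : 1 ≤ (N : ℝ) ^ δ := Real.one_le_rpow hNR hδ.le
  calc (N : ℝ) ^ δ * ∑ n ∈ Icc 1 N, (n : ℝ)⁻¹ ≤ (N : ℝ) ^ δ * ((N : ℝ) ^ δ + (N : ℝ) ^ δ / δ) := by
        gcongr; exact sum_inv_le.trans (add_le_add h3 h2)
    _ = (1 + 1 / δ) * ((N : ℝ) ^ δ * (N : ℝ) ^ δ) := by ring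
    _ = _ := by rw [← Real.rpow_add (by positivity)]; ring_nf

/-- The analytic conductor at height `t`. -/
noncomputable def Qc (q : ℕ) (t : ℝ) : ℝ := q * (2 + |t|)

lemma one_le_Qc (q : ℕ) [NeZero q] (t : ℝ) : 2 ≤ Qc q t := by
  have hq : (1 : ℝ) ≤ q := by exact_mod_cast Nat.pos_of_neZero q
  unfold Qc; nlinarith [abs_nonneg t]

lemma L_bound {δ : ℝ} (hδ : 0 < δ) (hδ2 : δ ≤ 1 / 2) {q : ℕ} [NeZero q] {χ : DirichletCharacter ℂ q}
    (hχ : χ ≠ 1) {s : ℂ} (hs : 1 - δ ≤ s.re) (hs3 : s.re ≤ 3) :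
    ‖χ.LFunction s‖ ≤ (40 + 4 / δ) * Qc q s.im ^ (2 * δ) := by
  have hQ := one_le_Qc q s.im
  set Q := Qc q s.im with hQd
  set N := ⌈Q⌉₊ with hNd
  have hN : 1 ≤ N := Nat.one_le_ceil_iff.mpr (by linarith)
  have hQN : Q ≤ N := Nat.le_ceil _
  have hNQ : (N : ℝ) ≤ 2 * Q := by have := Nat.ceil_lt_add_one (by linarith : 0 ≤ Q); linarith
  have hσ : 1 / 2 ≤ s.re := by linarith
  have hNR : (1 : ℝ) ≤ N := by exact_mod_cast hN
  have h1 := partial_le (f := fun n => χ (n : ZMod q)) (fun _ => χ.norm_le_one _) hδ hN hs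
  have h2 := L_sub_partial_le hχ hN (s := s) (by linarith)
  have hq : (1 : ℝ) ≤ q := by exact_mod_cast Nat.pos_of_neZero q
  have hns : ‖s‖ ≤ 2 * (2 + |s.im|) := by
    refine (Complex.norm_le_abs_re_add_abs_im s).trans ?_
    rw [abs_of_nonneg (by linarith)]; linarith [abs_nonneg s.im]
  have h3 : 2 * q * ‖s‖ * (N : ℝ) ^ (-s.re) / s.re ≤ 8 * (N : ℝ) ^ (2 * δ) := by
    have a1 : 2 * (q : ℝ) * ‖s‖ ≤ 4 * N := by
      calc 2 * (q : ℝ) * ‖s‖ ≤ 2 * q * (2 * (2 + |s.im|)) := by gcongr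
        _ = 4 * Q := by rw [hQd, Qc]; ring
        _ ≤ _ := by linarith
    have a2 : (N : ℝ) * (N : ℝ) ^ (-s.re) ≤ (N : ℝ) ^ (2 * δ) := by
      rw [show (N : ℝ) * (N : ℝ) ^ (-s.re) = (N : ℝ) ^ (1 + -s.re) by rw [Real.rpow_add (by positivity), Real.rpow_one]]
      exact Real.rpow_le_rpow_of_exponent_le hNR (by linarith)
    rw [div_le_iff₀ (by linarith)]
    calc 2 * q * ‖s‖ * (N : ℝ) ^ (-s.re) ≤ 4 * N * (N : ℝ) ^ (-s.re) := by gcongr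
      _ = 4 * (N * (N : ℝ) ^ (-s.re)) := by ring
      _ ≤ 4 * (N : ℝ) ^ (2 * δ) := by gcongr
      _ = 8 * (N : ℝ) ^ (2 * δ) * (1 / 2) := by ring
      _ ≤ _ := by gcongr
  have h4 : (N : ℝ) ^ (2 * δ) ≤ 2 * Q ^ (2 * δ) := by
    calc (N : ℝ) ^ (2 * δ) ≤ (2 * Q) ^ (2 * δ) := by gcongr
      _ = 2 ^ (2 * δ) * Q ^ (2 * δ) := Real.mul_rpow (by norm_num) (by linarith)
      _ ≤ 2 ^ (1 : ℝ) * Q ^ (2 * δ) := by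
          gcongr
          · norm_num
          · linarith
      _ = _ := by rw [Real.rpow_one]
  calc ‖χ.LFunction s‖ ≤ 8 * (N : ℝ) ^ (2 * δ) + (1 + 1 / δ) * (N : ℝ) ^ (2 * δ) := by
        have := norm_sub_norm_le (χ.LFunction s) (∑ n ∈ Icc 1 N, χ (n : ZMod q) * (n : ℂ) ^ (-s))
        linarith
    _ = (9 + 1 / δ) * (N : ℝ) ^ (2 * δ) := by ring
    _ ≤ (9 + 1 / δ) * (2 * Q ^ (2 * δ)) := by gcongr
    _ = (18 + 2 / δ) * Q ^ (2 * δ) := by ring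
    _ ≤ _ := by gcongr <;> norm_num

/-- Values and derivatives of `L`-functions near the line `Re s = 1` are at most a small power of
the conductor. -/
lemma L_deriv_bound {δ : ℝ} (hδ : 0 < δ) : ∃ C > 0, ∃ η > 0, η ≤ 1 / 4 ∧ ∀ (q : ℕ) [NeZero q]
    (χ : DirichletCharacter ℂ q), χ ≠ 1 → ∀ s : ℂ, 1 - η ≤ s.re → s.re ≤ 5 / 2 →
      ‖χ.LFunction s‖ ≤ C * Qc q s.im ^ δ ∧ ‖deriv χ.LFunction s‖ ≤ C * Qc q s.im ^ δ := by
  set d : ℝ := min (δ / 2) (1 / 2) with hd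
  have hd0 : 0 < d := by positivity
  have hd1 : d ≤ 1 / 2 := min_le_right _ _
  have hd2 : 2 * d ≤ δ := by have := min_le_left (δ / 2) (1 / 2 : ℝ); linarith
  set A : ℝ := 40 + 4 / d with hA
  have hA0 : 0 < A := by positivity
  refine ⟨A * 2 / (d / 2), by positivity, d / 2, by positivity, by linarith, ?_⟩
  intro q _ χ hχ s hs1 hs2
  have hQ := one_le_Qc q s.im
  have hmono : Qc q s.im ^ (2 * d) ≤ Qc q s.im ^ δ :=
    Real.rpow_le_rpow_of_exponent_le (by linarith) hd2
  have hC : A ≤ A * 2 / (d / 2) := by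
    rw [le_div_iff₀ (by positivity)]; nlinarith
  constructor
  · refine (L_bound hd0 hd1 hχ (by linarith) (by linarith)).trans ?_
    have : 0 ≤ Qc q s.im ^ (2 * d) := by positivity
    exact mul_le_mul hC hmono this (by positivity)
  · have := Complex.norm_deriv_le_of_forall_mem_sphere_norm_le (c := s) (R := d / 2)
      (C := A * 2 * Qc q s.im ^ δ) (f := χ.LFunction) (by positivity)
      (DirichletCharacter.differentiable_LFunction hχ).diffContOnCl ?_
    · refine this.trans (le_of_eq (by ring))
    intro z hz
    rw [mem_sphere_iff_norm] at hz
    have r1 := Complex.abs_re_le_norm (z - s)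
    have r2 := Complex.abs_im_le_norm (z - s)
    rw [hz, abs_le] at r1 r2
    simp only [Complex.sub_re, Complex.sub_im] at r1 r2
    refine (L_bound hd0 hd1 hχ (by linarith) (by linarith)).trans ?_
    have hq : (1 : ℝ) ≤ q := by exact_mod_cast Nat.pos_of_neZero q
    have e1 : Qc q z.im ≤ 2 * Qc q s.im := by
      have : |z.im| ≤ |s.im| + 2 := by
        have := abs_sub_abs_le_abs_sub z.im s.im
        have h5 : |z.im - s.im| ≤ d / 2 := abs_le.mpr ⟨by linarith, by linarith⟩
        linarith
      unfold Qc
      nlinarith [abs_nonneg s.im]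
    have e2 : Qc q z.im ^ (2 * d) ≤ 2 * Qc q s.im ^ δ := by
      have := one_le_Qc q z.im
      calc Qc q z.im ^ (2 * d) ≤ (2 * Qc q s.im) ^ (2 * d) := by gcongr
        _ = 2 ^ (2 * d) * Qc q s.im ^ (2 * d) := Real.mul_rpow (by norm_num) (by linarith)
        _ ≤ 2 ^ (1 : ℝ) * Qc q s.im ^ δ := by
            gcongr
            · norm_num
            · linarith
        _ = _ := by rw [Real.rpow_one]
    calc A * Qc q z.im ^ (2 * d) ≤ A * (2 * Qc q s.im ^ δ) := by gcongr
      _ = _ := by ring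

/-- Real characters have real `L`-values on the positive real axis. -/
lemma L_real {q : ℕ} [NeZero q] {χ : DirichletCharacter ℂ q} (hχ : χ ≠ 1)
    (hre : ∀ n : ℕ, (χ (n : ZMod q)).im = 0) {σ : ℝ} (hσ : 0 < σ) : (χ.LFunction σ).im = 0 := by
  have hP : ∀ N : ℕ, (∑ n ∈ Icc 1 N, χ (n : ZMod q) * (n : ℂ) ^ (-(σ : ℂ))).im = 0 := by
    intro N
    rw [Complex.im_sum]
    refine Finset.sum_eq_zero fun n _ => ?_
    have : (n : ℂ) ^ (-(σ : ℂ)) = (((n : ℝ) ^ (-σ) : ℝ) : ℂ) := by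
      rw [Complex.ofReal_cpow (by positivity)]; push_cast; rfl
    rw [this, Complex.im_mul_ofReal, hre n, zero_mul]
  have hb : ∀ N : ℕ, 1 ≤ N → |(χ.LFunction σ).im| ≤ 2 * q * σ / σ * (N : ℝ) ^ (-σ) := by
    intro N hN
    have h := L_sub_partial_le hχ hN (s := (σ : ℂ)) (by simpa using hσ)
    have h2 := (Complex.abs_im_le_norm _).trans h
    rw [Complex.sub_im, hP, sub_zero, Complex.norm_real, Real.norm_of_nonneg hσ.le,
      Complex.ofReal_re] at h2
    refine h2.trans (le_of_eq (by ring))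
  have hlim : Filter.Tendsto (fun N : ℕ => 2 * q * σ / σ * (N : ℝ) ^ (-σ)) Filter.atTop (nhds 0) := by
    have := ((tendsto_rpow_neg_atTop hσ).comp tendsto_natCast_atTop_atTop).const_mul (2 * q * σ / σ)
    simpa using this
  have := ge_of_tendsto hlim (Filter.eventually_atTop.mpr ⟨1, hb⟩)
  exact abs_eq_zero.mp (le_antisymm this (abs_nonneg _))

end QLS

namespace QLS

/-! ### Siegel's theorem by Estermann's method -/

open Finset MeasureTheory

section positivity
open scoped ComplexOrder

/-- If `F' = -F V` where `V` is a Dirichlet series with nonnegative coefficients, and `F(2) ≥ 0`,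
then the derivatives of `F` at `2` alternate in sign. -/
lemma alternating_of_logDeriv {a : ℕ → ℂ} (ha : 0 ≤ a) (hab : LSeries.abscissaOfAbsConv a ≤ 1)
    {F : ℂ → ℂ} (hF : DifferentiableOn ℂ F {s | 1 < s.re})
    (hd : ∀ s : ℂ, 1 < s.re → deriv F s = -(F s * LSeries a s)) (h2 : 0 ≤ F 2) (m : ℕ) :
    0 ≤ (-1) ^ m * iteratedDeriv m F 2 := by
  have hUo : IsOpen {s : ℂ | 1 < s.re} := isOpen_lt continuous_const Complex.continuous_re
  have hmem : (2 : ℂ) ∈ {s : ℂ | 1 < s.re} := by simp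
  have hFa : AnalyticAt ℂ F 2 := hF.analyticOnNhd hUo 2 hmem
  have hab2 : LSeries.abscissaOfAbsConv a < ((2 : ℝ) : EReal) :=
    hab.trans_lt (by exact_mod_cast (by norm_num : (1 : ℝ) < 2))
  have hVa : AnalyticAt ℂ (LSeries a) 2 :=
    LSeries_analyticOnNhd a 2 (by simpa using hab2)
  have hV : ∀ k, 0 ≤ (-1 : ℂ) ^ k * iteratedDeriv k (LSeries a) 2 := fun k => by
    simpa using LSeries.iteratedDeriv_alternating ha hab2 k
  induction m using Nat.strong_induction_on with
  | _ m ih =>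
    rcases m with _ | m
    · simpa using h2
    · have e1 : deriv F =ᶠ[nhds 2] fun s => -((F * LSeries a) s) := by
        filter_upwards [hUo.mem_nhds hmem] with s hs
        rw [hd s hs]; rfl
      rw [iteratedDeriv_succ', e1.iteratedDeriv_eq, iteratedDeriv_fun_neg,
        iteratedDeriv_mul hFa.contDiffAt hVa.contDiffAt]
      have : (-1 : ℂ) ^ (m + 1) * -∑ i ∈ range (m + 1), (m.choose i : ℂ) * iteratedDeriv i F 2 *
            iteratedDeriv (m - i) (LSeries a) 2 =
          ∑ i ∈ range (m + 1), (m.choose i : ℂ) * ((-1) ^ i * iteratedDeriv i F 2) *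
            ((-1) ^ (m - i) * iteratedDeriv (m - i) (LSeries a) 2) := by
        rw [pow_succ, mul_neg_one, neg_mul_neg, Finset.mul_sum]
        refine Finset.sum_congr rfl fun i hi => ?_
        have hi' : i ≤ m := by simpa [Nat.lt_succ_iff] using hi
        have : (-1 : ℂ) ^ m = (-1) ^ i * (-1) ^ (m - i) := by rw [← pow_add, Nat.add_sub_cancel' hi']
        rw [this]; ring
      rw [this]
      refine Finset.sum_nonneg fun i hi => mul_nonneg (mul_nonneg (by positivity) (ih i ?_)) (hV _)
      simpa using hi

end positivity

/-- `(s - 1) ζ(s)`, with the removable singularity at `1` filled in. -/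
noncomputable def zeta1 : ℂ → ℂ := Function.update (fun s => (s - 1) * riemannZeta s) 1 1

lemma differentiable_zeta1 : Differentiable ℂ zeta1 := by
  rw [← differentiableOn_univ,
    ← Complex.differentiableOn_compl_singleton_and_continuousAt_iff (c := 1) Filter.univ_mem]
  refine ⟨DifferentiableOn.congr (f := fun s => (s - 1) * riemannZeta s) (fun s hs => ?_)
    (fun s hs => ?_), continuousAt_update_same.mpr riemannZeta_residue_one⟩
  · have hs : s ≠ 1 := by simpa using hs
    exact ((differentiableAt_id.sub_const 1).mul
      (differentiableAt_riemannZeta hs)).differentiableWithinAt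
  · have hs : s ≠ 1 := by simpa using hs
    rw [zeta1, Function.update_of_ne hs]

lemma zeta_bound_sphere : ∃ C > 0, ∀ s ∈ Metric.sphere (2 : ℂ) (3 / 2), ‖riemannZeta s‖ ≤ C := by
  have hc : ContinuousOn riemannZeta (Metric.sphere (2 : ℂ) (3 / 2)) := by
    intro s hs
    refine (differentiableAt_riemannZeta ?_).continuousAt.continuousWithinAt
    rintro rfl
    rw [mem_sphere_iff_norm] at hs
    norm_num at hs
  obtain ⟨C, hC⟩ := (isCompact_sphere (2 : ℂ) (3 / 2)).exists_bound_of_continuousOn hc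
  exact ⟨max C 1, by positivity, fun s hs => (hC s hs).trans (le_max_left _ _)⟩

lemma iteratedDeriv_inv_sub_one (m : ℕ) :
    iteratedDeriv m (fun s : ℂ => (s - 1)⁻¹) 2 = (-1) ^ m * (m.factorial : ℂ) := by
  have := congrFun (iter_deriv_inv_linear_sub m (1 : ℂ) 1) 2
  rw [iteratedDeriv_eq_iterate]
  simp only [one_mul, one_pow, mul_one] at this
  rw [this]
  norm_num

/-- The effective form of Estermann's argument: a nonpositive value of `ζ G` just to the left of `1`
gives a lower bound for `G(1)`. -/
lemma estermann_step : ∃ C₁ > 0, ∀ (G : ℂ → ℂ), Differentiable ℂ G → ∀ (A lam c₀ β : ℝ),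
    (∀ s, ‖s - 2‖ ≤ 3 / 2 → ‖G s‖ ≤ A) → G 1 = lam →
    (∀ m, 0 ≤ ((-1) ^ m * iteratedDeriv m (fun s => riemannZeta s * G s) 2).re) →
    c₀ ≤ (riemannZeta 2 * G 2).re → 7 / 8 ≤ β → β < 1 → (riemannZeta β * G β).re ≤ 0 →
    ∀ M : ℕ, 1 ≤ M → c₀ - C₁ * A * (3 / 4) ^ M ≤ lam * (2 - β) ^ M / (1 - β) := by
  obtain ⟨Cz, hCz, hz⟩ := zeta_bound_sphere
  refine ⟨4 * (Cz + 2), by positivity, ?_⟩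
  intro G hG A lam c₀ β hA hlam hb hb0 hβ hβ1 hneg M hM
  set P : ℂ → ℂ := fun s => zeta1 s * G s with hP
  have hPd : Differentiable ℂ P := differentiable_zeta1.mul hG
  set H : ℂ → ℂ := dslope P 1 with hH
  have hHd : Differentiable ℂ H := by
    rw [← differentiableOn_univ]
    exact (Complex.differentiableOn_dslope Filter.univ_mem).mpr hPd.differentiableOn
  have hHe : ∀ s, s ≠ 1 → H s = riemannZeta s * G s - lam * (s - 1)⁻¹ := by
    intro s hs
    have h1 : P 1 = lam := by simp [hP, zeta1, hlam]
    have h2 : P s = (s - 1) * riemannZeta s * G s := by simp [hP, zeta1, Function.update_of_ne hs]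
    have h3 : s - 1 ≠ 0 := sub_ne_zero.mpr hs
    rw [hH, dslope_of_ne _ hs, slope_def_field, h1, h2]
    field_simp
  have hA0 : 0 ≤ A := (norm_nonneg _).trans (hA 2 (by norm_num))
  have hlA : |lam| ≤ A := by
    have := hA 1 (by norm_num)
    rw [hlam] at this; simpa using this
  have hHb : ∀ s ∈ Metric.sphere (2 : ℂ) (3 / 2), ‖H s‖ ≤ (Cz + 2) * A := by
    intro s hs
    have hs' : ‖s - 2‖ = 3 / 2 := by rwa [mem_sphere_iff_norm] at hs
    have h1 : 1 / 2 ≤ ‖s - 1‖ := by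
      have := norm_sub_norm_le (s - 2) (s - 2 - (s - 1))
      have e : ‖s - 2 - (s - 1)‖ = 1 := by
        rw [show s - 2 - (s - 1) = (-1 : ℂ) by ring]; simp
      rw [e, hs', show s - 2 - (s - 2 - (s - 1)) = s - 1 by ring] at this
      linarith
    have hne : s ≠ 1 := by rintro rfl; norm_num at h1
    rw [hHe s hne]
    calc ‖riemannZeta s * G s - lam * (s - 1)⁻¹‖
        ≤ ‖riemannZeta s‖ * ‖G s‖ + |lam| * ‖s - 1‖⁻¹ := by
          refine (norm_sub_le _ _).trans ?_
          simp [norm_mul]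
      _ ≤ Cz * A + A * (1 / 2)⁻¹ := by
          gcongr
          · exact hz s hs
          · exact hA s hs'.le
      _ = _ := by ring
  have hHm : ∀ m, ‖iteratedDeriv m H 2‖ ≤ m.factorial * ((Cz + 2) * A) / (3 / 2) ^ m := fun m =>
    Complex.norm_iteratedDeriv_le_of_forall_mem_sphere_norm_le m (by norm_num)
      hHd.diffContOnCl hHb
  have hHm2 : ∀ m, iteratedDeriv m H 2 =
      iteratedDeriv m (fun s => riemannZeta s * G s) 2 - lam * ((-1) ^ m * m.factorial) := by
    intro m
    have e1 : H =ᶠ[nhds 2] (fun s => riemannZeta s * G s) - fun s : ℂ => (lam : ℂ) * (s - 1)⁻¹ := by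
      filter_upwards [isOpen_ne.mem_nhds (show (2 : ℂ) ≠ 1 by norm_num)] with s hs
      rw [hHe s hs]; rfl
    have a1 : AnalyticAt ℂ (fun s => riemannZeta s * G s) 2 := by
      have : DifferentiableOn ℂ (fun s => riemannZeta s * G s) {s : ℂ | s ≠ 1} := fun s hs =>
        ((differentiableAt_riemannZeta hs).mul (hG s)).differentiableWithinAt
      exact this.analyticOnNhd isOpen_ne 2 (by norm_num)
    have a2 : AnalyticAt ℂ (fun s : ℂ => lam * (s - 1)⁻¹) 2 :=
      analyticAt_const.mul ((analyticAt_id.sub analyticAt_const).inv (by norm_num))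
    rw [e1.iteratedDeriv_eq, iteratedDeriv_sub a1.contDiffAt a2.contDiffAt,
      iteratedDeriv_const_mul_field, iteratedDeriv_inv_sub_one]
  set x : ℝ := 2 - β with hx
  have hx1 : 1 < x := by linarith
  have hx2 : x ≤ 9 / 8 := by linarith
  -- `t m` is the `m`-th Taylor term of `H` at `β`
  set t : ℕ → ℝ := fun m =>
    ((m.factorial : ℂ)⁻¹ • ((β : ℂ) - 2) ^ m • iteratedDeriv m H 2).re with ht
  have hsum : HasSum t (H β).re :=
    Complex.hasSum_re (Complex.hasSum_taylorSeries_of_entire hHd 2 β)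
  have hpow : ∀ m, ((β : ℂ) - 2) ^ m = ((x ^ m : ℝ) : ℂ) * (-1) ^ m := by
    intro m
    rw [show (β : ℂ) - 2 = (x : ℂ) * (-1) by rw [hx]; push_cast; ring, mul_pow]; push_cast; rfl
  have htb : ∀ m, |t m| ≤ (Cz + 2) * A * (3 / 4) ^ m := by
    intro m
    have hf : (0 : ℝ) < m.factorial := by exact_mod_cast m.factorial_pos
    refine (Complex.abs_re_le_norm _).trans ?_
    rw [norm_smul, norm_smul, hpow, norm_mul, Complex.norm_real, norm_pow (-1 : ℂ), norm_neg, norm_one,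
      one_pow, mul_one, norm_inv, Complex.norm_natCast, Real.norm_of_nonneg (by positivity)]
    calc (m.factorial : ℝ)⁻¹ * (x ^ m * ‖iteratedDeriv m H 2‖)
        ≤ (m.factorial : ℝ)⁻¹ * ((9 / 8) ^ m * (m.factorial * ((Cz + 2) * A) / (3 / 2) ^ m)) := by
          gcongr; exact hHm m
      _ = (Cz + 2) * A * ((9 / 8) ^ m / (3 / 2) ^ m) := by field_simp
      _ = _ := by rw [← div_pow]; norm_num
  have htl : ∀ m, -(lam * x ^ m) ≤ t m ∧ c₀ * (if m = 0 then 1 else 0) - lam * x ^ m ≤ t m := by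
    intro m
    have hf : (0 : ℝ) < m.factorial := by exact_mod_cast m.factorial_pos
    have e : t m = (m.factorial : ℝ)⁻¹ * x ^ m *
        ((-1) ^ m * iteratedDeriv m (fun s => riemannZeta s * G s) 2).re - lam * x ^ m := by
      have : (m.factorial : ℂ)⁻¹ • ((β : ℂ) - 2) ^ m • iteratedDeriv m H 2 =
          (((m.factorial : ℝ)⁻¹ * x ^ m : ℝ) : ℂ) *
          ((-1) ^ m * iteratedDeriv m (fun s => riemannZeta s * G s) 2) -
            ((lam * x ^ m : ℝ) : ℂ) := by
        have hf' : (m.factorial : ℂ) ≠ 0 := by exact_mod_cast m.factorial_ne_zero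
        have hs : (-1 : ℂ) ^ m * (-1) ^ m = 1 := by rw [← mul_pow]; norm_num
        rw [hpow, hHm2, smul_eq_mul, smul_eq_mul]
        push_cast
        field_simp
        linear_combination (-(lam : ℂ) * (m.factorial : ℂ) * (x : ℂ) ^ m) * hs
      rw [ht]
      simp only
      rw [this, Complex.sub_re, Complex.re_ofReal_mul, Complex.ofReal_re]
    rw [e]
    have := hb m
    refine ⟨by have : 0 ≤ (m.factorial : ℝ)⁻¹ * x ^ m *
      ((-1) ^ m * iteratedDeriv m (fun s => riemannZeta s * G s) 2).re := by positivity
               linarith, ?_⟩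
    rcases m with _ | m
    · simpa using hb0
    · have : 0 ≤ ((m + 1).factorial : ℝ)⁻¹ * x ^ (m + 1) *
        ((-1) ^ (m + 1) * iteratedDeriv (m + 1) (fun s => riemannZeta s * G s) 2).re := by positivity
      rw [if_neg (Nat.succ_ne_zero m)]; linarith
  have hsplit := hsum.summable.sum_add_tsum_nat_add M
  rw [hsum.tsum_eq] at hsplit
  have h1 : c₀ - lam * ((x ^ M - 1) / (x - 1)) ≤ ∑ m ∈ range M, t m := by
    rw [← geom_sum_eq (by linarith : x ≠ 1), Finset.mul_sum]
    calc _ = ∑ m ∈ range M, (c₀ * (if m = 0 then 1 else 0) - lam * x ^ m) := by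
          rw [Finset.sum_sub_distrib, ← Finset.mul_sum, ← Finset.mul_sum, Finset.sum_ite_eq' (range M) 0 fun _ => (1 : ℝ),
            if_pos (mem_range.mpr hM), mul_one]
      _ ≤ _ := Finset.sum_le_sum fun m _ => (htl m).2
  have hg : Summable fun m : ℕ => (Cz + 2) * A * (3 / 4 : ℝ) ^ (m + M) := by
    have := (summable_geometric_of_lt_one (by norm_num : (0 : ℝ) ≤ 3 / 4) (by norm_num)).mul_left
      ((Cz + 2) * A * (3 / 4 : ℝ) ^ M)
    refine this.congr fun m => ?_
    rw [pow_add]; ring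
  have hge : ∑' m : ℕ, (Cz + 2) * A * (3 / 4 : ℝ) ^ (m + M) = 4 * (Cz + 2) * A * (3 / 4) ^ M := by
    have : ∀ m : ℕ, (Cz + 2) * A * (3 / 4 : ℝ) ^ (m + M) =
        (Cz + 2) * A * (3 / 4 : ℝ) ^ M * (3 / 4) ^ m := fun m => by rw [pow_add]; ring
    simp_rw [this]
    rw [tsum_mul_left, tsum_geometric_of_lt_one (by norm_num) (by norm_num)]
    ring
  have h2 : -(4 * (Cz + 2) * A * (3 / 4) ^ M) ≤ ∑' m, t (m + M) := by
    rw [← hge, ← tsum_neg]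
    refine Summable.tsum_le_tsum (fun m => ?_) hg.neg ((summable_nat_add_iff M).mpr hsum.summable)
    exact (abs_le.mp (htb (m + M))).1
  have h3 : (H β).re = (riemannZeta β * G β).re + lam / (1 - β) := by
    rw [hHe β (by exact_mod_cast hβ1.ne), Complex.sub_re]
    have : (lam : ℂ) * ((β : ℂ) - 1)⁻¹ = ((lam * (β - 1)⁻¹ : ℝ) : ℂ) := by push_cast; rfl
    rw [this, Complex.ofReal_re, show β - 1 = -(1 - β) by ring, inv_neg]
    ring
  have hx3 : x - 1 = 1 - β := by rw [hx]; ring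
  rw [hx3] at h1
  have h4 : lam * ((x ^ M - 1) / (1 - β)) = lam * x ^ M / (1 - β) - lam / (1 - β) := by ring
  linarith

end QLS

namespace QLS

open Finset MeasureTheory

/-- `estermann_step` with `M` chosen of size `log A`. -/
lemma estermann : ∃ c > 0, ∀ (G : ℂ → ℂ), Differentiable ℂ G → ∀ (A lam β : ℝ), 1 ≤ A →
    (∀ s, ‖s - 2‖ ≤ 3 / 2 → ‖G s‖ ≤ A) → G 1 = lam →
    (∀ m, 0 ≤ ((-1) ^ m * iteratedDeriv m (fun s => riemannZeta s * G s) 2).re) →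
    1 / 64 ≤ (riemannZeta 2 * G 2).re → 7 / 8 ≤ β → β < 1 → (riemannZeta β * G β).re ≤ 0 →
    c * (1 - β) * A ^ (-(4 * (1 - β))) ≤ lam := by
  obtain ⟨C₀, hC₀, h⟩ := estermann_step
  set C₁ := max C₀ 1 with hC₁
  have hC1 : 1 ≤ C₁ := le_max_right _ _
  set c := (1 / 128) / (Real.exp 2 * (128 * C₁) ^ (4 : ℝ)) with hc
  refine ⟨c, by positivity, ?_⟩
  intro G hG A lam β hA1 hA hlam hb hb0 hβ hβ1 hneg
  set B := 128 * C₁ * A with hB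
  have hB1 : 1 ≤ B := by nlinarith
  have hlB : 0 ≤ Real.log B := Real.log_nonneg hB1
  set M := ⌈4 * Real.log B⌉₊ + 1 with hM
  have hM1 : 4 * Real.log B ≤ M := by
    rw [hM]; push_cast; linarith [Nat.le_ceil (4 * Real.log B)]
  have hM2 : (M : ℝ) ≤ 4 * Real.log B + 2 := by
    rw [hM]; push_cast; linarith [Nat.ceil_lt_add_one (show 0 ≤ 4 * Real.log B by positivity)]
  have h1 := h G hG A lam (1 / 64) β hA hlam hb hb0 hβ hβ1 hneg M (by omega)
  have h2 : (3 / 4 : ℝ) ^ M ≤ B⁻¹ := by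
    calc (3 / 4 : ℝ) ^ M ≤ (Real.exp (-(1 / 4))) ^ M := by
          gcongr; linarith [Real.add_one_le_exp (-(1 / 4) : ℝ)]
      _ = Real.exp (-(1 / 4) * M) := by rw [← Real.exp_nat_mul]; ring_nf
      _ ≤ Real.exp (-Real.log B) := by gcongr; linarith
      _ = B⁻¹ := by rw [Real.exp_neg, Real.exp_log (by linarith)]
  have h3 : C₀ * A * (3 / 4) ^ M ≤ 1 / 128 := by
    calc C₀ * A * (3 / 4) ^ M ≤ C₁ * A * B⁻¹ := by gcongr; exact le_max_left _ _
      _ = 1 / 128 := by rw [hB]; field_simp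
  have h4 : 1 / 128 ≤ lam * (2 - β) ^ M / (1 - β) := by linarith
  have hb1 : 0 < 1 - β := by linarith
  rw [le_div_iff₀ hb1] at h4
  have hlam0 : 0 < lam := by
    by_contra hcon
    have : lam * (2 - β) ^ M ≤ 0 :=
      mul_nonpos_of_nonpos_of_nonneg (by linarith) (pow_nonneg (by linarith) _)
    nlinarith
  have h5 : (2 - β) ^ M ≤ Real.exp 2 * (128 * C₁) ^ (4 : ℝ) * A ^ (4 * (1 - β)) := by
    calc (2 - β) ^ M ≤ (Real.exp (1 - β)) ^ M := by
          gcongr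
          · linarith
          · linarith [Real.add_one_le_exp (1 - β)]
      _ = Real.exp ((1 - β) * M) := by rw [← Real.exp_nat_mul]; ring_nf
      _ ≤ Real.exp (2 + Real.log B * (4 * (1 - β))) := by
          refine Real.exp_le_exp.mpr ?_
          calc (1 - β) * M ≤ (1 - β) * (4 * Real.log B + 2) := by gcongr
            _ ≤ _ := by nlinarith
      _ = Real.exp 2 * ((128 * C₁) ^ (4 * (1 - β)) * A ^ (4 * (1 - β))) := by
          rw [Real.exp_add, ← Real.rpow_def_of_pos (by linarith), hB,
            Real.mul_rpow (by positivity) (by linarith)]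
      _ ≤ Real.exp 2 * ((128 * C₁) ^ (4 : ℝ) * A ^ (4 * (1 - β))) := by
          gcongr
          · linarith
          · linarith
      _ = _ := by ring
  have hAp : 0 < A ^ (4 * (1 - β)) := Real.rpow_pos_of_pos (by linarith) _
  rw [Real.rpow_neg (by linarith), ← div_eq_mul_inv, div_le_iff₀ hAp, hc, div_mul_eq_mul_div,
    div_le_iff₀ (by positivity)]
  calc 1 / 128 * (1 - β) ≤ lam * (2 - β) ^ M := h4
    _ ≤ lam * (Real.exp 2 * (128 * C₁) ^ (4 : ℝ) * A ^ (4 * (1 - β))) := by gcongr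
    _ = _ := by ring

/-- Real Dirichlet characters, in the form used here: all values are `-1`, `0` or `1`. -/
def IsRealChar {q : ℕ} (χ : DirichletCharacter ℂ q) : Prop :=
  ∀ n : ℕ, χ (n : ZMod q) = 0 ∨ χ (n : ZMod q) = 1 ∨ χ (n : ZMod q) = -1

lemma IsRealChar.im {q : ℕ} {χ : DirichletCharacter ℂ q} (h : IsRealChar χ) (n : ℕ) :
    (χ (n : ZMod q)).im = 0 := by
  rcases h n with h | h | h <;> simp [h]

lemma zeta_two_sub_one_lt : ∑' n : ℕ, (1 : ℝ) / ((n : ℝ) + 2) ^ 2 ≤ 2 / 3 := by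
  have h := hasSum_zeta_two
  have h1 := h.summable.sum_add_tsum_nat_add 2
  rw [h.tsum_eq] at h1
  simp [Finset.sum_range_succ] at h1
  have hpi : Real.pi ^ 2 ≤ 10 := by nlinarith [Real.pi_lt_d2, Real.pi_pos]
  simp only [one_div]
  linarith

/-- At `s = 2` the `L`-function of a character stays within `2/3` of `1`. -/
lemma L_two_sub_one {q : ℕ} [NeZero q] (χ : DirichletCharacter ℂ q) :
    ‖χ.LFunction 2 - 1‖ ≤ 2 / 3 := by
  have hs : (1 : ℝ) < (2 : ℂ).re := by norm_num
  rw [DirichletCharacter.LFunction_eq_LSeries χ hs]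
  have hsum : LSeriesSummable (fun n => χ (n : ZMod q)) 2 :=
    DirichletCharacter.LSeriesSummable_of_one_lt_re χ hs
  have h1 := Summable.sum_add_tsum_nat_add 2 hsum
  rw [LSeries, ← h1, Finset.sum_range_succ, Finset.sum_range_one]
  have e0 : LSeries.term (fun n => χ (n : ZMod q)) 2 0 = 0 := by simp
  have e1 : LSeries.term (fun n => χ (n : ZMod q)) 2 1 = 1 := by simp [LSeries.term]
  rw [e0, e1, zero_add, add_sub_cancel_left]
  refine le_trans ?_ zeta_two_sub_one_lt
  have hS : Summable fun n : ℕ => (1 : ℝ) / ((n : ℝ) + 2) ^ 2 := by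
    have := (summable_nat_add_iff 2).mpr hasSum_zeta_two.summable
    simpa using this
  refine tsum_of_norm_bounded hS.hasSum fun n => ?_
  rw [LSeries.term_of_ne_zero (by omega), norm_div]
  have : ‖((n + 2 : ℕ) : ℂ) ^ (2 : ℂ)‖ = ((n : ℝ) + 2) ^ 2 := by
    rw [Complex.norm_natCast_cpow_of_pos (by omega)]; norm_num
  rw [this]
  gcongr
  exact χ.norm_le_one _

lemma L_two_re {q : ℕ} [NeZero q] (χ : DirichletCharacter ℂ q) : 1 / 3 ≤ (χ.LFunction 2).re := by
  have := (Complex.abs_re_le_norm _).trans (L_two_sub_one χ)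
  rw [abs_le] at this
  simp at this; linarith

lemma zeta_two_ge : ∃ z : ℝ, 1 ≤ z ∧ riemannZeta 2 = z := by
  refine ⟨Real.pi ^ 2 / 6, by nlinarith [Real.pi_gt_three], ?_⟩
  rw [riemannZeta_two]; push_cast; rfl

end QLS

namespace QLS

open Finset MeasureTheory

/-- The coefficients `χ(n) Λ(n)` of `-L'/L`. -/
noncomputable def twL {q : ℕ} (χ : DirichletCharacter ℂ q) : ℕ → ℂ :=
  (fun n : ℕ => χ (n : ZMod q)) * (fun n : ℕ => (ArithmeticFunction.vonMangoldt n : ℂ))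

lemma twL_summable {q : ℕ} (χ : DirichletCharacter ℂ q) {s : ℂ} (hs : 1 < s.re) :
    LSeriesSummable (twL χ) s := DirichletCharacter.LSeriesSummable_twist_vonMangoldt χ hs

lemma hasDerivAt_L {q : ℕ} [NeZero q] (χ : DirichletCharacter ℂ q) {s : ℂ} (hs : 1 < s.re) :
    HasDerivAt χ.LFunction (-(χ.LFunction s * LSeries (twL χ) s)) s := by
  have h := DirichletCharacter.LSeries_twist_vonMangoldt_eq χ hs
  have hne : LSeries (fun n => χ (n : ZMod q)) s ≠ 0 :=
    DirichletCharacter.LSeries_ne_zero_of_one_lt_re χ hs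
  have h2 : deriv χ.LFunction s = -(χ.LFunction s * LSeries (twL χ) s) := by
    rw [twL, h, DirichletCharacter.deriv_LFunction_eq_deriv_LSeries χ hs,
      DirichletCharacter.LFunction_eq_LSeries χ hs]
    field_simp
  rw [← h2]
  refine (DirichletCharacter.differentiableAt_LFunction χ s (Or.inl ?_)).hasDerivAt
  rintro rfl; simp at hs

lemma hasDerivAt_zeta {s : ℂ} (hs : 1 < s.re) :
    HasDerivAt riemannZeta
      (-(riemannZeta s * LSeries (fun n => (ArithmeticFunction.vonMangoldt n : ℂ)) s)) s := by
  have h := ArithmeticFunction.LSeries_vonMangoldt_eq_deriv_riemannZeta_div hs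
  have hne : riemannZeta s ≠ 0 := riemannZeta_ne_zero_of_one_lt_re hs
  have h2 : deriv riemannZeta s =
      -(riemannZeta s * LSeries (fun n => (ArithmeticFunction.vonMangoldt n : ℂ)) s) := by
    rw [h]; field_simp
  rw [← h2]
  refine (differentiableAt_riemannZeta ?_).hasDerivAt
  rintro rfl; simp at hs

section
open scoped ComplexOrder

lemma abscissa_le {a : ℕ → ℂ} (h : ∀ s : ℂ, 1 < s.re → LSeriesSummable a s) :
    LSeries.abscissaOfAbsConv a ≤ 1 := by
  refine LSeries.abscissaOfAbsConv_le_of_forall_lt_LSeriesSummable fun y hy => h y ?_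
  simpa using hy

lemma L_two_eq {q : ℕ} [NeZero q] {χ : DirichletCharacter ℂ q} (hχ : χ ≠ 1) (hr : IsRealChar χ) :
    ∃ x : ℝ, 1 / 3 ≤ x ∧ χ.LFunction 2 = x := by
  refine ⟨(χ.LFunction 2).re, L_two_re χ, ?_⟩
  have := L_real hχ hr.im (σ := 2) (by norm_num)
  apply Complex.ext <;> simp
  simpa using this

lemma L_one_eq {q : ℕ} [NeZero q] {χ : DirichletCharacter ℂ q} (hχ : χ ≠ 1) (hr : IsRealChar χ) :
    ∃ x : ℝ, χ.LFunction 1 = x := by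
  refine ⟨(χ.LFunction 1).re, ?_⟩
  have := L_real hχ hr.im (σ := 1) (by norm_num)
  apply Complex.ext <;> simp
  simpa using this

lemma vonMangoldt_summable {s : ℂ} (hs : 1 < s.re) :
    LSeriesSummable (fun n => (ArithmeticFunction.vonMangoldt n : ℂ)) s :=
  ArithmeticFunction.LSeriesSummable_vonMangoldt hs

/-- Lower bound for `L(1, χ)` from a point `β` with `ζ(β) L(β, χ) ≤ 0`. -/
lemma siegel_single : ∃ c > 0, ∀ (q : ℕ) [NeZero q] (χ : DirichletCharacter ℂ q), χ ≠ 1 →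
    IsRealChar χ → ∀ β : ℝ, 7 / 8 ≤ β → β < 1 → (riemannZeta β * χ.LFunction β).re ≤ 0 →
      c * (1 - β) * (15 * q : ℝ) ^ (-(4 * (1 - β))) ≤ ‖χ.LFunction 1‖ := by
  obtain ⟨c, hc, h⟩ := estermann
  refine ⟨c, hc, ?_⟩
  intro q _ χ hχ hr β hβ hβ1 hneg
  obtain ⟨lam, hlam⟩ := L_one_eq hχ hr
  obtain ⟨x, hx, hx2⟩ := L_two_eq hχ hr
  obtain ⟨z, hz, hz2⟩ := zeta_two_ge
  have hq : (1 : ℝ) ≤ q := by exact_mod_cast Nat.pos_of_neZero q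
  have hpos : ∀ m, 0 ≤ (-1) ^ m * iteratedDeriv m (fun s => riemannZeta s * χ.LFunction s) 2 := by
    intro m
    set a : ℕ → ℂ := (fun n => (ArithmeticFunction.vonMangoldt n : ℂ)) + twL χ with ha
    have hd : ∀ s : ℂ, 1 < s.re → HasDerivAt (fun s => riemannZeta s * χ.LFunction s)
        (-(riemannZeta s * χ.LFunction s * LSeries a s)) s := by
      intro s hs
      refine ((hasDerivAt_zeta hs).mul (hasDerivAt_L χ hs)).congr_deriv ?_
      rw [ha, LSeries_add (vonMangoldt_summable hs) (twL_summable χ hs)]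
      ring
    refine alternating_of_logDeriv (a := a) ?_ (abscissa_le fun s hs => ?_) ?_ ?_ ?_ m
    · intro n
      have h0 : (0 : ℂ) ≤ (ArithmeticFunction.vonMangoldt n : ℂ) := by
        exact_mod_cast ArithmeticFunction.vonMangoldt_nonneg
      have e : a n = (1 + χ (n : ZMod q)) * (ArithmeticFunction.vonMangoldt n : ℂ) := by
        simp [ha, twL]; ring
      rw [e]
      refine mul_nonneg ?_ h0
      rcases hr n with h | h | h <;> rw [h] <;> norm_num
    · exact (vonMangoldt_summable hs).add (twL_summable χ hs)
    · exact fun s hs => (hd s hs).differentiableAt.differentiableWithinAt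
    · exact fun s hs => (hd s hs).deriv
    · rw [hz2, hx2]; exact_mod_cast (by positivity : 0 ≤ z * x)
  have := h χ.LFunction (DirichletCharacter.differentiable_LFunction hχ) (15 * q) lam β
    (by linarith) (fun s hs => L_bound_disc hχ hs) hlam
    (fun m => (Complex.le_def.mp (hpos m)).1) ?_ hβ hβ1 hneg
  · refine this.trans ?_
    rw [hlam, Complex.norm_real]; exact le_abs_self _
  · rw [hz2, hx2]
    have : ((z : ℂ) * x).re = z * x := by rw [← Complex.ofReal_mul, Complex.ofReal_re]
    rw [this]; nlinarith

/-- Lower bound for `L(1, χ₁) L(1, χ₂) L(1, χ₁χ₂)` from a real zero `β` of `L(s, χ₁)`. -/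
lemma siegel_pair : ∃ c > 0, ∀ (q₁ q₂ q₃ : ℕ) [NeZero q₁] [NeZero q₂] [NeZero q₃]
    (χ₁ : DirichletCharacter ℂ q₁) (χ₂ : DirichletCharacter ℂ q₂) (ψ : DirichletCharacter ℂ q₃),
    χ₁ ≠ 1 → χ₂ ≠ 1 → ψ ≠ 1 → IsRealChar χ₁ → IsRealChar χ₂ →
    (∀ n : ℕ, ψ (n : ZMod q₃) = χ₁ (n : ZMod q₁) * χ₂ (n : ZMod q₂)) →
    ∀ β : ℝ, 7 / 8 ≤ β → β < 1 → χ₁.LFunction β = 0 →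
      c * (1 - β) * (15 ^ 3 * (q₁ * q₂ * q₃) : ℝ) ^ (-(4 * (1 - β))) ≤
        ‖χ₁.LFunction 1‖ * ‖χ₂.LFunction 1‖ * ‖ψ.LFunction 1‖ := by
  obtain ⟨c, hc, h⟩ := estermann
  refine ⟨c, hc, ?_⟩
  intro q₁ q₂ q₃ _ _ _ χ₁ χ₂ ψ hχ₁ hχ₂ hψ hr₁ hr₂ hmul β hβ hβ1 hzero
  have hr₃ : IsRealChar ψ := by
    intro n
    rw [hmul]
    rcases hr₁ n with h | h | h <;> rcases hr₂ n with h' | h' | h' <;> simp [h, h']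
  obtain ⟨l₁, hl₁⟩ := L_one_eq hχ₁ hr₁
  obtain ⟨x₁, hx₁, hxx₁⟩ := L_two_eq hχ₁ hr₁
  obtain ⟨l₂, hl₂⟩ := L_one_eq hχ₂ hr₂
  obtain ⟨x₂, hx₂, hxx₂⟩ := L_two_eq hχ₂ hr₂
  obtain ⟨l₃, hl₃⟩ := L_one_eq hψ hr₃
  obtain ⟨x₃, hx₃, hxx₃⟩ := L_two_eq hψ hr₃
  obtain ⟨z, hz, hz2⟩ := zeta_two_ge
  have hq₁ : (1 : ℝ) ≤ q₁ := by exact_mod_cast Nat.pos_of_neZero q₁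
  have hq₂ : (1 : ℝ) ≤ q₂ := by exact_mod_cast Nat.pos_of_neZero q₂
  have hq₃ : (1 : ℝ) ≤ q₃ := by exact_mod_cast Nat.pos_of_neZero q₃
  set G : ℂ → ℂ := fun s => χ₁.LFunction s * χ₂.LFunction s * ψ.LFunction s with hG
  have hGd : Differentiable ℂ G := ((DirichletCharacter.differentiable_LFunction hχ₁).mul
    (DirichletCharacter.differentiable_LFunction hχ₂)).mul
    (DirichletCharacter.differentiable_LFunction hψ)
  have hx12 : (1 / 9 : ℝ) ≤ x₁ * x₂ := by nlinarith
  have hx123 : (1 / 27 : ℝ) ≤ x₁ * x₂ * x₃ := by nlinarith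
  have hF2 : riemannZeta 2 * G 2 = ((z * (x₁ * x₂ * x₃) : ℝ) : ℂ) := by
    simp only [hG]; rw [hz2, hxx₁, hxx₂, hxx₃]; push_cast; rfl
  have hpos : ∀ m, 0 ≤ (-1) ^ m * iteratedDeriv m (fun s => riemannZeta s * G s) 2 := by
    intro m
    set a : ℕ → ℂ := (fun n => (ArithmeticFunction.vonMangoldt n : ℂ)) +
      ((twL χ₁ + twL χ₂) + twL ψ) with ha
    have hd : ∀ s : ℂ, 1 < s.re → HasDerivAt (fun s => riemannZeta s * G s)
        (-(riemannZeta s * G s * LSeries a s)) s := by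
      intro s hs
      refine ((hasDerivAt_zeta hs).mul (((hasDerivAt_L χ₁ hs).mul (hasDerivAt_L χ₂ hs)).mul
        (hasDerivAt_L ψ hs))).congr_deriv ?_
      rw [ha, LSeries_add (vonMangoldt_summable hs)
        (((twL_summable χ₁ hs).add (twL_summable χ₂ hs)).add (twL_summable ψ hs)),
        LSeries_add ((twL_summable χ₁ hs).add (twL_summable χ₂ hs)) (twL_summable ψ hs),
        LSeries_add (twL_summable χ₁ hs) (twL_summable χ₂ hs)]
      simp only [hG, Pi.mul_apply]
      ring
    refine alternating_of_logDeriv (a := a) ?_ (abscissa_le fun s hs => ?_) ?_ ?_ ?_ m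
    · intro n
      have h0 : (0 : ℂ) ≤ (ArithmeticFunction.vonMangoldt n : ℂ) := by
        exact_mod_cast ArithmeticFunction.vonMangoldt_nonneg
      have e : a n = (1 + χ₁ (n : ZMod q₁)) * (1 + χ₂ (n : ZMod q₂)) *
          (ArithmeticFunction.vonMangoldt n : ℂ) := by
        simp [ha, twL, hmul]; ring
      rw [e]
      refine mul_nonneg (mul_nonneg ?_ ?_) h0
      · rcases hr₁ n with h | h | h <;> rw [h] <;> norm_num
      · rcases hr₂ n with h | h | h <;> rw [h] <;> norm_num
    · exact (vonMangoldt_summable hs).add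
        (((twL_summable χ₁ hs).add (twL_summable χ₂ hs)).add (twL_summable ψ hs))
    · exact fun s hs => (hd s hs).differentiableAt.differentiableWithinAt
    · exact fun s hs => (hd s hs).deriv
    · rw [hF2]; exact_mod_cast (by positivity : 0 ≤ z * (x₁ * x₂ * x₃))
  have hprod : (1 : ℝ) ≤ q₁ * q₂ * q₃ := by
    have := mul_le_mul hq₁ hq₂ (by norm_num) (by linarith)
    nlinarith
  have := h G hGd (15 ^ 3 * (q₁ * q₂ * q₃)) (l₁ * l₂ * l₃) β
    (by linarith) (fun s hs => ?_) (by simp only [hG]; rw [hl₁, hl₂, hl₃]; push_cast; rfl)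
    (fun m => (Complex.le_def.mp (hpos m)).1) ?_ hβ hβ1 (by simp [hG, hzero])
  · refine this.trans ?_
    rw [hl₁, hl₂, hl₃, Complex.norm_real, Complex.norm_real, Complex.norm_real, ← norm_mul,
      ← norm_mul]
    exact le_abs_self _
  · simp only [hG, norm_mul]
    calc _ ≤ (15 * q₁ : ℝ) * (15 * q₂) * (15 * q₃) := by
          gcongr
          · exact L_bound_disc hχ₁ hs
          · exact L_bound_disc hχ₂ hs
          · exact L_bound_disc hψ hs
      _ = _ := by ring
  · rw [hF2, Complex.ofReal_re]; nlinarith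

end

/-- `ζ` has negative real part on the real axis just to the left of `1`. -/
lemma zeta_neg : ∃ η > 0, ∀ β : ℝ, 1 - η < β → β < 1 → (riemannZeta β).re < 0 := by
  have hc : Filter.Tendsto (fun β : ℝ => ((zeta1 β).re)) (nhds 1) (nhds 1) := by
    have : Continuous fun β : ℝ => (zeta1 β).re :=
      Complex.continuous_re.comp (differentiable_zeta1.continuous.comp Complex.continuous_ofReal)
    have h2 := this.tendsto 1
    simpa [zeta1] using h2
  have h := hc.eventually (lt_mem_nhds (show (0 : ℝ) < 1 by norm_num))
  obtain ⟨η, hη, hb⟩ := Metric.eventually_nhds_iff.mp h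
  refine ⟨η, hη, fun β h1 h2 => ?_⟩
  have h3 := hb (y := β) (by rw [Real.dist_eq, abs_lt]; constructor <;> linarith)
  have hne : (β : ℂ) ≠ 1 := by exact_mod_cast h2.ne
  rw [zeta1, Function.update_of_ne hne] at h3
  have e : (((β : ℂ) - 1) * riemannZeta β).re = (β - 1) * (riemannZeta β).re := by
    rw [show (β : ℂ) - 1 = ((β - 1 : ℝ) : ℂ) by push_cast; rfl, Complex.re_ofReal_mul]
  rw [e] at h3
  nlinarith

end QLS

namespace QLS

open Finset MeasureTheory

/-- The moduli of the theorem: squarefree odd `d > 1`. -/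
def Adm (d : ℕ) : Prop := 1 < d ∧ Squarefree d ∧ Odd d

/-- The hypothesis on the family of characters: `χ d` is a nonprincipal character modulo `4 d`
which agrees with the Jacobi symbol `(4d/·)` on odd integers. -/
def IsFam (χ : (d : ℕ) → DirichletCharacter ℂ (4 * d)) : Prop :=
  ∀ d, Adm d → χ d ≠ 1 ∧ ∀ n : ℕ, Odd n → χ d (n : ZMod (4 * d)) = (jacobiSym ((4 * d : ℕ) : ℤ) n : ℂ)

lemma Adm.neZero {d : ℕ} (h : Adm d) : NeZero (4 * d) := ⟨by have := h.1; omega⟩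

variable {χ : (d : ℕ) → DirichletCharacter ℂ (4 * d)}

lemma IsFam.apply_odd (hf : IsFam χ) {d : ℕ} (hd : Adm d) {n : ℕ} (hn : Odd n) :
    χ d (n : ZMod (4 * d)) = J d n := by
  rw [(hf d hd).2 n hn, J]
  congr 1
  have h4 : jacobiSym (2 * 2) n = 1 := by
    rw [jacobiSym.mul_left]
    have hg : (2 : ℤ).gcd n = 1 := by
      have := (Nat.coprime_two_left).mpr hn
      simpa [Int.gcd] using this
    rcases jacobiSym.eq_one_or_neg_one hg with h | h <;> rw [h] <;> norm_num
  have : ((4 * d : ℕ) : ℤ) = (2 * 2) * (d : ℤ) := by push_cast; ring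
  rw [this, jacobiSym.mul_left, h4, one_mul]

lemma IsFam.apply_even (d : ℕ) {n : ℕ} (hn : ¬ Odd n) :
    χ d (n : ZMod (4 * d)) = 0 := by
  refine MulChar.map_nonunit _ ?_
  rw [ZMod.isUnit_iff_coprime]
  intro h
  have h2 : 2 ∣ n := by rw [Nat.not_odd_iff_even] at hn; exact hn.two_dvd
  have := Nat.dvd_gcd h2 (show 2 ∣ 4 * d from ⟨2 * d, by ring⟩)
  rw [h] at this
  omega

lemma IsFam.isReal (hf : IsFam χ) {d : ℕ} (hd : Adm d) : IsRealChar (χ d) := by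
  intro n
  by_cases hn : Odd n
  · rw [hf.apply_odd hd hn, J]
    rcases jacobiSym.trichotomy d n with h | h | h <;> simp [h]
  · exact Or.inl (IsFam.apply_even d hn)

/-- The product of two different characters of the family is again nonprincipal. -/
lemma IsFam.exists_prod (hf : IsFam χ) {d₁ d₂ : ℕ} (h₁ : Adm d₁) (h₂ : Adm d₂) (hne : d₁ ≠ d₂) :
    ∃ ψ : DirichletCharacter ℂ ((4 * d₁) * (4 * d₂)), ψ ≠ 1 ∧
      ∀ n : ℕ, ψ (n : ZMod ((4 * d₁) * (4 * d₂))) =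
        χ d₁ (n : ZMod (4 * d₁)) * χ d₂ (n : ZMod (4 * d₂)) := by
  set q := (4 * d₁) * (4 * d₂) with hq
  set ψ : DirichletCharacter ℂ q :=
    DirichletCharacter.changeLevel (Dvd.intro _ rfl : 4 * d₁ ∣ q) (χ d₁) *
      DirichletCharacter.changeLevel (Dvd.intro_left _ rfl : 4 * d₂ ∣ q) (χ d₂) with hψ
  have hval : ∀ n : ℕ, ψ (n : ZMod q) =
        χ d₁ (n : ZMod (4 * d₁)) * χ d₂ (n : ZMod (4 * d₂)) := by
    intro n
    by_cases hu : IsUnit (n : ZMod q)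
    · have hc : IsCoprime ((n : ℕ) : ℤ) q := by
        rw [ZMod.isUnit_iff_coprime] at hu
        exact Nat.isCoprime_iff_coprime.mpr hu
      have e1 := DirichletCharacter.changeLevel_eq_cast_of_dvd' (χ d₁)
        (Dvd.intro _ rfl : 4 * d₁ ∣ q) hc
      have e2 := DirichletCharacter.changeLevel_eq_cast_of_dvd' (χ d₂)
        (Dvd.intro_left _ rfl : 4 * d₂ ∣ q) hc
      simp only [Int.cast_natCast] at e1 e2
      rw [hψ, MulChar.mul_apply, e1, e2]
    · rw [MulChar.map_nonunit _ hu]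
      by_cases h1 : IsUnit (n : ZMod (4 * d₁))
      · by_cases h2 : IsUnit (n : ZMod (4 * d₂))
        · rw [ZMod.isUnit_iff_coprime] at hu h1 h2
          exact absurd (h1.mul_right h2) hu
        · rw [MulChar.map_nonunit _ h2, mul_zero]
      · rw [MulChar.map_nonunit _ h1, zero_mul]
  refine ⟨ψ, ?_, hval⟩
  -- `d₁ d₂ = g² u` with `u > 1` squarefree
  set g := d₁.gcd d₂ with hg
  obtain ⟨e₁, he₁⟩ := Nat.gcd_dvd_left d₁ d₂
  obtain ⟨e₂, he₂⟩ := Nat.gcd_dvd_right d₁ d₂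
  rw [← hg] at he₁ he₂
  have hg0 : 0 < g := Nat.gcd_pos_of_pos_left _ (by have := h₁.1; omega)
  have hsq₁ := h₁.2.1
  have hsq₂ := h₂.2.1
  rw [he₁, Nat.squarefree_mul_iff] at hsq₁
  rw [he₂, Nat.squarefree_mul_iff] at hsq₂
  have hod₁ := h₁.2.2
  have hod₂ := h₂.2.2
  rw [he₁, Nat.odd_mul] at hod₁
  rw [he₂, Nat.odd_mul] at hod₂
  have hcop : e₁.Coprime e₂ := by
    have := Nat.gcd_mul_left g e₁ e₂
    rw [← he₁, ← he₂, ← hg] at this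
    exact Nat.eq_of_mul_eq_mul_left hg0 (by rw [mul_one]; exact this.symm)
  have husq : Squarefree (e₁ * e₂) := (Nat.squarefree_mul_iff).mpr ⟨hcop, hsq₁.2.2, hsq₂.2.2⟩
  have hu1 : 1 < e₁ * e₂ := by
    have p1 : 0 < e₁ := hod₁.2.pos
    have p2 : 0 < e₂ := hod₂.2.pos
    rcases Nat.lt_or_ge 1 (e₁ * e₂) with h | h
    · exact h
    · exfalso
      have hh : e₁ * e₂ = 1 := by
        have := Nat.mul_pos p1 p2; omega
      have q1 : e₁ = 1 := Nat.dvd_one.mp ⟨_, hh.symm⟩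
      have q2 : e₂ = 1 := Nat.dvd_one.mp ⟨e₁, by rw [mul_comm]; exact hh.symm⟩
      exact hne (by rw [he₁, he₂, q1, q2])
  have hum : (e₁ * e₂).Coprime (4 * g) := by
    have o : Odd (e₁ * e₂) := hod₁.2.mul hod₂.2
    refine Nat.Coprime.mul_right ?_ (Nat.Coprime.mul_left hsq₁.1.symm hsq₂.1.symm)
    exact Nat.Coprime.pow_right 2 (Nat.coprime_two_right.mpr o)
  obtain ⟨a, ha, hau, hJ⟩ := exists_jacobi_neg_one hu1 (hod₁.2.mul hod₂.2) husq hum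
  have ha4 : a % 4 = 1 := (Nat.ModEq.of_mul_right g ha)
  have hag : a.Coprime g := by
    have h : a ≡ 1 [MOD g] := Nat.ModEq.of_mul_left 4 ha
    have := h.gcd_eq
    simpa [Nat.Coprime] using this
  have hao : Odd a := by rw [Nat.odd_iff]; omega
  have hJ2 : J (e₁ * e₂) a = -1 := by
    rw [← hJ, J, J, jacobiSym.quadratic_reciprocity_one_mod_four ha4 (hod₁.2.mul hod₂.2)]
  have hv := hval a
  rw [hf.apply_odd h₁ hao, hf.apply_odd h₂ hao, he₁, he₂] at hv
  have hgg : J g a * J g a = 1 := by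
    have : (g : ℤ).gcd a = 1 := by simpa [Int.gcd] using hag.symm
    rw [J]
    rcases jacobiSym.eq_one_or_neg_one this with h | h <;> rw [h] <;> norm_num
  have hv2 : ψ (a : ZMod q) = -1 := by
    rw [hv, J_mul_left, J_mul_left, mul_mul_mul_comm, hgg, one_mul, ← J_mul_left, hJ2]
  intro h1
  by_cases hu : IsUnit (a : ZMod q)
  · rw [h1, MulChar.one_apply hu] at hv2; norm_num at hv2
  · rw [h1, MulChar.map_nonunit _ hu] at hv2; norm_num at hv2

/-- **Siegel's theorem** for the family. -/
theorem siegel (hf : IsFam χ) {δ : ℝ} (hδ : 0 < δ) : ∃ c > 0, ∀ d, Adm d → ∀ [NeZero (4 * d)],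
    c * (d : ℝ) ^ (-δ) ≤ ‖(χ d).LFunction 1‖ := by
  obtain ⟨η, hη, hζ⟩ := zeta_neg
  set e : ℝ := min (min η (1 / 8)) (δ / 16) with he
  have he0 : 0 < e := by positivity
  have heη : e ≤ η := (min_le_left _ _).trans (min_le_left _ _)
  have he8 : e ≤ 1 / 8 := (min_le_left _ _).trans (min_le_right _ _)
  have heδ : e ≤ δ / 16 := min_le_right _ _
  by_cases hex : ∃ d₁, ∃ _ : Adm d₁, ∃ _ : NeZero (4 * d₁), ∃ β : ℝ, 1 - e < β ∧ β < 1 ∧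
      (χ d₁).LFunction β = 0
  · obtain ⟨d₁, h₁, _, β, hβ, hβ1, hz⟩ := hex
    obtain ⟨c, hc, hs⟩ := siegel_pair
    obtain ⟨C, hC, η', hη', _, hL⟩ := L_deriv_bound (δ := δ / 2) (by positivity)
    have hd₁ : (1 : ℝ) ≤ d₁ := by exact_mod_cast h₁.1.le
    set l := ‖(χ d₁).LFunction 1‖ with hl
    have hl0 : 0 < l := norm_pos_iff.mpr
      (DirichletCharacter.LFunction_apply_one_ne_zero (hf d₁ h₁).1)
    set B : ℝ := 15 ^ 3 * 256 * d₁ ^ 2 with hB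
    have hB1 : 1 ≤ B := by rw [hB]; nlinarith
    set E : ℝ := (c * (1 - β) * B⁻¹) / (l * (C * (32 * d₁) ^ (δ / 2))) with hE
    have hE0 : 0 < E := by
      have : 0 < 1 - β := by linarith
      positivity
    refine ⟨min E l, by positivity, ?_⟩
    intro d hd _
    have hdR : (1 : ℝ) ≤ d := by exact_mod_cast hd.1.le
    by_cases hdd : d = d₁
    · subst hdd
      calc min E l * (d : ℝ) ^ (-δ) ≤ l * 1 := by
            gcongr
            · exact min_le_right _ _
            · exact Real.rpow_le_one_of_one_le_of_nonpos hdR (by linarith)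
        _ = _ := by rw [mul_one]
    · obtain ⟨ψ, hψ, hmul⟩ := hf.exists_prod h₁ hd (Ne.symm hdd)
      have : NeZero ((4 * d₁) * (4 * d)) := ⟨mul_ne_zero (NeZero.ne _) (NeZero.ne _)⟩
      have h1 := hs _ _ _ (χ d₁) (χ d) ψ (hf d₁ h₁).1 (hf d hd).1 hψ (hf.isReal h₁) (hf.isReal hd)
        hmul β (by linarith) hβ1 hz
      have h2 := (hL _ ψ hψ 1 (by simp; linarith) (by norm_num)).1
      have e1 : Qc (4 * d₁ * (4 * d)) (1 : ℂ).im = 32 * d₁ * d := by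
        simp [Qc]; ring
      rw [e1, Real.mul_rpow (by positivity) (by positivity)] at h2
      have e2 : (15 ^ 3 * (((4 * d₁ : ℕ) : ℝ) * ((4 * d : ℕ) : ℝ) * ((4 * d₁ * (4 * d) : ℕ) : ℝ)) : ℝ) =
          B * (d : ℝ) ^ (2 : ℝ) := by
        rw [hB, Real.rpow_two]; push_cast; ring
      rw [e2, Real.mul_rpow (by positivity) (by positivity), ← Real.rpow_mul (by positivity)] at h1
      have h3 : B⁻¹ ≤ B ^ (-(4 * (1 - β))) := by
        rw [← Real.rpow_neg_one]
        exact Real.rpow_le_rpow_of_exponent_le hB1 (by linarith)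
      have h4 : (d : ℝ) ^ (-(δ / 2)) ≤ (d : ℝ) ^ (2 * -(4 * (1 - β))) :=
        Real.rpow_le_rpow_of_exponent_le hdR (by linarith)
      have h5 : c * (1 - β) * (B⁻¹ * (d : ℝ) ^ (-(δ / 2))) ≤
          l * ‖(χ d).LFunction 1‖ * (C * ((32 * d₁) ^ (δ / 2) * (d : ℝ) ^ (δ / 2))) := by
        refine le_trans ?_ (h1.trans ?_)
        · have : 0 < 1 - β := by linarith
          gcongr
        · gcongr
      have hdp : 0 < (d : ℝ) ^ (δ / 2) := by positivity
      have e3 : (d : ℝ) ^ (-δ) = (d : ℝ) ^ (-(δ / 2)) / (d : ℝ) ^ (δ / 2) := by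
        rw [← Real.rpow_sub (by positivity)]; ring_nf
      calc min E l * (d : ℝ) ^ (-δ) ≤ E * (d : ℝ) ^ (-δ) := by gcongr; exact min_le_left _ _
        _ ≤ _ := by
          rw [e3, hE, div_mul_div_comm, div_le_iff₀ (by positivity)]
          calc _ = c * (1 - β) * (B⁻¹ * (d : ℝ) ^ (-(δ / 2))) := by ring
            _ ≤ _ := h5
            _ = _ := by ring
  · push Not at hex
    obtain ⟨c, hc, hs⟩ := siegel_single
    refine ⟨c * (e / 2) * (60 : ℝ) ^ (-(4 * (e / 2))), by positivity, ?_⟩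
    intro d hd _
    have hdR : (1 : ℝ) ≤ d := by exact_mod_cast hd.1.le
    set β : ℝ := 1 - e / 2 with hβ
    have hβ1 : β < 1 := by linarith
    have hχ := (hf d hd).1
    have hre : ∀ σ : ℝ, 0 < σ → (χ d).LFunction σ = (((χ d).LFunction σ).re : ℂ) := by
      intro σ hσ
      apply Complex.ext
      · simp
      · simpa using L_real hχ (hf.isReal hd).im hσ
    have hpos : 0 ≤ ((χ d).LFunction β).re := by
      by_contra hcon
      push Not at hcon
      have hcont : ContinuousOn (fun σ : ℝ => ((χ d).LFunction σ).re) (Set.Icc β 2) :=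
        (Complex.continuous_re.comp ((DirichletCharacter.differentiable_LFunction hχ).continuous.comp
          Complex.continuous_ofReal)).continuousOn
      have h2 : 0 ≤ ((χ d).LFunction (2 : ℝ)).re := by
        have := L_two_re (χ d); push_cast; linarith
      obtain ⟨σ, hσ, hσ0⟩ := intermediate_value_Icc (by linarith) hcont ⟨hcon.le, h2⟩
      have hz : (χ d).LFunction σ = 0 := by
        rw [hre σ (by linarith [hσ.1])]; simpa using hσ0
      rcases lt_or_ge σ 1 with h | h
      · exact hex d hd inferInstance σ (by linarith [hσ.1]) h hz
      · exact DirichletCharacter.LFunction_ne_zero_of_one_le_re (χ d) (Or.inl hχ)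
          (by simpa using h) hz
    have h1 := hs _ (χ d) hχ (hf.isReal hd) β (by linarith) hβ1 (by
      rw [hre β (by linarith), Complex.re_mul_ofReal]
      exact mul_nonpos_of_nonpos_of_nonneg (hζ β (by linarith) hβ1).le hpos)
    refine le_trans ?_ h1
    have e1 : (15 * ((4 * d : ℕ) : ℝ)) = 60 * d := by push_cast; ring
    rw [e1, Real.mul_rpow (by norm_num) (by positivity), show 1 - β = e / 2 by rw [hβ]; ring, ← mul_assoc]
    gcongr
    linarith

end QLS

namespace QLS

open Finset MeasureTheory

/-! ### Lower bounds for `L(1 + it, χ)` -/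

/-- Tail bound for a Dirichlet series whose coefficients have mean value `c`. -/
lemma LSeries_tail_mean {f : ℕ → ℂ} (hf : ∀ n, ‖f n‖ ≤ 1) {c : ℂ} {E : ℝ} {N : ℕ} (hN : 1 ≤ N)
    (hE : ∀ t : ℝ, N < t → ‖tailS f N t - c * (t - N)‖ ≤ E) {s : ℂ} (hs : 1 < s.re) :
    ‖LSeries f s - ∑ n ∈ Icc 1 N, f n * (n : ℂ) ^ (-s)‖ ≤ ‖c‖ / ‖s - 1‖ + E * ‖s‖ / N := by
  have hN0 : (0 : ℝ) < N := by exact_mod_cast hN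
  have hN1 : (1 : ℝ) ≤ N := by exact_mod_cast hN
  have hNc : (N : ℂ) ≠ 0 := by exact_mod_cast hN0.ne'
  have hE0 : 0 ≤ E := (norm_nonneg _).trans (hE (N + 1) (by linarith))
  have hs0 : s ≠ 0 := by rintro rfl; norm_num at hs
  have hs1 : s - 1 ≠ 0 := by intro h; rw [sub_eq_zero.mp h] at hs; norm_num at hs
  rw [LSeries_tail hf N hs]
  have e : mellin (tailS f N) (-s) = ∫ t in Set.Ioi (N : ℝ), (t : ℂ) ^ (-s - 1) • tailS f N t := by
    rw [mellin]
    refine (setIntegral_eq_of_subset_of_forall_sdiff_eq_zero measurableSet_Ioi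
      (Set.Ioi_subset_Ioi hN0.le) fun t ht => ?_)
    rw [tailS_eq_zero f (not_lt.mp ht.2), smul_zero]
  have i1 : IntegrableOn (fun t : ℝ => (t : ℂ) ^ (-s)) (Set.Ioi (N : ℝ)) :=
    integrableOn_Ioi_cpow_of_lt (by simpa using hs) hN0
  have i2 : IntegrableOn (fun t : ℝ => (t : ℂ) ^ (-s - 1)) (Set.Ioi (N : ℝ)) :=
    integrableOn_Ioi_cpow_of_lt (by simp; linarith) hN0
  have i3 : IntegrableOn (fun t : ℝ => c * ((t : ℂ) ^ (-s) - N * (t : ℂ) ^ (-s - 1)))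
      (Set.Ioi (N : ℝ)) := (i1.sub (i2.const_mul _)).const_mul _
  have hlt : -s.re - 1 < -1 := by linarith
  have i4 : IntegrableOn (fun t : ℝ => E * t ^ (-s.re - 1)) (Set.Ioi (N : ℝ)) :=
    (integrableOn_Ioi_rpow_of_lt hlt hN0).const_mul _
  have hb : ∀ t ∈ Set.Ioi (N : ℝ), ‖(t : ℂ) ^ (-s - 1) * (tailS f N t - c * (t - N))‖ ≤
      E * t ^ (-s.re - 1) := by
    intro t ht
    have ht0 : 0 < t := hN0.trans ht
    rw [norm_mul, Complex.norm_cpow_eq_rpow_re_of_pos ht0, mul_comm]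
    exact mul_le_mul (hE t ht) (le_of_eq (by simp)) (by positivity) hE0
  have hb' := (ae_restrict_iff' (μ := volume) (measurableSet_Ioi (a := (N : ℝ)))).mpr
    (Filter.Eventually.of_forall hb)
  have i5 : IntegrableOn (fun t : ℝ => (t : ℂ) ^ (-s - 1) * (tailS f N t - c * (t - N)))
      (Set.Ioi (N : ℝ)) := by
    refine Integrable.mono' i4 ?_ hb'
    refine (Measurable.mul ?_ ?_).aestronglyMeasurable
    · fun_prop
    · refine (measurable_tailS f N).sub ?_
      fun_prop
  have e2 : mellin (tailS f N) (-s) = c * ((N : ℂ) ^ (1 - s) / (s * (s - 1))) +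
      ∫ t in Set.Ioi (N : ℝ), (t : ℂ) ^ (-s - 1) * (tailS f N t - c * (t - N)) := by
    have e3 : ∫ t in Set.Ioi (N : ℝ), c * ((t : ℂ) ^ (-s) - N * (t : ℂ) ^ (-s - 1)) =
        c * ((N : ℂ) ^ (1 - s) / (s * (s - 1))) := by
      rw [integral_const_mul, integral_sub i1 (i2.const_mul _), integral_const_mul,
        integral_Ioi_cpow_of_lt (by simpa using hs) hN0,
        integral_Ioi_cpow_of_lt (by simp; linarith) hN0]
      congr 1
      have h1 : -s + 1 ≠ 0 := by intro h; apply hs1; linear_combination -h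
      have h2 : ((N : ℝ) : ℂ) ^ (-s - 1 + 1) = (N : ℂ) ^ (1 - s) / N := by
        rw [show -s - 1 + 1 = (1 - s) - 1 by ring, Complex.cpow_sub _ _ (by simpa using hNc)]
        simp
      have h4 : ((N : ℝ) : ℂ) ^ (-s + 1) = (N : ℂ) ^ (1 - s) := by
        rw [show -s + 1 = 1 - s by ring]; simp
      rw [h2, h4, show -s - 1 + 1 = -s by ring, show -s + 1 = -(s - 1) by ring]
      field_simp
      ring
    rw [e, ← e3, ← integral_add i3 i5]
    refine setIntegral_congr_fun measurableSet_Ioi fun t ht => ?_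
    have ht0 : (t : ℂ) ≠ 0 := by exact_mod_cast (hN0.trans ht).ne'
    have h5 : (t : ℂ) ^ (-s) = (t : ℂ) ^ (-s - 1) * t := by
      rw [Complex.cpow_sub _ _ ht0, Complex.cpow_one]; field_simp
    simp only [smul_eq_mul]
    rw [h5]; ring
  have h6 : ‖∫ t in Set.Ioi (N : ℝ), (t : ℂ) ^ (-s - 1) * (tailS f N t - c * (t - N))‖ ≤ E / N := by
    refine (norm_integral_le_of_norm_le i4 hb').trans ?_
    rw [integral_const_mul, integral_Ioi_rpow_of_lt hlt hN0, show -s.re - 1 + 1 = -s.re by ring,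
      div_eq_mul_inv E]
    gcongr
    rw [neg_div_neg_eq, ← Real.rpow_neg_one]
    calc (N : ℝ) ^ (-s.re) / s.re ≤ (N : ℝ) ^ (-s.re) / 1 := by gcongr
      _ ≤ _ := by rw [div_one]; exact Real.rpow_le_rpow_of_exponent_le hN1 (by linarith)
  rw [e2, mul_add]
  refine (norm_add_le _ _).trans (add_le_add ?_ ?_)
  · rw [show s * (c * ((N : ℂ) ^ (1 - s) / (s * (s - 1)))) = c * (N : ℂ) ^ (1 - s) / (s - 1) by
      field_simp, norm_div, norm_mul]
    gcongr
    have : ‖(N : ℂ) ^ (1 - s)‖ ≤ 1 := by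
      rw [show (N : ℂ) = ((N : ℝ) : ℂ) by simp, Complex.norm_cpow_eq_rpow_re_of_pos hN0]
      exact Real.rpow_le_one_of_one_le_of_nonpos hN1 (by simp; linarith)
    calc ‖c‖ * _ ≤ ‖c‖ * 1 := by gcongr
      _ = _ := mul_one _
  · rw [norm_mul, mul_comm E, mul_div_assoc]
    gcongr

lemma tailS_sub_mean {f : ℕ → ℂ} {c : ℂ} (hc : ‖c‖ ≤ 1) {E : ℝ}
    (hE : ∀ X, ‖∑ m ∈ range X, (f m - c)‖ ≤ E) {N : ℕ} {t : ℝ} (ht : N < t) :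
    ‖tailS f N t - c * (t - N)‖ ≤ 2 * E + 1 := by
  have ht0 : 0 ≤ t := (Nat.cast_nonneg N).trans ht.le
  have hNt : N ≤ ⌊t⌋₊ := Nat.le_floor ht.le
  have e : tailS f N t = tailS (fun n => f n - c) N t + c * ((⌊t⌋₊ : ℂ) - N) := by
    have h : ∀ g : ℕ → ℂ, tailS g N t = ∑ k ∈ Ioc N ⌊t⌋₊, g k := by
      intro g
      rw [tailS]
      calc ∑ k ∈ Icc 1 ⌊t⌋₊, tailF g N k = ∑ k ∈ (Icc 1 ⌊t⌋₊).filter (fun k => N < k), g k := by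
            rw [Finset.sum_filter]
            refine Finset.sum_congr rfl fun k _ => ?_
            unfold tailF; split_ifs <;> first | rfl | omega
        _ = _ := by
            congr 1; ext k; simp only [mem_filter, mem_Icc, mem_Ioc]; omega
    rw [h, h, Finset.sum_sub_distrib]
    simp [Nat.cast_sub hNt]
    ring
  rw [e, show tailS (fun n => f n - c) N t + c * ((⌊t⌋₊ : ℂ) - N) - c * (t - N) =
    tailS (fun n => f n - c) N t - c * (((t - ⌊t⌋₊ : ℝ) : ℝ) : ℂ) by push_cast; ring]
  refine (norm_sub_le _ _).trans (add_le_add (norm_tailS_le hE N t) ?_)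
  rw [norm_mul, Complex.norm_real, Real.norm_of_nonneg (by linarith [Nat.floor_le ht0])]
  have := Nat.lt_floor_add_one t
  exact mul_le_one₀ hc (by linarith [Nat.floor_le ht0]) (by linarith)

lemma triv_bound {δ : ℝ} (hδ : 0 < δ) (q : ℕ) [NeZero q] {s : ℂ} (hs : 1 < s.re) (hs2 : s.re ≤ 2) :
    ‖(1 : DirichletCharacter ℂ q).LFunction s‖ ≤
      (7 + 2 / δ) * (2 * Qc q s.im) ^ δ + 1 / ‖s - 1‖ := by
  have hQ := one_le_Qc q s.im
  set Q := Qc q s.im with hQd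
  set N := ⌈Q⌉₊ with hNd
  have hN : 1 ≤ N := Nat.one_le_ceil_iff.mpr (by linarith)
  have hNQ : Q ≤ N := Nat.le_ceil _
  have hN2 : (N : ℝ) ≤ 2 * Q := by have := (Nat.ceil_lt_add_one (a := Q) (by linarith)).le; linarith
  have hq : (1 : ℝ) ≤ q := by exact_mod_cast Nat.pos_of_neZero q
  set χ : DirichletCharacter ℂ q := 1
  set c : ℂ := (∑ a : ZMod q, χ a) / q with hc
  have hcn : ‖c‖ ≤ 1 := by
    rw [hc, norm_div, div_le_one (by simpa using Nat.pos_of_neZero q)]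
    refine (norm_sum_le _ _).trans ?_
    refine (Finset.sum_le_card_nsmul _ _ 1 fun a _ => χ.norm_le_one a).trans ?_
    simp [ZMod.card]
  have hE : ∀ X, ‖∑ m ∈ range X, (χ (m : ZMod q) - c)‖ ≤ 2 * q := by
    intro X
    have := norm_sum_range_periodic_le (Nat.pos_of_neZero q)
      (fun m : ℕ => (χ (m : ZMod q) - c) / 2) (fun m => by simp) (fun m => by
        rw [norm_div]
        have := (norm_sub_le (χ (m : ZMod q)) c).trans (add_le_add (χ.norm_le_one _) hcn)
        norm_num at this ⊢; linarith) (by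
        rw [← Finset.sum_div, Finset.sum_sub_distrib, sum_range_zmod (fun a => χ a), hc]
        have : (q : ℂ) ≠ 0 := by exact_mod_cast (NeZero.ne q)
        simp; field_simp; simp) X
    rw [← Finset.sum_div, norm_div] at this
    norm_num at this ⊢; linarith
  have h1 := LSeries_tail_mean (f := fun n : ℕ => χ (n : ZMod q)) (fun _ => χ.norm_le_one _) hN
    (fun t ht => tailS_sub_mean hcn hE ht) hs
  have h2 := partial_le (f := fun n : ℕ => χ (n : ZMod q)) (fun _ => χ.norm_le_one _)
    (δ := δ / 2) (by positivity) hN (s := s) (by linarith)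
  rw [← χ.LFunction_eq_LSeries hs] at h1
  have h3 : (2 * (2 * q) + 1) * ‖s‖ / N ≤ 5 := by
    rw [div_le_iff₀ (by linarith)]
    have : ‖s‖ ≤ 2 + |s.im| := by
      refine (Complex.norm_le_abs_re_add_abs_im s).trans ?_
      rw [abs_of_pos (by linarith)]; linarith
    calc (2 * (2 * q) + 1) * ‖s‖ ≤ (5 * q) * (2 + |s.im|) := by gcongr; linarith
      _ = 5 * Q := by rw [hQd, Qc]; ring
      _ ≤ _ := by linarith
  have h4 : (1 : ℝ) ≤ (2 * Q) ^ δ := Real.one_le_rpow (by linarith) hδ.le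
  have h5 : (N : ℝ) ^ (2 * (δ / 2)) ≤ (2 * Q) ^ δ := by
    rw [show 2 * (δ / 2) = δ by ring]; gcongr
  have h6 : ‖c‖ / ‖s - 1‖ ≤ 1 / ‖s - 1‖ := by gcongr
  have h7 := norm_sub_norm_le (χ.LFunction s) (∑ n ∈ Icc 1 N, χ (n : ZMod q) * (n : ℂ) ^ (-s))
  have h8 : (1 + 1 / (δ / 2)) * (N : ℝ) ^ (2 * (δ / 2)) ≤ (1 + 2 / δ) * (2 * Q) ^ δ := by
    rw [show 1 / (δ / 2) = 2 / δ by field_simp]; gcongr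
  nlinarith

end QLS

namespace QLS

open Finset MeasureTheory

lemma Qc_mono (q : ℕ) {t T : ℝ} (h : |t| ≤ T) : Qc q t ≤ Qc q T := by
  unfold Qc
  have := h.trans (le_abs_self T)
  gcongr

lemma L_lip {δ : ℝ} (hδ : 0 < δ) : ∃ C ≥ 1, ∃ η > 0, η ≤ 1 / 4 ∧ ∀ (q : ℕ) [NeZero q]
    (χ : DirichletCharacter ℂ q), χ ≠ 1 → ∀ (T : ℝ) (a b : ℂ), 1 - η ≤ a.re → a.re ≤ 5 / 2 →
      |a.im| ≤ T → 1 - η ≤ b.re → b.re ≤ 5 / 2 → |b.im| ≤ T →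
      ‖χ.LFunction b - χ.LFunction a‖ ≤ C * Qc q T ^ δ * ‖b - a‖ := by
  obtain ⟨C, hC, η, hη, hη4, h⟩ := L_deriv_bound hδ
  refine ⟨max C 1, le_max_right _ _, η, hη, hη4, ?_⟩
  intro q _ χ hχ T a b ha ha' haT hb hb' hbT
  have hconv : Convex ℝ (Set.Icc (1 - η) (5 / 2) ×ℂ Set.Icc (-T) T) :=
    ((convex_Icc (1 - η) (5 / 2)).linear_preimage Complex.reLm).inter
      ((convex_Icc (-T) T).linear_preimage Complex.imLm)
  refine hconv.norm_image_sub_le_of_norm_deriv_le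
    (fun x _ => (DirichletCharacter.differentiable_LFunction hχ) x) (fun x hx => ?_) ?_ ?_
  · rw [Complex.mem_reProdIm] at hx
    refine ((h q χ hχ x hx.1.1 hx.1.2).2).trans ?_
    have := one_le_Qc q x.im
    gcongr
    · exact le_max_left _ _
    · exact Qc_mono q (abs_le.mpr hx.2)
  · rw [Complex.mem_reProdIm]; exact ⟨⟨ha, ha'⟩, abs_le.mp haT⟩
  · rw [Complex.mem_reProdIm]; exact ⟨⟨hb, hb'⟩, abs_le.mp hbT⟩

lemma IsRealChar.sq_eq_one {q : ℕ} [NeZero q] {χ : DirichletCharacter ℂ q} (h : IsRealChar χ) :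
    χ ^ 2 = 1 := by
  ext a
  have h0 : ((a : ZMod q).val : ZMod q) = a := ZMod.natCast_zmod_val _
  have h1 := h (a : ZMod q).val
  rw [h0] at h1
  have hne : χ (a : ZMod q) ≠ 0 := (a.isUnit.map χ).ne_zero
  rw [MulChar.pow_apply_coe, MulChar.one_apply_coe]
  rcases h1 with h1 | h1 | h1
  · exact absurd h1 hne
  · rw [h1]; norm_num
  · rw [h1]; norm_num

/-- The optimisation over the abscissa `1 + x` in the `3-4-1` argument. -/
lemma three_four_one_calc {P C A : ℝ} (hP : 1 ≤ P) (hC : 1 ≤ C) (hA : 1 ≤ A) {y : ℝ → ℝ} {v : ℝ}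
    (hy0 : ∀ x, 0 ≤ y x)
    (hy : ∀ x, 0 < x → x ≤ 1 → 1 ≤ (A * P / x) ^ 3 * y x ^ 4 * (A * P ^ 3))
    (hv : ∀ x, 0 < x → x ≤ 1 → y x - C * P * x ≤ v) :
    (16 * C ^ 4 * A ^ 4)⁻¹ * (P ^ 10)⁻¹ ≤ v := by
  set x : ℝ := (16 * C ^ 4 * A ^ 4)⁻¹ * (P ^ 10)⁻¹ with hx
  have hx0 : 0 < x := by positivity
  have hx1 : x ≤ 1 := by
    rw [hx]
    refine mul_le_one₀ ?_ (by positivity) ?_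
    · apply inv_le_one_of_one_le₀
      have := one_le_pow₀ hC (n := 4)
      have := one_le_pow₀ hA (n := 4)
      nlinarith
    · exact inv_le_one_of_one_le₀ (one_le_pow₀ hP)
  have h1 := hy x hx0 hx1
  have h2 : (2 * C * P * x) ^ 4 ≤ y x ^ 4 := by
    have h3 : x ^ 3 ≤ A ^ 4 * P ^ 6 * y x ^ 4 := by
      have e : (A * P / x) ^ 3 * y x ^ 4 * (A * P ^ 3) = A ^ 4 * P ^ 6 * y x ^ 4 / x ^ 3 := by
        field_simp
      rw [e, le_div_iff₀ (by positivity)] at h1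
      linarith
    have e2 : (2 * C * P * x) ^ 4 * (A ^ 4 * P ^ 6) = x ^ 3 := by
      calc (2 * C * P * x) ^ 4 * (A ^ 4 * P ^ 6) = x ^ 3 * ((16 * C ^ 4 * A ^ 4) * P ^ 10 * x) := by
            ring
        _ = _ := by rw [hx]; field_simp
    have hpos : 0 < A ^ 4 * P ^ 6 := by positivity
    refine le_of_mul_le_mul_right ?_ hpos
    rw [e2]; linarith
  have h4 := le_of_pow_le_pow_left₀ (by norm_num) (hy0 x) h2
  have h5 := hv x hx0 hx1
  have h6 : x ≤ C * P * x := by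
    have : 1 ≤ C * P := one_le_mul_of_one_le_of_one_le hC hP
    nlinarith
  nlinarith

/-- Lower bound for `L(1 + it, χ)`: for `t` close to `0` by continuity from Siegel's theorem, and
otherwise by the `3-4-1` inequality, in which `χ²` is principal. -/
lemma L_lower_line {χ : (d : ℕ) → DirichletCharacter ℂ (4 * d)} (hf : IsFam χ) {δ : ℝ} (hδ : 0 < δ) :
    ∃ c > 0, ∀ d, Adm d → ∀ [NeZero (4 * d)], ∀ t : ℝ,
      c * Qc (4 * d) t ^ (-δ) ≤ ‖(χ d).LFunction (1 + t * Complex.I)‖ := by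
  set e : ℝ := δ / 10 with he
  have he0 : 0 < e := by positivity
  obtain ⟨C, hC, η, hη, hη4, hL⟩ := L_lip he0
  obtain ⟨c, hc, hS⟩ := siegel hf he0
  set B : ℝ := (7 + 2 / e) * 4 ^ e with hB
  have hB0 : 0 < B := by positivity
  set A : ℝ := B + 1 + 2 * C / c with hA
  have hC0 : 0 < C := by linarith
  have hCc : 0 < 2 * C / c := by positivity
  have hA1 : 1 ≤ A := by linarith
  refine ⟨min (c / 2) (16 * C ^ 4 * A ^ 4)⁻¹, by positivity, ?_⟩
  intro d hd _ t
  have hdR : (1 : ℝ) ≤ d := by exact_mod_cast hd.1.le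
  have hQ := one_le_Qc (4 * d) t
  set Q := Qc (4 * d) t with hQd
  set P : ℝ := Q ^ e with hP
  have hP1 : 1 ≤ P := Real.one_le_rpow (by linarith) he0.le
  have hP0 : 0 < P := by linarith
  have hPδ : Q ^ (-δ) = (P ^ 10)⁻¹ := by
    rw [Real.rpow_neg (by linarith), hP, ← Real.rpow_natCast, ← Real.rpow_mul (by linarith)]
    congr 2; rw [he]; push_cast; ring
  have hχ := (hf d hd).1
  rw [hPδ]
  by_cases hcase : C * P * |t| ≤ c / 2 * P⁻¹
  · have h1 := hS d hd
    have h2 : P⁻¹ ≤ (d : ℝ) ^ (-e) := by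
      rw [hP, ← Real.rpow_neg (by linarith)]
      refine Real.rpow_le_rpow_of_nonpos (by linarith) ?_ (by linarith)
      rw [hQd, Qc]; push_cast; nlinarith [abs_nonneg t]
    have h3 := hL (4 * d) (χ d) hχ |t| 1 (1 + t * Complex.I) (by simp; linarith) (by norm_num)
      (by simp) (by simp; linarith) (by norm_num) (by simp)
    have h4 : ‖(1 + t * Complex.I : ℂ) - 1‖ = |t| := by simp
    have h5 : Qc (4 * d) |t| = Q := by simp [hQd, Qc]
    rw [h4, h5] at h3
    have h6 := norm_sub_norm_le ((χ d).LFunction 1) ((χ d).LFunction (1 + t * Complex.I))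
    rw [norm_sub_rev] at h6
    have h7 : c * P⁻¹ ≤ ‖(χ d).LFunction 1‖ := le_trans (by gcongr) h1
    calc min (c / 2) (16 * C ^ 4 * A ^ 4)⁻¹ * (P ^ 10)⁻¹ ≤ c / 2 * P⁻¹ := by
          gcongr
          · exact min_le_left _ _
          · exact le_self_pow₀ hP1 (by norm_num)
      _ ≤ _ := by linarith
  · push Not at hcase
    have ht0 : 0 < |t| := by
      rcases (abs_nonneg t).lt_or_eq with h | h
      · exact h
      · rw [← h, mul_zero] at hcase
        have : 0 < c / 2 * P⁻¹ := by positivity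
        linarith
    have htinv : 1 / |t| ≤ 2 * C / c * P ^ 2 := by
      rw [div_le_iff₀ ht0]
      have : c / 2 ≤ C * P * |t| * P := by
        rw [← div_eq_mul_inv, div_lt_iff₀ hP0] at hcase; exact hcase.le
      calc (1 : ℝ) = 2 / c * (c / 2) := by field_simp
        _ ≤ 2 / c * (C * P * |t| * P) := by gcongr
        _ = _ := by ring
    refine le_trans ?_ (three_four_one_calc hP1 hC hA1
      (y := fun x : ℝ => ‖(χ d).LFunction (1 + x + Complex.I * t)‖) (fun _ => norm_nonneg _) ?_ ?_)
    · gcongr; exact min_le_right _ _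
    · intro x hx hx1
      have h1 := DirichletCharacter.norm_LFunction_product_ge_one (χ d) hx t
      rw [(hf.isReal hd).sq_eq_one, norm_mul, norm_mul, norm_pow, norm_pow] at h1
      have hT1 : ‖(1 : DirichletCharacter ℂ (4 * d)).LFunction (1 + x)‖ ≤ A * P / x := by
        refine (triv_bound he0 (4 * d) (s := 1 + x) (by simpa using hx) (by simp; linarith)).trans ?_
        have e1 : (1 + x - 1 : ℂ) = x := by ring
        rw [e1, Complex.norm_real, Real.norm_of_nonneg hx.le, le_div_iff₀ hx, add_mul]
        have h2 : (2 * Qc (4 * d) (1 + x : ℂ).im) ^ e ≤ 4 ^ e * P := by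
          rw [hP, ← Real.mul_rpow (by norm_num) (by linarith)]
          have : Qc (4 * d) (1 + x : ℂ).im ≤ Q := by
            rw [hQd]; simp only [Qc]; simp; nlinarith
          have h0 := one_le_Qc (4 * d) (1 + x : ℂ).im
          exact Real.rpow_le_rpow (by linarith) (by linarith) he0.le
        rw [div_mul_cancel₀ _ hx.ne']
        calc (7 + 2 / e) * (2 * Qc (4 * d) (1 + x : ℂ).im) ^ e * x + 1 ≤
              (7 + 2 / e) * (4 ^ e * P) * 1 + P := by gcongr
          _ = (B + 1) * P := by rw [hB]; ring
          _ ≤ A * P := by gcongr; linarith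
      have hT2 : ‖(1 : DirichletCharacter ℂ (4 * d)).LFunction (1 + x + 2 * Complex.I * t)‖ ≤
          A * P ^ 3 := by
        refine (triv_bound he0 (4 * d) (by simpa using hx) (by simp; linarith)).trans ?_
        have h2 : (2 * Qc (4 * d) (1 + x + 2 * Complex.I * t : ℂ).im) ^ e ≤ 4 ^ e * P := by
          rw [hP, ← Real.mul_rpow (by norm_num) (by linarith)]
          have : Qc (4 * d) (1 + x + 2 * Complex.I * t : ℂ).im ≤ 2 * Q := by
            rw [hQd]; simp only [Qc]; simp [abs_mul]; nlinarith
          have h0 := one_le_Qc (4 * d) (1 + x + 2 * Complex.I * t : ℂ).im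
          exact Real.rpow_le_rpow (by linarith) (by linarith) he0.le
        have h3 : |t| ≤ ‖(1 + x + 2 * Complex.I * t : ℂ) - 1‖ := by
          refine le_trans ?_ (Complex.abs_im_le_norm _)
          simp [abs_mul]; linarith
        have h4 : 1 / ‖(1 + x + 2 * Complex.I * t : ℂ) - 1‖ ≤ 1 / |t| := by gcongr
        have h5 : P ≤ P ^ 3 := le_self_pow₀ hP1 (by norm_num)
        have h6 : P ^ 2 ≤ P ^ 3 := pow_le_pow_right₀ hP1 (by norm_num)
        calc _ ≤ (7 + 2 / e) * (4 ^ e * P) + 2 * C / c * P ^ 2 := by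
              gcongr; exact h4.trans htinv
          _ = B * P + 2 * C / c * P ^ 2 := by rw [hB]; ring
          _ ≤ B * P ^ 3 + 2 * C / c * P ^ 3 := by gcongr
          _ ≤ A * P ^ 3 := by rw [← add_mul]; gcongr; linarith
      refine h1.le.trans ?_
      gcongr
    · intro x hx hx1
      have h3 := hL (4 * d) (χ d) hχ |t| (1 + t * Complex.I) (1 + x + Complex.I * t)
        (by simp; linarith) (by norm_num) (by simp) (by simp; linarith) (by simp; linarith) (by simp)
      have h4 : ‖(1 + x + Complex.I * t : ℂ) - (1 + t * Complex.I)‖ = x := by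
        rw [show (1 + x + Complex.I * t : ℂ) - (1 + t * Complex.I) = x by ring, Complex.norm_real,
          Real.norm_of_nonneg hx.le]
      have h5 : Qc (4 * d) |t| = Q := by simp [hQd, Qc]
      rw [h4, h5] at h3
      have h6 := norm_sub_norm_le ((χ d).LFunction (1 + x + Complex.I * t))
        ((χ d).LFunction (1 + t * Complex.I))
      linarith

/-- A zero-free region for the family, of width `Q ^ (-δ)`, with a lower bound for `L` inside it. -/
theorem L_lower {χ : (d : ℕ) → DirichletCharacter ℂ (4 * d)} (hf : IsFam χ) {δ : ℝ} (hδ : 0 < δ) :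
    ∃ c > 0, c ≤ 1 / 4 ∧ ∀ d, Adm d → ∀ [NeZero (4 * d)], ∀ (T : ℝ) (s : ℂ), |s.im| ≤ T →
      1 - c * Qc (4 * d) T ^ (-δ) ≤ s.re → s.re ≤ 1 →
      c * Qc (4 * d) T ^ (-δ) ≤ ‖(χ d).LFunction s‖ := by
  obtain ⟨C, hC, η, hη, hη4, hL⟩ := L_lip (δ := δ / 2) (by positivity)
  obtain ⟨c, hc, hS⟩ := L_lower_line hf (δ := δ / 2) (by positivity)
  have hC0 : 0 < C := by linarith
  refine ⟨min η (min (c / 2) (c / (2 * C))), by positivity, (min_le_left _ _).trans hη4, ?_⟩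
  set r := min η (min (c / 2) (c / (2 * C))) with hr
  have hr0 : 0 < r := by positivity
  have hr1 : r ≤ η := min_le_left _ _
  have hr2 : r ≤ c / 2 := (min_le_right _ _).trans (min_le_left _ _)
  have hr3 : C * r ≤ c / 2 := by
    have : r ≤ c / (2 * C) := (min_le_right _ _).trans (min_le_right _ _)
    rw [le_div_iff₀ (by positivity)] at this; linarith
  intro d hd _ T s hsT hs hs1
  have hQ := one_le_Qc (4 * d) T
  have hQ' := one_le_Qc (4 * d) s.im
  set Q := Qc (4 * d) T with hQd
  set P := Q ^ (δ / 2) with hP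
  have hP1 : 1 ≤ P := Real.one_le_rpow (by linarith) (by positivity)
  have hPδ : Q ^ (-δ) = (P ^ 2)⁻¹ := by
    rw [Real.rpow_neg (by linarith), hP, ← Real.rpow_natCast, ← Real.rpow_mul (by linarith)]
    congr 2; push_cast; ring
  rw [hPδ] at hs ⊢
  have hPi : (P ^ 2)⁻¹ ≤ 1 := inv_le_one_of_one_le₀ (one_le_pow₀ hP1)
  have h1 := hS d hd s.im
  have h2 : P⁻¹ ≤ Qc (4 * d) s.im ^ (-(δ / 2)) := by
    rw [hP, ← Real.rpow_neg (by linarith)]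
    exact Real.rpow_le_rpow_of_nonpos (by linarith) (Qc_mono _ hsT) (by linarith)
  have h3 := hL (4 * d) (χ d) (hf d hd).1 T (1 + s.im * Complex.I) s (by simp; linarith) (by norm_num)
    (by simpa using hsT) (by nlinarith) (by linarith) hsT
  have h4 : ‖s - (1 + s.im * Complex.I)‖ = 1 - s.re := by
    rw [show s - (1 + s.im * Complex.I) = ((s.re - 1 : ℝ) : ℂ) by
      apply Complex.ext <;> simp, Complex.norm_real, Real.norm_of_nonpos (by linarith)]
    ring
  rw [h4] at h3
  have h5 := norm_sub_norm_le ((χ d).LFunction (1 + s.im * Complex.I)) ((χ d).LFunction s)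
  rw [norm_sub_rev] at h5
  have h6 : c * P⁻¹ ≤ c * Qc (4 * d) s.im ^ (-(δ / 2)) := by gcongr
  have h7 : C * P * (1 - s.re) ≤ c / 2 * P⁻¹ := by
    calc C * P * (1 - s.re) ≤ C * P * (r * (P ^ 2)⁻¹) := by gcongr; linarith
      _ = C * r * P⁻¹ := by field_simp
      _ ≤ _ := by gcongr
  have h8 : r * (P ^ 2)⁻¹ ≤ c / 2 * P⁻¹ := by
    gcongr; exact le_self_pow₀ hP1 (by norm_num)
  linarith

end QLS

namespace QLS

open Finset MeasureTheory

/-! ### Newman's contour argument on rectangles -/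

open Complex in
/-- The integral of `f` over the boundary of the rectangle `[a, b] × [-R, R]`, taken
counterclockwise. -/
noncomputable def rectInt (f : ℂ → ℂ) (a b R : ℝ) : ℂ :=
  (∫ x in a..b, f (x + ((-R : ℝ) : ℂ) * I)) - (∫ x in a..b, f (x + (R : ℂ) * I)) +
    I * (∫ y in (-R)..R, f (b + y * I)) - I * ∫ y in (-R)..R, f (a + y * I)

/-- The closed rectangle `[a, b] × [-R, R]`. -/
def rect (a b R : ℝ) : Set ℂ := {z | a ≤ z.re ∧ z.re ≤ b ∧ -R ≤ z.im ∧ z.im ≤ R}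

section
set_option linter.unusedSectionVars false
variable {a b R : ℝ}

lemma rect_eq (ha : a ≤ b) (hR : 0 ≤ R) : rect a b R = Set.uIcc a b ×ℂ Set.uIcc (-R) R := by
  ext z
  rw [Complex.mem_reProdIm, Set.uIcc_of_le ha, Set.uIcc_of_le (by linarith)]
  simp [rect, and_assoc]

lemma rectInt_eq_zero {f : ℂ → ℂ} (ha : a ≤ b) (hR : 0 ≤ R) (hf : DifferentiableOn ℂ f (rect a b R)) :
    rectInt f a b R = 0 := by
  rw [rect_eq ha hR] at hf
  exact Complex.integral_boundary_rect_eq_zero_of_differentiableOn f ⟨a, -R⟩ ⟨b, R⟩ hf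

variable (ha : a < 0) (hb : 0 < b) (hR : 0 < R)
include ha hb hR

lemma rect_bot {x : ℝ} (hx : x ∈ Set.Icc a b) : (x + ((-R : ℝ) : ℂ) * Complex.I) ∈ rect a b R \ {0} := by
  refine ⟨⟨by simpa using hx.1, by simpa using hx.2, by simp, by simp; linarith⟩, fun h => ?_⟩
  have := congrArg Complex.im h
  simp at this; linarith

lemma rect_top {x : ℝ} (hx : x ∈ Set.Icc a b) : (x + (R : ℂ) * Complex.I) ∈ rect a b R \ {0} := by
  refine ⟨⟨by simpa using hx.1, by simpa using hx.2, by simp; linarith, by simp⟩, fun h => ?_⟩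
  have := congrArg Complex.im h
  simp at this; linarith

lemma rect_right {y : ℝ} (hy : y ∈ Set.Icc (-R) R) : (b + y * Complex.I) ∈ rect a b R \ {0} := by
  refine ⟨⟨by simp; linarith, by simp, by simpa using hy.1, by simpa using hy.2⟩, fun h => ?_⟩
  have := congrArg Complex.re h
  simp at this; linarith

lemma rect_left {y : ℝ} (hy : y ∈ Set.Icc (-R) R) : (a + y * Complex.I) ∈ rect a b R \ {0} := by
  refine ⟨⟨by simp, by simp; linarith, by simpa using hy.1, by simpa using hy.2⟩, fun h => ?_⟩
  have := congrArg Complex.re h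
  simp at this; linarith

lemma rectInt_congr {f g : ℂ → ℂ} (h : ∀ z ∈ rect a b R \ {0}, f z = g z) :
    rectInt f a b R = rectInt g a b R := by
  have hab : a ≤ b := by linarith
  have hRR : -R ≤ R := by linarith
  unfold rectInt
  congr 1
  congr 1
  congr 1
  · refine intervalIntegral.integral_congr fun x hx => h _ (rect_bot ha hb hR ?_)
    rwa [Set.uIcc_of_le hab] at hx
  · refine intervalIntegral.integral_congr fun x hx => h _ (rect_top ha hb hR ?_)
    rwa [Set.uIcc_of_le hab] at hx
  · congr 1
    refine intervalIntegral.integral_congr fun x hx => h _ (rect_right ha hb hR ?_)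
    rwa [Set.uIcc_of_le hRR] at hx
  · congr 1
    refine intervalIntegral.integral_congr fun x hx => h _ (rect_left ha hb hR ?_)
    rwa [Set.uIcc_of_le hRR] at hx

lemma intervalIntegrable_bot {f : ℂ → ℂ} (hf : ContinuousOn f (rect a b R \ {0})) :
    IntervalIntegrable (fun x : ℝ => f (x + ((-R : ℝ) : ℂ) * Complex.I)) volume a b := by
  refine ContinuousOn.intervalIntegrable ?_
  rw [Set.uIcc_of_le (by linarith)]
  exact hf.comp (by fun_prop) fun x hx => rect_bot ha hb hR hx

lemma intervalIntegrable_top {f : ℂ → ℂ} (hf : ContinuousOn f (rect a b R \ {0})) :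
    IntervalIntegrable (fun x : ℝ => f (x + (R : ℂ) * Complex.I)) volume a b := by
  refine ContinuousOn.intervalIntegrable ?_
  rw [Set.uIcc_of_le (by linarith)]
  exact hf.comp (by fun_prop) fun x hx => rect_top ha hb hR hx

lemma intervalIntegrable_right {f : ℂ → ℂ} (hf : ContinuousOn f (rect a b R \ {0})) :
    IntervalIntegrable (fun y : ℝ => f (b + y * Complex.I)) volume (-R) R := by
  refine ContinuousOn.intervalIntegrable ?_
  rw [Set.uIcc_of_le (by linarith)]
  exact hf.comp (by fun_prop) fun x hx => rect_right ha hb hR hx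

lemma intervalIntegrable_left {f : ℂ → ℂ} (hf : ContinuousOn f (rect a b R \ {0})) :
    IntervalIntegrable (fun y : ℝ => f (a + y * Complex.I)) volume (-R) R := by
  refine ContinuousOn.intervalIntegrable ?_
  rw [Set.uIcc_of_le (by linarith)]
  exact hf.comp (by fun_prop) fun x hx => rect_left ha hb hR hx

lemma rectInt_add {f g : ℂ → ℂ} (hf : ContinuousOn f (rect a b R \ {0}))
    (hg : ContinuousOn g (rect a b R \ {0})) :
    rectInt (fun z => f z + g z) a b R = rectInt f a b R + rectInt g a b R := by
  unfold rectInt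
  rw [intervalIntegral.integral_add (intervalIntegrable_bot ha hb hR hf)
      (intervalIntegrable_bot ha hb hR hg),
    intervalIntegral.integral_add (intervalIntegrable_top ha hb hR hf)
      (intervalIntegrable_top ha hb hR hg),
    intervalIntegral.integral_add (intervalIntegrable_right ha hb hR hf)
      (intervalIntegrable_right ha hb hR hg),
    intervalIntegral.integral_add (intervalIntegrable_left ha hb hR hf)
      (intervalIntegrable_left ha hb hR hg)]
  ring

omit ha hb hR in
lemma log_sub_log_neg {z : ℂ} (hz : 0 < z.im) : Complex.log z - Complex.log (-z) = Real.pi * Complex.I := by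
  rw [Complex.log, Complex.log, Complex.arg_neg_eq_arg_sub_pi_of_im_pos hz, norm_neg]
  push_cast; ring

omit ha hb hR in
lemma integral_inv_line {p v : ℂ} {l u : ℝ} (h : ∀ x : ℝ, p + x * v ∈ Complex.slitPlane) :
    v * ∫ x in l..u, (p + x * v)⁻¹ = Complex.log (p + u * v) - Complex.log (p + l * v) := by
  rw [← intervalIntegral.integral_const_mul]
  refine intervalIntegral.integral_eq_sub_of_hasDerivAt (f := fun x : ℝ => Complex.log (p + x * v))
    (fun x _ => ?_) ?_
  · have h1 : HasDerivAt (fun x : ℝ => p + (x : ℂ) * v) v x := by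
      simpa using ((Complex.ofRealCLM.hasDerivAt (x := x)).mul_const v).const_add p
    exact (h1.clog_real (h x)).congr_deriv (by rw [div_eq_mul_inv])
  · refine Continuous.intervalIntegrable ?_ _ _
    exact continuous_const.mul (Continuous.inv₀ (by fun_prop) fun x =>
      Complex.slitPlane_ne_zero (h x))

lemma rectInt_inv : rectInt (fun z => z⁻¹) a b R = 2 * Real.pi * Complex.I := by
  have h1 := integral_inv_line (p := ((-R : ℝ) : ℂ) * Complex.I) (v := 1) (l := a) (u := b)
    (fun x => by right; simp; exact hR.ne')
  have h2 := integral_inv_line (p := (R : ℂ) * Complex.I) (v := 1) (l := a) (u := b)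
    (fun x => by right; simp; exact hR.ne')
  have h3 := integral_inv_line (p := (b : ℂ)) (v := Complex.I) (l := -R) (u := R)
    (fun x => by left; simpa using hb)
  have h4 := integral_inv_line (p := ((-a : ℝ) : ℂ)) (v := -Complex.I) (l := -R) (u := R)
    (fun x => by left; simpa using ha)
  have e4 : ∫ x in (-R)..R, (((-a : ℝ) : ℂ) + x * -Complex.I)⁻¹ =
      - ∫ x in (-R)..R, ((a : ℂ) + x * Complex.I)⁻¹ := by
    rw [← intervalIntegral.integral_neg]
    congr 1; ext x
    rw [← inv_neg]; congr 1; push_cast; ring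
  rw [e4] at h4
  simp only [mul_one, one_mul] at h1 h2
  have h5 := log_sub_log_neg (z := a + R * Complex.I) (by simpa using hR)
  have h6 := log_sub_log_neg (z := -a + R * Complex.I) (by simpa using hR)
  unfold rectInt
  have c1 : ∀ c : ℂ, ∫ x in a..b, ((x : ℂ) + c)⁻¹ = ∫ x in a..b, (c + (x : ℂ))⁻¹ := by
    intro c; congr 1; ext x; rw [add_comm]
  rw [c1, c1, h1, h2, h3]
  have e7 : Complex.I * ∫ y in (-R)..R, ((a : ℂ) + y * Complex.I)⁻¹ =
      Complex.log (((-a : ℝ) : ℂ) + R * -Complex.I) - Complex.log (((-a : ℝ) : ℂ) + ((-R : ℝ) : ℂ) * -Complex.I) := by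
    rw [← h4]; ring
  rw [e7]
  have t1 : (-(a + R * Complex.I) : ℂ) = ((-a : ℝ) : ℂ) + R * -Complex.I := by push_cast; ring
  have t2 : (-a + R * Complex.I : ℂ) = ((-a : ℝ) : ℂ) + ((-R : ℝ) : ℂ) * -Complex.I := by push_cast; ring
  have t3 : (-(-a + R * Complex.I) : ℂ) = ((-R : ℝ) : ℂ) * Complex.I + a := by push_cast; ring
  rw [t1] at h5
  rw [t3, t2] at h6
  rw [show (R : ℂ) * Complex.I + b = b + R * Complex.I by ring,
    show ((-R : ℝ) : ℂ) * Complex.I + b = b + ((-R : ℝ) : ℂ) * Complex.I by ring,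
    show (R : ℂ) * Complex.I + a = a + R * Complex.I by ring]
  linear_combination h5 + h6

/-- Cauchy's formula on a rectangle with Newman's kernel. -/
lemma rectInt_newman {F : ℂ → ℂ} (hF : DifferentiableOn ℂ F (rect a b R)) (κ : ℂ) :
    rectInt (fun z => F z * (z⁻¹ + z * κ)) a b R = 2 * Real.pi * Complex.I * F 0 := by
  have hn : rect a b R ∈ nhds (0 : ℂ) := by
    have : IsOpen {z : ℂ | a < z.re ∧ z.re < b ∧ -R < z.im ∧ z.im < R} := by
      refine (isOpen_lt continuous_const Complex.continuous_re).inter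
        ((isOpen_lt Complex.continuous_re continuous_const).inter
        ((isOpen_lt continuous_const Complex.continuous_im).inter
        (isOpen_lt Complex.continuous_im continuous_const)))
    refine Filter.mem_of_superset (this.mem_nhds ⟨by simpa using ha, by simpa using hb, by simpa using hR,
      by simpa using hR⟩) ?_
    rintro z ⟨h1, h2, h3, h4⟩
    exact ⟨h1.le, h2.le, h3.le, h4.le⟩
  have hd : DifferentiableOn ℂ (fun z => dslope F 0 z + F z * (z * κ)) (rect a b R) := by
    refine ((Complex.differentiableOn_dslope hn).mpr hF).add (hF.mul ?_)
    fun_prop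
  have h0 := rectInt_eq_zero (by linarith) hR.le hd
  have e : rectInt (fun z => F z * (z⁻¹ + z * κ)) a b R =
      rectInt (fun z => (dslope F 0 z + F z * (z * κ)) + F 0 * z⁻¹) a b R := by
    refine rectInt_congr ha hb hR fun z hz => ?_
    have hz0 : z ≠ 0 := hz.2
    rw [dslope_of_ne _ hz0, slope_def_field]
    field_simp; ring
  rw [e, rectInt_add ha hb hR (hd.continuousOn.mono Set.sdiff_subset), h0, zero_add]
  · have := rectInt_inv ha hb hR
    rw [mul_comm _ (F 0), ← this]
    simp only [rectInt, intervalIntegral.integral_const_mul]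
    ring
  · exact continuousOn_const.mul (continuousOn_id.inv₀ fun z hz => hz.2)

end

end QLS

namespace QLS

open Finset MeasureTheory

/-- `n ^ (-1 - x)` is bounded by a telescoping difference. -/
lemma rpow_neg_telescope {x : ℝ} (hx : 0 < x) {n : ℕ} (hn : 1 ≤ n) :
    ((n + 1 : ℕ) : ℝ) ^ (-1 - x) ≤ x⁻¹ * ((n : ℝ) ^ (-x) - ((n + 1 : ℕ) : ℝ) ^ (-x)) := by
  have hn0 : (0 : ℝ) < n := by exact_mod_cast hn
  push_cast
  set m : ℝ := n + 1 with hm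
  have hm0 : 0 < m := by positivity
  have h1 : (n : ℝ) ^ (-x) = m ^ (-x) * ((n : ℝ) / m) ^ (-x) := by
    rw [← Real.mul_rpow hm0.le (by positivity)]; congr 1; field_simp
  have h2 : 1 + x / m ≤ ((n : ℝ) / m) ^ (-x) := by
    rw [Real.rpow_def_of_pos (by positivity)]
    have h3 : Real.log ((n : ℝ) / m) ≤ -(1 / m) := by
      refine (Real.log_le_sub_one_of_pos (by positivity)).trans (le_of_eq ?_)
      rw [hm]; field_simp; ring
    have h4 := Real.add_one_le_exp (Real.log ((n : ℝ) / m) * -x)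
    have : x / m = x * (1 / m) := by ring
    nlinarith
  have h5 : m ^ (-1 - x) = m ^ (-x) / m := by
    rw [show -1 - x = -x - 1 by ring, Real.rpow_sub_one hm0.ne']
  rw [h1, h5]
  have : 0 < m ^ (-x) := by positivity
  calc m ^ (-x) / m = x⁻¹ * (m ^ (-x) * (1 + x / m) - m ^ (-x)) := by field_simp; ring
    _ ≤ _ := by gcongr

lemma tail_rpow_le {x : ℝ} (hx : 0 < x) {N : ℕ} (hN : 1 ≤ N) (M : ℕ) :
    ∑ i ∈ range M, ((N + i + 1 : ℕ) : ℝ) ^ (-1 - x) ≤ x⁻¹ * (N : ℝ) ^ (-x) := by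
  have h : ∑ i ∈ range M, ((N + i + 1 : ℕ) : ℝ) ^ (-1 - x) ≤
      ∑ i ∈ range M, (x⁻¹ * ((N + i : ℕ) : ℝ) ^ (-x) - x⁻¹ * ((N + (i + 1) : ℕ) : ℝ) ^ (-x)) := by
    refine Finset.sum_le_sum fun i _ => ?_
    rw [← mul_sub]
    exact rpow_neg_telescope hx (by omega)
  refine h.trans ?_
  rw [Finset.sum_range_sub' (fun i => x⁻¹ * ((N + i : ℕ) : ℝ) ^ (-x))]
  simp only [add_zero]
  have : 0 ≤ x⁻¹ * ((N + M : ℕ) : ℝ) ^ (-x) := by positivity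
  linarith

/-- Tail of an absolutely convergent Dirichlet series with bounded coefficients. -/
lemma norm_LSeries_sub_partial_le {f : ℕ → ℂ} (hf : ∀ n, ‖f n‖ ≤ 1) {N : ℕ} (hN : 1 ≤ N) {s : ℂ}
    (hs : 1 < s.re) : ‖LSeries f s - ∑ n ∈ Icc 1 N, f n * (n : ℂ) ^ (-s)‖ ≤
      (s.re - 1)⁻¹ * (N : ℝ) ^ (-(s.re - 1)) := by
  have hS : LSeriesSummable f s := LSeriesSummable_of_bounded_of_one_lt_re (m := 1) (fun n _ => hf n) hs
  have ht : ∀ n : ℕ, n ≠ 0 → LSeries.term f s n = f n * (n : ℂ) ^ (-s) := by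
    intro n hn
    rw [LSeries.term_of_ne_zero hn, Complex.cpow_neg, div_eq_mul_inv]
  have e : LSeries f s - ∑ n ∈ Icc 1 N, f n * (n : ℂ) ^ (-s) =
      ∑' i, LSeries.term f s (i + (N + 1)) := by
    rw [LSeries, ← hS.sum_add_tsum_nat_add (N + 1), Finset.sum_range_succ', LSeries.term_zero, add_zero]
    rw [← Finset.sum_bij (s := range N) (t := Icc 1 N) (f := fun i => LSeries.term f s (i + 1))
      (fun i _ => i + 1) (by intro i hi; simp at hi ⊢; omega) (by intro i _ j _ h; omega)
      (by intro j hj; rw [mem_Icc] at hj; exact ⟨j - 1, by simp; omega, by omega⟩)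
      (fun i _ => ht _ (by omega))]
    ring
  have hb : ∀ i : ℕ, ‖LSeries.term f s (i + (N + 1))‖ ≤ ((N + i + 1 : ℕ) : ℝ) ^ (-1 - (s.re - 1)) := by
    intro i
    rw [ht _ (by omega), norm_mul, show i + (N + 1) = N + i + 1 by ring,
      Complex.norm_natCast_cpow_of_pos (by omega)]
    rw [show (-s).re = -1 - (s.re - 1) by rw [Complex.neg_re]; ring]
    exact mul_le_of_le_one_left (by positivity) (hf _)
  rw [e]
  have hS' : Summable fun i => ‖LSeries.term f s (i + (N + 1))‖ :=
    ((summable_nat_add_iff (N + 1)).mpr hS).norm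
  refine (norm_tsum_le_tsum_norm hS').trans ?_
  refine Real.tsum_le_of_sum_range_le (fun _ => norm_nonneg _) fun M => ?_
  exact (Finset.sum_le_sum fun i _ => hb i).trans (tail_rpow_le (by linarith) hN M)

lemma sum_rpow_le {y : ℝ} (hy : 0 < y) (N : ℕ) :
    ∑ n ∈ Icc 1 N, (n : ℝ) ^ (y - 1) ≤ y⁻¹ * (N : ℝ) ^ y + (N : ℝ) ^ (y - 1) := by
  rcases le_or_gt y 1 with h1 | h1
  · have h : ∑ n ∈ Icc 1 N, (n : ℝ) ^ (y - 1) ≤ y⁻¹ * (N : ℝ) ^ y := by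
      induction N with
      | zero => simp; positivity
      | succ N ih =>
        rw [Finset.sum_Icc_succ_top (by omega)]
        have hm0 : (0 : ℝ) < ((N + 1 : ℕ) : ℝ) := by positivity
        set m : ℝ := ((N + 1 : ℕ) : ℝ) with hm
        have hNm : (N : ℝ) = m - 1 := by rw [hm]; push_cast; ring
        have hm1 : 1 ≤ m := by rw [hm]; push_cast; linarith [Nat.cast_nonneg (α := ℝ) N]
        have h2 : (N : ℝ) ^ y ≤ m ^ y * (1 - y / m) := by
          have h3 : (N : ℝ) = m * (1 + -(1 / m)) := by rw [hNm]; field_simp; ring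
          have h4 : (1 + -(1 / m)) ^ y ≤ 1 + y * -(1 / m) :=
            rpow_one_add_le_one_add_mul_self (by
              have : 1 / m ≤ 1 := by rw [div_le_one hm0]; exact hm1
              linarith) hy.le h1
          have h6 : (0 : ℝ) ≤ 1 + -(1 / m) := by
            have : 1 / m ≤ 1 := by rw [div_le_one hm0]; exact hm1
            linarith
          rw [h3, Real.mul_rpow hm0.le h6]
          calc m ^ y * (1 + -(1 / m)) ^ y ≤ m ^ y * (1 + y * -(1 / m)) := by gcongr
            _ = _ := by ring
        have h5 : m ^ (y - 1) = m ^ y / m := Real.rpow_sub_one hm0.ne' _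
        calc _ ≤ y⁻¹ * (N : ℝ) ^ y + m ^ (y - 1) := by gcongr
          _ ≤ y⁻¹ * (m ^ y * (1 - y / m)) + m ^ (y - 1) := by gcongr
          _ = _ := by rw [h5]; field_simp; ring
    have : 0 ≤ (N : ℝ) ^ (y - 1) := by positivity
    linarith
  · rcases Nat.eq_zero_or_pos N with rfl | hN
    · simp; positivity
    obtain ⟨M, rfl⟩ : ∃ M, N = M + 1 := ⟨N - 1, by omega⟩
    rw [Finset.sum_Icc_succ_top (by omega)]
    gcongr
    clear hN
    induction M with
    | zero => simp; positivity
    | succ N ih =>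
      rw [Finset.sum_Icc_succ_top (by omega)]
      have hm0 : (0 : ℝ) < ((N + 1 : ℕ) : ℝ) := by positivity
      rw [show ((N + 1 + 1 : ℕ) : ℝ) = ((N + 1 : ℕ) : ℝ) + 1 by push_cast; ring]
      set m : ℝ := ((N + 1 : ℕ) : ℝ) with hm
      have h2 : m ^ y * (1 + y / m) ≤ (m + 1) ^ y := by
        have h3 : m + 1 = m * (1 + 1 / m) := by field_simp
        have h4 : 1 + y * (1 / m) ≤ (1 + 1 / m) ^ y :=
          one_add_mul_self_le_rpow_one_add (by
            have : 0 < 1 / m := by positivity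
            linarith) h1.le
        rw [h3, Real.mul_rpow hm0.le (by positivity)]
        calc m ^ y * (1 + y / m) = m ^ y * (1 + y * (1 / m)) := by ring
          _ ≤ _ := by gcongr
      have h5 : m ^ (y - 1) = m ^ y / m := Real.rpow_sub_one hm0.ne' _
      calc _ ≤ y⁻¹ * m ^ y + m ^ (y - 1) := by gcongr
        _ = y⁻¹ * (m ^ y * (1 + y / m)) := by rw [h5]; field_simp
        _ ≤ _ := by gcongr

/-- Left of the line `Re s = 1` the partial sums, scaled by `N ^ (s - 1)`, are small. -/
lemma norm_partial_left_le {f : ℕ → ℂ} (hf : ∀ n, ‖f n‖ ≤ 1) {N : ℕ} (hN : 1 ≤ N) {s : ℂ}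
    (hs : s.re < 1) (hsN : 1 - s.re ≤ N) :
    ‖∑ n ∈ Icc 1 N, f n * (n : ℂ) ^ (-s)‖ * (N : ℝ) ^ (s.re - 1) ≤ 2 * (1 - s.re)⁻¹ := by
  set y : ℝ := 1 - s.re with hy
  have hy0 : 0 < y := by linarith
  have hN0 : (0 : ℝ) < N := by exact_mod_cast hN
  have h1 : ‖∑ n ∈ Icc 1 N, f n * (n : ℂ) ^ (-s)‖ ≤ y⁻¹ * (N : ℝ) ^ y + (N : ℝ) ^ (y - 1) := by
    refine (norm_sum_le _ _).trans (le_trans ?_ (sum_rpow_le hy0 N))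
    refine Finset.sum_le_sum fun n hn => ?_
    rw [norm_mul, Complex.norm_natCast_cpow_of_pos (mem_Icc.mp hn).1]
    rw [show (-s).re = y - 1 by simp [hy]]
    exact mul_le_of_le_one_left (by positivity) (hf _)
  have h2 : (N : ℝ) ^ (s.re - 1) = ((N : ℝ) ^ y)⁻¹ := by
    rw [← Real.rpow_neg hN0.le]; congr 1; rw [hy]; ring
  have hp : 0 < (N : ℝ) ^ y := by positivity
  rw [h2, ← div_eq_mul_inv, div_le_iff₀ hp]
  refine h1.trans ?_
  rw [Real.rpow_sub_one hN0.ne']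
  have : (N : ℝ) ^ y / N ≤ y⁻¹ * (N : ℝ) ^ y := by
    rw [div_eq_inv_mul]; gcongr
  linarith

end QLS

namespace QLS

open Finset MeasureTheory

/-- Newman's kernel is small on the horizontal sides. -/
lemma kernel_horiz {R : ℝ} (hR : 0 < R) {z : ℂ} (hx : |z.re| ≤ R) (hy : |z.im| = R) :
    ‖z⁻¹ + z * ((R : ℂ) ^ 2)⁻¹‖ ≤ 3 * |z.re| / R ^ 2 := by
  have hzn : R ≤ ‖z‖ := hy ▸ Complex.abs_im_le_norm z
  have hz0 : z ≠ 0 := norm_pos_iff.mp (by linarith)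
  have hRc : (R : ℂ) ≠ 0 := by exact_mod_cast hR.ne'
  have hR2 : (R : ℂ) ^ 2 = (z.im : ℂ) ^ 2 := by
    rw [← hy]; norm_cast; exact sq_abs _
  have e1 : (R : ℂ) ^ 2 + z ^ 2 = z.re * (z.re + 2 * z.im * Complex.I) := by
    rw [hR2]
    conv_lhs => rw [← Complex.re_add_im z]
    simp only [Complex.add_im, Complex.ofReal_re, Complex.ofReal_im, Complex.mul_im,
      Complex.I_re, Complex.I_im]
    push_cast
    linear_combination ((z.im : ℂ) ^ 2) * Complex.I_sq
  have e2 : z⁻¹ + z * ((R : ℂ) ^ 2)⁻¹ = z.re * (z.re + 2 * z.im * Complex.I) / (z * (R : ℂ) ^ 2) := by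
    rw [← e1]; field_simp
  rw [e2, norm_div, norm_mul, norm_mul, norm_pow, Complex.norm_real, Complex.norm_real,
    Real.norm_eq_abs, Real.norm_of_nonneg hR.le]
  have h3 : ‖(z.re + 2 * z.im * Complex.I : ℂ)‖ ≤ 3 * R := by
    refine (norm_add_le _ _).trans ?_
    simp; linarith
  calc |z.re| * ‖(z.re + 2 * z.im * Complex.I : ℂ)‖ / (‖z‖ * R ^ 2) ≤ |z.re| * (3 * R) / (R * R ^ 2) := by
        gcongr
    _ = _ := by field_simp

lemma kernel_vert {R : ℝ} (hR : 0 < R) {z : ℂ} (hx0 : 0 < |z.re|) (hx : |z.re| ≤ R) (hy : |z.im| ≤ R) :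
    ‖z⁻¹ + z * ((R : ℂ) ^ 2)⁻¹‖ ≤ |z.re|⁻¹ + 2 / R := by
  refine (norm_add_le _ _).trans (add_le_add ?_ ?_)
  · rw [norm_inv]
    exact inv_anti₀ hx0 (Complex.abs_re_le_norm z)
  · rw [norm_mul, norm_inv, norm_pow, Complex.norm_real, Real.norm_of_nonneg hR.le]
    have : ‖z‖ ≤ 2 * R := (Complex.norm_le_abs_re_add_abs_im z).trans (by linarith)
    calc ‖z‖ * (R ^ 2)⁻¹ ≤ 2 * R * (R ^ 2)⁻¹ := by gcongr
      _ = _ := by field_simp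

/-- Newman's contour argument: the partial sum at `1` of a Dirichlet series that continues to the
left of the line `Re s = 1`. -/
lemma newman {f : ℕ → ℂ} (hf : ∀ n, ‖f n‖ ≤ 1) {g : ℂ → ℂ} {R r B : ℝ} {N : ℕ} (hr : 0 < r)
    (hr1 : r ≤ 1) (hR : 1 ≤ R) (hRN : R ≤ N) (hB : 0 ≤ B)
    (hg : DifferentiableOn ℂ (fun z => g (1 + z)) (rect (-r) R R))
    (hgL : ∀ s : ℂ, 1 < s.re → g s = LSeries f s)
    (hgB : ∀ z ∈ rect (-r) R R, z.re ≤ 0 → ‖g (1 + z)‖ ≤ B) :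
    ‖g 1 - ∑ n ∈ Icc 1 N, f n * (n : ℂ) ^ (-1 : ℂ)‖ ≤
      36 / R + 6 * B / R ^ 2 + B * (N : ℝ) ^ (-r) * (2 * R / r + 4) := by
  have hR0 : 0 < R := by linarith
  have hN1 : (1 : ℝ) ≤ N := hR.trans hRN
  have hN0 : (0 : ℝ) < N := by linarith
  have hN : 1 ≤ N := by exact_mod_cast hN1
  have hNc : (N : ℂ) ≠ 0 := by exact_mod_cast hN0.ne'
  set A : ℂ → ℂ := fun z => ∑ n ∈ Icc 1 N, f n * (n : ℂ) ^ (-(1 + z)) with hA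
  set W : ℂ → ℂ := fun z => z⁻¹ + z * ((R : ℂ) ^ 2)⁻¹ with hW
  have hEn : ∀ z : ℂ, ‖(N : ℂ) ^ z‖ = (N : ℝ) ^ z.re := fun z =>
    Complex.norm_natCast_cpow_of_pos hN z
  have hEd : Differentiable ℂ (fun z : ℂ => (N : ℂ) ^ z) := fun z =>
    (differentiableAt_id.const_cpow (Or.inl hNc))
  have hAd : Differentiable ℂ A := by
    refine Differentiable.fun_sum fun n hn => ?_
    have hn0 : (n : ℂ) ≠ 0 := by
      have := (mem_Icc.mp hn).1
      exact_mod_cast (by omega : n ≠ 0)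
    intro z
    refine DifferentiableAt.const_mul ?_ _
    exact DifferentiableAt.const_cpow (by fun_prop) (Or.inl hn0)
  set FG : ℂ → ℂ := fun z => g (1 + z) * (N : ℂ) ^ z * W z with hFG
  set FA : ℂ → ℂ := fun z => A z * (N : ℂ) ^ z * W z with hFA
  have hra : -r < 0 := by linarith
  have hRa : -R < 0 := by linarith
  have IG := rectInt_newman (F := fun z => g (1 + z) * (N : ℂ) ^ z) hra hR0 hR0
    (hg.mul hEd.differentiableOn) ((R : ℂ) ^ 2)⁻¹
  have IA := rectInt_newman (F := fun z => A z * (N : ℂ) ^ z) hRa hR0 hR0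
    (hAd.mul hEd).differentiableOn ((R : ℂ) ^ 2)⁻¹
  have hWc : ∀ a : ℝ, ContinuousOn W (rect a R R \ {0}) := fun a =>
    (continuousOn_id.inv₀ fun z hz => hz.2).add (by fun_prop)
  have hGc : ContinuousOn FG (rect (-r) R R \ {0}) :=
    ((hg.mul hEd.differentiableOn).continuousOn.mono Set.sdiff_subset).mul (hWc _)
  have hAc : ContinuousOn FA (rect (-R) R R \ {0}) :=
    (hAd.mul hEd).continuous.continuousOn.mul (hWc _)
  have hsub : ∀ a : ℝ, a < 0 → ∀ h : ℝ → ℂ, IntervalIntegrable h volume a R →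
      IntervalIntegrable h volume a 0 ∧ IntervalIntegrable h volume 0 R := by
    intro a ha h hh
    constructor
    · exact hh.mono_set (by
        rw [Set.uIcc_of_le ha.le, Set.uIcc_of_le (by linarith)]; exact Set.Icc_subset_Icc_right hR0.le)
    · exact hh.mono_set (by
        rw [Set.uIcc_of_le hR0.le, Set.uIcc_of_le (by linarith)]; exact Set.Icc_subset_Icc_left ha.le)
  obtain ⟨gb1, gb2⟩ := hsub _ hra _ (intervalIntegrable_bot hra hR0 hR0 hGc)
  obtain ⟨gt1, gt2⟩ := hsub _ hra _ (intervalIntegrable_top hra hR0 hR0 hGc)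
  obtain ⟨ab1, ab2⟩ := hsub _ hRa _ (intervalIntegrable_bot hRa hR0 hR0 hAc)
  obtain ⟨at1, at2⟩ := hsub _ hRa _ (intervalIntegrable_top hRa hR0 hR0 hAc)
  have gr := intervalIntegrable_right hra hR0 hR0 hGc
  have ar := intervalIntegrable_right hRa hR0 hR0 hAc
  change rectInt FG (-r) R R = _ at IG
  change rectInt FA (-R) R R = _ at IA
  unfold rectInt at IG IA
  rw [← intervalIntegral.integral_add_adjacent_intervals gb1 gb2,
    ← intervalIntegral.integral_add_adjacent_intervals gt1 gt2] at IG
  rw [← intervalIntegral.integral_add_adjacent_intervals ab1 ab2,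
    ← intervalIntegral.integral_add_adjacent_intervals at1 at2] at IA
  have s1 := intervalIntegral.integral_sub gb2 ab2
  have s2 := intervalIntegral.integral_sub gt2 at2
  have s3 := intervalIntegral.integral_sub gr ar
  -- the difference on the right half, where the Dirichlet series converges
  have hright : ∀ z : ℂ, 0 < z.re → ‖FG z - FA z‖ ≤ z.re⁻¹ * ‖W z‖ := by
    intro z hz
    have h1 := norm_LSeries_sub_partial_le hf hN (s := 1 + z) (by simpa using hz)
    rw [← hgL _ (by simpa using hz)] at h1
    have e : FG z - FA z = (g (1 + z) - A z) * (N : ℂ) ^ z * W z := by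
      simp only [hFG, hFA]; ring
    rw [e, norm_mul, norm_mul, hEn]
    gcongr
    have e2 : (1 + z).re - 1 = z.re := by simp
    rw [e2] at h1
    calc ‖g (1 + z) - A z‖ * (N : ℝ) ^ z.re ≤ z.re⁻¹ * (N : ℝ) ^ (-z.re) * (N : ℝ) ^ z.re := by
          gcongr
      _ = z.re⁻¹ := by rw [mul_assoc, ← Real.rpow_add hN0]; simp
  have hleft : ∀ z : ℂ, z.re < 0 → -R ≤ z.re → ‖FA z‖ ≤ 2 * |z.re|⁻¹ * ‖W z‖ := by
    intro z hz hz2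
    have h1 := norm_partial_left_le hf hN (s := 1 + z) (by simpa using hz) (by simp; linarith)
    rw [hFA]
    simp only
    rw [norm_mul, norm_mul, hEn]
    refine mul_le_mul_of_nonneg_right ?_ (norm_nonneg _)
    have e2 : (1 + z).re - 1 = z.re := by simp
    have e3 : 1 - (1 + z).re = |z.re| := by simp [abs_of_neg hz]
    rwa [e2, e3] at h1
  have hGl : ∀ z ∈ rect (-r) R R, z.re ≤ 0 → ‖FG z‖ ≤ B * (N : ℝ) ^ z.re * ‖W z‖ := by
    intro z hz hz0
    rw [hFG]
    simp only
    rw [norm_mul, norm_mul, hEn]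
    gcongr
    exact hgB z hz hz0
  -- the three right-hand pieces
  have hR1 : ∀ σ : ℝ, |σ| = R → ‖∫ x in (0 : ℝ)..R, (FG (x + (σ : ℂ) * Complex.I) -
      FA (x + (σ : ℂ) * Complex.I))‖ ≤ 3 / R := by
    intro σ hσ
    refine (intervalIntegral.norm_integral_le_of_norm_le_const (C := 3 / R ^ 2) fun x hx => ?_).trans
      (le_of_eq ?_)
    · rw [Set.uIoc_of_le hR0.le] at hx
      refine (hright _ (by simpa using hx.1)).trans ?_
      have hk := kernel_horiz hR0 (z := x + (σ : ℂ) * Complex.I)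
        (by simpa [abs_of_pos hx.1] using hx.2) (by simpa using hσ)
      have e : (x + (σ : ℂ) * Complex.I).re = x := by simp
      rw [e] at hk ⊢
      have := hx.1
      calc _ ≤ x⁻¹ * (3 * |x| / R ^ 2) := by gcongr
        _ = _ := by rw [abs_of_pos hx.1]; field_simp
    · rw [sub_zero, abs_of_pos hR0]; field_simp
  have hR2 : ‖∫ y in (-R)..R, (FG (R + (y : ℂ) * Complex.I) - FA (R + (y : ℂ) * Complex.I))‖ ≤ 6 / R := by
    refine (intervalIntegral.norm_integral_le_of_norm_le_const (C := 3 / R ^ 2) fun y hy => ?_).trans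
      (le_of_eq ?_)
    · rw [Set.uIoc_of_le (by linarith)] at hy
      refine (hright _ (by simpa using hR0)).trans ?_
      have hk := kernel_vert hR0 (z := R + (y : ℂ) * Complex.I) (by simpa using hR0.ne')
        (by simp [abs_of_pos hR0]) (by simpa using abs_le.mpr ⟨hy.1.le, hy.2⟩)
      have e : (R + (y : ℂ) * Complex.I).re = R := by simp
      rw [e] at hk ⊢
      rw [abs_of_pos hR0] at hk
      calc _ ≤ R⁻¹ * (R⁻¹ + 2 / R) := by gcongr
        _ = _ := by field_simp; norm_num
    · rw [show R - -R = 2 * R by ring, abs_of_pos (by linarith)]; field_simp; norm_num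
  -- the partial sum on the left half
  have hA1 : ∀ σ : ℝ, |σ| = R → ‖∫ x in (-R)..(0 : ℝ), FA (x + (σ : ℂ) * Complex.I)‖ ≤ 6 / R := by
    intro σ hσ
    refine (intervalIntegral.norm_integral_le_of_norm_le_const (C := 6 / R ^ 2) fun x hx => ?_).trans
      (le_of_eq ?_)
    · rw [Set.uIoc_of_le hRa.le] at hx
      have hk := kernel_horiz hR0 (z := x + (σ : ℂ) * Complex.I)
        (by simpa [abs_of_nonpos hx.2] using by linarith [hx.1]) (by simpa using hσ)
      have e : (x + (σ : ℂ) * Complex.I).re = x := by simp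
      rw [e] at hk
      rcases hx.2.lt_or_eq with h0 | h0
      · refine (hleft _ (by simpa using h0) (by simpa using hx.1.le)).trans ?_
        rw [e]
        have : 0 < |x| := abs_pos.mpr h0.ne
        calc _ ≤ 2 * |x|⁻¹ * (3 * |x| / R ^ 2) := by gcongr
          _ = _ := by field_simp; norm_num
      · have h00 : W (x + (σ : ℂ) * Complex.I) = 0 :=
          norm_le_zero_iff.mp (hk.trans_eq (by rw [h0]; simp))
        rw [hFA]; simp only
        rw [h00, mul_zero, norm_zero]; positivity
    · rw [show 0 - -R = R by ring, abs_of_pos hR0]; field_simp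
  have hA2 : ‖∫ y in (-R)..R, FA (((-R : ℝ) : ℂ) + (y : ℂ) * Complex.I)‖ ≤ 12 / R := by
    refine (intervalIntegral.norm_integral_le_of_norm_le_const (C := 6 / R ^ 2) fun y hy => ?_).trans
      (le_of_eq ?_)
    · rw [Set.uIoc_of_le (by linarith)] at hy
      refine (hleft _ (by simpa using hR0) (by simp)).trans ?_
      have hk := kernel_vert hR0 (z := ((-R : ℝ) : ℂ) + (y : ℂ) * Complex.I) (by simpa using hR0.ne')
        (by simp [abs_of_pos hR0]) (by simpa using abs_le.mpr ⟨hy.1.le, hy.2⟩)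
      have e : (((-R : ℝ) : ℂ) + (y : ℂ) * Complex.I).re = -R := by simp
      rw [e] at hk ⊢
      rw [abs_neg, abs_of_pos hR0] at hk ⊢
      calc _ ≤ 2 * R⁻¹ * (R⁻¹ + 2 / R) := by gcongr
        _ = _ := by field_simp; norm_num
    · rw [show R - -R = 2 * R by ring, abs_of_pos (by linarith)]; field_simp; norm_num
  -- the continuation on the left half
  have hrR : r ≤ R := hr1.trans hR
  have hG1 : ∀ σ : ℝ, |σ| = R → ‖∫ x in (-r)..(0 : ℝ), FG (x + (σ : ℂ) * Complex.I)‖ ≤ 3 * B / R ^ 2 := by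
    intro σ hσ
    refine (intervalIntegral.norm_integral_le_of_norm_le_const (C := 3 * B / R ^ 2)
      fun x hx => ?_).trans ?_
    · rw [Set.uIoc_of_le hra.le] at hx
      have hx1 : |x| ≤ 1 := by rw [abs_of_nonpos hx.2]; linarith [hx.1]
      have hk := kernel_horiz hR0 (z := x + (σ : ℂ) * Complex.I)
        (by simpa using hx1.trans hR) (by simpa using hσ)
      have e : (x + (σ : ℂ) * Complex.I).re = x := by simp
      have hσ' := abs_le.mp hσ.le
      refine (hGl _ ⟨by simpa using hx.1.le, by simpa using hx.2.trans hR0.le, by simpa using hσ'.1,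
        by simpa using hσ'.2⟩ (by simpa using hx.2)).trans ?_
      rw [e] at hk ⊢
      have h1 : (N : ℝ) ^ x ≤ 1 := Real.rpow_le_one_of_one_le_of_nonpos hN1 hx.2
      calc _ ≤ B * 1 * (3 * 1 / R ^ 2) := by
            gcongr
            exact hk.trans (by gcongr)
        _ = _ := by ring
    · rw [show 0 - -r = r by ring, abs_of_pos hr]
      exact mul_le_of_le_one_right (by positivity) hr1
  have hG2 : ‖∫ y in (-R)..R, FG (((-r : ℝ) : ℂ) + (y : ℂ) * Complex.I)‖ ≤
      B * (N : ℝ) ^ (-r) * (2 * R / r + 4) := by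
    refine (intervalIntegral.norm_integral_le_of_norm_le_const
      (C := B * (N : ℝ) ^ (-r) * (r⁻¹ + 2 / R)) fun y hy => ?_).trans (le_of_eq ?_)
    · rw [Set.uIoc_of_le (by linarith)] at hy
      have hk := kernel_vert hR0 (z := ((-r : ℝ) : ℂ) + (y : ℂ) * Complex.I) (by simpa using hr.ne')
        (by simpa [abs_of_pos hr] using hrR) (by simpa using abs_le.mpr ⟨hy.1.le, hy.2⟩)
      have e : (((-r : ℝ) : ℂ) + (y : ℂ) * Complex.I).re = -r := by simp
      refine (hGl _ ⟨by simp, by simp; linarith, by simpa using hy.1.le,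
        by simpa using hy.2⟩ (by simpa using hr.le)).trans ?_
      rw [e] at hk ⊢
      rw [abs_neg, abs_of_pos hr] at hk
      gcongr
    · rw [show R - -R = 2 * R by ring, abs_of_pos (by linarith)]; field_simp; ring
  set V := g 1 - ∑ n ∈ Icc 1 N, f n * (n : ℂ) ^ (-1 : ℂ) with hV
  have hmain : 2 * Real.pi * Complex.I * V =
      (∫ x in (0 : ℝ)..R, (FG (x + ((-R : ℝ) : ℂ) * Complex.I) - FA (x + ((-R : ℝ) : ℂ) * Complex.I)))
      - (∫ x in (0 : ℝ)..R, (FG (x + (R : ℂ) * Complex.I) - FA (x + (R : ℂ) * Complex.I)))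
      + Complex.I * (∫ y in (-R)..R, (FG (R + (y : ℂ) * Complex.I) - FA (R + (y : ℂ) * Complex.I)))
      + (∫ x in (-r)..(0 : ℝ), FG (x + ((-R : ℝ) : ℂ) * Complex.I))
      - (∫ x in (-r)..(0 : ℝ), FG (x + (R : ℂ) * Complex.I))
      - Complex.I * (∫ y in (-R)..R, FG (((-r : ℝ) : ℂ) + (y : ℂ) * Complex.I))
      - (∫ x in (-R)..(0 : ℝ), FA (x + ((-R : ℝ) : ℂ) * Complex.I))
      + (∫ x in (-R)..(0 : ℝ), FA (x + (R : ℂ) * Complex.I))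
      + Complex.I * (∫ y in (-R)..R, FA (((-R : ℝ) : ℂ) + (y : ℂ) * Complex.I)) := by
    rw [s1, s2, s3]
    have hV' : V = g (1 + 0) * (N : ℂ) ^ (0 : ℂ) - A 0 * (N : ℂ) ^ (0 : ℂ) := by
      simp [hV, hA]
    rw [hV', mul_sub, ← IG, ← IA]
    ring
  have hnR : |(-R)| = R := by rw [abs_neg, abs_of_pos hR0]
  have n1 := hR1 (-R) hnR
  have n2 := hR1 R (abs_of_pos hR0)
  have n3 := hA1 (-R) hnR
  have n4 := hA1 R (abs_of_pos hR0)
  have n5 := hG1 (-R) hnR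
  have n6 := hG1 R (abs_of_pos hR0)
  have key : ‖2 * Real.pi * Complex.I * V‖ ≤ 3 / R + 3 / R + 6 / R + 3 * B / R ^ 2 + 3 * B / R ^ 2 +
      B * (N : ℝ) ^ (-r) * (2 * R / r + 4) + 6 / R + 6 / R + 12 / R := by
    rw [hmain]
    have hI : ∀ w : ℂ, ‖Complex.I * w‖ = ‖w‖ := fun w => by simp
    refine (norm_add_le _ _).trans (add_le_add ?_ ((hI _).trans_le hA2))
    refine (norm_add_le _ _).trans (add_le_add ?_ n4)
    refine (norm_sub_le _ _).trans (add_le_add ?_ n3)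
    refine (norm_sub_le _ _).trans (add_le_add ?_ ((hI _).trans_le hG2))
    refine (norm_sub_le _ _).trans (add_le_add ?_ n6)
    refine (norm_add_le _ _).trans (add_le_add ?_ n5)
    refine (norm_add_le _ _).trans (add_le_add ?_ ((hI _).trans_le hR2))
    exact (norm_sub_le _ _).trans (add_le_add n1 n2)
  have hpi : ‖V‖ ≤ ‖2 * Real.pi * Complex.I * V‖ := by
    rw [norm_mul]
    refine le_mul_of_one_le_left (norm_nonneg _) ?_
    simp only [norm_mul, Complex.norm_I, Complex.norm_real, mul_one, Real.norm_eq_abs,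
      abs_of_pos Real.pi_pos, RCLike.norm_ofNat]
    linarith [Real.pi_gt_three]
  refine hpi.trans (key.trans (le_of_eq ?_))
  ring

end QLS

namespace QLS

/-! ### Long partial sums of the inverse L-series -/

open Finset MeasureTheory

/-- For `Re s > 1` the inverse of `L(s, χ)` is the Dirichlet series of `μ χ`. -/
lemma inv_L_eq_LSeries {q : ℕ} [NeZero q] (χ : DirichletCharacter ℂ q) {s : ℂ} (hs : 1 < s.re) :
    (χ.LFunction s)⁻¹ = LSeries (fun n : ℕ => (ArithmeticFunction.moebius n : ℂ) * χ (n : ZMod q)) s := by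
  have h := DirichletCharacter.LSeries.mul_mu_eq_one χ hs
  rw [← χ.LFunction_eq_LSeries hs] at h
  rw [inv_eq_of_mul_eq_one_right h]
  congr 1
  ext n
  simp [mul_comm]

lemma tail_calc {ε c₁ : ℝ} (hε : 0 < ε) (hε1 : ε ≤ 1) (hc : 0 < c₁) : ∃ C > 0, ∀ (D N : ℕ) (r : ℝ),
    1 ≤ D → Real.exp ((D : ℝ) ^ ε) ≤ N → c₁ * (D : ℝ) ^ (-(ε / 2)) ≤ r →
    36 / (D : ℝ) + 6 * r⁻¹ / (D : ℝ) ^ 2 + r⁻¹ * (N : ℝ) ^ (-r) * (2 * D / r + 4) ≤ C / D := by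
  obtain ⟨m, hm⟩ := exists_nat_ge ((2 + ε) / (ε / 2))
  refine ⟨36 + 6 / c₁ + (2 / c₁ ^ 2 + 4 / c₁) * (m.factorial / c₁ ^ m), by positivity, ?_⟩
  intro D N r hD hN hr
  have hDR : (1 : ℝ) ≤ D := by exact_mod_cast hD
  have hD0 : (0 : ℝ) < D := by linarith
  set v : ℝ := (D : ℝ) ^ (ε / 2) with hv
  have hv1 : 1 ≤ v := Real.one_le_rpow hDR (by positivity)
  have hv0 : 0 < v := by linarith
  have hvi : (D : ℝ) ^ (-(ε / 2)) = v⁻¹ := Real.rpow_neg hD0.le _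
  have hvv : (D : ℝ) ^ ε = v * v := by rw [hv, ← Real.rpow_add hD0]; ring_nf
  rw [hvi] at hr
  have hr0 : 0 < r := lt_of_lt_of_le (by positivity) hr
  have hri : r⁻¹ ≤ v / c₁ := by
    rw [show v / c₁ = (c₁ * v⁻¹)⁻¹ by field_simp]
    exact inv_anti₀ (by positivity) hr
  have hvD : v ≤ D := by
    calc v ≤ (D : ℝ) ^ (1 : ℝ) := Real.rpow_le_rpow_of_exponent_le hDR (by linarith)
      _ = D := Real.rpow_one _
  have hN0 : (0 : ℝ) < N := lt_of_lt_of_le (Real.exp_pos _) hN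
  have hNr : (N : ℝ) ^ (-r) ≤ Real.exp (-(c₁ * v)) := by
    rw [Real.rpow_def_of_pos hN0]
    apply Real.exp_le_exp.mpr
    have h1 : v * v ≤ Real.log N := by
      rw [← hvv]; exact (Real.le_log_iff_exp_le hN0).mpr hN
    have h2 : c₁ * v ≤ r * Real.log N := by
      calc c₁ * v = c₁ * v⁻¹ * (v * v) := by field_simp
        _ ≤ r * Real.log N := by gcongr
    linarith
  have hvm : (D : ℝ) ^ 2 * v ^ 2 ≤ v ^ m := by
    have e1 : (D : ℝ) ^ 2 * v ^ 2 = (D : ℝ) ^ (2 + ε) := by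
      rw [Real.rpow_add hD0, hvv]; norm_num; left; ring
    rw [e1, hv, ← Real.rpow_natCast, ← Real.rpow_mul hD0.le]
    refine Real.rpow_le_rpow_of_exponent_le hDR ?_
    rw [div_le_iff₀ (by positivity)] at hm
    linarith
  have hexp : (D : ℝ) ^ 2 * v ^ 2 * Real.exp (-(c₁ * v)) ≤ m.factorial / c₁ ^ m := by
    have h1 := Real.pow_div_factorial_le_exp (c₁ * v) (by positivity) m
    rw [Real.exp_neg, ← div_eq_mul_inv, div_le_div_iff₀ (Real.exp_pos _) (by positivity)]
    rw [div_le_iff₀ (by positivity), mul_pow] at h1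
    calc (D : ℝ) ^ 2 * v ^ 2 * c₁ ^ m ≤ v ^ m * c₁ ^ m := by gcongr
      _ ≤ _ := by linarith
  have t2 : 6 * r⁻¹ / (D : ℝ) ^ 2 ≤ (6 / c₁) / D := by
    calc 6 * r⁻¹ / (D : ℝ) ^ 2 ≤ 6 * (D / c₁) / (D : ℝ) ^ 2 := by
          gcongr; exact hri.trans (by gcongr)
      _ = _ := by field_simp
  have t3 : r⁻¹ * (N : ℝ) ^ (-r) * (2 * D / r + 4) ≤
      ((2 / c₁ ^ 2 + 4 / c₁) * (m.factorial / c₁ ^ m)) / D := by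
    have h1 : 2 * (D : ℝ) / r + 4 ≤ D * v * (2 / c₁ + 4) := by
      have : 1 ≤ (D : ℝ) * v := one_le_mul_of_one_le_of_one_le hDR hv1
      calc 2 * (D : ℝ) / r + 4 = 2 * D * r⁻¹ + 4 * 1 := by ring
        _ ≤ 2 * D * (v / c₁) + 4 * (D * v) := by gcongr
        _ = _ := by ring
    calc r⁻¹ * (N : ℝ) ^ (-r) * (2 * D / r + 4) ≤
          (v / c₁) * Real.exp (-(c₁ * v)) * (D * v * (2 / c₁ + 4)) := by gcongr
      _ = (2 / c₁ ^ 2 + 4 / c₁) * ((D : ℝ) ^ 2 * v ^ 2 * Real.exp (-(c₁ * v))) / D := by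
          field_simp
      _ ≤ _ := by gcongr
  calc _ ≤ 36 / (D : ℝ) + (6 / c₁) / D + ((2 / c₁ ^ 2 + 4 / c₁) * (m.factorial / c₁ ^ m)) / D := by
        gcongr
    _ = _ := by ring

/-- A Siegel–Walfisz type bound: partial sums of length at least `exp (D ^ ε)` approximate
`1 / L(1, χ_d)` to within `O(1 / D)`, uniformly for `d ≤ D`. -/
theorem mobius_tail {χ : (d : ℕ) → DirichletCharacter ℂ (4 * d)} (hf : IsFam χ) {ε : ℝ} (hε : 0 < ε)
    (hε1 : ε ≤ 1) : ∃ C > 0, ∀ D N : ℕ, 1 ≤ D → D ≤ N → Real.exp ((D : ℝ) ^ ε) ≤ N →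
      ∀ d, Adm d → d ≤ D → ∀ [NeZero (4 * d)], ‖((χ d).LFunction 1)⁻¹ -
        ∑ k ∈ Icc 1 N, (ArithmeticFunction.moebius k : ℂ) * χ d (k : ZMod (4 * d)) / (k : ℂ)‖ ≤ C / D := by
  obtain ⟨c, hc, hc4, hL⟩ := L_lower hf (δ := ε / 4) (by positivity)
  obtain ⟨C, hC, h⟩ := tail_calc hε hε1 (c₁ := c * (12 : ℝ) ^ (-(ε / 4))) (by positivity)
  refine ⟨C, hC, ?_⟩
  intro D N hD hDN hN d hd hdD _
  have hDR : (1 : ℝ) ≤ D := by exact_mod_cast hD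
  have hdDR : (d : ℝ) ≤ D := by exact_mod_cast hdD
  have hQ := one_le_Qc (4 * d) (D : ℝ)
  set Q := Qc (4 * d) (D : ℝ) with hQd
  have hQD : Q ≤ 12 * (D : ℝ) ^ 2 := by
    rw [hQd, Qc, abs_of_nonneg (by positivity)]; push_cast
    nlinarith
  set r : ℝ := c * Q ^ (-(ε / 4)) with hr
  have hQ1 : Q ^ (-(ε / 4)) ≤ 1 := Real.rpow_le_one_of_one_le_of_nonpos (by linarith) (by linarith)
  have hr0 : 0 < r := by positivity
  have hr1 : r ≤ 1 := by
    calc r ≤ 1 / 4 * 1 := by rw [hr]; gcongr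
      _ ≤ 1 := by norm_num
  have hrl : c * (12 : ℝ) ^ (-(ε / 4)) * (D : ℝ) ^ (-(ε / 2)) ≤ r := by
    rw [hr, mul_assoc]
    gcongr
    have e : (D : ℝ) ^ (-(ε / 2)) = ((D : ℝ) ^ 2) ^ (-(ε / 4)) := by
      rw [← Real.rpow_natCast, ← Real.rpow_mul (by positivity)]; congr 1; push_cast; ring
    rw [e, ← Real.mul_rpow (by norm_num) (by positivity)]
    exact Real.rpow_le_rpow_of_nonpos (by linarith) hQD (by linarith)
  have hχ := (hf d hd).1
  have hlow : ∀ z ∈ rect (-r) D D, z.re ≤ 0 → r ≤ ‖(χ d).LFunction (1 + z)‖ := by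
    rintro z ⟨h1, h2, h3, h4⟩ hz
    exact hL d hd D (1 + z) (by simpa using abs_le.mpr ⟨h3, h4⟩) (by simp; linarith) (by simpa using hz)
  have hne : ∀ z ∈ rect (-r) D D, (χ d).LFunction (1 + z) ≠ 0 := by
    intro z hz
    rcases le_total z.re 0 with h0 | h0
    · exact norm_pos_iff.mp (hr0.trans_le (hlow z hz h0))
    · exact DirichletCharacter.LFunction_ne_zero_of_one_le_re (χ d) (Or.inl hχ) (by simpa using h0)
  have key := newman (f := fun n : ℕ => (ArithmeticFunction.moebius n : ℂ) * χ d (n : ZMod (4 * d)))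
    (g := fun s => ((χ d).LFunction s)⁻¹) (R := D) (r := r) (B := r⁻¹) (N := N) (fun n => by
      rw [norm_mul]
      exact mul_le_one₀ (norm_moebius_le n) (norm_nonneg _) ((χ d).norm_le_one _)) hr0 hr1 hDR
    (by exact_mod_cast hDN) (by positivity) (by
      refine DifferentiableOn.inv ?_ hne
      exact ((DirichletCharacter.differentiable_LFunction hχ).comp (by fun_prop)).differentiableOn)
    (fun s hs => inv_L_eq_LSeries _ hs) (fun z hz hz0 => by
      rw [norm_inv]; exact inv_anti₀ hr0 (hlow z hz hz0))
  have e : ∑ k ∈ Icc 1 N, (ArithmeticFunction.moebius k : ℂ) * χ d (k : ZMod (4 * d)) / (k : ℂ) =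
      ∑ n ∈ Icc 1 N, (ArithmeticFunction.moebius n : ℂ) * χ d (n : ZMod (4 * d)) * (n : ℂ) ^ (-1 : ℂ) := by
    refine Finset.sum_congr rfl fun k _ => ?_
    rw [Complex.cpow_neg_one, div_eq_mul_inv]
  rw [e]
  exact key.trans (h D N r hD hN hrl)

end QLS

namespace QLS

/-! ### Dyadic blocks and the mean square -/

open Finset MeasureTheory

/-- Heath-Brown's inequality loses `M ^ ε` in the column range, which is not affordable when `M` is
exponentially large in `D`; beyond `D ^ 3` the dual of the elementary bound `LS_base` loses nothing. -/
lemma LS_uniform {ε : ℝ} (hε : 0 < ε) : ∃ C > 0, ∀ D M : ℕ, 1 ≤ D → 1 ≤ M →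
    LS (C * (D : ℝ) ^ ε * (D + M)) D (2 * M) := by
  obtain ⟨C, hC, hB⟩ := heathBrown (ε := ε / 4) (by positivity)
  refine ⟨2 * C + 20, by positivity, fun D M hD hM => ?_⟩
  have hDR : (1 : ℝ) ≤ D := by exact_mod_cast hD
  have hMR : (1 : ℝ) ≤ M := by exact_mod_cast hM
  have hp : (1 : ℝ) ≤ (D : ℝ) ^ ε := Real.one_le_rpow hDR hε.le
  rcases le_total (2 * M) (D ^ 3) with h | h
  · refine (hB D (2 * M) hD (by omega)).mono ?_ le_rfl le_rfl
    have h' : (2 * (M : ℝ)) ≤ (D : ℝ) ^ 3 := by exact_mod_cast h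
    have h1 : ((D : ℝ) * (2 * M : ℕ)) ^ (ε / 4) ≤ (D : ℝ) ^ ε := by
      calc ((D : ℝ) * (2 * M : ℕ)) ^ (ε / 4) ≤ ((D : ℝ) ^ (4 : ℕ)) ^ (ε / 4) := by
            refine Real.rpow_le_rpow (by positivity) ?_ (by positivity)
            push_cast
            nlinarith
        _ = (D : ℝ) ^ ε := by
            rw [← Real.rpow_natCast, ← Real.rpow_mul (by positivity)]
            congr 1; push_cast; ring
    calc C * ((D : ℝ) * (2 * M : ℕ)) ^ (ε / 4) * (D + (2 * M : ℕ))
        ≤ C * (D : ℝ) ^ ε * (2 * (D + M)) := by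
          push_cast at h1 ⊢
          refine mul_le_mul (mul_le_mul_of_nonneg_left h1 hC.le) (by linarith) (by positivity)
            (by positivity)
      _ ≤ (2 * C + 20) * (D : ℝ) ^ ε * (D + M) := by
          have : 0 ≤ (D : ℝ) ^ ε * (D + M) := by positivity
          nlinarith
  · refine ((LS_base (2 * M) D).swap (by positivity)).mono ?_ le_rfl le_rfl
    have h' : (D : ℝ) ^ 3 ≤ 2 * (M : ℝ) := by exact_mod_cast h
    push_cast
    calc 4 * (2 * (M : ℝ) + 1 + (D : ℝ) ^ 3) ≤ 20 * 1 * (D + M) := by nlinarith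
      _ ≤ (2 * C + 20) * (D : ℝ) ^ ε * (D + M) := by
          refine mul_le_mul_of_nonneg_right ?_ (by positivity)
          exact mul_le_mul (by linarith) hp (by norm_num) (by positivity)

/-- One dyadic block of the truncated Dirichlet series of `1 / L(s, χ)` at `s = 1`, as a row of the
sieve matrix: even `k` drop out because `χ d` has even modulus, non-squarefree `k` because of `μ`. -/
lemma block_eq {χ : (d : ℕ) → DirichletCharacter ℂ (4 * d)} (hf : IsFam χ) {d : ℕ} (hd : Adm d)
    (M : ℕ) :
    ∑ k ∈ Ioc M (2 * M), (ArithmeticFunction.moebius k : ℂ) * χ d (k : ZMod (4 * d)) / (k : ℂ) =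
      ∑ l ∈ OS (2 * M), (if M < l then (ArithmeticFunction.moebius l : ℂ) / l else 0) * J d l := by
  have e : ∀ l, (if M < l then (ArithmeticFunction.moebius l : ℂ) / l else 0) * J d l =
      if M < l then (ArithmeticFunction.moebius l : ℂ) / l * J d l else 0 := by
    intro l; split_ifs <;> simp
  simp only [e]
  rw [← Finset.sum_filter]
  symm
  have hsub : (OS (2 * M)).filter (fun l => M < l) ⊆ Ioc M (2 * M) := fun l hl => by
    rw [mem_filter, mem_OS] at hl; rw [mem_Ioc]; exact ⟨hl.2, hl.1.2.1⟩
  rw [← Finset.sum_subset_zero_on_sdiff hsub (f := fun l => (ArithmeticFunction.moebius l : ℂ) / l * J d l)]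
  · intro k hk
    rw [mem_sdiff, mem_filter, mem_OS, mem_Ioc] at hk
    by_cases ho : Odd k
    · have : ¬ Squarefree k := fun hs => hk.2 ⟨⟨by omega, by omega, ho, hs⟩, by omega⟩
      rw [ArithmeticFunction.moebius_eq_zero_of_not_squarefree this]; simp
    · rw [IsFam.apply_even d ho]; simp
  · intro l hl
    rw [mem_filter, mem_OS] at hl
    rw [hf.apply_odd hd hl.1.2.2.1]; ring

lemma block_bound {ε : ℝ} (hε : 0 < ε) : ∃ C > 0, ∀ χ : (d : ℕ) → DirichletCharacter ℂ (4 * d),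
    IsFam χ → ∀ D M : ℕ, 1 ≤ D → 1 ≤ M → ∀ S : Finset ℕ, (∀ d ∈ S, Adm d ∧ d ≤ D) →
    ∑ d ∈ S, ‖∑ k ∈ Ioc M (2 * M), (ArithmeticFunction.moebius k : ℂ) *
      χ d (k : ZMod (4 * d)) / (k : ℂ)‖ ^ 2 ≤ C * (D : ℝ) ^ ε * (D / M + 1) := by
  obtain ⟨C, hC, h⟩ := LS_uniform hε
  refine ⟨C, hC, fun χ hf D M hD hM S hS => ?_⟩
  have hMR : (1 : ℝ) ≤ M := by exact_mod_cast hM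
  have hsub : S ⊆ SF D := fun d hd => by
    obtain ⟨⟨h1, h2, h3⟩, h4⟩ := hS d hd
    exact mem_SF.mpr ⟨by omega, h4, h2⟩
  have hl2 : ∑ l ∈ OS (2 * M), ‖(if M < l then (ArithmeticFunction.moebius l : ℂ) / l else 0)‖ ^ 2
      ≤ 1 / (M : ℝ) := by
    calc _ ≤ ∑ l ∈ OS (2 * M), (if M < l then 1 / (M : ℝ) ^ 2 else 0) := by
          refine Finset.sum_le_sum fun l _ => ?_
          split_ifs with hl
          · have hlR : (M : ℝ) ≤ l := by exact_mod_cast hl.le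
            rw [norm_div, Complex.norm_natCast, div_pow]
            refine div_le_div₀ (by norm_num) ?_ (by positivity) (by gcongr)
            exact pow_le_one₀ (norm_nonneg _) (norm_moebius_le l)
          · simp
      _ ≤ ∑ l ∈ Ioc M (2 * M), 1 / (M : ℝ) ^ 2 := by
          rw [← Finset.sum_filter]
          refine Finset.sum_le_sum_of_subset_of_nonneg (fun l hl => ?_) fun _ _ _ => by positivity
          rw [mem_filter, mem_OS] at hl; rw [mem_Ioc]; exact ⟨hl.2, hl.1.2.1⟩
      _ = 1 / (M : ℝ) := by
          have e : 2 * M - M = M := by omega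
          rw [Finset.sum_const, Nat.card_Ioc, e, nsmul_eq_mul]
          field_simp
  calc _ = ∑ d ∈ S, ‖∑ l ∈ OS (2 * M),
        (if M < l then (ArithmeticFunction.moebius l : ℂ) / l else 0) * J d l‖ ^ 2 :=
        Finset.sum_congr rfl fun d hd => by rw [block_eq hf (hS d hd).1]
    _ ≤ ∑ d ∈ SF D, ‖∑ l ∈ OS (2 * M),
        (if M < l then (ArithmeticFunction.moebius l : ℂ) / l else 0) * J d l‖ ^ 2 :=
        Finset.sum_le_sum_of_subset_of_nonneg hsub fun _ _ _ => by positivity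
    _ ≤ C * (D : ℝ) ^ ε * (D + M) * (1 / (M : ℝ)) :=
        (h D M hD hM _).trans (mul_le_mul_of_nonneg_left hl2 (by positivity))
    _ = C * (D : ℝ) ^ ε * (D / M + 1) := by field_simp

lemma sum_Icc_dyadic (a : ℕ → ℂ) (K m : ℕ) :
    ∑ k ∈ Icc 1 (K * 2 ^ m), a k = ∑ k ∈ Icc 1 K, a k +
      ∑ j ∈ range m, ∑ k ∈ Ioc (K * 2 ^ j) (2 * (K * 2 ^ j)), a k := by
  induction m with
  | zero => simp
  | succ m ih =>
    rw [Finset.sum_range_succ, ← add_assoc, ← ih]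
    have e : K * 2 ^ (m + 1) = 2 * (K * 2 ^ m) := by ring
    rw [e]
    have hI : ∀ n, Icc 1 n = Ioc 0 n := fun n => by ext; simp [Nat.succ_le_iff]
    rw [hI, hI, Finset.sum_Ioc_consecutive a (Nat.zero_le _) (by omega)]

/-- The number of dyadic blocks needed to climb above `exp (D ^ ε)` is `O(D ^ ε)`. -/
lemma exists_exponent {ε : ℝ} (hε : 0 < ε) : ∃ C > 0, ∀ D : ℕ, 1 ≤ D → ∃ m : ℕ,
    D ≤ 2 ^ m ∧ Real.exp ((D : ℝ) ^ ε) ≤ (2 : ℝ) ^ m ∧ (m : ℝ) ≤ C * (D : ℝ) ^ ε := by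
  refine ⟨2 * (1 + 1 / ε) + 1, by positivity, fun D hD => ?_⟩
  have hDR : (1 : ℝ) ≤ D := by exact_mod_cast hD
  have hp : (1 : ℝ) ≤ (D : ℝ) ^ ε := Real.one_le_rpow hDR hε.le
  set m := ⌈2 * (1 + 1 / ε) * (D : ℝ) ^ ε⌉₊ with hm
  have hm1 : 2 * (1 + 1 / ε) * (D : ℝ) ^ ε ≤ m := Nat.le_ceil _
  have hm2 : (m : ℝ) < 2 * (1 + 1 / ε) * (D : ℝ) ^ ε + 1 := Nat.ceil_lt_add_one (by positivity)
  have hexp : Real.exp ((1 + 1 / ε) * (D : ℝ) ^ ε) ≤ (2 : ℝ) ^ m := by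
    have h2 : (2 : ℝ) ^ m = Real.exp (m * Real.log 2) := by
      rw [Real.exp_nat_mul, Real.exp_log (by norm_num)]
    rw [h2]
    refine Real.exp_le_exp.mpr ?_
    have := Real.log_two_gt_d9
    nlinarith
  have hq : 0 ≤ 1 / ε * (D : ℝ) ^ ε := by positivity
  refine ⟨m, ?_, ?_, by nlinarith⟩
  · have hlog : Real.log D ≤ (D : ℝ) ^ ε / ε := Real.log_le_rpow_div (by positivity) hε
    have h1 : (D : ℝ) ≤ (2 : ℝ) ^ m := by
      rw [← Real.exp_log (show (0 : ℝ) < D by linarith)]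
      refine (Real.exp_le_exp.mpr ?_).trans hexp
      have : (D : ℝ) ^ ε / ε = 1 / ε * (D : ℝ) ^ ε := by ring
      nlinarith
    exact_mod_cast h1
  · refine (Real.exp_le_exp.mpr ?_).trans hexp
    nlinarith

/-- The theorem for integral `D` and `K`: the part beyond `N = K 2 ^ m ≥ exp (D ^ ε)` is bounded
by `mobius_tail`, and `O(D ^ ε)` dyadic blocks remain. The values of the `L`-functions are passed as a
function `L` so that no instance occurs in the sum. -/
lemma final_nat {χ : (d : ℕ) → DirichletCharacter ℂ (4 * d)} (hf : IsFam χ) {ε : ℝ} (hε : 0 < ε)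
    (hε1 : ε ≤ 1) : ∃ C > 0, ∀ D K : ℕ, 1 ≤ D → 1 ≤ K → ∀ S : Finset ℕ,
    (∀ d ∈ S, Adm d ∧ d ≤ D) → ∀ L : ℕ → ℂ,
    (∀ d ∈ S, ∃ _ : NeZero (4 * d), L d = (χ d).LFunction 1) →
    ∑ d ∈ S, ‖(L d)⁻¹ - ∑ k ∈ Icc 1 K, (ArithmeticFunction.moebius k : ℂ) *
      χ d (k : ZMod (4 * d)) / (k : ℂ)‖ ^ 2 ≤ C * (D : ℝ) ^ (3 * ε) * (D / K + 1) := by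
  obtain ⟨C₁, hC₁, htail⟩ := mobius_tail hf hε hε1
  obtain ⟨C₂, hC₂, hblock⟩ := block_bound hε
  obtain ⟨C₃, hC₃, hexpo⟩ := exists_exponent hε
  refine ⟨2 * C₁ ^ 2 + 2 * (C₃ ^ 2 * C₂), by positivity, ?_⟩
  intro D K hD hK S hS L hL
  have hDR : (1 : ℝ) ≤ D := by exact_mod_cast hD
  have hD0 : (0 : ℝ) < D := by linarith
  have hKR : (1 : ℝ) ≤ K := by exact_mod_cast hK
  have hp : (1 : ℝ) ≤ (D : ℝ) ^ (3 * ε) := Real.one_le_rpow hDR (by positivity)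
  obtain ⟨m, hm1, hm2, hm3⟩ := hexpo D hD
  set N := K * 2 ^ m with hN
  have hN1 : 2 ^ m ≤ N := Nat.le_mul_of_pos_left _ hK
  have hNR : (2 : ℝ) ^ m ≤ N := by exact_mod_cast hN1
  let a : ℕ → ℕ → ℂ := fun d k =>
    (ArithmeticFunction.moebius k : ℂ) * χ d (k : ZMod (4 * d)) / (k : ℂ)
  let B : ℕ → ℕ → ℂ := fun d j => ∑ k ∈ Ioc (K * 2 ^ j) (2 * (K * 2 ^ j)), a d k
  have hterm : ∀ d ∈ S, ‖(L d)⁻¹ - ∑ k ∈ Icc 1 K, a d k‖ ^ 2 ≤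
      2 * (C₁ / D) ^ 2 + 2 * (m * ∑ j ∈ range m, ‖B d j‖ ^ 2) := by
    intro d hd
    obtain ⟨hne, hLd⟩ := hL d hd
    have ht := htail D N hD (hm1.trans hN1) (hm2.trans hNR) d (hS d hd).1 (hS d hd).2
    rw [← hLd] at ht
    have hsplit : (L d)⁻¹ - ∑ k ∈ Icc 1 K, a d k =
        ((L d)⁻¹ - ∑ k ∈ Icc 1 N, a d k) + ∑ j ∈ range m, B d j := by
      rw [hN, sum_Icc_dyadic (a d) K m]; ring
    have hcs : ‖∑ j ∈ range m, B d j‖ ^ 2 ≤ m * ∑ j ∈ range m, ‖B d j‖ ^ 2 := by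
      calc ‖∑ j ∈ range m, B d j‖ ^ 2 ≤ (∑ j ∈ range m, ‖B d j‖) ^ 2 := by
            gcongr; exact norm_sum_le _ _
        _ ≤ _ := by simpa using sq_sum_le_card_mul_sum_sq (s := range m) (f := fun j => ‖B d j‖)
    have ht' : ‖(L d)⁻¹ - ∑ k ∈ Icc 1 N, a d k‖ ^ 2 ≤ (C₁ / D) ^ 2 := by
      gcongr
    rw [hsplit]
    have h1 := norm_add_le ((L d)⁻¹ - ∑ k ∈ Icc 1 N, a d k) (∑ j ∈ range m, B d j)
    have h2 := pow_le_pow_left₀ (norm_nonneg _) h1 2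
    nlinarith [sq_nonneg (‖(L d)⁻¹ - ∑ k ∈ Icc 1 N, a d k‖ - ‖∑ j ∈ range m, B d j‖)]
  have hcard : (S.card : ℝ) ≤ D := by
    have : S ⊆ Icc 1 D := fun d hd => by
      have := hS d hd
      exact mem_Icc.mpr ⟨this.1.1.le, this.2⟩
    have := Finset.card_le_card this
    rw [Nat.card_Icc] at this
    exact_mod_cast this
  have hblocks : ∀ j ∈ range m, ∑ d ∈ S, ‖B d j‖ ^ 2 ≤ C₂ * (D : ℝ) ^ ε * (D / K + 1) := by
    intro j _
    have hj : K ≤ K * 2 ^ j := Nat.le_mul_of_pos_right _ (by positivity)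
    have hjR : (K : ℝ) ≤ (K * 2 ^ j : ℕ) := by exact_mod_cast hj
    refine (hblock χ hf D (K * 2 ^ j) hD (hK.trans hj) S hS).trans ?_
    gcongr
  calc ∑ d ∈ S, ‖(L d)⁻¹ - ∑ k ∈ Icc 1 K, a d k‖ ^ 2
      ≤ ∑ d ∈ S, (2 * (C₁ / D) ^ 2 + 2 * (m * ∑ j ∈ range m, ‖B d j‖ ^ 2)) :=
        Finset.sum_le_sum hterm
    _ = S.card * (2 * (C₁ / D) ^ 2) + 2 * (m * ∑ j ∈ range m, ∑ d ∈ S, ‖B d j‖ ^ 2) := by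
        rw [Finset.sum_add_distrib, Finset.sum_const, nsmul_eq_mul, ← Finset.mul_sum,
          ← Finset.mul_sum, Finset.sum_comm]
    _ ≤ D * (2 * (C₁ / D) ^ 2) + 2 * (m * (m * (C₂ * (D : ℝ) ^ ε * (D / K + 1)))) := by
        have : ∑ j ∈ range m, ∑ d ∈ S, ‖B d j‖ ^ 2 ≤ m * (C₂ * (D : ℝ) ^ ε * (D / K + 1)) := by
          simpa using Finset.sum_le_sum hblocks
        gcongr
    _ ≤ 2 * C₁ ^ 2 * ((D : ℝ) ^ (3 * ε) * (D / K + 1)) +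
        2 * (C₃ ^ 2 * C₂) * ((D : ℝ) ^ (3 * ε) * (D / K + 1)) := by
        have hq : (1 : ℝ) ≤ D / K + 1 := by
          have : (0 : ℝ) ≤ D / K := by positivity
          linarith
        refine add_le_add ?_ ?_
        · have e : (D : ℝ) * (2 * (C₁ / D) ^ 2) = 2 * C₁ ^ 2 * (1 / D) := by field_simp
          rw [e]
          refine mul_le_mul_of_nonneg_left ?_ (by positivity)
          calc 1 / (D : ℝ) ≤ 1 := by rw [div_le_one hD0]; exact hDR
            _ ≤ _ := one_le_mul_of_one_le_of_one_le hp hq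
        · have e3 : (D : ℝ) ^ (3 * ε) = (D : ℝ) ^ ε * (D : ℝ) ^ ε * (D : ℝ) ^ ε := by
            rw [← Real.rpow_add hD0, ← Real.rpow_add hD0]; congr 1; ring
          have hmm : (m : ℝ) * m ≤ (C₃ * (D : ℝ) ^ ε) * (C₃ * (D : ℝ) ^ ε) :=
            mul_le_mul hm3 hm3 (by positivity) (by positivity)
          rw [e3]
          calc 2 * ((m : ℝ) * (m * (C₂ * (D : ℝ) ^ ε * (D / K + 1))))
              = (m * m) * (2 * (C₂ * (D : ℝ) ^ ε * (D / K + 1))) := by ring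
            _ ≤ (C₃ * (D : ℝ) ^ ε) * (C₃ * (D : ℝ) ^ ε) *
                (2 * (C₂ * (D : ℝ) ^ ε * (D / K + 1))) :=
                mul_le_mul_of_nonneg_right hmm (by positivity)
            _ = _ := by ring
    _ = _ := by ring

end QLS

open ArithmeticFunction

/-- For every squarefree odd `d > 1`, let `χ d` be a Dirichlet character
mod `4d` whose value at every odd `n` equals the Jacobi symbol `(4d/n)`, assumed
nonprincipal, and let `L(1, χ_{4d})` be the value at `s = 1` of its Dirichlet
L-function.  Then for every `ε > 0` there is `C_ε` such that for all `K, D ≥ 1`,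
`Σ_{1 < d ≤ D, d squarefree odd} |1/L(1,χ_{4d}) − Σ_{k ≤ K} μ(k) χ_{4d}(k)/k|²
  ≤ C_ε (D^{1+ε}/K + D^ε)`. -/
theorem stmt_3
    (χ : (d : ℕ) → DirichletCharacter ℂ (4 * d))
    (hχval : ∀ d : ℕ, 1 < d → Squarefree d → Odd d →
      ∀ n : ℕ, Odd n → χ d ((n : ℕ) : ZMod (4 * d)) = (jacobiSym ((4 * d : ℕ) : ℤ) n : ℂ))
    (hχnp : ∀ d : ℕ, 1 < d → Squarefree d → Odd d → χ d ≠ 1) :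
    ∀ ε : ℝ, 0 < ε → ∃ Cε : ℝ, 0 < Cε ∧
      ∀ K D : ℝ, 1 ≤ K → 1 ≤ D →
        ∑ d ∈ (Finset.range (Nat.floor D + 1)).filter
            (fun d => 1 < d ∧ Squarefree d ∧ Odd d),
          (if h : d = 0 then 0 else
            haveI : NeZero (4 * d) := ⟨Nat.mul_ne_zero (by norm_num) h⟩
            ‖(DirichletCharacter.LFunction (χ d) 1)⁻¹
              - ∑ k ∈ Finset.Icc 1 (Nat.floor K),
                  (moebius k : ℂ) * χ d ((k : ℕ) : ZMod (4 * d)) / (k : ℂ)‖ ^ 2)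
        ≤ Cε * (D ^ ((1 : ℝ) + ε) / K + D ^ ε) := by
  intro ε hε
  have hf : QLS.IsFam χ := fun d hd =>
    ⟨hχnp d hd.1 hd.2.1 hd.2.2, hχval d hd.1 hd.2.1 hd.2.2⟩
  have hδ : 0 < min ε 1 / 3 := by positivity
  obtain ⟨C, hC, h⟩ := QLS.final_nat hf hδ (by have := min_le_right ε 1; linarith)
  refine ⟨2 * C, by positivity, fun K D hK hD => ?_⟩
  have hD1 : 1 ≤ ⌊D⌋₊ := Nat.one_le_floor_iff _ |>.mpr hD
  have hK1 : 1 ≤ ⌊K⌋₊ := Nat.one_le_floor_iff _ |>.mpr hK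
  set S := (Finset.range (Nat.floor D + 1)).filter (fun d => 1 < d ∧ Squarefree d ∧ Odd d) with hS
  have hSm : ∀ d ∈ S, QLS.Adm d ∧ d ≤ ⌊D⌋₊ := by
    intro d hd
    rw [hS, Finset.mem_filter, Finset.mem_range] at hd
    exact ⟨hd.2, by omega⟩
  have key := h ⌊D⌋₊ ⌊K⌋₊ hD1 hK1 S hSm
    (fun d => if h : d = 0 then 0 else
      haveI : NeZero (4 * d) := ⟨Nat.mul_ne_zero (by norm_num) h⟩
      DirichletCharacter.LFunction (χ d) 1) (fun d hd => by
      have hd0 : d ≠ 0 := by have := (hSm d hd).1.1; omega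
      exact ⟨⟨Nat.mul_ne_zero (by norm_num) hd0⟩, dif_neg hd0⟩)
  have hD0 : 0 < D := by linarith
  have hK0 : 0 < K := by linarith
  have hDf : ((⌊D⌋₊ : ℕ) : ℝ) ≤ D := Nat.floor_le hD0.le
  have hKf : K ≤ 2 * ((⌊K⌋₊ : ℕ) : ℝ) := by
    have h1 := Nat.lt_floor_add_one K
    have h2 : (1 : ℝ) ≤ (⌊K⌋₊ : ℕ) := by exact_mod_cast hK1
    linarith
  calc _ = ∑ d ∈ S, _ := ?_
    _ ≤ _ := key
    _ ≤ C * D ^ ε * (2 * D / K + 2) := ?_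
    _ = _ := ?_
  · refine Finset.sum_congr rfl fun d hd => ?_
    have hd0 : d ≠ 0 := by have := (hSm d hd).1.1; omega
    simp only [hd0, dite_false]
  · have h1 : ((⌊D⌋₊ : ℕ) : ℝ) ^ (3 * (min ε 1 / 3)) ≤ D ^ ε := by
      calc ((⌊D⌋₊ : ℕ) : ℝ) ^ (3 * (min ε 1 / 3)) ≤ D ^ (3 * (min ε 1 / 3)) :=
            Real.rpow_le_rpow (by positivity) hDf (by positivity)
        _ ≤ D ^ ε := Real.rpow_le_rpow_of_exponent_le hD (by
            have := min_le_left ε 1; linarith)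
    have h2 : ((⌊D⌋₊ : ℕ) : ℝ) / (⌊K⌋₊ : ℕ) ≤ 2 * D / K := by
      rw [div_le_div_iff₀ (by exact_mod_cast hK1) hK0]
      nlinarith
    exact mul_le_mul (mul_le_mul_of_nonneg_left h1 hC.le) (by linarith) (by positivity)
      (by positivity)
  · rw [Real.rpow_add hD0, Real.rpow_one]; ring
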